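/- Let $c$, $\mu$, $A$, $\delta$, $\xi$ be fixed real numbers with $1 < c < \frac{17}{16}$, $0 < \mu < 1$, $A > 0$, $\delta > 0$, $0 < \xi < c$ and $\xi + 3\delta < \frac{12}{25}$. There exists a constant $C = C(c, \mu, A, \delta, \xi) > 0$ such that for every real $X \geq 2$, with $D = X^{\delta}$ and $\Delta = X^{\xi - c}$, every sieve weight $\lambda$ of level $D$, and every real $\alpha$ with $|\alpha| < \Delta$, one has $\left| L(\alpha) - \left( \sum_{d \leq D} \frac{\lambda(d)}{\varphi(d)} \right) I(\alpha) \right| \leq C X (\log X)^{-A}$. -/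

import Mathlib

/-!
The sum `L(α)` is a weighted average over odd moduli `d ≤ X ^ δ` of exponential sums over primes
`p ≡ -2 (mod d)`. As `|α| < X ^ (ξ - c)` is small, the integer part in the phase can be dropped,
and the primes can be replaced by the von Mangoldt function (`prime_sum_sub_le`). Vaughan's
identity (`vaughan`) with `V = X ^ (1/100)` and `U = X ^ (49/100)` then splits the sum into linear
and bilinear sums; the phase `α n ^ c` has total variation `O(X ^ ξ)` on the window.

*Linear sums* (`typeI_bound`). As `d` is odd, the conditions `b ∣ n`, `d ∣ n + 2` define a single
class modulo `b d` if `(b, d) = 1` and are contradictory otherwise. Partial summation replaces the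
sum over that class by an integral with error `O(X ^ ξ)` up to logarithms. The main term
`I(α) / φ(d)` comes from `∑_{b ≤ V, (b, d) = 1} μ(b) / b = o(1)` and
`∑_{b ≤ V, (b, d) = 1} μ(b) / b · log (V / b) = d / φ(d) + o(1)`, each with an arbitrary power of
the logarithm saved (`moebius_div_coprime_bound`, `moebius_log_coprime_bound`).

*Bilinear sums* (`typeII_bound`). Here the weights `λ(d)` stay inside: Cauchy's inequality in the
long variable `m`, and expansion of the square, give sums over `d₁, d₂, b₁, b₂`. The conditions on
`m` define a class modulo `lcm(d₁, d₂)` precisely if `(bᵢ, dᵢ) = 1` and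
`b₁ ≡ b₂ (mod gcd(d₁, d₂))`. Replacing the sum over `m` by an integral costs
`X ^ (151/100 + 2 δ + ξ)` up to logarithms, which `ξ + 3 δ < 12/25` makes smaller than `X ^ 2`.
The remaining integral `mainQ` is bounded (`mainQ_bound`) trivially if the gcd exceeds a power of
`log X`, by the first derivative test if `|α| X ^ c` exceeds a power of `log X`, and otherwise by
the Siegel–Walfisz theorem for the Möbius function in residue classes (`moebius_class_bound`).

The last theorem rests on `1 / L(s, χ)`. Siegel's lower bound for `L(1, χ)` (`siegel`, by
Estermann's method) and the 3-4-1 inequality give `|L(s, χ)| ≫ (q (|t| + 2)) ^ (-ε)` for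
`1 ≤ Re s ≤ 2` (`LFunction_lower`); together with upper bounds slightly to the left of the line
this bounds every derivative of `1 / L(s, χ)` (`inv_LFunction_deriv_bound`). The `j`-th derivative
corresponds to the weight `(log n) ^ j`, so a Perron formula with the kernel `1 / s ^ 2` on
`Re s = 1 + 1 / log x` already saves any power of the logarithm (`sum_bound_of_deriv`), with no
zero-free region needed. Coprimality to `d` is inserted one prime at a time
(`coprime_induction`).
-/

/-- `e(t) = e^{2πit}`. -/
noncomputable def e (t : ℝ) : ℂ := Complex.exp (2 * Real.pi * Complex.I * t)

/-- A sieve weight of level `D`. -/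
def IsSieveWeight (D : ℝ) (lam : ℕ → ℝ) : Prop :=
  (∀ d : ℕ, |lam d| ≤ 1) ∧ ∀ d : ℕ, (D < (d : ℝ) ∨ 2 ∣ d ∨ ¬ Squarefree d) → lam d = 0

/-- The exponential sum `L(α)` over primes `μX < p ≤ X` with `p + 2 ≡ 0 (mod d)`. -/
noncomputable def L (c μ X D : ℝ) (lam : ℕ → ℝ) (α : ℝ) : ℂ :=
  ∑ d ∈ Finset.range (⌊D⌋₊ + 1), (lam d : ℂ) *
    ∑ p ∈ (Finset.range (⌊X⌋₊ + 1)).filter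
        (fun p : ℕ => p.Prime ∧ μ * X < (p : ℝ) ∧ d ∣ (p + 2)),
      (Real.log p : ℂ) * e (α * ⌊(p : ℝ) ^ c⌋)

/-- `I(α) = ∫_{μX}^{X} e(α t^c) dt`. -/
noncomputable def I (c μ X : ℝ) (α : ℝ) : ℂ := ∫ t in (μ * X)..X, e (α * t ^ c)

namespace SieveBV

open Finset MeasureTheory Filter Asymptotics

/-! ### Upper bounds for Dirichlet `L`-functions near the line `Re s = 1` -/

/-- The remainder `∑_{N < k ≤ t} f(k) - c (t - N)` of a summatory function with density `c`,
supported on `t > N`. -/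
noncomputable def remFn (f : ℕ → ℂ) (c : ℂ) (N : ℕ) : ℝ → ℂ :=
  Set.indicator (Set.Ioi (N : ℝ)) (fun t => ∑ k ∈ Ioc N ⌊t⌋₊, f k - c * (t - N))

lemma sum_Ioc_eq (f : ℕ → ℂ) {N m : ℕ} (h : N ≤ m) :
    ∑ k ∈ Ioc N m, f k = ∑ k ∈ Icc 1 m, f k - ∑ k ∈ Icc 1 N, f k := by
  have h1 : ∀ n, Icc 1 n = Ioc 0 n := fun n => by ext; simp; omega
  rw [h1, h1, eq_sub_iff_add_eq, add_comm, Finset.sum_Ioc_consecutive _ (Nat.zero_le _) h]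

lemma norm_remFn_le {f : ℕ → ℂ} {c : ℂ} {Q : ℝ} (hc : ‖c‖ ≤ 1)
    (hQ : ∀ m : ℕ, ‖∑ k ∈ Icc 1 m, f k - c * m‖ ≤ Q) (N : ℕ) (t : ℝ) :
    ‖remFn f c N t‖ ≤ 2 * Q + 1 := by
  have hQ0 : 0 ≤ Q := (norm_nonneg _).trans (hQ 0)
  unfold remFn
  by_cases ht : t ∈ Set.Ioi (N : ℝ)
  · rw [Set.indicator_of_mem ht]
    have hN0 : (0:ℝ) ≤ N := Nat.cast_nonneg _
    have ht0 : 0 ≤ t := hN0.trans (le_of_lt ht)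
    have hm : N ≤ ⌊t⌋₊ := Nat.le_floor (le_of_lt ht)
    rw [sum_Ioc_eq f hm]
    have e1 : ∑ k ∈ Icc 1 ⌊t⌋₊, f k - ∑ k ∈ Icc 1 N, f k - c * (t - N) =
      (∑ k ∈ Icc 1 ⌊t⌋₊, f k - c * (⌊t⌋₊ : ℕ)) - (∑ k ∈ Icc 1 N, f k - c * N)
        - c * ((t - (⌊t⌋₊ : ℕ) : ℝ) : ℂ) := by push_cast; ring
    rw [e1]
    have h3 : ‖c * ((t - (⌊t⌋₊ : ℕ) : ℝ) : ℂ)‖ ≤ 1 := by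
      rw [norm_mul, Complex.norm_real, Real.norm_eq_abs]
      have : |t - (⌊t⌋₊ : ℕ)| ≤ 1 := by
        rw [abs_le]; constructor <;> linarith [Nat.floor_le ht0, Nat.lt_floor_add_one t]
      exact mul_le_one₀ hc (abs_nonneg _) this
    calc _ ≤ ‖(∑ k ∈ Icc 1 ⌊t⌋₊, f k - c * (⌊t⌋₊ : ℕ)) - (∑ k ∈ Icc 1 N, f k - c * N)‖ + _ :=
          norm_sub_le _ _
      _ ≤ (Q + Q) + 1 := add_le_add ((norm_sub_le _ _).trans (add_le_add (hQ _) (hQ _))) h3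
      _ = _ := by ring
  · rw [Set.indicator_of_notMem ht]; simp; linarith

lemma measurable_remFn (f : ℕ → ℂ) (c : ℂ) (N : ℕ) : Measurable (remFn f c N) := by
  unfold remFn
  refine Measurable.indicator ?_ measurableSet_Ioi
  refine Measurable.sub ?_ (by fun_prop)
  exact (measurable_from_nat (f := fun m : ℕ => ∑ k ∈ Ioc N m, f k)).comp Nat.measurable_floor

lemma remFn_mellin_integrable {f : ℕ → ℂ} {c : ℂ} {Q : ℝ} (hc : ‖c‖ ≤ 1)
    (hQ : ∀ m : ℕ, ‖∑ k ∈ Icc 1 m, f k - c * m‖ ≤ Q) {N : ℕ} (hN : 1 ≤ N) {s : ℂ} (hs : 0 < s.re) :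
    IntegrableOn (fun t : ℝ => (t : ℂ) ^ (-s - 1) * remFn f c N t) (Set.Ioi (N : ℝ)) := by
  have hNpos : (0:ℝ) < N := by exact_mod_cast hN
  have h1 := integrableOn_Ioi_cpow_of_lt (a := -s - 1) (by simp; linarith) hNpos
  exact h1.mul_bdd (c := 2 * Q + 1) (measurable_remFn f c N).aestronglyMeasurable
    (Eventually.of_forall (norm_remFn_le hc hQ N))

lemma mellin_remFn {f : ℕ → ℂ} {c : ℂ} (N : ℕ) (s : ℂ) :
    mellin (remFn f c N) (-s) = ∫ t in Set.Ioi (N : ℝ), (t : ℂ) ^ (-s - 1) * remFn f c N t := by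
  unfold mellin
  simp only [smul_eq_mul]
  have : ∀ t : ℝ, (t : ℂ) ^ (-s - 1) * remFn f c N t =
      Set.indicator (Set.Ioi (N : ℝ)) (fun t => (t : ℂ) ^ (-s - 1) * remFn f c N t) t := by
    intro t
    by_cases ht : t ∈ Set.Ioi (N : ℝ)
    · rw [Set.indicator_of_mem ht]
    · rw [Set.indicator_of_notMem ht, remFn, Set.indicator_of_notMem ht, mul_zero]
  rw [setIntegral_congr_fun measurableSet_Ioi (fun t _ => this t),
    setIntegral_indicator measurableSet_Ioi]
  congr 2
  ext t
  simp only [Set.mem_inter_iff, Set.mem_Ioi, and_iff_right_iff_imp]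
  intro h
  exact lt_of_le_of_lt (Nat.cast_nonneg _) h

lemma norm_mellin_remFn_le {f : ℕ → ℂ} {c : ℂ} {Q : ℝ} (hc : ‖c‖ ≤ 1)
    (hQ : ∀ m : ℕ, ‖∑ k ∈ Icc 1 m, f k - c * m‖ ≤ Q) {N : ℕ} (hN : 1 ≤ N) {s : ℂ} (hs : 0 < s.re) :
    ‖mellin (remFn f c N) (-s)‖ ≤ (2 * Q + 1) * ((N : ℝ) ^ (-s.re) / s.re) := by
  have hNpos : (0:ℝ) < N := by exact_mod_cast hN
  have hQ0 : 0 ≤ Q := (norm_nonneg _).trans (hQ 0)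
  rw [mellin_remFn]
  have h2 : ∫ t in Set.Ioi (N : ℝ), (2 * Q + 1) * t ^ (-s.re - 1) =
      (2 * Q + 1) * ((N : ℝ) ^ (-s.re) / s.re) := by
    rw [integral_const_mul, integral_Ioi_rpow_of_lt (by linarith) hNpos]
    congr 1
    rw [show -s.re - 1 + 1 = -s.re by ring]
    field_simp
  rw [← h2]
  refine norm_integral_le_of_norm_le ?_ ?_
  · exact (integrableOn_Ioi_rpow_of_lt (by linarith) hNpos).const_mul _
  · filter_upwards [ae_restrict_mem measurableSet_Ioi] with t ht
    have ht0 : 0 < t := hNpos.trans ht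
    rw [norm_mul, Complex.norm_cpow_eq_rpow_re_of_pos ht0, mul_comm]
    simp only [Complex.sub_re, Complex.neg_re, Complex.one_re]
    gcongr
    exact norm_remFn_le hc hQ N t

lemma differentiableAt_mellin_remFn {f : ℕ → ℂ} {c : ℂ} {Q : ℝ} (hc : ‖c‖ ≤ 1)
    (hQ : ∀ m : ℕ, ‖∑ k ∈ Icc 1 m, f k - c * m‖ ≤ Q) {N : ℕ} (hN : 1 ≤ N) {s : ℂ} (hs : 0 < s.re) :
    DifferentiableAt ℂ (fun s => mellin (remFn f c N) (-s)) s := by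
  have hNpos : (0:ℝ) < N := by exact_mod_cast hN
  have : DifferentiableAt ℂ (mellin (remFn f c N)) (-s) := by
    refine mellin_differentiableAt_of_isBigO_rpow (a := 0) (b := -s.re - 1) ?_ ?_ (by simpa using hs)
      ?_ (by simp)
    · refine LocallyIntegrable.locallyIntegrableOn ?_ _
      refine (locallyIntegrable_const (2 * Q + 1 : ℝ)).mono
        (measurable_remFn f c N).aestronglyMeasurable (Eventually.of_forall fun t => ?_)
      exact (norm_remFn_le hc hQ N t).trans (le_abs_self _)
    · refine IsBigO.of_bound (2 * Q + 1) (Eventually.of_forall fun t => ?_)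
      simpa using norm_remFn_le hc hQ N t
    · refine IsBigO.of_bound 1 ?_
      filter_upwards [Ioo_mem_nhdsGT hNpos] with t ht
      have : remFn f c N t = 0 := by
        rw [remFn, Set.indicator_of_notMem]; simp; exact ht.2.le
      rw [this]; simp
  exact this.comp s differentiableAt_id.neg

/-- Partial summation beyond `N`, in the region of absolute convergence. -/
lemma lseries_eq_remFn {f : ℕ → ℂ} {c : ℂ} {Q : ℝ} (hf : ∀ n, ‖f n‖ ≤ 1) (hc : ‖c‖ ≤ 1)
    (hQ : ∀ m : ℕ, ‖∑ k ∈ Icc 1 m, f k - c * m‖ ≤ Q) {N : ℕ} (hN : 1 ≤ N) {s : ℂ} (hs : 1 < s.re) :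
    LSeries f s = ∑ n ∈ Icc 1 N, f n / (n : ℂ) ^ s + c * (N : ℂ) ^ (1 - s) / (s - 1)
      + s * mellin (remFn f c N) (-s) := by
  have hNpos : (0:ℝ) < N := by exact_mod_cast hN
  have hs0 : s ≠ 0 := by rintro rfl; simp at hs; linarith
  have hs1 : s - 1 ≠ 0 := by
    intro h; rw [sub_eq_zero] at h; rw [h] at hs; simp at hs
  set f1 : ℕ → ℂ := fun n => if n ≤ N then f n else 0 with hf1
  set f2 : ℕ → ℂ := fun n => if n ≤ N then 0 else f n with hf2
  have hsplit : f = f1 + f2 := by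
    ext n; simp only [hf1, hf2, Pi.add_apply]; split_ifs <;> simp
  have b1 : ∀ n, ‖f1 n‖ ≤ 1 := fun n => by simp only [hf1]; split_ifs; exacts [hf n, by simp]
  have b2 : ∀ n, ‖f2 n‖ ≤ 1 := fun n => by simp only [hf2]; split_ifs; exacts [by simp, hf n]
  have S1 : LSeries f1 s = ∑ n ∈ Icc 1 N, f n / (n : ℂ) ^ s := by
    unfold LSeries
    rw [tsum_eq_sum (s := Icc 1 N)]
    · refine sum_congr rfl fun n hn => ?_
      rw [mem_Icc] at hn
      rw [LSeries.term_of_ne_zero (by omega)]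
      simp [hf1, hn.2]
    · intro n hn
      rw [LSeries.term_def]
      split_ifs with h0
      · rfl
      · have : ¬ n ≤ N := fun h => hn (mem_Icc.2 ⟨by omega, h⟩)
        simp [hf1, this]
  have S2 : LSeries f2 s = c * (N : ℂ) ^ (1 - s) / (s - 1) + s * mellin (remFn f c N) (-s) := by
    rw [LSeries_eq_mul_integral' f2 zero_le_one hs]
    · have hN1 : (1:ℝ) ≤ N := by exact_mod_cast hN
      have e0 : ∫ t in Set.Ioi (1:ℝ), (∑ k ∈ Icc 1 ⌊t⌋₊, f2 k) * (t:ℂ) ^ (-(s + 1)) =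
          ∫ t in Set.Ioi (N:ℝ), (∑ k ∈ Icc 1 ⌊t⌋₊, f2 k) * (t:ℂ) ^ (-(s + 1)) := by
        refine setIntegral_eq_of_subset_of_forall_sdiff_eq_zero measurableSet_Ioi
          (Set.Ioi_subset_Ioi hN1) fun t ht => ?_
        have ht2 : t ≤ N := by simpa using ht.2
        have : ∑ k ∈ Icc 1 ⌊t⌋₊, f2 k = 0 := by
          refine sum_eq_zero fun k hk => ?_
          have : k ≤ N := (mem_Icc.1 hk).2.trans (by
            have := Nat.floor_le_floor ht2; simpa using this)
          simp [hf2, this]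
        rw [this, zero_mul]
      have e1 : ∀ t ∈ Set.Ioi (N:ℝ), (∑ k ∈ Icc 1 ⌊t⌋₊, f2 k) * (t:ℂ) ^ (-(s + 1)) =
          (t : ℂ) ^ (-s - 1) * remFn f c N t + (c * (t:ℂ) ^ (-s) - c * N * (t:ℂ) ^ (-s-1)) := by
        intro t ht
        have ht0 : 0 < t := hNpos.trans ht
        have htc : (t:ℂ) ≠ 0 := by exact_mod_cast ht0.ne'
        have hm : N ≤ ⌊t⌋₊ := Nat.le_floor (le_of_lt ht)
        have : ∑ k ∈ Icc 1 ⌊t⌋₊, f2 k = ∑ k ∈ Ioc N ⌊t⌋₊, f k := by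
          rw [← sum_filter_add_sum_filter_not _ (fun k => k ≤ N)]
          rw [sum_eq_zero, zero_add]
          · refine sum_congr ?_ ?_
            · ext k; simp; omega
            · intro k hk
              have : ¬ k ≤ N := by simp at hk; omega
              simp [hf2, this]
          · intro k hk
            simp only [mem_filter] at hk
            simp [hf2, hk.2]
        rw [this, remFn, Set.indicator_of_mem ht, show -(s+1) = -s-1 by ring,
          show (t:ℂ)^(-s) = (t:ℂ)^(-s-1) * t by
            rw [show (-s : ℂ) = (-s-1) + 1 by ring, Complex.cpow_add _ _ htc]; simp]
        ring
      rw [e0, setIntegral_congr_fun measurableSet_Ioi e1, integral_add, integral_sub,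
        integral_const_mul, integral_const_mul, integral_Ioi_cpow_of_lt (by simpa using hs) hNpos,
        integral_Ioi_cpow_of_lt (by simp; linarith) hNpos, ← mellin_remFn]
      · have hNc : (N:ℂ) ≠ 0 := by exact_mod_cast hNpos.ne'
        have h3 : (N:ℂ) ^ (1 - s) = (N:ℂ) ^ (-s) * N := by
          rw [show (1 - s : ℂ) = -s + 1 by ring, Complex.cpow_add _ _ hNc]; simp
        push_cast
        rw [show -s - 1 + 1 = -s by ring, show -s + 1 = -(s-1) by ring,
          show -(s - 1) = 1 - s by ring, h3]
        have h4 : (1 - s) ≠ 0 := by intro h; apply hs1; linear_combination -h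
        field_simp
        ring
      · exact (integrableOn_Ioi_cpow_of_lt (by simpa using hs) hNpos).const_mul _
      · exact (integrableOn_Ioi_cpow_of_lt (by simp; linarith) hNpos).const_mul _
      · exact remFn_mellin_integrable hc hQ hN (by linarith)
      · exact ((integrableOn_Ioi_cpow_of_lt (by simpa using hs) hNpos).const_mul _).sub
          ((integrableOn_Ioi_cpow_of_lt (by simp; linarith) hNpos).const_mul _)
    · refine IsBigO.of_bound 1 (Eventually.of_forall fun n => ?_)
      rw [Real.rpow_one, one_mul, Real.norm_of_nonneg (sum_nonneg fun _ _ => norm_nonneg _)]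
      calc _ ≤ ∑ k ∈ Icc 1 n, (1:ℝ) := sum_le_sum fun k _ => b2 k
        _ ≤ _ := by simp
  rw [hsplit, LSeries_add (LSeriesSummable_of_bounded_of_one_lt_re (fun n _ => b1 n) hs)
    (LSeriesSummable_of_bounded_of_one_lt_re (fun n _ => b2 n) hs), ← hsplit, S1, S2, add_assoc]

/-- Analytic continuation to `Re s > 0` of a Dirichlet series whose coefficients have density `c`,
in the form of a truncated sum plus a Mellin transform. The function `E` is any holomorphic
continuation of `(s - 1) ∑ f(n) n^{-s}`. -/
lemma continuation_formula {f : ℕ → ℂ} {c : ℂ} {Q : ℝ} (hf : ∀ n, ‖f n‖ ≤ 1) (hc : ‖c‖ ≤ 1)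
    (hQ : ∀ m : ℕ, ‖∑ k ∈ Icc 1 m, f k - c * m‖ ≤ Q) {E : ℂ → ℂ} (hE : Differentiable ℂ E)
    (hEL : ∀ s : ℂ, 1 < s.re → E s = (s - 1) * LSeries f s)
    {N : ℕ} (hN : 1 ≤ N) {s : ℂ} (hs : 0 < s.re) :
    E s = (s - 1) * ∑ n ∈ Icc 1 N, f n / (n : ℂ) ^ s + c * (N : ℂ) ^ (1 - s)
      + (s - 1) * (s * mellin (remFn f c N) (-s)) := by
  have hNc : (N:ℂ) ≠ 0 := by exact_mod_cast (by omega : N ≠ 0)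
  have hU : IsOpen {s : ℂ | 0 < s.re} := isOpen_lt continuous_const Complex.continuous_re
  have hconv : IsPreconnected {s : ℂ | 0 < s.re} := (convex_halfSpace_re_gt 0).isPreconnected
  have key : Set.EqOn E (fun s => (s - 1) * ∑ n ∈ Icc 1 N, f n / (n : ℂ) ^ s
      + c * (N : ℂ) ^ (1 - s) + (s - 1) * (s * mellin (remFn f c N) (-s))) {s : ℂ | 0 < s.re} := by
    refine AnalyticOnNhd.eqOn_of_preconnected_of_eventuallyEq (z₀ := 2)
      (hE.differentiableOn.analyticOnNhd hU) (DifferentiableOn.analyticOnNhd ?_ hU) hconv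
      (by simp) ?_
    · intro z hz
      refine DifferentiableAt.differentiableWithinAt ?_
      have h1 : DifferentiableAt ℂ (fun s => ∑ n ∈ Icc 1 N, f n / (n : ℂ) ^ s) z := by
        refine DifferentiableAt.fun_sum fun n hn => ?_
        have : (n:ℂ) ≠ 0 := by
          have := (mem_Icc.1 hn).1
          exact_mod_cast (by omega : n ≠ 0)
        refine DifferentiableAt.div (by fun_prop) ?_ (by simp [Complex.cpow_eq_zero_iff, this])
        exact DifferentiableAt.const_cpow differentiableAt_id (Or.inl this)
      have h2 : DifferentiableAt ℂ (fun s : ℂ => (N : ℂ) ^ (1 - s)) z :=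
        DifferentiableAt.const_cpow (by fun_prop) (Or.inl hNc)
      have h3 := differentiableAt_mellin_remFn hc hQ hN hz
      fun_prop
    · have : {s : ℂ | 1 < s.re} ∈ nhds (2 : ℂ) :=
        (isOpen_lt continuous_const Complex.continuous_re).mem_nhds (by simp)
      filter_upwards [this] with z hz
      have hz1 : z - 1 ≠ 0 := by
        intro h; rw [sub_eq_zero] at h; rw [h] at hz; simp at hz
      rw [hEL z hz, lseries_eq_remFn hf hc hQ hN hz]
      field_simp
  exact key hs

lemma periodic_sum_range {f : ℕ → ℂ} {q : ℕ} (hq : 1 ≤ q) (hf : ∀ n, ‖f n‖ ≤ 1)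
    (hper : ∀ n, f (n + q) = f n) (m : ℕ) :
    ‖∑ k ∈ range m, f k - (∑ k ∈ range q, f k) / q * m‖ ≤ 2 * q := by
  have hq0 : (q:ℂ) ≠ 0 := by exact_mod_cast (by omega : q ≠ 0)
  have hb : ∀ m : ℕ, ‖∑ k ∈ range m, f k‖ ≤ m := fun m =>
    (norm_sum_le _ _).trans ((sum_le_sum fun k _ => hf k).trans (by simp))
  induction m using Nat.strong_induction_on with
  | _ m ih =>
    rcases lt_or_ge m q with h | h
    · have h1 : ‖(∑ k ∈ range q, f k) / q * m‖ ≤ m := by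
        rw [norm_mul, norm_div, Complex.norm_natCast, Complex.norm_natCast]
        have : ‖∑ k ∈ range q, f k‖ / q ≤ 1 :=
          div_le_one_of_le₀ (hb q) (Nat.cast_nonneg _)
        calc _ ≤ (1:ℝ) * m := by gcongr
          _ = _ := one_mul _
      have h2 : (m:ℝ) ≤ q := by exact_mod_cast h.le
      linarith [norm_sub_le (∑ k ∈ range m, f k) ((∑ k ∈ range q, f k) / q * m), hb m]
    · obtain ⟨n, rfl⟩ := Nat.exists_eq_add_of_le h
      have h1 : ∑ k ∈ range (q + n), f k = ∑ k ∈ range q, f k + ∑ k ∈ range n, f k := by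
        rw [sum_range_add]
        congr 1
        exact sum_congr rfl fun k _ => by rw [add_comm, hper]
      have h2 := ih n (by omega)
      convert h2 using 2
      rw [h1]
      push_cast
      field_simp
      ring

lemma sum_range_natCast_zmod {q : ℕ} [NeZero q] (g : ZMod q → ℂ) :
    ∑ k ∈ range q, g (k : ZMod q) = ∑ a : ZMod q, g a := by
  refine sum_nbij' (fun k : ℕ => (k : ZMod q)) (fun a => a.val) ?_ ?_ ?_ ?_ ?_
  · intro a _; simp
  · intro a _; simpa using ZMod.val_lt a
  · intro a ha; exact ZMod.val_cast_of_lt (mem_range.1 ha)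
  · intro a _; simp
  · intro a _; rfl

/-- By periodicity, the sums of a character are `c m + O(q)`, where `c` vanishes unless `χ` is
trivial. -/
lemma char_sum_bound {q : ℕ} [NeZero q] (χ : DirichletCharacter ℂ q) :
    ∃ c : ℂ, ‖c‖ ≤ 1 ∧ (χ ≠ 1 → c = 0) ∧
      ∀ m : ℕ, ‖∑ k ∈ Icc 1 m, χ k - c * m‖ ≤ 2 * q := by
  have hq : 1 ≤ q := Nat.one_le_iff_ne_zero.2 (NeZero.ne q)
  have hb : ∀ n : ℕ, ‖χ ((n + 1 : ℕ) : ZMod q)‖ ≤ 1 := fun n => χ.norm_le_one _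
  refine ⟨(∑ k ∈ range q, χ ((k + 1 : ℕ) : ZMod q)) / q, ?_, ?_, ?_⟩
  · rw [norm_div, Complex.norm_natCast]
    refine div_le_one_of_le₀ ?_ (Nat.cast_nonneg _)
    exact (norm_sum_le _ _).trans ((sum_le_sum fun k _ => hb k).trans (by simp))
  · intro hχ
    have h1 : ∑ k ∈ range q, χ ((k + 1 : ℕ) : ZMod q) = ∑ a : ZMod q, χ a := by
      have := sum_range_natCast_zmod (q := q) (fun a => χ (a + 1))
      push_cast
      rw [this]
      exact Fintype.sum_equiv (Equiv.addRight 1) _ _ fun a => rfl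
    rw [h1, MulChar.sum_eq_zero_of_ne_one hχ, zero_div]
  · intro m
    have h2 := periodic_sum_range hq hb (fun n => by
      rw [show n + q + 1 = (n + 1) + q by ring, Nat.cast_add (n + 1) q]; simp) m
    convert h2 using 3
    have : Icc 1 m = Ico 1 (m + 1) := by ext; simp
    rw [this, sum_Ico_eq_sum_range]
    simp [add_comm]

lemma sum_rpow_le {η : ℝ} (hη : 0 < η) {N : ℕ} (hN : 1 ≤ N) :
    ∑ n ∈ Icc 1 N, (n : ℝ) ^ (η - 1) ≤ (1 + 1 / η) * (N : ℝ) ^ (2 * η) := by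
  have hN1 : (1:ℝ) ≤ N := by exact_mod_cast hN
  have h1 : ∑ n ∈ Icc 1 N, (n : ℝ) ^ (η - 1) ≤ ∑ n ∈ Icc 1 N, (N : ℝ) ^ η * (n:ℝ)⁻¹ := by
    refine sum_le_sum fun n hn => ?_
    rw [mem_Icc] at hn
    have hn0 : (0:ℝ) < n := by exact_mod_cast hn.1
    rw [Real.rpow_sub hn0, Real.rpow_one, div_eq_mul_inv]
    gcongr
    exact_mod_cast hn.2
  have h2 := harmonic_le_one_add_log N
  rw [harmonic_eq_sum_Icc] at h2
  push_cast at h2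
  have h3 : Real.log N ≤ (N:ℝ) ^ η / η := Real.log_le_rpow_div (by linarith) hη
  have h4 : (1:ℝ) ≤ (N:ℝ) ^ η := Real.one_le_rpow hN1 hη.le
  calc _ ≤ _ := h1
    _ = (N:ℝ) ^ η * ∑ n ∈ Icc 1 N, (n:ℝ)⁻¹ := by rw [mul_sum]
    _ ≤ (N:ℝ) ^ η * ((1 + 1 / η) * (N:ℝ) ^ η) := by
        gcongr
        calc _ ≤ 1 + Real.log N := h2
          _ ≤ (N:ℝ) ^ η + (N:ℝ) ^ η / η := add_le_add h4 h3
          _ = _ := by field_simp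
    _ = _ := by rw [show 2 * η = η + η by ring, Real.rpow_add (by linarith)]; ring

/-- An entire function `E` with `E(s) = (s - 1) L(s, χ)` away from `s = 1`. -/
lemma exists_entire {q : ℕ} [NeZero q] (χ : DirichletCharacter ℂ q) :
    ∃ E : ℂ → ℂ, Differentiable ℂ E ∧ ∀ s ≠ 1, E s = (s - 1) * χ.LFunction s := by
  by_cases h : χ = 1
  · subst h
    refine ⟨DirichletCharacter.LFunctionTrivChar₁ q,
      DirichletCharacter.differentiable_LFunctionTrivChar₁ q, fun s hs => ?_⟩
    simp [DirichletCharacter.LFunctionTrivChar₁, Function.update_of_ne hs,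
      DirichletCharacter.LFunctionTrivChar]
  · refine ⟨fun s => (s - 1) * χ.LFunction s, ?_, fun s _ => rfl⟩
    have := DirichletCharacter.differentiable_LFunction h
    fun_prop

/-- The truncated Dirichlet series at length `N`, with its two error terms bounded. -/
lemma LFunction_trunc {q : ℕ} [NeZero q] (χ : DirichletCharacter ℂ q) {N : ℕ} (hN : 1 ≤ N)
    {s : ℂ} (hs : 0 < s.re) (hs1 : s ≠ 1) :
    ‖χ.LFunction s‖ ≤ ∑ n ∈ Icc 1 N, (n : ℝ) ^ (-s.re)
      + (if χ = 1 then (N:ℝ) ^ (1 - s.re) / ‖s - 1‖ else 0)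
      + ‖s‖ * ((2 * (2 * q) + 1) * ((N : ℝ) ^ (-s.re) / s.re)) := by
  obtain ⟨c, hc, hc0, hQ⟩ := char_sum_bound χ
  obtain ⟨E, hE, hEs⟩ := exists_entire χ
  have hs1' : s - 1 ≠ 0 := sub_ne_zero.2 hs1
  have hNpos : (0:ℝ) < N := by exact_mod_cast hN
  have h := continuation_formula (f := fun n => χ n) (fun n => χ.norm_le_one _) hc hQ hE
    (fun z hz => by
      rw [hEs z (by rintro rfl; simp at hz), DirichletCharacter.LFunction_eq_LSeries χ hz]) hN hs
  rw [hEs s hs1] at h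
  have h' : χ.LFunction s = ∑ n ∈ Icc 1 N, χ n / (n : ℂ) ^ s + c * (N : ℂ) ^ (1 - s) / (s - 1)
      + s * mellin (remFn (fun n => χ n) c N) (-s) := by
    have := mul_left_cancel₀ (b := χ.LFunction s) (c := ∑ n ∈ Icc 1 N, χ n / (n : ℂ) ^ s + c * (N : ℂ) ^ (1 - s) / (s - 1)
      + s * mellin (remFn (fun n => χ n) c N) (-s)) hs1' (by rw [h]; field_simp)
    exact this
  rw [h']
  refine (norm_add_le _ _).trans (add_le_add ((norm_add_le _ _).trans (add_le_add ?_ ?_)) ?_)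
  · refine (norm_sum_le _ _).trans (sum_le_sum fun n hn => ?_)
    have hn0 : (0:ℝ) < n := by exact_mod_cast (mem_Icc.1 hn).1
    rw [norm_div, Complex.norm_natCast_cpow_of_pos (by exact_mod_cast hn0), Real.rpow_neg hn0.le,
      div_eq_mul_inv]
    have := χ.norm_le_one (n : ZMod q)
    have h3 : 0 ≤ ((n:ℝ) ^ s.re)⁻¹ := by positivity
    nlinarith
  · split_ifs with hχ
    · rw [norm_div, norm_mul, Complex.norm_natCast_cpow_of_pos (by omega)]
      simp only [Complex.sub_re, Complex.one_re]
      gcongr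
      have : 0 ≤ (N:ℝ) ^ (1 - s.re) := by positivity
      nlinarith
    · simp [hc0 hχ]
  · rw [norm_mul]
    gcongr
    exact norm_mellin_remFn_le hc hQ hN hs

/-- The analytic conductor `q (|t| + 2)`. -/
noncomputable def cond (q : ℕ) (t : ℝ) : ℝ := q * (|t| + 2)

lemma two_le_cond {q : ℕ} [NeZero q] (t : ℝ) : 2 ≤ cond q t := by
  have hq : (1:ℝ) ≤ q := by exact_mod_cast Nat.one_le_iff_ne_zero.2 (NeZero.ne q)
  unfold cond
  nlinarith [abs_nonneg t]

/-- Truncation at `N ≍ cond` bounds `L(s, χ)` for `1 - η ≤ Re s`; the last factor accounts for the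
pole of a trivial character. -/
lemma LFunction_bound_aux {q : ℕ} [NeZero q] (χ : DirichletCharacter ℂ q) {η : ℝ} (hη : 0 < η)
    (hη4 : η ≤ 1 / 2) {s : ℂ} (hs : 1 - η ≤ s.re) (hs3 : s.re ≤ 4) (hs1 : s ≠ 1) :
    ‖χ.LFunction s‖ ≤ 100 * (1 + 1 / η) * cond q s.im ^ (2 * η) *
      (1 + if χ = 1 then 1 / ‖s - 1‖ else 0) := by
  set τ := cond q s.im with hτ
  have hτ2 : 2 ≤ τ := two_le_cond _
  have hq : (1:ℝ) ≤ q := by exact_mod_cast Nat.one_le_iff_ne_zero.2 (NeZero.ne q)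
  set N := ⌈τ⌉₊ with hNdef
  have hNτ : τ ≤ N := Nat.le_ceil τ
  have hN2 : (N:ℝ) ≤ 2 * τ := by linarith [Nat.ceil_lt_add_one (show 0 ≤ τ by linarith)]
  have hN1 : 1 ≤ N := by exact_mod_cast (show (1:ℝ) ≤ N by linarith)
  have hNr : (1:ℝ) ≤ N := by exact_mod_cast hN1
  have hsr : 0 < s.re := by linarith
  have h := LFunction_trunc χ hN1 hsr hs1
  have hN2η : (N:ℝ) ^ (2 * η) ≤ 2 * τ ^ (2 * η) := by
    calc _ ≤ (2 * τ) ^ (2 * η) := by gcongr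
      _ = 2 ^ (2 * η) * τ ^ (2 * η) := Real.mul_rpow (by norm_num) (by linarith)
      _ ≤ 2 ^ (1:ℝ) * τ ^ (2 * η) := by gcongr <;> linarith
      _ = _ := by rw [Real.rpow_one]
  have hτη : 1 ≤ τ ^ (2 * η) := Real.one_le_rpow (by linarith) (by linarith)
  have e1 : ∑ n ∈ Icc 1 N, (n : ℝ) ^ (-s.re) ≤ (1 + 1 / η) * (2 * τ ^ (2 * η)) := by
    refine le_trans (sum_le_sum fun n hn => ?_) ((sum_rpow_le hη hN1).trans (by gcongr))
    exact Real.rpow_le_rpow_of_exponent_le (by exact_mod_cast (mem_Icc.1 hn).1) (by linarith)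
  have hη1 : 1 ≤ 1 + 1 / η := by have : 0 < 1 / η := by positivity
                                 linarith
  have e2 : (if χ = 1 then (N:ℝ) ^ (1 - s.re) / ‖s - 1‖ else 0) ≤
      2 * τ ^ (2 * η) * (if χ = 1 then 1 / ‖s - 1‖ else 0) := by
    split_ifs
    · rw [mul_one_div]
      gcongr
      refine le_trans ?_ hN2η
      exact Real.rpow_le_rpow_of_exponent_le hNr (by linarith)
    · simp
  have e3 : ‖s‖ * ((2 * (2 * q) + 1) * ((N : ℝ) ^ (-s.re) / s.re)) ≤ 40 * τ ^ (2 * η) := by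
    have a1 : ‖s‖ ≤ 2 * (|s.im| + 2) := by
      have := Complex.norm_le_abs_re_add_abs_im s
      rw [abs_of_pos hsr] at this
      linarith [abs_nonneg s.im]
    have a2 : (N:ℝ) ^ (-s.re) ≤ τ⁻¹ * τ ^ (2 * η) := by
      calc (N:ℝ) ^ (-s.re) ≤ τ ^ (-s.re) := Real.rpow_le_rpow_of_nonpos (by linarith) hNτ (by linarith)
        _ ≤ τ ^ (-1 + 2 * η) := Real.rpow_le_rpow_of_exponent_le (by linarith) (by linarith)
        _ = _ := by rw [Real.rpow_add (by linarith), Real.rpow_neg_one]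
    have a3 : (N:ℝ) ^ (-s.re) / s.re ≤ (τ⁻¹ * τ ^ (2 * η)) * 2 := by
      rw [div_eq_mul_inv]
      gcongr
      rw [inv_le_comm₀ hsr (by norm_num)]
      linarith
    calc _ ≤ (2 * (|s.im| + 2)) * ((5 * q) * ((τ⁻¹ * τ ^ (2 * η)) * 2)) := by
          gcongr; linarith
      _ = 20 * (τ * τ⁻¹) * τ ^ (2 * η) := by rw [hτ]; unfold cond; ring
      _ = 20 * τ ^ (2 * η) := by rw [mul_inv_cancel₀ (by linarith), mul_one]
      _ ≤ _ := by linarith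
  set B := τ ^ (2 * η)
  set P := (if χ = 1 then 1 / ‖s - 1‖ else 0) with hP
  have hP0 : 0 ≤ P := by rw [hP]; split_ifs <;> positivity
  have f1 : B ≤ (1 + 1 / η) * B := by nlinarith
  have f2 : B * P ≤ (1 + 1 / η) * B * P := by gcongr
  have f3 : 0 ≤ (1 + 1 / η) * B * P := by positivity
  nlinarith

lemma LFunction_bound {q : ℕ} [NeZero q] {χ : DirichletCharacter ℂ q} (hχ : χ ≠ 1) {η : ℝ}
    (hη : 0 < η) (hη4 : η ≤ 1 / 2) {s : ℂ} (hs : 1 - η ≤ s.re) (hs3 : s.re ≤ 4) :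
    ‖χ.LFunction s‖ ≤ 100 * (1 + 1 / η) * cond q s.im ^ (2 * η) := by
  by_cases hs1 : s ≠ 1
  · simpa [hχ] using LFunction_bound_aux χ hη hη4 hs hs3 hs1
  push Not at hs1
  subst hs1
  have hc : Filter.Tendsto (fun y : ℝ => ‖χ.LFunction (1 + (y:ℂ))‖) (nhdsWithin 0 (Set.Ioi 0))
      (nhds ‖χ.LFunction 1‖) := by
    have h1 : Continuous (fun y : ℝ => ‖χ.LFunction (1 + (y:ℂ))‖) :=
      ((DirichletCharacter.differentiable_LFunction hχ).continuous.comp (by fun_prop)).norm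
    have := (h1.tendsto 0).mono_left (nhdsWithin_le_nhds (s := Set.Ioi 0))
    simpa using this
  refine le_of_tendsto hc ?_
  filter_upwards [Ioo_mem_nhdsGT (show (0:ℝ) < 1 by norm_num)] with y hy
  have := LFunction_bound_aux χ hη hη4 (s := 1 + (y:ℂ)) (by simp; linarith [hy.1])
    (by simp; linarith [hy.2]) (by simp [hy.1.ne'])
  simpa [hχ] using this

lemma LFunction_bound' {q : ℕ} [NeZero q] {χ : DirichletCharacter ℂ q} {η : ℝ}
    (hη : 0 < η) (hη4 : η ≤ 1 / 2) {s : ℂ} (hχ : χ ≠ 1 ∨ 1 / 2 ≤ |s.im|)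
    (hs : 1 - η ≤ s.re) (hs3 : s.re ≤ 4) :
    ‖χ.LFunction s‖ ≤ 300 * (1 + 1 / η) * cond q s.im ^ (2 * η) := by
  have hτ2 : 2 ≤ cond q s.im := two_le_cond _
  have hpos : 0 ≤ (1 + 1 / η) * cond q s.im ^ (2 * η) := by positivity
  by_cases h1 : χ ≠ 1
  · linarith [LFunction_bound h1 hη hη4 hs hs3]
  · have him : 1 / 2 ≤ |s.im| := hχ.resolve_left h1
    have hn : 1 / 2 ≤ ‖s - 1‖ := by
      have := Complex.abs_im_le_norm (s - 1)
      simp at this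
      linarith
    have hs1 : s ≠ 1 := by rintro rfl; simp at him; linarith
    have h := LFunction_bound_aux χ hη hη4 hs hs3 hs1
    push Not at h1
    rw [if_pos h1] at h
    have h3 : 1 / ‖s - 1‖ ≤ 2 := by
      rw [div_le_iff₀ (by linarith)]; linarith
    nlinarith

lemma cond_rpow_le {q : ℕ} [NeZero q] {η : ℝ} (hη : 0 < η) (hη4 : η ≤ 1 / 2) {t u : ℝ}
    (h : |u| ≤ 2 * |t| + 2) : cond q u ^ (2 * η) ≤ 2 * cond q t ^ (2 * η) := by
  have ht := two_le_cond (q := q) t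
  have hu := two_le_cond (q := q) u
  have hq : (1:ℝ) ≤ q := by exact_mod_cast Nat.one_le_iff_ne_zero.2 (NeZero.ne q)
  have : cond q u ≤ 2 * cond q t := by
    unfold cond
    nlinarith [abs_nonneg t]
  calc _ ≤ (2 * cond q t) ^ (2 * η) := by gcongr
    _ = 2 ^ (2 * η) * cond q t ^ (2 * η) := Real.mul_rpow (by norm_num) (by linarith)
    _ ≤ 2 ^ (1:ℝ) * cond q t ^ (2 * η) := by gcongr <;> linarith
    _ = _ := by rw [Real.rpow_one]

/-- Cauchy's estimate applied to the upper bound for `L(s, χ)`. -/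
lemma LFunction_deriv_bound {q : ℕ} [NeZero q] {χ : DirichletCharacter ℂ q} {η : ℝ}
    (hη : 0 < η) (hη4 : η ≤ 1 / 2) {s : ℂ} (hχ : χ ≠ 1 ∨ 1 ≤ |s.im|)
    (hs : 1 - η / 2 ≤ s.re) (hs3 : s.re ≤ 5 / 2) :
    ‖deriv χ.LFunction s‖ ≤ 1200 * (1 + 1 / η) / η * cond q s.im ^ (2 * η) := by
  have hd : ∀ z ∈ Metric.closedBall s (η / 2),
      |z.re - s.re| ≤ η / 2 ∧ |z.im - s.im| ≤ η / 2 := by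
    intro z hz
    rw [mem_closedBall_iff_norm] at hz
    constructor
    · exact (by simpa using Complex.abs_re_le_norm (z - s) : |z.re - s.re| ≤ ‖z - s‖).trans hz
    · exact (by simpa using Complex.abs_im_le_norm (z - s) : |z.im - s.im| ≤ ‖z - s‖).trans hz
  have hχz : ∀ z ∈ Metric.closedBall s (η / 2), χ ≠ 1 ∨ 1 / 2 ≤ |z.im| := by
    intro z hz
    rcases hχ with h | h
    · exact Or.inl h
    · right
      have h1 := (hd z hz).2
      have h2 := abs_sub_abs_le_abs_sub s.im z.im
      rw [abs_sub_comm] at h2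
      linarith
  have hdiff : ∀ z ∈ Metric.closedBall s (η / 2), DifferentiableAt ℂ χ.LFunction z := by
    intro z hz
    refine DirichletCharacter.differentiableAt_LFunction χ z ?_
    rcases hχz z hz with h | h
    · exact Or.inr h
    · left; rintro rfl; simp at h; linarith
  have hb : ∀ z ∈ Metric.sphere s (η / 2), ‖χ.LFunction z‖ ≤
      300 * (1 + 1 / η) * (2 * cond q s.im ^ (2 * η)) := by
    intro z hz
    have hz' := Metric.sphere_subset_closedBall hz
    have h1 := hd z hz'
    rw [abs_le, abs_le] at h1
    refine (LFunction_bound' hη hη4 (hχz z hz') (by linarith) (by linarith)).trans ?_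
    gcongr
    refine cond_rpow_le hη hη4 ?_
    have h2 := abs_sub_abs_le_abs_sub z.im s.im
    have h3 := (hd z hz').2
    linarith [abs_nonneg s.im]
  have := Complex.norm_deriv_le_of_forall_mem_sphere_norm_le (by linarith) ?_ hb
  · refine this.trans (le_of_eq ?_)
    field_simp
    ring
  · refine ⟨fun z hz => (hdiff z (Metric.ball_subset_closedBall hz)).differentiableWithinAt, ?_⟩
    rw [closure_ball _ (by linarith)]
    exact fun z hz => (hdiff z hz).continuousAt.continuousWithinAt

end SieveBV

namespace SieveBV

open Finset MeasureTheory Filter Asymptotics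
open scoped ComplexOrder

/-! ### Siegel's theorem -/

lemma exists_zeta_entire : ∃ Z : ℂ → ℂ, Differentiable ℂ Z ∧ Z 1 = 1 ∧
    ∀ s ≠ 1, Z s = (s - 1) * riemannZeta s := by
  obtain ⟨Z, hZ, hZs⟩ := exists_entire (1 : DirichletCharacter ℂ 1)
  have hZs' : ∀ s ≠ 1, Z s = (s - 1) * riemannZeta s := fun s hs => by
    rw [hZs s hs, DirichletCharacter.LFunction_modOne_eq]
  refine ⟨Z, hZ, ?_, hZs'⟩
  have h1 : Tendsto Z (nhdsWithin 1 {1}ᶜ) (nhds (Z 1)) :=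
    (hZ.continuous.tendsto 1).mono_left nhdsWithin_le_nhds
  have h2 : Tendsto Z (nhdsWithin 1 {1}ᶜ) (nhds 1) :=
    riemannZeta_residue_one.congr' (by
      filter_upwards [self_mem_nhdsWithin] with s hs
      rw [hZs' s hs])
  exact tendsto_nhds_unique h1 h2

/-- If `F' = -F · ∑ b(n) n^{-s}` with `b ≥ 0`, then the derivatives of `F` at `2` alternate in
sign. -/
lemma alternating_of_deriv {F : ℂ → ℂ} {b : ℕ → ℂ} (hb : 0 ≤ b)
    (hbs : LSeries.abscissaOfAbsConv b < (2:ℝ)) (hF : AnalyticAt ℂ F 2) (hF0 : 0 ≤ F 2)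
    (hd : ∀ s : ℂ, 1 < s.re → deriv F s = -(F s * LSeries b s)) (k : ℕ) :
    0 ≤ (-1) ^ k * iteratedDeriv k F 2 := by
  induction k using Nat.strong_induction_on with
  | _ k ih =>
    cases k with
    | zero => simpa using hF0
    | succ k =>
      have hev : deriv F =ᶠ[nhds 2] -(F * LSeries b) := by
        have : {s : ℂ | 1 < s.re} ∈ nhds (2 : ℂ) :=
          (isOpen_lt continuous_const Complex.continuous_re).mem_nhds (by simp)
        filter_upwards [this] with z hz
        simpa using hd z hz
      have hB : AnalyticAt ℂ (LSeries b) 2 :=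
        LSeries_analyticOnNhd b 2 (by simpa using hbs)
      rw [iteratedDeriv_succ', hev.iteratedDeriv_eq, iteratedDeriv_neg,
        iteratedDeriv_mul hF.contDiffAt hB.contDiffAt, pow_succ, mul_neg_one, neg_mul_neg, mul_sum]
      refine sum_nonneg fun i hi => ?_
      have hik : i ≤ k := Nat.lt_succ_iff.1 (mem_range.1 hi)
      have h1 := ih i (by omega)
      have h2 := LSeries.iteratedDeriv_alternating hb hbs (k - i)
      have h3 : ((-1:ℂ)) ^ k = (-1) ^ i * (-1) ^ (k - i) := by rw [← pow_add]; congr 1; omega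
      have h4 : (0:ℂ) ≤ (k.choose i : ℂ) := by exact_mod_cast Nat.zero_le _
      have := mul_nonneg h4 (mul_nonneg h1 h2)
      rw [h3]
      convert! this using 1
      push_cast
      ring

/-- Estermann's lemma: a lower bound for the residue `P(1)` of `ζ P` at `s = 1` in terms of a real
point `β < 1` at which `ζ P` is non-positive. -/
lemma estermann : ∃ Z0 : ℝ, 1 ≤ Z0 ∧ ∀ (P : ℂ → ℂ) (b : ℕ → ℂ) (K c0 β : ℝ) (M : ℕ),
    Differentiable ℂ P → 0 ≤ b → LSeries.abscissaOfAbsConv b < (2:ℝ) →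
    (∀ s : ℂ, 1 < s.re → deriv (fun s => riemannZeta s * P s) s =
      -(riemannZeta s * P s * LSeries b s)) →
    (∀ z ∈ Metric.closedBall (2:ℂ) (4 / 3), ‖P z‖ ≤ K) →
    0 ≤ riemannZeta 2 * P 2 → c0 ≤ (riemannZeta 2 * P 2).re →
    7 / 8 ≤ β → β < 1 → (riemannZeta β * P β).re ≤ 0 → 1 ≤ M →
    Z0 * K * (27 / 32) ^ M ≤ c0 / 2 →
    c0 / 2 * (1 - β) ≤ (P 1).re * (2 - β) ^ M := by
  obtain ⟨Z, hZ, hZ1, hZs⟩ := exists_zeta_entire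
  obtain ⟨Z1, hZ1b⟩ := (isCompact_closedBall (2:ℂ) (4/3)).exists_bound_of_continuousOn
    hZ.continuous.continuousOn
  have hZ1pos : 1 ≤ Z1 := by
    have := hZ1b 1 (by simp [dist_eq_norm]; norm_num)
    rw [hZ1] at this; simpa using this
  refine ⟨40 * Z1, by linarith, ?_⟩
  intro P b K c0 β M hP hb hbs hd hK h20 h2c hβ hβ1 hFβ hM hMK
  set F : ℂ → ℂ := fun s => riemannZeta s * P s with hF
  set E : ℂ → ℂ := fun s => Z s * P s with hE
  have hEd : Differentiable ℂ E := hZ.mul hP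
  set h : ℂ → ℂ := dslope E 1 with hh
  have hhd : Differentiable ℂ h := by
    rw [← differentiableOn_univ]
    exact (Complex.differentiableOn_dslope univ_mem).2 hEd.differentiableOn
  have hE1 : E 1 = P 1 := by simp [hE, hZ1]
  have hhs : ∀ s ≠ 1, h s = F s - P 1 * (s - 1)⁻¹ := by
    intro s hs
    have hs1 : s - 1 ≠ 0 := sub_ne_zero.2 hs
    rw [hh, dslope_of_ne _ hs, slope_def_field, hE1, hE, hF]
    simp only
    rw [hZs s hs]
    field_simp
  have hFan : AnalyticAt ℂ F 2 := by
    have : DifferentiableOn ℂ F {1}ᶜ := fun s hs =>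
      ((differentiableAt_riemannZeta hs).mul (hP s)).differentiableWithinAt
    exact this.analyticAt (isOpen_compl_singleton.mem_nhds (by norm_num))
  have hinv : AnalyticAt ℂ (fun s : ℂ => (s - 1)⁻¹) 2 :=
    (analyticAt_id.sub analyticAt_const).inv (by norm_num)
  have hK0 : 0 ≤ K := (norm_nonneg _).trans (hK 2 (by simp; norm_num))
  have hP1 : ‖P 1‖ ≤ K := hK 1 (by simp [dist_eq_norm]; norm_num)
  have hid : ∀ k, iteratedDeriv k h 2 = iteratedDeriv k F 2 - P 1 * ((-1) ^ k * k.factorial) := by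
    intro k
    have hev : h =ᶠ[nhds 2] F - (fun s => P 1 * (s - 1)⁻¹) := by
      filter_upwards [isOpen_compl_singleton.mem_nhds (show (2:ℂ) ∈ ({1}ᶜ : Set ℂ) by norm_num)]
        with s hs
      simpa using hhs s hs
    rw [hev.iteratedDeriv_eq, iteratedDeriv_sub hFan.contDiffAt
      (show AnalyticAt ℂ (fun s => P 1 * (s - 1)⁻¹) 2 from
        analyticAt_const.mul hinv).contDiffAt, iteratedDeriv_const_mul_field]
    congr 2
    have := iteratedDeriv_comp_sub_const k (Inv.inv : ℂ → ℂ) (1:ℂ)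
    rw [this]
    simp only
    rw [iteratedDeriv_eq_iterate, iter_deriv_inv]
    norm_num
  set a : ℕ → ℝ := fun k => ((-1) ^ k * iteratedDeriv k F 2).re / k.factorial with ha
  have ha0 : ∀ k, 0 ≤ a k := fun k =>
    div_nonneg (Complex.le_def.1 (alternating_of_deriv hb hbs hFan h20 hd k)).1
      (Nat.cast_nonneg _)
  set lam := (P 1).re with hlam
  have hterm : ∀ k, (((-1) ^ k * iteratedDeriv k h 2).re / k.factorial) = a k - lam := by
    intro k
    have hk : (k.factorial : ℝ) ≠ 0 := by exact_mod_cast k.factorial_ne_zero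
    have h1 : (-1 : ℂ) ^ k * (-1) ^ k = 1 := by rw [← pow_add]; exact Even.neg_one_pow ⟨k, rfl⟩
    rw [hid, ha]
    simp only
    rw [mul_sub, Complex.sub_re, sub_div]
    congr 1
    rw [show (-1 : ℂ) ^ k * (P 1 * ((-1) ^ k * k.factorial)) =
      ((-1 : ℂ) ^ k * (-1) ^ k) * (P 1 * ((k.factorial : ℝ) : ℂ)) by push_cast; ring, h1, one_mul,
      Complex.re_mul_ofReal, mul_div_assoc, div_self hk, mul_one]
  have hsph : ∀ z ∈ Metric.sphere (2:ℂ) (4/3), ‖h z‖ ≤ 6 * Z1 * K := by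
    intro z hz
    have hz' := Metric.sphere_subset_closedBall hz
    rw [mem_sphere_iff_norm] at hz
    have hz1 : 1 / 3 ≤ ‖z - 1‖ := by
      have h1 := norm_sub_norm_le (z - 2) (-1)
      rw [show z - 2 - -1 = z - 1 by ring] at h1
      simp at h1
      linarith
    have hne : z ≠ 1 := by rintro rfl; simp at hz1; linarith
    rw [hh, dslope_of_ne _ hne, slope_def_field, norm_div, hE1]
    rw [div_le_iff₀ (by linarith)]
    have h2 : ‖E z‖ ≤ Z1 * K := by
      rw [hE]; simp only [norm_mul]
      exact mul_le_mul (hZ1b z hz') (hK z hz') (norm_nonneg _) (by linarith)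
    have h3 : ‖E z - P 1‖ ≤ 2 * (Z1 * K) := by
      refine (norm_sub_le _ _).trans ?_
      nlinarith
    nlinarith [mul_nonneg (show 0 ≤ Z1 by linarith) hK0]
  have hbd : ∀ k, |a k - lam| ≤ 6 * Z1 * K * (3 / 4) ^ k := by
    intro k
    have hk : (0:ℝ) < k.factorial := by exact_mod_cast k.factorial_pos
    have h1 := Complex.norm_iteratedDeriv_le_of_forall_mem_sphere_norm_le k (by norm_num)
      hhd.diffContOnCl hsph
    rw [← hterm, abs_div, abs_of_pos hk, div_le_iff₀ hk]
    refine (Complex.abs_re_le_norm _).trans ?_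
    rw [norm_mul, norm_pow, norm_neg, norm_one, one_pow, one_mul]
    refine h1.trans (le_of_eq ?_)
    rw [show (3/4 : ℝ) = (4/3)⁻¹ by norm_num, inv_pow]
    field_simp
  have hsum : HasSum (fun k => (a k - lam) * (2 - β) ^ k) (h β).re := by
    have h1 := Complex.hasSum_taylorSeries_on_ball (r := 4/3) (hhd.differentiableOn (s := Metric.ball 2 (4/3)))
      (z := (β : ℂ)) (by
        rw [mem_ball_iff_norm, show (β : ℂ) - 2 = ((β - 2 : ℝ) : ℂ) by push_cast; ring,
          Complex.norm_real, Real.norm_eq_abs, abs_lt]; constructor <;> linarith)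
    have h2 := (Complex.hasSum_re h1)
    convert! h2 using 1
    ext k
    rw [← hterm, smul_eq_mul, smul_eq_mul]
    rw [show (β - 2 : ℂ) ^ k = (-1) ^ k * (((2 - β) ^ k : ℝ) : ℂ) by
      push_cast; rw [← mul_pow]; congr 1; ring]
    rw [show ((k.factorial : ℂ))⁻¹ * ((-1) ^ k * (((2 - β) ^ k : ℝ) : ℂ) * iteratedDeriv k h 2) =
      ((-1) ^ k * iteratedDeriv k h 2) * (((k.factorial : ℝ)⁻¹ * (2 - β) ^ k : ℝ) : ℂ) by
        push_cast; ring, Complex.re_mul_ofReal]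
    ring
  have hy1 : 1 < 2 - β := by linarith
  have hy2 : 2 - β ≤ 9 / 8 := by linarith
  have htb : ∀ k, |(a k - lam) * (2 - β) ^ k| ≤ 6 * Z1 * K * (27 / 32) ^ k := by
    intro k
    rw [abs_mul, abs_of_nonneg (by positivity : 0 ≤ (2 - β) ^ k)]
    calc _ ≤ 6 * Z1 * K * (3 / 4) ^ k * (9 / 8) ^ k := by
          refine mul_le_mul (hbd k) (pow_le_pow_left₀ (by linarith) hy2 k) (by positivity)
            (by positivity)
      _ = _ := by rw [mul_assoc, ← mul_pow]; norm_num
  have hgeo : HasSum (fun k : ℕ => -(6 * Z1 * K * (27 / 32) ^ M * (27 / 32) ^ k))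
      (-(6 * Z1 * K * (27 / 32) ^ M * (1 - 27 / 32)⁻¹)) :=
    ((hasSum_geometric_of_lt_one (by norm_num) (by norm_num)).mul_left _).neg
  have htail : -(6 * Z1 * K * (27 / 32) ^ M * (1 - 27 / 32)⁻¹) ≤
      ∑' k, (a (k + M) - lam) * (2 - β) ^ (k + M) := by
    rw [← hgeo.tsum_eq]
    refine Summable.tsum_le_tsum (fun k => ?_) hgeo.summable ((summable_nat_add_iff M).2 hsum.summable)
    have := (abs_le.1 (htb (k + M))).1
    rw [pow_add] at this
    linarith
  have htot := hsum.summable.sum_add_tsum_nat_add M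
  rw [hsum.tsum_eq] at htot
  have hhead : c0 - lam * (((2 - β) ^ M - 1) / (1 - β)) ≤
      ∑ k ∈ range M, (a k - lam) * (2 - β) ^ k := by
    simp only [sub_mul, sum_sub_distrib, ← mul_sum]
    rw [geom_sum_eq (by linarith), show 2 - β - 1 = 1 - β by ring]
    have : c0 ≤ ∑ k ∈ range M, a k * (2 - β) ^ k := by
      calc c0 ≤ a 0 * (2 - β) ^ 0 := by simpa only [ha, pow_zero, one_mul, iteratedDeriv_zero, Nat.factorial_zero, Nat.cast_one, div_one, mul_one] using! h2c
        _ ≤ _ := single_le_sum (f := fun k => a k * (2 - β) ^ k)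
            (fun k _ => mul_nonneg (ha0 k) (by positivity)) (mem_range.2 hM)
    linarith
  have hβre : (h β).re ≤ lam / (1 - β) := by
    rw [hhs β (by exact_mod_cast hβ1.ne), Complex.sub_re,
      show (P 1 * ((β:ℂ) - 1)⁻¹) = P 1 * (((β - 1)⁻¹ : ℝ) : ℂ) by push_cast; rfl,
      Complex.re_mul_ofReal]
    have h1 : (β - 1)⁻¹ = -(1 - β)⁻¹ := by rw [← neg_sub, inv_neg]
    rw [h1, div_eq_mul_inv]
    have : (F β).re ≤ 0 := hFβ
    linarith
  have h1β : 0 < 1 - β := by linarith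
  have hfin : c0 / 2 ≤ lam * (2 - β) ^ M / (1 - β) := by
    have e1 : lam * (((2 - β) ^ M - 1) / (1 - β)) = lam * (2 - β) ^ M / (1 - β) - lam / (1 - β) := by
      field_simp
    have e3 : 0 ≤ Z1 * K * (27/32:ℝ)^M := by positivity
    have e4 : 6 * Z1 * K * (27 / 32) ^ M * (1 - 27 / 32)⁻¹ = (192/5) * (Z1 * K * (27/32:ℝ)^M) := by
      norm_num; ring
    nlinarith
  rw [le_div_iff₀ h1β] at hfin
  exact hfin

/-- The numerical consequence of `estermann` used below. -/
lemma estermann_bound : ∃ C : ℝ, 0 < C ∧ ∀ (P : ℂ → ℂ) (b : ℕ → ℂ) (K β : ℝ),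
    Differentiable ℂ P → 0 ≤ b → LSeries.abscissaOfAbsConv b < (2:ℝ) →
    (∀ s : ℂ, 1 < s.re → deriv (fun s => riemannZeta s * P s) s =
      -(riemannZeta s * P s * LSeries b s)) →
    1 ≤ K → (∀ z ∈ Metric.closedBall (2:ℂ) (4 / 3), ‖P z‖ ≤ K) →
    0 ≤ riemannZeta 2 * P 2 → 1 / 64 ≤ (riemannZeta 2 * P 2).re →
    7 / 8 ≤ β → β < 1 → (riemannZeta β * P β).re ≤ 0 →
    1 - β ≤ C * K ^ (8 * (1 - β)) * ‖P 1‖ := by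
  obtain ⟨Z0, hZ0, hest⟩ := estermann
  refine ⟨128 * (Real.exp 1 * (128 * Z0)), by positivity, ?_⟩
  intro P b K β hP hb hbs hd hK1 hK h20 h2c hβ hβ1 hFβ
  set Y := 128 * Z0 * K with hY
  have hY1 : 128 ≤ Y := by nlinarith
  have hlog : 1 / 8 < Real.log Y := by
    have h1 : 1 - Y⁻¹ ≤ Real.log Y := Real.one_sub_inv_le_log_of_pos (by linarith)
    have h2 : Y⁻¹ ≤ 128⁻¹ := inv_anti₀ (by norm_num) hY1
    norm_num at h2 ⊢
    linarith
  set M := ⌈8 * Real.log Y⌉₊ with hM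
  have hM1 : 8 * Real.log Y ≤ M := Nat.le_ceil _
  have hM2 : (M:ℝ) < 8 * Real.log Y + 1 := Nat.ceil_lt_add_one (by linarith)
  have hM3 : 1 ≤ M := by
    have : (1:ℝ) < M := by linarith
    exact_mod_cast this.le
  have hpow : (27 / 32 : ℝ) ^ M ≤ Y⁻¹ := by
    calc (27 / 32 : ℝ) ^ M ≤ (Real.exp (-(1 / 8))) ^ M := by
          gcongr
          linarith [Real.add_one_le_exp (-(1/8 : ℝ))]
      _ = Real.exp (-(M / 8)) := by rw [← Real.exp_nat_mul]; congr 1; ring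
      _ ≤ Real.exp (-Real.log Y) := Real.exp_le_exp.2 (by linarith)
      _ = Y⁻¹ := by rw [Real.exp_neg, Real.exp_log (by linarith)]
  have h1 := hest P b K (1/64) β M hP hb hbs hd hK h20 h2c hβ hβ1 hFβ hM3 (by
    calc Z0 * K * (27 / 32) ^ M ≤ Z0 * K * Y⁻¹ := by gcongr
      _ = 1 / 128 := by rw [hY]; field_simp
      _ = _ := by norm_num)
  have hre : (P 1).re ≤ ‖P 1‖ := Complex.re_le_norm _
  have hβ0 : 0 < 1 - β := by linarith
  have h2 : (2 - β) ^ M ≤ Real.exp 1 * (128 * Z0) * K ^ (8 * (1 - β)) := by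
    calc (2 - β) ^ M ≤ (Real.exp (1 - β)) ^ M := by
          gcongr
          · linarith
          · linarith [Real.add_one_le_exp (1 - β)]
      _ = Real.exp (M * (1 - β)) := by rw [← Real.exp_nat_mul]
      _ ≤ Real.exp (1 + Real.log Y * (8 * (1 - β))) := Real.exp_le_exp.2 (by nlinarith)
      _ = Real.exp 1 * Y ^ (8 * (1 - β)) := by
          rw [Real.exp_add, Real.rpow_def_of_pos (by linarith)]
      _ = Real.exp 1 * ((128 * Z0) ^ (8 * (1 - β)) * K ^ (8 * (1 - β))) := by
          rw [hY, Real.mul_rpow (by linarith) (by linarith)]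
      _ ≤ Real.exp 1 * ((128 * Z0) ^ (1:ℝ) * K ^ (8 * (1 - β))) := by
          gcongr <;> linarith
      _ = _ := by rw [Real.rpow_one]; ring
  have h3 : (P 1).re * (2 - β) ^ M ≤ ‖P 1‖ * (Real.exp 1 * (128 * Z0) * K ^ (8 * (1 - β))) :=
    mul_le_mul hre h2 (by have : 0 < 2 - β := by linarith
                          positivity) (norm_nonneg _)
  nlinarith

lemma conj_lseries {f : ℕ → ℂ} (hf : ∀ n, (starRingEnd ℂ) (f n) = f n) (s : ℂ) :
    LSeries f ((starRingEnd ℂ) s) = (starRingEnd ℂ) (LSeries f s) := by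
  unfold LSeries
  rw [Complex.conj_tsum]
  refine tsum_congr fun n => ?_
  rw [LSeries.term_def, LSeries.term_def]
  split_ifs with h
  · simp
  · rw [map_div₀, hf]
    congr 1
    have := Complex.cpow_conj (n : ℂ) s (by rw [Complex.natCast_arg]; exact Real.pi_pos.ne)
    rw [this]
    simp

lemma im_eq_zero_of_conj {E : ℂ → ℂ} (hE : Differentiable ℂ E)
    (h : ∀ s : ℂ, 1 < s.re → E ((starRingEnd ℂ) s) = (starRingEnd ℂ) (E s)) (x : ℝ) :
    (E x).im = 0 := by
  have h1 : Differentiable ℂ ((starRingEnd ℂ) ∘ E ∘ (starRingEnd ℂ)) := fun z => by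
    have := (hE ((starRingEnd ℂ) z)).conj_conj
    simpa using this
  have h2 : E = (starRingEnd ℂ) ∘ E ∘ (starRingEnd ℂ) := by
    refine AnalyticOnNhd.eq_of_eventuallyEq (z₀ := 2) (fun z _ => hE.analyticAt z)
      (fun z _ => h1.analyticAt z) ?_
    have : {s : ℂ | 1 < s.re} ∈ nhds (2 : ℂ) :=
      (isOpen_lt continuous_const Complex.continuous_re).mem_nhds (by simp)
    filter_upwards [this] with z hz
    simp [h z hz]
  have h3 := congrFun h2 x
  simp only [Function.comp, Complex.conj_ofReal] at h3
  exact Complex.conj_eq_iff_im.1 h3.symm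

/-- Characters with `χ ^ 2 = 1` are real-valued. -/
lemma quad_conj {q : ℕ} {χ : DirichletCharacter ℂ q} (hχ : χ ^ 2 = 1) (n : ZMod q) :
    (starRingEnd ℂ) (χ n) = χ n := by
  rcases MulChar.isQuadratic_iff_sq_eq_one.mpr hχ n with h | h | h <;> simp [h]

lemma quad_nonneg {q : ℕ} {χ : DirichletCharacter ℂ q} (hχ : χ ^ 2 = 1) (n : ZMod q) :
    0 ≤ 1 + χ n := by
  rcases MulChar.isQuadratic_iff_sq_eq_one.mpr hχ n with h | h | h
  · simp [h]
  · rw [h]; exact add_nonneg zero_le_one zero_le_one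
  · simp [h]

lemma quad_im {q : ℕ} [NeZero q] {χ : DirichletCharacter ℂ q} (hχ : χ ^ 2 = 1) (hχ1 : χ ≠ 1)
    (x : ℝ) : (χ.LFunction x).im = 0 := by
  refine im_eq_zero_of_conj (DirichletCharacter.differentiable_LFunction hχ1) (fun s hs => ?_) x
  rw [DirichletCharacter.LFunction_eq_LSeries χ hs, DirichletCharacter.LFunction_eq_LSeries χ
    (by simpa using hs), conj_lseries (fun n => quad_conj hχ _)]

lemma LFunction_two_sub_one {q : ℕ} [NeZero q] (χ : DirichletCharacter ℂ q) :
    ‖χ.LFunction 2 - 1‖ ≤ 3 / 4 := by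
  have hs : (1:ℝ) < (2:ℂ).re := by norm_num
  rw [DirichletCharacter.LFunction_eq_LSeries χ hs]
  have hsum : LSeriesSummable (fun n => χ n) 2 :=
    LSeriesSummable_of_bounded_of_one_lt_re (m := 1) (fun n _ => χ.norm_le_one _) hs
  have h2 : ∀ n, LSeries.term (fun n => χ n) 2 n = χ n / n ^ 2 := by
    intro n
    rw [LSeries.term_def]
    split_ifs with h
    · simp [h]
    · congr 1
      have := Complex.cpow_natCast (n:ℂ) 2
      simpa using this
  have hz := hasSum_zeta_two
  have e1 := hsum.sum_add_tsum_nat_add 2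
  have e2 := hz.summable.sum_add_tsum_nat_add 2
  rw [hz.tsum_eq] at e2
  simp [sum_range_succ] at e2
  have e3 : LSeries (fun n => χ n) 2 - 1 = ∑' k, LSeries.term (fun n => χ n) 2 (k + 2) := by
    unfold LSeries
    rw [← e1]
    simp [sum_range_succ, h2]
  rw [e3]
  have e4 : ‖∑' k, LSeries.term (fun n => χ n) 2 (k + 2)‖ ≤ ∑' k : ℕ, (((k:ℝ) + 2) ^ 2)⁻¹ := by
    refine tsum_of_norm_bounded (f := fun k => LSeries.term (fun n => χ n) 2 (k + 2))
      (g := fun k : ℕ => (((k:ℝ) + 2) ^ 2)⁻¹) (Summable.hasSum ?_) (fun k => ?_)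
    · have := (summable_nat_add_iff 2).2 hz.summable
      simpa using this
    · rw [h2, norm_div, norm_pow, Complex.norm_natCast]
      have := χ.norm_le_one ((k + 2 : ℕ) : ZMod q)
      push_cast at this ⊢
      rw [div_eq_mul_inv]
      have h3 : (0:ℝ) ≤ (((k:ℝ) + 2) ^ 2)⁻¹ := by positivity
      nlinarith
  refine e4.trans ?_
  have hpi : Real.pi ^ 2 ≤ 10.5 := by nlinarith [Real.pi_lt_d2, Real.pi_pos]
  linarith

lemma quad_two {q : ℕ} [NeZero q] {χ : DirichletCharacter ℂ q} (hχ : χ ^ 2 = 1) (hχ1 : χ ≠ 1) :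
    ∃ v : ℝ, 1 / 4 ≤ v ∧ χ.LFunction 2 = v := by
  refine ⟨(χ.LFunction 2).re, ?_, ?_⟩
  · have := (Complex.abs_re_le_norm _).trans (LFunction_two_sub_one χ)
    rw [abs_le] at this
    simp at this
    linarith
  · have := quad_im hχ hχ1 2
    exact Complex.ext (by simp) (by simpa using this)

/-- A real `L`-function without zeros on `[β, 1)` is positive there. -/
lemma quad_pos {q : ℕ} [NeZero q] {χ : DirichletCharacter ℂ q} (hχ : χ ^ 2 = 1) (hχ1 : χ ≠ 1)
    {β : ℝ} (hβ : β ≤ 2) (h0 : ∀ x : ℝ, β ≤ x → x < 1 → χ.LFunction x ≠ 0) :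
    0 < (χ.LFunction β).re := by
  by_contra hneg
  push Not at hneg
  obtain ⟨v, hv, hv2⟩ := quad_two hχ hχ1
  have hcont : ContinuousOn (fun x : ℝ => (χ.LFunction x).re) (Set.Icc β 2) :=
    (Complex.continuous_re.comp ((DirichletCharacter.differentiable_LFunction hχ1).continuous.comp
      Complex.continuous_ofReal)).continuousOn
  obtain ⟨x, hx, hx0⟩ := intermediate_value_Icc hβ hcont
    (show (0:ℝ) ∈ Set.Icc _ _ from ⟨hneg, by
      simp only [Complex.ofReal_ofNat, hv2, Complex.ofReal_re]; linarith⟩)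
  have hz : χ.LFunction x = 0 := Complex.ext hx0 (quad_im hχ hχ1 x)
  rcases lt_or_ge x 1 with h | h
  · exact h0 x hx.1 h hz
  · exact DirichletCharacter.LFunction_ne_zero_of_one_le_re χ (Or.inl hχ1) (by simpa using h) hz

lemma hasDerivAt_LFunction_vonMangoldt {q : ℕ} [NeZero q] (χ : DirichletCharacter ℂ q) {s : ℂ}
    (hs : 1 < s.re) : HasDerivAt χ.LFunction
      (-(χ.LFunction s * LSeries (fun n => χ n * (ArithmeticFunction.vonMangoldt n : ℂ)) s)) s := by
  have h1 : DifferentiableAt ℂ χ.LFunction s :=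
    DirichletCharacter.differentiableAt_LFunction χ s (Or.inl (by rintro rfl; simp at hs))
  have h2 := DirichletCharacter.LSeries_twist_vonMangoldt_eq χ hs
  have h3 : LSeries (fun n => χ n) s ≠ 0 := DirichletCharacter.LSeries_ne_zero_of_one_lt_re χ hs
  have h4 : (fun n : ℕ => χ n * (ArithmeticFunction.vonMangoldt n : ℂ)) =
    (fun n : ℕ => χ n) * (fun n : ℕ => (ArithmeticFunction.vonMangoldt n : ℂ)) := rfl
  have h5 : χ.LFunction s * LSeries (fun n => χ n * (ArithmeticFunction.vonMangoldt n : ℂ)) s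
      = - deriv χ.LFunction s := by
    rw [h4, h2, DirichletCharacter.LFunction_eq_LSeries χ hs,
      DirichletCharacter.deriv_LFunction_eq_deriv_LSeries χ hs]
    field_simp
  rw [h5, neg_neg]
  exact h1.hasDerivAt

lemma hasDerivAt_zeta_vonMangoldt {s : ℂ}
    (hs : 1 < s.re) : HasDerivAt riemannZeta
      (-(riemannZeta s * LSeries (fun n => (ArithmeticFunction.vonMangoldt n : ℂ)) s)) s := by
  have h := hasDerivAt_LFunction_vonMangoldt (1 : DirichletCharacter ℂ 1) hs
  rw [DirichletCharacter.LFunction_modOne_eq] at h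
  have e1 : (fun n : ℕ => (1 : DirichletCharacter ℂ 1) n * (ArithmeticFunction.vonMangoldt n : ℂ))
      = fun n : ℕ => (ArithmeticFunction.vonMangoldt n : ℂ) := by
    ext n
    rw [MulChar.one_apply (isUnit_of_subsingleton _), one_mul]
  rwa [e1] at h

lemma twist_summable {q : ℕ} [NeZero q] (χ : DirichletCharacter ℂ q) {s : ℂ} (hs : 1 < s.re) :
    LSeriesSummable (fun n => χ n * (ArithmeticFunction.vonMangoldt n : ℂ)) s :=
  DirichletCharacter.LSeriesSummable_twist_vonMangoldt χ hs

lemma abscissa_lt_two {f : ℕ → ℂ} (hf : ∀ s : ℂ, 1 < s.re → LSeriesSummable f s) :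
    LSeries.abscissaOfAbsConv f < (2:ℝ) := by
  have h := (hf (3/2 : ℝ) (by norm_num)).abscissaOfAbsConv_le
  refine h.trans_lt ?_
  rw [Complex.ofReal_re]
  exact_mod_cast (by norm_num : (3/2 : ℝ) < 2)

lemma re_ball {z : ℂ} (hz : z ∈ Metric.closedBall (2:ℂ) (4 / 3)) :
    2 / 3 ≤ z.re ∧ z.re ≤ 4 ∧ |z.im| ≤ 4 / 3 := by
  rw [mem_closedBall_iff_norm] at hz
  have h1 := (Complex.abs_re_le_norm (z - 2)).trans hz
  have h2 := (Complex.abs_im_le_norm (z - 2)).trans hz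
  rw [abs_le] at h1
  simp at h1 h2
  exact ⟨by linarith, by linarith, h2⟩

lemma LFunction_ball_bound {q : ℕ} [NeZero q] {χ : DirichletCharacter ℂ q} (hχ : χ ≠ 1)
    {z : ℂ} (hz : z ∈ Metric.closedBall (2:ℂ) (4 / 3)) : ‖χ.LFunction z‖ ≤ 1400 * q := by
  obtain ⟨h1, h2, h3⟩ := re_ball hz
  have hq : (1:ℝ) ≤ q := by exact_mod_cast NeZero.one_le
  refine (LFunction_bound hχ (η := 1/3) (by norm_num) (by norm_num) (by linarith) h2).trans ?_
  have hc : cond q z.im ≤ 10 / 3 * q := by unfold cond; nlinarith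
  calc 100 * (1 + 1 / (1/3 : ℝ)) * cond q z.im ^ (2 * (1/3 : ℝ))
      ≤ 100 * (1 + 1 / (1/3 : ℝ)) * cond q z.im ^ (1 : ℝ) := by
        gcongr
        · linarith [two_le_cond (q := q) z.im]
        · norm_num
    _ ≤ _ := by rw [Real.rpow_one]; norm_num; nlinarith

lemma zeta_two_ge : ∃ v : ℝ, 1 ≤ v ∧ riemannZeta 2 = v := by
  refine ⟨Real.pi ^ 2 / 6, ?_, ?_⟩
  · nlinarith [Real.pi_gt_three]
  · rw [riemannZeta_two]; push_cast; rfl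

/-- `estermann_bound` for `ζ(s) L(s, χ)`. -/
lemma siegel_one : ∃ C : ℝ, 0 < C ∧ ∀ (q : ℕ) [NeZero q] (χ : DirichletCharacter ℂ q) (β : ℝ),
    χ ^ 2 = 1 → χ ≠ 1 → 7 / 8 ≤ β → β < 1 → (riemannZeta β * χ.LFunction β).re ≤ 0 →
    1 - β ≤ C * (1400 * q : ℝ) ^ (8 * (1 - β)) * ‖χ.LFunction 1‖ := by
  obtain ⟨C, hC, h⟩ := estermann_bound
  refine ⟨C, hC, fun q _ χ β hχ hχ1 hβ hβ1 hle => ?_⟩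
  have hq : (1:ℝ) ≤ q := by exact_mod_cast NeZero.one_le
  obtain ⟨v, hv, hv2⟩ := quad_two hχ hχ1
  obtain ⟨w, hw, hw2⟩ := zeta_two_ge
  refine h χ.LFunction (fun n => (ArithmeticFunction.vonMangoldt n : ℂ) +
    χ n * (ArithmeticFunction.vonMangoldt n : ℂ)) (1400 * q) β
    (DirichletCharacter.differentiable_LFunction hχ1) ?_ ?_ ?_ (by linarith)
    (fun z hz => LFunction_ball_bound hχ1 hz) ?_ ?_ hβ hβ1 hle
  · intro n
    have : 0 ≤ (ArithmeticFunction.vonMangoldt n : ℂ) := by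
      exact_mod_cast ArithmeticFunction.vonMangoldt_nonneg
    have h2 := mul_nonneg (quad_nonneg hχ n) this
    simpa [add_mul] using h2
  · exact abscissa_lt_two fun s hs =>
      (ArithmeticFunction.LSeriesSummable_vonMangoldt hs).add (twist_summable χ hs)
  · intro s hs
    have hd := (hasDerivAt_zeta_vonMangoldt hs).mul (hasDerivAt_LFunction_vonMangoldt χ hs)
    have := LSeries_add (ArithmeticFunction.LSeriesSummable_vonMangoldt hs) (twist_summable χ hs)
    rw [show (fun n : ℕ => (ArithmeticFunction.vonMangoldt n : ℂ) +
      χ n * (ArithmeticFunction.vonMangoldt n : ℂ)) =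
      (fun n : ℕ => (ArithmeticFunction.vonMangoldt n : ℂ)) +
      (fun n : ℕ => χ n * (ArithmeticFunction.vonMangoldt n : ℂ)) from rfl, this]
    refine hd.deriv.trans ?_
    ring
  · rw [hv2, hw2]
    have : 0 ≤ w * v := by nlinarith
    exact_mod_cast this
  · rw [hv2, hw2, ← Complex.ofReal_mul, Complex.ofReal_re]
    nlinarith

/-- The product of two characters, as a character modulo the product of the moduli. -/
noncomputable def prodChar {q r : ℕ} (χ : DirichletCharacter ℂ q) (χ' : DirichletCharacter ℂ r) :
    DirichletCharacter ℂ (q * r) :=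
  DirichletCharacter.changeLevel (dvd_mul_right q r) χ *
    DirichletCharacter.changeLevel (dvd_mul_left r q) χ'

lemma changeLevel_natCast {q N : ℕ} (h : q ∣ N) (χ : DirichletCharacter ℂ q) {n : ℕ}
    (hn : n.Coprime N) : DirichletCharacter.changeLevel h χ (n : ZMod N) = χ (n : ZMod q) := by
  have hu : IsUnit (n : ZMod N) := (ZMod.isUnit_iff_coprime n N).2 hn
  have := DirichletCharacter.changeLevel_eq_cast_of_dvd χ h hu.unit
  simpa [ZMod.cast_natCast h] using this

lemma prodChar_apply {q r : ℕ} [NeZero q] [NeZero r] (χ : DirichletCharacter ℂ q)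
    (χ' : DirichletCharacter ℂ r) (n : ℕ) :
    prodChar χ χ' n = χ n * χ' n := by
  unfold prodChar
  by_cases hn : n.Coprime (q * r)
  · rw [MulChar.mul_apply, changeLevel_natCast _ _ hn, changeLevel_natCast _ _ hn]
  · rw [MulChar.map_nonunit _ (fun h => hn ((ZMod.isUnit_iff_coprime n _).1 h))]
    rw [Nat.coprime_mul_iff_right, not_and_or] at hn
    rcases hn with hn | hn
    · rw [MulChar.map_nonunit χ (fun h => hn ((ZMod.isUnit_iff_coprime n _).1 h)), zero_mul]
    · rw [MulChar.map_nonunit χ' (fun h => hn ((ZMod.isUnit_iff_coprime n _).1 h)), mul_zero]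

lemma changeLevel_sq {q N : ℕ} (h : q ∣ N) {χ : DirichletCharacter ℂ q} (hχ : χ ^ 2 = 1) :
    (DirichletCharacter.changeLevel h χ) ^ 2 = 1 := by
  rw [← map_pow, hχ, map_one]

lemma prodChar_sq {q r : ℕ} {χ : DirichletCharacter ℂ q}
    {χ' : DirichletCharacter ℂ r} (h : χ ^ 2 = 1) (h' : χ' ^ 2 = 1) : prodChar χ χ' ^ 2 = 1 := by
  unfold prodChar
  rw [mul_pow, changeLevel_sq _ h, changeLevel_sq _ h', one_mul]

/-- `estermann_bound` for `ζ(s) L(s, χ) L(s, χ') L(s, χ χ')`, which vanishes at a zero `β` of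
`L(s, χ)`. -/
lemma siegel_two : ∃ C : ℝ, 0 < C ∧ ∀ (q r : ℕ) [NeZero q] [NeZero r]
    (χ : DirichletCharacter ℂ q) (χ' : DirichletCharacter ℂ r) (β : ℝ),
    χ ^ 2 = 1 → χ ≠ 1 → χ' ^ 2 = 1 → χ' ≠ 1 → prodChar χ χ' ≠ 1 →
    7 / 8 ≤ β → β < 1 → χ.LFunction β = 0 →
    1 - β ≤ C * (1400 ^ 3 * (q * r) ^ 2 : ℝ) ^ (8 * (1 - β)) *
      ‖χ.LFunction 1 * χ'.LFunction 1 * (prodChar χ χ').LFunction 1‖ := by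
  obtain ⟨C, hC, h⟩ := estermann_bound
  refine ⟨C, hC, fun q r _ _ χ χ' β hχ hχ1 hχ' hχ1' hψ1 hβ hβ1 hz => ?_⟩
  set ψ := prodChar χ χ' with hψ
  have hψ2 : ψ ^ 2 = 1 := prodChar_sq hχ hχ'
  have hq : (1:ℝ) ≤ q := by exact_mod_cast NeZero.one_le
  have hr : (1:ℝ) ≤ r := by exact_mod_cast NeZero.one_le
  have hqr : (1:ℝ) ≤ q * r := by nlinarith
  obtain ⟨v, hv, hv2⟩ := quad_two hχ hχ1
  obtain ⟨v', hv', hv2'⟩ := quad_two hχ' hχ1'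
  obtain ⟨u, hu, hu2⟩ := quad_two hψ2 hψ1
  obtain ⟨w, hw, hw2⟩ := zeta_two_ge
  have hvv : 1 / 16 ≤ v * v' := by nlinarith
  have hvu : 1 / 64 ≤ v * v' * u := by nlinarith
  have hwu : 1 / 64 ≤ w * (v * v' * u) := by nlinarith
  refine h (fun s => χ.LFunction s * χ'.LFunction s * ψ.LFunction s)
    (fun n => (ArithmeticFunction.vonMangoldt n : ℂ) +
      χ n * (ArithmeticFunction.vonMangoldt n : ℂ) + χ' n * (ArithmeticFunction.vonMangoldt n : ℂ)
      + ψ n * (ArithmeticFunction.vonMangoldt n : ℂ)) (1400 ^ 3 * (q * r) ^ 2) β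
    (((DirichletCharacter.differentiable_LFunction hχ1).mul
      (DirichletCharacter.differentiable_LFunction hχ1')).mul
      (DirichletCharacter.differentiable_LFunction hψ1)) ?_ ?_ ?_ (by nlinarith)
    (fun z hz => ?_) ?_ ?_ hβ hβ1 (by simp [hz])
  · intro n
    have : 0 ≤ (ArithmeticFunction.vonMangoldt n : ℂ) := by
      exact_mod_cast ArithmeticFunction.vonMangoldt_nonneg
    have h2 := mul_nonneg (mul_nonneg (quad_nonneg hχ n) (quad_nonneg hχ' n)) this
    have h3 : ψ n = χ n * χ' n := prodChar_apply χ χ' n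
    rw [show (0 : ℕ → ℂ) n = 0 from rfl]
    beta_reduce
    rw [h3]
    convert h2 using 1
    ring
  · exact abscissa_lt_two fun s hs =>
      (((ArithmeticFunction.LSeriesSummable_vonMangoldt hs).add (twist_summable χ hs)).add
        (twist_summable χ' hs)).add (twist_summable ψ hs)
  · intro s hs
    have hd := (hasDerivAt_zeta_vonMangoldt hs).mul (((hasDerivAt_LFunction_vonMangoldt χ hs).mul
      (hasDerivAt_LFunction_vonMangoldt χ' hs)).mul (hasDerivAt_LFunction_vonMangoldt ψ hs))
    have s1 := ArithmeticFunction.LSeriesSummable_vonMangoldt hs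
    have s2 := s1.add (twist_summable χ hs)
    have s3 := s2.add (twist_summable χ' hs)
    have e3 := LSeries_add s3 (twist_summable ψ hs)
    rw [LSeries_add s2 (twist_summable χ' hs), LSeries_add s1 (twist_summable χ hs)] at e3
    refine hd.deriv.trans ?_
    refine Eq.trans ?_ (congrArg (fun x => -(riemannZeta s *
      (χ.LFunction s * χ'.LFunction s * ψ.LFunction s) * x)) e3.symm)
    simp only [Pi.mul_apply]
    ring
  · have b1 := LFunction_ball_bound hχ1 hz
    have b2 := LFunction_ball_bound hχ1' hz
    have b3 := LFunction_ball_bound hψ1 hz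
    rw [norm_mul, norm_mul]
    calc _ ≤ (1400 * q : ℝ) * (1400 * r) * (1400 * (q * r : ℕ)) := by gcongr
      _ = _ := by push_cast; ring
  · simp only [hv2, hw2, hv2', hu2]
    have : 0 ≤ w * (v * v' * u) := by linarith
    exact_mod_cast this
  · simp only [hv2, hw2, hv2', hu2]
    rw [← Complex.ofReal_mul, ← Complex.ofReal_mul, ← Complex.ofReal_mul, Complex.ofReal_re]
    exact hwu

lemma zeta_neg_near_one : ∃ r : ℝ, 0 < r ∧ ∀ β : ℝ, 1 - r < β → β < 1 →
    ∃ v : ℝ, v < 0 ∧ riemannZeta β = v := by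
  obtain ⟨Z, hZ, hZ1, hZs⟩ := exists_zeta_entire
  have hcont : Continuous (fun x : ℝ => (Z x).re) :=
    Complex.continuous_re.comp (hZ.continuous.comp Complex.continuous_ofReal)
  have hev : ∀ᶠ x : ℝ in nhds 1, 0 < (Z x).re :=
    hcont.continuousAt.eventually (lt_mem_nhds (by simp [hZ1]))
  obtain ⟨r, hr, hb⟩ := Metric.eventually_nhds_iff.1 hev
  refine ⟨r, hr, fun β h1 h2 => ?_⟩
  have hre : 0 < (Z β).re := hb (by rw [Real.dist_eq, abs_lt]; constructor <;> linarith)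
  have him : (Z β).im = 0 := by
    refine im_eq_zero_of_conj hZ (fun s hs => ?_) β
    have hs1 : s ≠ 1 := by rintro rfl; simp at hs
    have hs2 : (starRingEnd ℂ) s ≠ 1 := by
      intro h
      exact hs1 (by simpa using congrArg (starRingEnd ℂ) h)
    have hs3 : 1 < ((starRingEnd ℂ) s).re := by simpa using hs
    rw [hZs _ hs1, hZs _ hs2, ← LSeries_one_eq_riemannZeta hs,
      ← LSeries_one_eq_riemannZeta hs3, conj_lseries (by simp)]
    simp
  have hne : (β:ℂ) ≠ 1 := by
    intro h
    have : β = 1 := by exact_mod_cast h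
    linarith
  refine ⟨(Z β).re / (β - 1), div_neg_of_pos_of_neg hre (by linarith), ?_⟩
  have e1 := hZs β hne
  have e2 : Z β = ((Z β).re : ℂ) := Complex.ext (by simp) (by simpa using him)
  have hne' : (β:ℂ) - 1 ≠ 0 := sub_ne_zero.2 hne
  rw [Complex.ofReal_div, ← e2, e1]
  push_cast
  field_simp

/-- If `χ χ'` is trivial, then `χ` and `χ'` come from the same primitive real character, so their
`L`-functions have the same zeros in `(0, 1)`. -/
lemma changeLevel_zero {q r : ℕ} [NeZero q] [NeZero r] {χ : DirichletCharacter ℂ q}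
    {χ' : DirichletCharacter ℂ r} (h : χ ^ 2 = 1) (hχ1 : χ ≠ 1) (hχ1' : χ' ≠ 1)
    (hp : prodChar χ χ' = 1) {β : ℝ} (hβ : 0 < β) (hz : χ.LFunction β = 0) :
    χ'.LFunction β = 0 := by
  have e1 : DirichletCharacter.changeLevel (dvd_mul_left r q) χ' =
      DirichletCharacter.changeLevel (dvd_mul_right q r) χ := by
    have h2 := changeLevel_sq (dvd_mul_right q r) h
    rw [pow_two] at h2
    unfold prodChar at hp
    exact mul_left_cancel (hp.trans h2.symm)
  have e2 := DirichletCharacter.LFunction_changeLevel (dvd_mul_right q r) χ (s := β) (Or.inl hχ1)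
  have e3 := DirichletCharacter.LFunction_changeLevel (dvd_mul_left r q) χ' (s := β) (Or.inl hχ1')
  rw [e1, e2, hz, zero_mul] at e3
  rcases mul_eq_zero.1 e3.symm with h0 | h0
  · exact h0
  · exfalso
    rw [prod_eq_zero_iff] at h0
    obtain ⟨p, hp, hp0⟩ := h0
    have hp2 := Nat.prime_of_mem_primeFactors hp
    have h5 : ‖χ' p * (p:ℂ) ^ (-(β:ℂ))‖ < 1 := by
      rw [norm_mul]
      have h6 : ‖(p:ℂ) ^ (-(β:ℂ))‖ < 1 := by
        rw [Complex.norm_natCast_cpow_of_pos hp2.pos]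
        exact Real.rpow_lt_one_of_one_lt_of_neg (by exact_mod_cast hp2.one_lt) (by simpa using hβ)
      nlinarith [χ'.norm_le_one (p : ZMod r), norm_nonneg (χ' (p : ZMod r)),
        norm_nonneg ((p:ℂ) ^ (-(β:ℂ)))]
    rw [sub_eq_zero] at hp0
    rw [← hp0] at h5
    simp at h5

lemma rpow_split {a x y z : ℝ} (ha : 1 ≤ a) (hx : 1 ≤ x) (hy1 : y ≤ 1) (hyz : y ≤ z) :
    (a * x) ^ y ≤ a * x ^ z := by
  rw [Real.mul_rpow (by linarith) (by linarith)]
  have h1 : a ^ y ≤ a := by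
    calc a ^ y ≤ a ^ (1:ℝ) := Real.rpow_le_rpow_of_exponent_le ha hy1
      _ = a := Real.rpow_one a
  have h2 := Real.rpow_le_rpow_of_exponent_le hx hyz
  have : 0 ≤ x ^ y := by positivity
  nlinarith

/-- Siegel's theorem: an ineffective lower bound for `L(1, χ)`, for real characters `χ`. -/
theorem siegel {ε : ℝ} (hε : 0 < ε) : ∃ c : ℝ, 0 < c ∧ ∀ (q : ℕ) [NeZero q]
    (χ : DirichletCharacter ℂ q), χ ^ 2 = 1 → χ ≠ 1 → c * (q:ℝ) ^ (-ε) ≤ ‖χ.LFunction 1‖ := by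
  obtain ⟨r, hr, hzeta⟩ := zeta_neg_near_one
  obtain ⟨C1, hC1, h1⟩ := siegel_one
  obtain ⟨C2, hC2, h2⟩ := siegel_two
  set ε0 := min (ε / 64) (min (1 / 8) r) with hε0
  have h00 : 0 < ε0 := by positivity
  have h01 : ε0 ≤ ε / 64 := min_le_left _ _
  have h02 : ε0 ≤ 1 / 8 := (min_le_right _ _).trans (min_le_left _ _)
  have h03 : ε0 ≤ r := (min_le_right _ _).trans (min_le_right _ _)
  have key : ∀ {c K q l : ℝ}, 0 < K → 1 ≤ q → c ≤ K * q ^ ε * l → c / K * q ^ (-ε) ≤ l := by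
    intro c K q l hK hq hle
    have hq' : 0 < q := by linarith
    rw [Real.rpow_neg hq'.le, div_mul_eq_mul_div, div_le_iff₀ hK, ← div_eq_mul_inv,
      div_le_iff₀ (by positivity)]
    linarith
  -- Either some real character has a zero close to `1`, which is then played against all other
  -- characters, or every `ζ(β) L(β, χ)` is negative close to `1` and `siegel_one` applies.
  by_cases hex : ∃ (q₁ : ℕ) (_ : NeZero q₁) (χ₁ : DirichletCharacter ℂ q₁) (β : ℝ),
      χ₁ ^ 2 = 1 ∧ χ₁ ≠ 1 ∧ 1 - ε0 < β ∧ β < 1 ∧ χ₁.LFunction β = 0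
  · obtain ⟨q₁, _, χ₁, β, hχ, hχ1, hβ0, hβ1, hz⟩ := hex
    have hq1 : (1:ℝ) ≤ q₁ := by exact_mod_cast NeZero.one_le
    have hl1 : 0 < ‖χ₁.LFunction 1‖ := norm_pos_iff.2
      (DirichletCharacter.LFunction_ne_zero_of_one_le_re χ₁ (Or.inl hχ1) (by simp))
    set η := min (ε / 4) (1 / 2) with hη
    have hη0 : 0 < η := by positivity
    have hη1 : η ≤ ε / 4 := min_le_left _ _
    have hη2 : η ≤ 1 / 2 := min_le_right _ _
    set K2 := C2 * (1400 ^ 3 * (q₁:ℝ) ^ 2) * ‖χ₁.LFunction 1‖ * (100 * (1 + 1 / η) * (2 * q₁))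
      with hK2
    have hK2p : 0 < K2 := by positivity
    have hK1p : 0 < C1 * 1400 := by positivity
    refine ⟨min ((1 - β) / K2) ((1 - β) / (C1 * 1400)),
      lt_min (div_pos (by linarith) hK2p) (div_pos (by linarith) hK1p), ?_⟩
    intro q _ χ hχ' hχ1'
    have hq : (1:ℝ) ≤ q := by exact_mod_cast NeZero.one_le
    have hqe : (0:ℝ) ≤ (q:ℝ) ^ (-ε) := by positivity
    by_cases hp : prodChar χ₁ χ = 1
    · have hz' := changeLevel_zero hχ hχ1 hχ1' hp (by linarith) hz
      have h3 := h1 q χ β hχ' hχ1' (by linarith) hβ1 (by simp [hz'])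
      have h4 : (1400 * q : ℝ) ^ (8 * (1 - β)) ≤ 1400 * (q:ℝ) ^ ε :=
        rpow_split (by norm_num) hq (by linarith) (by linarith)
      have h5 : 1 - β ≤ C1 * 1400 * (q:ℝ) ^ ε * ‖χ.LFunction 1‖ := by
        refine h3.trans ?_
        rw [mul_assoc C1 1400]
        gcongr
      exact (mul_le_mul_of_nonneg_right (min_le_right _ _) hqe).trans (key hK1p hq h5)
    · have h3 := h2 q₁ q χ₁ χ β hχ hχ1 hχ' hχ1' hp (by linarith) hβ1 hz
      have h4 : (1400 ^ 3 * (q₁ * q) ^ 2 : ℝ) ^ (8 * (1 - β)) ≤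
          (1400 ^ 3 * (q₁:ℝ) ^ 2) * (q:ℝ) ^ (ε / 2) := by
        have := rpow_split (a := 1400 ^ 3 * (q₁:ℝ) ^ 2) (x := (q:ℝ) ^ 2) (y := 8 * (1 - β))
          (z := ε / 4) (by nlinarith) (by nlinarith) (by linarith) (by linarith)
        rw [← Real.rpow_natCast (q:ℝ), ← Real.rpow_mul (by linarith)] at this
        convert this using 2
        · push_cast [Real.rpow_two]; ring
        · push_cast; ring_nf
      have h5 : ‖(prodChar χ₁ χ).LFunction 1‖ ≤ 100 * (1 + 1 / η) * (2 * q₁ * (q:ℝ) ^ (ε / 2)) := by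
        refine (LFunction_bound hp hη0 hη2 (by simp; linarith) (by simp)).trans ?_
        gcongr
        have : cond (q₁ * q) (1:ℂ).im = 2 * q₁ * q := by simp [cond]; ring
        rw [this]
        exact rpow_split (by linarith) hq (by linarith) (by linarith)
      have hqq : (q:ℝ) ^ ε = (q:ℝ) ^ (ε / 2) * (q:ℝ) ^ (ε / 2) := by
        rw [← Real.rpow_add (by linarith)]; ring_nf
      have h6 : 1 - β ≤ K2 * (q:ℝ) ^ ε * ‖χ.LFunction 1‖ := by
        refine h3.trans ?_
        rw [norm_mul, norm_mul]
        calc _ ≤ C2 * ((1400 ^ 3 * (q₁:ℝ) ^ 2) * (q:ℝ) ^ (ε / 2)) * (‖χ₁.LFunction 1‖ *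
              ‖χ.LFunction 1‖ * (100 * (1 + 1 / η) * (2 * q₁ * (q:ℝ) ^ (ε / 2)))) := by gcongr
          _ = _ := by rw [hqq, hK2]; ring
      exact (mul_le_mul_of_nonneg_right (min_le_left _ _) hqe).trans (key hK2p hq h6)
  · push Not at hex
    refine ⟨(ε0 / 2) / (C1 * 1400), by positivity, fun q _ χ hχ hχ1 => ?_⟩
    have hq : (1:ℝ) ≤ q := by exact_mod_cast NeZero.one_le
    obtain ⟨v, hv, hv2⟩ := hzeta (1 - ε0 / 2) (by linarith) (by linarith)
    have hpos := quad_pos hχ hχ1 (β := 1 - ε0 / 2) (by linarith) (fun x hx hx1 =>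
      hex q inferInstance χ x hχ hχ1 (by linarith) hx1)
    have h3 := h1 q χ (1 - ε0 / 2) hχ hχ1 (by linarith) (by linarith) (by
      rw [hv2, Complex.re_ofReal_mul]
      nlinarith)
    refine key (by positivity) hq ?_
    have h4 : (1400 * q : ℝ) ^ (8 * (1 - (1 - ε0 / 2))) ≤ 1400 * (q:ℝ) ^ ε :=
      rpow_split (by norm_num) hq (by linarith) (by linarith)
    calc ε0 / 2 = 1 - (1 - ε0 / 2) := by ring
      _ ≤ _ := h3
      _ ≤ C1 * (1400 * (q:ℝ) ^ ε) * ‖χ.LFunction 1‖ := by gcongr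
      _ = _ := by ring

end SieveBV

namespace SieveBV

open Finset MeasureTheory Filter Asymptotics

/-! ### Lower bounds for `L`-functions on the line `Re s = 1` -/

/-- The 3-4-1 inequality, with upper bounds inserted for `ζ` and `L(s, χ ^ 2)`. The parameter `κ`
bounds the contribution of the pole of `L(s, χ ^ 2)` when `χ` is real. -/
lemma raw_341 {q : ℕ} [NeZero q] (χ : DirichletCharacter ℂ q) {η : ℝ}
    (hη : 0 < η) (hη4 : η ≤ 1 / 2) {x t κ : ℝ} (hx : 0 < x) (hx1 : x ≤ 1)
    (hκ : χ ^ 2 = 1 → 1 + 1 / ‖(x + 2 * t * Complex.I : ℂ)‖ ≤ κ) (hκ1 : 1 ≤ κ) :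
    x ^ 3 ≤ 16 * (100 * (1 + 1 / η)) ^ 4 * (cond q t ^ (2 * η)) ^ 4 * κ *
      ‖χ.LFunction (1 + x + t * Complex.I)‖ ^ 4 := by
  set H := 100 * (1 + 1 / η) with hH
  have hH0 : 0 < H := by positivity
  set w := cond q t ^ (2 * η) with hw
  have hτ := two_le_cond (q := q) t
  have hw0 : 0 < w := by positivity
  have h := DirichletCharacter.norm_LFunction_product_ge_one χ hx t
  have b1 : ‖DirichletCharacter.LFunctionTrivChar q (1 + x)‖ ≤ 2 * H * w / x := by
    unfold DirichletCharacter.LFunctionTrivChar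
    refine (LFunction_bound_aux (1 : DirichletCharacter ℂ q) hη hη4 (s := 1 + x)
      (by simp; linarith) (by simp; linarith)
      (by simpa using hx.ne')).trans ?_
    have e1 : cond q (1 + x : ℂ).im ≤ cond q t := by
      unfold cond
      have : (1 + x : ℂ).im = 0 := by simp
      rw [this, abs_zero]
      gcongr
      positivity
    have e0 := two_le_cond (q := q) (1 + x : ℂ).im
    have e2 : (1 + x : ℂ) - 1 = x := by ring
    rw [if_pos rfl, e2, Complex.norm_real, Real.norm_of_nonneg hx.le]
    have e3 : 1 + 1 / x ≤ 2 / x := by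
      rw [le_div_iff₀ hx]; field_simp; linarith
    calc _ ≤ H * w * (2 / x) := by rw [hw]; gcongr
      _ = _ := by ring
  have b2 : ‖(χ ^ 2).LFunction (1 + x + 2 * Complex.I * t)‖ ≤ 2 * H * w * κ := by
    refine (LFunction_bound_aux (χ ^ 2) hη hη4 (s := 1 + x + 2 * Complex.I * t)
      (by simp; linarith) (by simp; linarith) ?_).trans ?_
    · intro h0
      have := congrArg Complex.re h0
      simp at this
      exact hx.ne' this
    · have e1 : cond q (1 + x + 2 * Complex.I * t : ℂ).im ^ (2 * η) ≤ 2 * w := by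
        refine cond_rpow_le hη hη4 ?_
        simp [abs_mul]
      have e0 := two_le_cond (q := q) (1 + x + 2 * Complex.I * t : ℂ).im
      have e2 : (1 + x + 2 * Complex.I * t : ℂ) - 1 = x + 2 * t * Complex.I := by ring
      rw [e2]
      have e3 : (1 + if χ ^ 2 = 1 then 1 / ‖(x + 2 * t * Complex.I : ℂ)‖ else 0) ≤ κ := by
        split_ifs with h2
        · exact hκ h2
        · simpa using hκ1
      have e4 : 0 ≤ (1 + if χ ^ 2 = 1 then 1 / ‖(x + 2 * t * Complex.I : ℂ)‖ else 0) := by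
        split_ifs <;> positivity
      calc _ ≤ H * (2 * w) * κ := by gcongr
        _ = _ := by ring
  rw [norm_mul, norm_mul, norm_pow, norm_pow, mul_comm Complex.I] at h
  set y := ‖χ.LFunction (1 + x + t * Complex.I)‖
  have h3 : 1 ≤ (2 * H * w / x) ^ 3 * y ^ 4 * (2 * H * w * κ) := by
    refine (ge_iff_le.1 h).trans ?_
    gcongr
  have e : (2 * H * w / x) ^ 3 * y ^ 4 * (2 * H * w * κ) = 16 * H ^ 4 * w ^ 4 * κ * y ^ 4 / x ^ 3 := by
    field_simp; ring
  rw [e, le_div_iff₀ (by positivity)] at h3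
  linarith

/-- The 3-4-1 inequality solved for `L(1 + x + i t, χ)`, for `x` not too small. -/
lemma lower_step {q : ℕ} [NeZero q] (χ : DirichletCharacter ℂ q) {η : ℝ}
    (hη : 0 < η) (hη4 : η ≤ 1 / 2) {x t κ C x0 : ℝ} (hx1 : x ≤ 1) (hC : 1 ≤ C)
    (hκ : χ ^ 2 = 1 → 1 + 1 / ‖(x + 2 * t * Complex.I : ℂ)‖ ≤ κ) (hκ1 : 1 ≤ κ)
    (hx0 : x0 = 1 / (256 * C ^ 4 * (100 * (1 + 1 / η)) ^ 4 * (cond q t ^ (2 * η)) ^ 8 * κ))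
    (hx : x0 ≤ x) :
    2 * C * cond q t ^ (2 * η) * x0 ≤ ‖χ.LFunction (1 + x + t * Complex.I)‖ := by
  have hτ := two_le_cond (q := q) t
  have hw0 : 0 < cond q t ^ (2 * η) := by positivity
  have hx00 : 0 < x0 := by rw [hx0]; positivity
  have hraw := raw_341 χ hη hη4 (hx00.trans_le hx) hx1 hκ hκ1
  set H := 100 * (1 + 1 / η) with hH
  have hH0 : 0 < H := by positivity
  set w := cond q t ^ (2 * η) with hw
  set y := ‖χ.LFunction (1 + x + t * Complex.I)‖
  refine le_of_pow_le_pow_left₀ (n := 4) (by norm_num) (norm_nonneg _) ?_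
  have h1 : x0 ^ 3 ≤ x ^ 3 := by gcongr
  have h2 : 16 * H ^ 4 * w ^ 4 * κ = 1 / (16 * C ^ 4 * w ^ 4 * x0) := by
    rw [hx0]; field_simp; norm_num
  rw [h2, div_mul_eq_mul_div, one_mul, le_div_iff₀ (by positivity)] at hraw
  calc (2 * C * w * x0) ^ 4 = x0 ^ 3 * (16 * C ^ 4 * w ^ 4 * x0) := by ring
    _ ≤ x ^ 3 * (16 * C ^ 4 * w ^ 4 * x0) := by gcongr
    _ ≤ y ^ 4 := hraw

/-- The mean value estimate for an `L`-function near the line `Re s = 1`. -/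
lemma LFunction_lipschitz {q : ℕ} [NeZero q] {χ : DirichletCharacter ℂ q} {η : ℝ}
    (hη : 0 < η) (hη4 : η ≤ 1 / 2) {t : ℝ} {S : Set ℂ} (hS : Convex ℝ S)
    (hSd : ∀ z ∈ S, 1 ≤ z.re ∧ z.re ≤ 2 ∧ |z.im| ≤ |t| ∧ (χ ≠ 1 ∨ 1 ≤ |z.im|))
    {a b : ℂ} (ha : a ∈ S) (hb : b ∈ S) :
    ‖χ.LFunction b - χ.LFunction a‖ ≤
      1200 * (1 + 1 / η) / η * cond q t ^ (2 * η) * ‖b - a‖ := by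
  refine Convex.norm_image_sub_le_of_norm_deriv_le (𝕜 := ℂ) (fun z hz => ?_) (fun z hz => ?_)
    hS ha hb
  · refine DirichletCharacter.differentiableAt_LFunction χ z ?_
    rcases (hSd z hz).2.2.2 with h | h
    · exact Or.inr h
    · left
      rintro rfl
      norm_num at h
  · obtain ⟨h1, h2, h3, h4⟩ := hSd z hz
    refine (LFunction_deriv_bound hη hη4 h4 (by linarith) (by linarith)).trans ?_
    have := two_le_cond (q := q) z.im
    gcongr
    unfold cond
    gcongr

/-- The bound of `lower_step` at `x₀` is carried to `0 ≤ x ≤ x₀` by the Lipschitz estimate for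
`L(s, χ)`. -/
lemma lower_kappa {q : ℕ} [NeZero q] (χ : DirichletCharacter ℂ q) {η : ℝ}
    (hη : 0 < η) (hη4 : η ≤ 1 / 2) {x t κ C x0 : ℝ} (hx00 : 0 ≤ x) (hx1 : x ≤ 1)
    (hχ : χ ≠ 1 ∨ 1 ≤ |t|)
    (hC : C = 1200 * (1 + 1 / η) / η)
    (hκ : ∀ x : ℝ, x0 ≤ x → x ≤ 1 → χ ^ 2 = 1 → 1 + 1 / ‖(x + 2 * t * Complex.I : ℂ)‖ ≤ κ)
    (hκ1 : 1 ≤ κ)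
    (hx0 : x0 = 1 / (256 * C ^ 4 * (100 * (1 + 1 / η)) ^ 4 * (cond q t ^ (2 * η)) ^ 8 * κ)) :
    x0 ≤ ‖χ.LFunction (1 + x + t * Complex.I)‖ := by
  have hη2 : 2 ≤ 1 / η := by rw [le_div_iff₀ hη]; linarith
  have hC1 : 1 ≤ C := by
    rw [hC, le_div_iff₀ hη]; nlinarith
  have hτ := two_le_cond (q := q) t
  have hw0 : 1 ≤ cond q t ^ (2 * η) := Real.one_le_rpow (by linarith) (by linarith)
  have hx0p : 0 < x0 := by rw [hx0]; positivity
  have hx01 : x0 ≤ 1 := by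
    rw [hx0, div_le_one (by positivity)]
    have a1 : 1 ≤ C ^ 4 := one_le_pow₀ hC1
    have a2 : 1 ≤ (100 * (1 + 1 / η)) ^ 4 := one_le_pow₀ (by linarith)
    have a3 : 1 ≤ (cond q t ^ (2 * η)) ^ 8 := one_le_pow₀ hw0
    have a4 := one_le_mul_of_one_le_of_one_le (one_le_mul_of_one_le_of_one_le
      (one_le_mul_of_one_le_of_one_le a1 a2) a3) hκ1
    linarith
  have hCw : 1 ≤ C * cond q t ^ (2 * η) := one_le_mul_of_one_le_of_one_le hC1 hw0
  rcases le_total x0 x with h | h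
  · have := lower_step χ hη hη4 hx1 hC1 (hκ x h hx1) hκ1 hx0 h
    nlinarith
  · have h1 := lower_step χ hη hη4 hx01 hC1 (hκ x0 le_rfl hx01) hκ1 hx0 le_rfl
    set S : Set ℂ := {z | 1 ≤ z.re ∧ z.re ≤ 2 ∧ z.im = t} with hSdef
    have hS : Convex ℝ S := by
      have e : S = Complex.re ⁻¹' Set.Icc 1 2 ∩ Complex.im ⁻¹' {t} := by
        ext z; simp [hSdef, and_assoc]
      rw [e]
      exact ((convex_Icc (1:ℝ) 2).linear_preimage Complex.reLm).inter
        ((convex_singleton t).linear_preimage Complex.imLm)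
    have h2 := LFunction_lipschitz (χ := χ) hη hη4 (t := t) hS (fun z hz => by
      obtain ⟨a, b, c⟩ := hz
      exact ⟨a, b, by rw [c], by rwa [c]⟩) (a := 1 + x + t * Complex.I)
      (b := 1 + x0 + t * Complex.I) (by simp [S]; constructor <;> linarith)
      (by simp [S]; constructor <;> linarith)
    rw [← hC] at h2
    have e : (1 + x0 + t * Complex.I : ℂ) - (1 + x + t * Complex.I) = ((x0 - x : ℝ) : ℂ) := by
      push_cast; ring
    rw [e, Complex.norm_real, Real.norm_of_nonneg (by linarith)] at h2
    have h3 := norm_sub_norm_le (χ.LFunction (1 + x0 + t * Complex.I))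
      (χ.LFunction (1 + x + t * Complex.I))
    have h4 : C * cond q t ^ (2 * η) * (x0 - x) ≤ C * cond q t ^ (2 * η) * x0 := by
      gcongr; linarith
    nlinarith

set_option maxHeartbeats 1000000 in
/-- Lower bounds for `L`-functions on `1 ≤ Re s ≤ 2`. Siegel's theorem is needed only for real `χ`
and `s` close to `1`. -/
theorem LFunction_lower {ε : ℝ} (hε : 0 < ε) : ∃ c : ℝ, 0 < c ∧ ∀ (q : ℕ) [NeZero q]
    (χ : DirichletCharacter ℂ q) (s : ℂ), 1 ≤ s.re → s.re ≤ 2 → (χ ≠ 1 ∨ 1 ≤ |s.im|) →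
    c * cond q s.im ^ (-ε) ≤ ‖χ.LFunction s‖ := by
  set η := min (ε / 19) (1 / 2) with hη
  have hη0 : 0 < η := by positivity
  have hη1 : η ≤ ε / 19 := min_le_left _ _
  have hη4 : η ≤ 1 / 2 := min_le_right _ _
  obtain ⟨c1', hc1', hsieg'⟩ := siegel hη0
  set c1 := min c1' 1 with hc1d
  have hc1 : 0 < c1 := by positivity
  have hc11 : c1 ≤ 1 := min_le_right _ _
  set C := 1200 * (1 + 1 / η) / η with hC
  have hη2 : 2 ≤ 1 / η := by rw [le_div_iff₀ hη0]; linarith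
  have hC1 : 1 ≤ C := by
    rw [hC, le_div_iff₀ hη0]; nlinarith
  set H := 100 * (1 + 1 / η) with hH
  set c := min (c1 / 2) (c1 / (8 * C) / (256 * C ^ 4 * H ^ 4)) with hc
  refine ⟨c, by positivity, ?_⟩
  intro q _ χ s hs1 hs2 hχ
  have hq : (1:ℝ) ≤ q := by exact_mod_cast NeZero.one_le
  set t := s.im with ht
  set τ := cond q t with hτd
  have hτ : 2 ≤ τ := two_le_cond t
  set w := τ ^ (2 * η) with hw
  have hw1 : 1 ≤ w := Real.one_le_rpow (by linarith) (by linarith)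
  set x := s.re - 1 with hx
  have hs : s = 1 + x + t * Complex.I := by
    apply Complex.ext <;> simp [hx, ht]
  -- `r` is the radius around `1` in which Siegel's theorem is used
  set r := c1 * τ ^ (-(3 * η)) / (4 * C) with hr
  have hτ3 : τ ^ (-(3 * η)) ≤ 1 := Real.rpow_le_one_of_one_le_of_nonpos (by linarith) (by linarith)
  have hr0 : 0 < r := by positivity
  have hr1 : r ≤ 1 := by
    rw [hr, div_le_one (by positivity)]
    have : c1 * τ ^ (-(3 * η)) ≤ 1 := mul_le_one₀ hc11 (by positivity) hτ3
    linarith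
  set κ := 1 + 1 / r with hκ
  have hκ1 : 1 ≤ κ := by rw [hκ]; linarith [one_div_pos.2 hr0]
  set x0 := 1 / (256 * C ^ 4 * H ^ 4 * w ^ 8 * κ) with hx0
  have hbig : c * τ ^ (-ε) ≤ x0 := by
    have e1 : κ ≤ 2 / r := by
      rw [hκ, le_div_iff₀ hr0]; field_simp; linarith
    have e2 : 1 / (256 * C ^ 4 * H ^ 4 * w ^ 8 * (2 / r)) ≤ x0 := by
      rw [hx0]; gcongr
    refine le_trans ?_ e2
    have e3 : 1 / (256 * C ^ 4 * H ^ 4 * w ^ 8 * (2 / r)) =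
        c1 / (8 * C) / (256 * C ^ 4 * H ^ 4) * (τ ^ (-(3 * η)) / w ^ 8) := by
      rw [hr]; field_simp; norm_num
    have e4 : τ ^ (-(3 * η)) / w ^ 8 = τ ^ (-(19 * η)) := by
      rw [hw, ← Real.rpow_natCast, ← Real.rpow_mul (by linarith), ← Real.rpow_sub (by linarith)]
      congr 1
      push_cast; ring
    rw [e3, e4]
    gcongr
    · exact min_le_right _ _
    · linarith
    · linarith
  have hnorm1 : ∀ x : ℝ, |x| ≤ ‖(x + 2 * t * Complex.I : ℂ)‖ := fun x => by
    simpa using Complex.abs_re_le_norm (x + 2 * t * Complex.I : ℂ)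
  have hnorm2 : ∀ x : ℝ, 2 * |t| ≤ ‖(x + 2 * t * Complex.I : ℂ)‖ := fun x => by
    simpa [abs_mul] using Complex.abs_im_le_norm (x + 2 * t * Complex.I : ℂ)
  by_cases hA : χ ^ 2 ≠ 1 ∨ r ≤ |t|
  · refine hbig.trans ?_
    rw [hs]
    refine lower_kappa χ hη0 hη4 (by linarith) (by linarith) hχ hC (fun x hxx _ h2 => ?_) hκ1 hx0
    have hrt : r ≤ |t| := hA.resolve_left (by simpa using h2)
    have := hnorm2 x
    rw [hκ]
    gcongr
    linarith [abs_nonneg t]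
  · push Not at hA
    obtain ⟨hχ2, htr⟩ := hA
    have hχ1 : χ ≠ 1 := hχ.resolve_right (by linarith)
    rcases le_or_gt x r with hxr | hxr
    · have hsg := hsieg' q χ hχ2 hχ1
      have hqτ : (q:ℝ) ≤ τ := by
        rw [hτd]; unfold cond; nlinarith [abs_nonneg t]
      have hsg2 : c1 * τ ^ (-η) ≤ ‖χ.LFunction 1‖ := by
        refine le_trans ?_ hsg
        refine mul_le_mul (min_le_left _ _) ?_ (by positivity) hc1'.le
        exact Real.rpow_le_rpow_of_nonpos (by linarith) hqτ (by linarith)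
      set S : Set ℂ := {z | 1 ≤ z.re ∧ z.re ≤ 2 ∧ |z.im| ≤ |t|} with hSdef
      have hS : Convex ℝ S := by
        have e : S = Complex.re ⁻¹' Set.Icc 1 2 ∩ Complex.im ⁻¹' Set.Icc (-|t|) |t| := by
          ext z; simp [hSdef, and_assoc, abs_le]
        rw [e]
        exact ((convex_Icc (1:ℝ) 2).linear_preimage Complex.reLm).inter
          ((convex_Icc (-|t|) |t|).linear_preimage Complex.imLm)
      have h2 := LFunction_lipschitz (χ := χ) hη0 hη4 (t := t) hS (fun z hz => by
        obtain ⟨a, b, d⟩ := hz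
        exact ⟨a, b, d, Or.inl hχ1⟩) (a := 1) (b := s) (by simp [S])
        ⟨hs1, hs2, le_rfl⟩
      rw [← hC] at h2
      have h3 : ‖s - 1‖ ≤ 2 * r := by
        have e : s - 1 = x + t * Complex.I := by rw [hs]; ring
        rw [e]
        refine (norm_add_le _ _).trans ?_
        rw [norm_mul, Complex.norm_I, Complex.norm_real, Complex.norm_real, mul_one, Real.norm_eq_abs,
          Real.norm_eq_abs, abs_of_nonneg (by linarith : 0 ≤ x)]
        linarith
      have h4 : C * w * ‖s - 1‖ ≤ c1 * τ ^ (-η) / 2 := by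
        calc _ ≤ C * w * (2 * r) := by gcongr
          _ = c1 * (w * τ ^ (-(3 * η))) / 2 := by rw [hr]; field_simp; norm_num
          _ = _ := by
            rw [hw, ← Real.rpow_add (by linarith)]
            congr 3; ring
      have h5 := norm_sub_norm_le (χ.LFunction 1) (χ.LFunction s)
      rw [norm_sub_rev] at h5
      have h6 : c * τ ^ (-ε) ≤ c1 / 2 * τ ^ (-η) := by
        gcongr
        · exact min_le_left _ _
        · linarith
        · linarith
      nlinarith
    · refine hbig.trans ?_
      rw [hs]
      have hx0r : x0 ≤ x := by
        refine le_trans ?_ hxr.le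
        have a1 : 1 ≤ C ^ 4 := one_le_pow₀ hC1
        have a2 : 1 ≤ H ^ 4 := one_le_pow₀ (by linarith)
        have a3 : 1 ≤ w ^ 8 := one_le_pow₀ hw1
        have a4 := one_le_mul_of_one_le_of_one_le
          (one_le_mul_of_one_le_of_one_le a1 a2) a3
        rw [hx0, div_le_iff₀ (by positivity)]
        have a5 : 1 ≤ r * κ := by rw [hκ]; field_simp; linarith
        nlinarith
      have := lower_step χ hη0 hη4 (x := x) (t := t) (by linarith) hC1 (fun _ => by
        rw [hκ]
        gcongr
        have := hnorm1 x
        rw [abs_of_nonneg (by linarith)] at this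
        linarith) hκ1 hx0 hx0r
      have hCw : 1 ≤ C * w := one_le_mul_of_one_le_of_one_le hC1 hw1
      have hx0p : 0 < x0 := by positivity
      have hfin : x0 ≤ 2 * C * w * x0 := by nlinarith
      exact hfin.trans this

/-! ### A Perron formula -/

lemma line_norm_sq {σ : ℝ} (t : ℝ) : ‖(σ + t * Complex.I : ℂ)‖ ^ 2 = σ ^ 2 + t ^ 2 := by
  rw [← Complex.normSq_eq_norm_sq, Complex.normSq_add_mul_I]

lemma line_sq_ge {σ : ℝ} (hσ : 1 ≤ σ) (t : ℝ) :
    (1 + |t|) ^ 2 / 2 ≤ ‖(σ + t * Complex.I : ℂ)‖ ^ 2 := by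
  rw [line_norm_sq]
  nlinarith [sq_nonneg (1 - |t|), sq_abs t]

lemma line_inv_sq_le {σ : ℝ} (hσ : 1 ≤ σ) (t : ℝ) :
    ‖(1 / (σ + t * Complex.I) ^ 2 : ℂ)‖ ≤ 2 * (1 + |t|) ^ (-2 : ℝ) := by
  have h := line_sq_ge hσ t
  have h0 : 0 < 1 + |t| := by positivity
  rw [norm_div, norm_one, norm_pow, Real.rpow_neg h0.le, Real.rpow_two, ← div_eq_mul_inv,
    div_le_div_iff₀ (by linarith [sq_pos_of_pos h0]) (by positivity)]
  linarith

lemma line_inv_sq_integrable {σ : ℝ} (hσ : 1 ≤ σ) :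
    Integrable (fun t : ℝ => (1 / (σ + t * Complex.I) ^ 2 : ℂ)) := by
  have h1 := (integrable_one_add_norm (E := ℝ) (r := 2) (μ := volume)
    (by simp)).const_mul 2
  refine h1.mono' ?_ (Eventually.of_forall fun t => by
    simpa using line_inv_sq_le hσ t)
  apply Measurable.aestronglyMeasurable
  fun_prop

lemma mellin_log {s : ℂ} (hs : 0 < s.re) :
    MellinConvergent (fun t : ℝ => ((Real.log t : ℝ) • (Set.Ioc (0:ℝ) 1).indicator (fun _ => (1:ℂ)) t)) s ∧
    mellin (fun t : ℝ => ((Real.log t : ℝ) • (Set.Ioc (0:ℝ) 1).indicator (fun _ => (1:ℂ)) t)) s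
      = -(1 / s ^ 2) := by
  have h := mellin_hasDerivAt_of_isBigO_rpow (E := ℂ) (a := s.re + 1) (b := 0)
    (f := (Set.Ioc (0:ℝ) 1).indicator (fun _ => (1:ℂ))) (s := s) ?_ ?_ (by linarith) ?_ hs
  · refine ⟨h.1, ?_⟩
    have h2 : HasDerivAt (fun s : ℂ => 1 / s) (-(1 / s ^ 2)) s := by
      have hs0 : s ≠ 0 := by rintro rfl; simp at hs
      simpa using hasDerivAt_inv hs0
    have h3 : mellin ((Set.Ioc (0:ℝ) 1).indicator (fun _ => (1:ℂ))) =ᶠ[nhds s] fun s => 1 / s := by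
      filter_upwards [(isOpen_lt continuous_const Complex.continuous_re).mem_nhds hs] with z hz
      exact (hasMellin_one_Ioc hz).2
    exact h.2.unique (h2.congr_of_eventuallyEq h3)
  · refine Integrable.locallyIntegrable ?_ |>.locallyIntegrableOn _
    rw [integrable_indicator_iff measurableSet_Ioc]
    simp
  · refine IsBigO.of_bound 0 ?_
    filter_upwards [eventually_gt_atTop 1] with t ht
    rw [Set.indicator_of_notMem (by simp [ht])]
    simp
  · refine IsBigO.of_bound 1 (Eventually.of_forall fun t => ?_)
    simp only [neg_zero, Real.rpow_zero, norm_one, mul_one]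
    refine (norm_indicator_le_norm_self _ _).trans (by simp)

/-- The Mellin transform of `max (-log y) 0` is `1 / s ^ 2`; this is the inversion formula for it. -/
lemma perron_kernel {σ y : ℝ} (hσ : 1 ≤ σ) (hy : 0 < y) :
    (1 / (2 * Real.pi) : ℝ) • ∫ t : ℝ, (y : ℂ) ^ (-(σ + t * Complex.I)) •
      (1 / (σ + t * Complex.I) ^ 2 : ℂ) = ((max (-Real.log y) 0 : ℝ) : ℂ) := by
  set f : ℝ → ℂ := fun t : ℝ =>
    ((Real.log t : ℝ) • (Set.Ioc (0:ℝ) 1).indicator (fun _ => (1:ℂ)) t) with hf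
  have hre : ∀ t : ℝ, (σ + t * Complex.I : ℂ).re = σ := by simp
  have h := mellinInv_mellin_eq σ f (x := y) hy (mellin_log (s := σ) (by simp; linarith)).1 ?_ ?_
  · unfold mellinInv at h
    have e : ∀ t : ℝ, mellin f (σ + t * Complex.I) = -(1 / (σ + t * Complex.I) ^ 2 : ℂ) := fun t =>
      (mellin_log (by rw [hre]; linarith)).2
    simp only [e, smul_neg, integral_neg] at h
    rw [neg_eq_iff_eq_neg] at h
    rw [h, hf]
    simp only [Set.indicator, Set.mem_Ioc, hy, true_and]
    split_ifs with h1
    · rw [max_eq_left (by simpa using Real.log_nonpos hy.le h1)]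
      simp
    · rw [max_eq_right (by simpa using Real.log_nonneg (le_of_not_ge h1))]
      simp
  · have e : (fun t : ℝ => mellin f (σ + t * Complex.I)) =
      fun t : ℝ => -(1 / (σ + t * Complex.I) ^ 2 : ℂ) := by
      ext t
      exact (mellin_log (by rw [hre]; linarith)).2
    unfold Complex.VerticalIntegrable
    rw [e]
    exact (line_inv_sq_integrable hσ).neg
  · have e : f =ᶠ[nhds y] fun t => ((min (Real.log t) 0 : ℝ) : ℂ) := by
      filter_upwards [lt_mem_nhds hy] with t ht
      simp only [hf, Set.indicator, Set.mem_Ioc, ht, true_and]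
      split_ifs with h1
      · rw [min_eq_left (Real.log_nonpos ht.le h1)]; simp
      · rw [min_eq_right (Real.log_nonneg (le_of_not_ge h1))]; simp
    refine ContinuousAt.congr ?_ e.symm
    have := (Real.continuousAt_log hy.ne')
    fun_prop

/-- Perron's formula with the weight `log (x / n)`, whose kernel `1 / s ^ 2` is absolutely
integrable. -/
lemma perron {b : ℕ → ℂ} {σ x : ℝ} (hσ : 1 ≤ σ) (hx : 1 ≤ x) (hb : LSeriesSummable b σ) :
    ∑ n ∈ Icc 1 ⌊x⌋₊, b n * (Real.log (x / n) : ℂ) =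
      (1 / (2 * Real.pi) : ℝ) • ∫ t : ℝ, (x : ℂ) ^ (σ + t * Complex.I : ℂ) *
        LSeries b (σ + t * Complex.I) * (1 / (σ + t * Complex.I) ^ 2 : ℂ) := by
  have hx0 : 0 < x := by linarith
  have hre : ∀ t : ℝ, (σ + t * Complex.I : ℂ).re = σ := by simp
  set F : ℕ → ℝ → ℂ := fun n t => (x : ℂ) ^ (σ + t * Complex.I : ℂ) *
    LSeries.term b (σ + t * Complex.I) n * (1 / (σ + t * Complex.I) ^ 2 : ℂ) with hF
  have hnorm : ∀ n t, ‖F n t‖ = x ^ σ * ‖LSeries.term b σ n‖ *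
      ‖(1 / (σ + t * Complex.I) ^ 2 : ℂ)‖ := by
    intro n t
    simp only [hF]
    rw [norm_mul, norm_mul, Complex.norm_cpow_eq_rpow_re_of_pos hx0, hre, LSeries.norm_term_eq,
      LSeries.norm_term_eq, hre, Complex.ofReal_re]
  have hmeas : ∀ n, AEStronglyMeasurable (F n) volume := by
    intro n
    apply Measurable.aestronglyMeasurable
    simp only [hF, LSeries.term_def]
    rcases eq_or_ne n 0 with h | h
    · simp [h]
    · simp only [h, if_false]
      have hc : Continuous fun t : ℝ => (x : ℂ) ^ (σ + t * Complex.I : ℂ) :=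
        Continuous.const_cpow (by fun_prop) (Or.inl (by exact_mod_cast hx0.ne'))
      have hc2 : Continuous fun t : ℝ => (n : ℂ) ^ (σ + t * Complex.I : ℂ) :=
        Continuous.const_cpow (by fun_prop) (Or.inl (by exact_mod_cast h))
      have := hc.measurable
      have := hc2.measurable
      fun_prop
  have hInt : ∀ n, Integrable (F n) := by
    intro n
    refine ((line_inv_sq_integrable hσ).norm.const_mul (x ^ σ * ‖LSeries.term b σ n‖)).mono' (hmeas n)
      (Eventually.of_forall fun t => (hnorm n t).le)
  have hsum : Summable fun n => ∫ t, ‖F n t‖ := by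
    simp only [hnorm, integral_const_mul]
    exact ((hb.norm.mul_left _).mul_right _)
  have h := hasSum_integral_of_summable_integral_norm hInt hsum
  have hF2 : ∀ t, ∑' n, F n t = (x : ℂ) ^ (σ + t * Complex.I : ℂ) *
        LSeries b (σ + t * Complex.I) * (1 / (σ + t * Complex.I) ^ 2 : ℂ) := by
    intro t
    simp only [hF]
    rw [tsum_mul_right, tsum_mul_left]
    rfl
  simp only [hF2] at h
  have hval : ∀ n, (1 / (2 * Real.pi) : ℝ) • ∫ t, F n t =
      if n ∈ Icc 1 ⌊x⌋₊ then b n * (Real.log (x / n) : ℂ) else 0 := by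
    intro n
    rcases Nat.eq_zero_or_pos n with h0 | h0
    · simp [hF, h0]
    · have hn : (0:ℝ) < n := by exact_mod_cast h0
      have e : ∀ t, F n t = b n * (((n / x : ℝ) : ℂ) ^ (-(σ + t * Complex.I)) •
          (1 / (σ + t * Complex.I) ^ 2 : ℂ)) := by
        intro t
        simp only [hF]
        rw [LSeries.term_of_ne_zero h0.ne', Complex.ofReal_div, Complex.div_cpow_ofReal_nonneg
          hn.le hx0.le, Complex.cpow_neg (x:ℂ), Complex.cpow_neg ((n:ℝ):ℂ), smul_eq_mul]
        simp only [Complex.ofReal_natCast]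
        rw [div_inv_eq_mul]
        ring
      simp only [e, integral_const_mul]
      rw [← mul_smul_comm, perron_kernel hσ (by positivity : 0 < (n:ℝ) / x), ← Real.log_inv, inv_div]
      simp only [mem_Icc]
      split_ifs with h1
      · rw [max_eq_left]
        refine Real.log_nonneg ((one_le_div hn).2 ?_)
        exact (Nat.le_floor_iff hx0.le).1 h1.2
      · have : ⌊x⌋₊ < n := by
          by_contra h2
          exact h1 ⟨h0, by omega⟩
        have := (Nat.floor_lt hx0.le).1 this
        rw [max_eq_right]
        · simp
        · exact Real.log_nonpos (by positivity) ((div_le_one hn).2 this.le)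
  have h2 := (h.const_smul (1 / (2 * Real.pi) : ℝ)).tsum_eq
  rw [← h2, tsum_congr hval, tsum_eq_sum (s := Icc 1 ⌊x⌋₊)]
  · refine sum_congr rfl fun n hn => by simp only [hn, if_true]
  · intro n hn
    simp only [hn, if_false]

lemma perron_bound : ∃ C : ℝ, 0 < C ∧ ∀ (b : ℕ → ℂ) (B σ x : ℝ), 1 ≤ σ → 1 ≤ x → 0 ≤ B →
    LSeriesSummable b σ → (∀ t : ℝ, ‖LSeries b (σ + t * Complex.I)‖ ≤ B * (|t| + 2) ^ (1 / 2 : ℝ)) →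
    ‖∑ n ∈ Icc 1 ⌊x⌋₊, b n * (Real.log (x / n) : ℂ)‖ ≤ C * B * x ^ σ := by
  set J := ∫ t : ℝ, (1 + ‖t‖) ^ (-(3 / 2) : ℝ) with hJ
  have hJi := integrable_one_add_norm (E := ℝ) (r := 3 / 2) (μ := volume) (by simp; norm_num)
  have hJ0 : 0 ≤ J := integral_nonneg fun t => by positivity
  refine ⟨4 * J + 1, by positivity, fun b B σ x hσ hx hB hb hL => ?_⟩
  rw [perron hσ hx hb, norm_smul]
  have hx0 : 0 < x := by linarith
  have h1 : ‖∫ t : ℝ, (x : ℂ) ^ (σ + t * Complex.I : ℂ) *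
        LSeries b (σ + t * Complex.I) * (1 / (σ + t * Complex.I) ^ 2 : ℂ)‖ ≤
      ∫ t : ℝ, 4 * B * x ^ σ * (1 + ‖t‖) ^ (-(3 / 2) : ℝ) := by
    refine norm_integral_le_of_norm_le (hJi.const_mul _) (Eventually.of_forall fun t => ?_)
    rw [norm_mul, norm_mul, Complex.norm_cpow_eq_rpow_re_of_pos hx0]
    have a1 := hL t
    have a2 := line_inv_sq_le hσ t
    have a3 : (|t| + 2) ^ (1 / 2 : ℝ) ≤ 2 * (1 + |t|) ^ (1 / 2 : ℝ) := by
      calc (|t| + 2) ^ (1 / 2 : ℝ) ≤ (4 * (1 + |t|)) ^ (1 / 2 : ℝ) := by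
            gcongr; linarith [abs_nonneg t]
        _ = _ := by
          rw [Real.mul_rpow (by norm_num) (by positivity)]
          congr 1
          rw [show (4:ℝ) = 2 ^ (2:ℝ) by norm_num, ← Real.rpow_mul (by norm_num)]
          norm_num
    have a4 : (1 + |t|) ^ (1 / 2 : ℝ) * (1 + |t|) ^ (-2 : ℝ) = (1 + |t|) ^ (-(3 / 2) : ℝ) := by
      rw [← Real.rpow_add (by positivity)]; norm_num
    have hre : (σ + t * Complex.I : ℂ).re = σ := by simp
    rw [hre, Real.norm_eq_abs, ← a4]
    calc _ ≤ x ^ σ * (B * (2 * (1 + |t|) ^ (1 / 2 : ℝ))) * (2 * (1 + |t|) ^ (-2 : ℝ)) := by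
          gcongr
          exact a1.trans (by gcongr)
      _ = _ := by ring
  rw [integral_const_mul] at h1
  have hpi : ‖(1 / (2 * Real.pi) : ℝ)‖ ≤ 1 := by
    rw [Real.norm_of_nonneg (by positivity), div_le_one (by positivity)]
    linarith [Real.pi_gt_three]
  have : 0 ≤ B * x ^ σ := by positivity
  calc _ ≤ 1 * (4 * B * x ^ σ * J) := by gcongr
    _ ≤ _ := by nlinarith

/-! ### Removing the smoothing -/

lemma sum_Icc_add_Ioc {E : Type*} [AddCommMonoid E] (f : ℕ → E) {m n : ℕ} (h : m ≤ n) :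
    ∑ i ∈ Icc 1 m, f i + ∑ i ∈ Ioc m n, f i = ∑ i ∈ Icc 1 n, f i := by
  have e : ∀ k, Icc 1 k = Ioc 0 k := fun k => by ext; simp [Nat.lt_iff_add_one_le]
  rw [e, e, sum_Ioc_consecutive _ (Nat.zero_le _) h]

/-- The smoothed sums at `y` and `y e ^ h` differ by `h ∑_{n ≤ y} b(n)` up to the terms with
`y < n ≤ y e ^ h`. -/
lemma desmooth {b : ℕ → ℂ} {y h R W : ℝ} (hy : 1 ≤ y) (h0 : 0 < h) (h1 : h ≤ 1)
    (hS : ‖∑ n ∈ Icc 1 ⌊y⌋₊, b n * (Real.log (y / n) : ℂ)‖ ≤ R)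
    (hS' : ‖∑ n ∈ Icc 1 ⌊y * Real.exp h⌋₊, b n * (Real.log (y * Real.exp h / n) : ℂ)‖ ≤ R)
    (hb : ∀ n : ℕ, 1 ≤ n → (n:ℝ) ≤ y * Real.exp h → ‖b n‖ ≤ W) :
    ‖∑ n ∈ Icc 1 ⌊y⌋₊, b n‖ ≤ 2 * R / h + W * (2 * h * y + 1) := by
  have hy0 : 0 < y := by linarith
  have hexp : 1 ≤ Real.exp h := Real.one_le_exp h0.le
  have hexp2 : Real.exp h ≤ 1 + 2 * h := by
    have := Real.abs_exp_sub_one_le (x := h) (by rw [abs_of_pos h0]; exact h1)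
    rw [abs_of_pos h0] at this
    linarith [(abs_le.1 this).2]
  have hle : ⌊y⌋₊ ≤ ⌊y * Real.exp h⌋₊ := Nat.floor_mono (by nlinarith)
  have hW : 0 ≤ W := (norm_nonneg _).trans (hb 1 le_rfl (by push_cast; nlinarith))
  have e1 : ∑ n ∈ Icc 1 ⌊y⌋₊, b n * (Real.log (y * Real.exp h / n) : ℂ) =
      ∑ n ∈ Icc 1 ⌊y⌋₊, b n * (Real.log (y / n) : ℂ) + h * ∑ n ∈ Icc 1 ⌊y⌋₊, b n := by
    rw [mul_sum, ← sum_add_distrib]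
    refine sum_congr rfl fun n hn => ?_
    have hn : (0:ℝ) < n := by exact_mod_cast (mem_Icc.1 hn).1
    rw [show y * Real.exp h / n = y / n * Real.exp h by ring,
      Real.log_mul (by positivity) (by positivity), Real.log_exp]
    push_cast
    ring
  have e2 := sum_Icc_add_Ioc (fun n => b n * (Real.log (y * Real.exp h / n) : ℂ)) hle
  rw [e1] at e2
  have e3 : ‖∑ n ∈ Ioc ⌊y⌋₊ ⌊y * Real.exp h⌋₊, b n * (Real.log (y * Real.exp h / n) : ℂ)‖ ≤
      (2 * h * y + 1) * (W * h) := by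
    have hc : (((Ioc ⌊y⌋₊ ⌊y * Real.exp h⌋₊).card : ℕ) : ℝ) ≤ 2 * h * y + 1 := by
      rw [Nat.card_Ioc, Nat.cast_sub hle]
      have a1 := Nat.floor_le (by positivity : 0 ≤ y * Real.exp h)
      have a2 := Nat.lt_floor_add_one y
      nlinarith
    refine (norm_sum_le_of_le (f := fun n => b n * (Real.log (y * Real.exp h / n) : ℂ)) _
      (n := fun _ => W * h) fun n hn => ?_).trans ?_
    · rw [mem_Ioc] at hn
      have hn1 : 1 ≤ n := by omega
      have hn0 : (0:ℝ) < n := by exact_mod_cast hn1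
      have hn2 : (n:ℝ) ≤ y * Real.exp h := (Nat.le_floor_iff (by positivity)).1 hn.2
      have hn3 : y < n := (Nat.floor_lt hy0.le).1 hn.1
      rw [norm_mul, Complex.norm_real, Real.norm_of_nonneg
        (Real.log_nonneg ((one_le_div hn0).2 hn2))]
      gcongr
      · exact Real.log_nonneg ((one_le_div hn0).2 hn2)
      · exact hb n hn1 hn2
      · rw [show y * Real.exp h / n = y / n * Real.exp h by ring,
          Real.log_mul (by positivity) (by positivity), Real.log_exp]
        have := Real.log_nonpos (by positivity) ((div_le_one hn0).2 hn3.le)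
        linarith
    · rw [sum_const, nsmul_eq_mul]
      gcongr
  have e4 : (h:ℂ) * ∑ n ∈ Icc 1 ⌊y⌋₊, b n =
      ∑ n ∈ Icc 1 ⌊y * Real.exp h⌋₊, b n * (Real.log (y * Real.exp h / n) : ℂ) -
      ∑ n ∈ Icc 1 ⌊y⌋₊, b n * (Real.log (y / n) : ℂ) -
      ∑ n ∈ Ioc ⌊y⌋₊ ⌊y * Real.exp h⌋₊, b n * (Real.log (y * Real.exp h / n) : ℂ) := by
    rw [← e2]; ring
  have e5 : h * ‖∑ n ∈ Icc 1 ⌊y⌋₊, b n‖ ≤ R + R + (2 * h * y + 1) * (W * h) := by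
    calc _ = ‖(h:ℂ) * ∑ n ∈ Icc 1 ⌊y⌋₊, b n‖ := by
          rw [norm_mul, Complex.norm_real, Real.norm_of_nonneg h0.le]
      _ ≤ _ := by
          rw [e4]
          refine (norm_sub_le _ _).trans (add_le_add ((norm_sub_le _ _).trans ?_) e3)
          linarith
  have e6 : 2 * R / h + W * (2 * h * y + 1) = (R + R + (2 * h * y + 1) * (W * h)) / h := by
    field_simp; ring
  rw [e6, le_div_iff₀ h0]
  linarith

/-- Partial summation against a nonnegative decreasing weight. -/
lemma abel_antitone {b : ℕ → ℂ} {w : ℕ → ℝ} {m N : ℕ} {R : ℝ}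
    (hw : ∀ n, m < n → w (n + 1) ≤ w n) (hw0 : ∀ n, m < n → 0 ≤ w n)
    (hR : ∀ n, m ≤ n → n ≤ N → ‖∑ i ∈ Icc 1 n, b i‖ ≤ R) (hmN : m < N) :
    ‖∑ n ∈ Ioc m N, b n * (w n : ℂ)‖ ≤ 2 * R * w (m + 1) := by
  have key : ∀ k, m + 1 ≤ k → k ≤ N →
      ‖∑ n ∈ Ioc m k, b n * (w n : ℂ) - w k * ∑ i ∈ Icc 1 k, b i‖ ≤ R * (2 * w (m + 1) - w k) := by
    intro k hk
    induction k, hk using Nat.le_induction with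
    | base =>
      intro h
      have e1 : Ioc m (m + 1) = {m + 1} := by ext; simp
      have e2 : ∑ i ∈ Icc 1 (m + 1), b i = ∑ i ∈ Icc 1 m, b i + b (m + 1) :=
        sum_Icc_succ_top (by omega) _
      rw [e1, sum_singleton, e2]
      have e3 : b (m + 1) * (w (m + 1) : ℂ) - w (m + 1) * (∑ i ∈ Icc 1 m, b i + b (m + 1)) =
        -(w (m + 1) * ∑ i ∈ Icc 1 m, b i) := by ring
      rw [e3, norm_neg, norm_mul, Complex.norm_real, Real.norm_of_nonneg (hw0 _ (by omega))]
      nlinarith [hR m le_rfl (by omega), hw0 (m + 1) (by omega)]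
    | succ k hk ih =>
      intro h
      have ih := ih (by omega)
      have e1 : ∑ n ∈ Ioc m (k + 1), b n * (w n : ℂ) = ∑ n ∈ Ioc m k, b n * (w n : ℂ) +
          b (k + 1) * (w (k + 1) : ℂ) := sum_Ioc_succ_top (by omega) _
      have e2 : ∑ i ∈ Icc 1 (k + 1), b i = ∑ i ∈ Icc 1 k, b i + b (k + 1) :=
        sum_Icc_succ_top (by omega) _
      rw [e1, e2]
      have e3 : ∑ n ∈ Ioc m k, b n * (w n : ℂ) + b (k + 1) * (w (k + 1) : ℂ) -
          w (k + 1) * (∑ i ∈ Icc 1 k, b i + b (k + 1)) =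
          (∑ n ∈ Ioc m k, b n * (w n : ℂ) - w k * ∑ i ∈ Icc 1 k, b i) +
          ((w k - w (k + 1) : ℝ) : ℂ) * ∑ i ∈ Icc 1 k, b i := by push_cast; ring
      rw [e3]
      refine (norm_add_le _ _).trans ?_
      rw [norm_mul, Complex.norm_real, Real.norm_of_nonneg (by linarith [hw k (by omega)])]
      nlinarith [hR k (by omega) (by omega), hw k (by omega)]
  have h1 := key N (by omega) le_rfl
  have h2 := norm_sub_norm_le (∑ n ∈ Ioc m N, b n * (w n : ℂ)) (w N * ∑ i ∈ Icc 1 N, b i)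
  rw [norm_mul (w N : ℂ), Complex.norm_real, Real.norm_of_nonneg (hw0 N hmN)] at h2
  nlinarith [hR N hmN.le le_rfl, hw0 N hmN]

lemma logMul_iterate (a : ℕ → ℂ) (m n : ℕ) :
    (LSeries.logMul^[m] a) n = (Real.log n : ℂ) ^ m * a n := by
  induction m generalizing a with
  | zero => simp
  | succ m ih =>
    rw [Function.iterate_succ_apply, ih, LSeries.logMul, Complex.natCast_log]
    ring

lemma log_pow_le_mul {y : ℝ} (hy : 1 ≤ y) (k : ℕ) : Real.log y ^ k ≤ k.factorial * y := by
  have h := Real.pow_div_factorial_le_exp (Real.log y) (Real.log_nonneg hy) k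
  rw [Real.exp_log (by linarith), div_le_iff₀ (by positivity)] at h
  linarith

/-- A bound for the `2k`-th derivative of a Dirichlet series saves `k` logarithms in the
summatory function. -/
theorem sum_bound_of_deriv (k : ℕ) : ∃ C : ℝ, 0 < C ∧ ∀ (a : ℕ → ℂ) (B x : ℝ),
    (∀ n, ‖a n‖ ≤ 1) → 1 ≤ B → (∀ s : ℂ, 1 < s.re → s.re ≤ 2 →
      ‖iteratedDeriv (2 * k) (LSeries a) s‖ ≤ B * (|s.im| + 2) ^ (1 / 2 : ℝ)) →
    Real.exp 1 ≤ x → ‖∑ n ∈ Icc 1 ⌊x⌋₊, a n‖ ≤ C * B * x / Real.log x ^ k := by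
  obtain ⟨C1, hC1, hP⟩ := perron_bound
  set C3 : ℝ := 2 * (C1 * (Real.exp 1 * Real.exp 1)) + 4 ^ k * (2 + k.factorial) with hC3
  have hC30 : 1 ≤ C3 := by
    have h4 : (1:ℝ) ≤ 4 ^ k := one_le_pow₀ (by norm_num)
    have : 0 < C1 * (Real.exp 1 * Real.exp 1) := by positivity
    have h5 : (0:ℝ) < k.factorial := by positivity
    nlinarith
  refine ⟨2 * 4 ^ k * C3 + (2 * k).factorial * 4 ^ k, by positivity, ?_⟩
  intro a B x ha hB hF hx
  have hone : (2:ℝ) < Real.exp 1 := by linarith [Real.exp_one_gt_d9]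
  have habs : LSeries.abscissaOfAbsConv a ≤ 1 :=
    LSeries.abscissaOfAbsConv_le_of_le_const ⟨1, fun n _ => ha n⟩
  set b := LSeries.logMul^[2 * k] a with hb
  have hbn : ∀ n, b n = (Real.log n : ℂ) ^ (2 * k) * a n := logMul_iterate a (2 * k)
  have hbs : ∀ σ : ℝ, 1 < σ → LSeriesSummable b σ := by
    intro σ hσ
    refine LSeriesSummable_of_abscissaOfAbsConv_lt_re ?_
    rw [hb, LSeries.absicssaOfAbsConv_logPowMul]
    refine habs.trans_lt ?_
    rw [Complex.ofReal_re]
    exact_mod_cast hσ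
  have hbL : ∀ s : ℂ, 1 < s.re → s.re ≤ 2 → ‖LSeries b s‖ ≤ B * (|s.im| + 2) ^ (1 / 2 : ℝ) := by
    intro s h1 h2
    have := hF s h1 h2
    rw [LSeries_iteratedDeriv _ (habs.trans_lt (by exact_mod_cast h1)), norm_mul, norm_pow] at this
    simpa using this
  have hS : ∀ y : ℝ, Real.exp 1 ≤ y →
      ‖∑ n ∈ Icc 1 ⌊y⌋₊, b n * (Real.log (y / n) : ℂ)‖ ≤ C1 * B * (Real.exp 1 * y) := by
    intro y hy
    have hy0 : 0 < y := by linarith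
    have hlog : 1 ≤ Real.log y := by rwa [Real.le_log_iff_exp_le hy0]
    have hσ : 1 < 1 + 1 / Real.log y := by
      have : 0 < 1 / Real.log y := by positivity
      linarith
    have hσ2 : 1 + 1 / Real.log y ≤ 2 := by
      have : 1 / Real.log y ≤ 1 := by rw [div_le_one (by linarith)]; exact hlog
      linarith
    have := hP b B (1 + 1 / Real.log y) y hσ.le (by linarith) (by linarith) (hbs _ hσ) (fun t => by
      have h := hbL ((1 + 1 / Real.log y : ℝ) + t * Complex.I) (by simpa using hσ)
        (by simpa using hσ2)
      simpa using h)
    have e : y ^ (1 + 1 / Real.log y) = Real.exp 1 * y := by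
      rw [Real.rpow_add hy0, Real.rpow_one, Real.rpow_def_of_pos hy0,
        mul_one_div_cancel (by linarith)]
      ring
    rwa [e] at this
  -- the weighted summatory function
  have hB1 : ∀ y : ℝ, Real.exp 1 ≤ y →
      ‖∑ n ∈ Icc 1 ⌊y⌋₊, b n‖ ≤ C3 * B * (y * Real.log y ^ k) := by
    intro y hy
    have hy0 : 0 < y := by linarith
    have hlog : 1 ≤ Real.log y := by rwa [Real.le_log_iff_exp_le hy0]
    set h := (Real.log y ^ k)⁻¹ with hh
    have hlk : 1 ≤ Real.log y ^ k := one_le_pow₀ hlog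
    have h0 : 0 < h := by positivity
    have h1 : h ≤ 1 := inv_le_one_of_one_le₀ hlk
    have hyh : y * Real.exp h ≤ y * Real.exp 1 := by gcongr
    have hyh1 : y ≤ y * Real.exp h := by nlinarith [Real.one_le_exp h0.le]
    have := desmooth (b := b) (y := y) (h := h) (R := C1 * B * (Real.exp 1 * (y * Real.exp 1)))
      (W := (2 * Real.log y) ^ (2 * k)) (by linarith) h0 h1 ((hS y hy).trans (by gcongr; nlinarith))
      ((hS _ (hy.trans hyh1)).trans (by gcongr)) (fun n hn hny => ?_)
    · refine this.trans ?_
      have e1 : 2 * (C1 * B * (Real.exp 1 * (y * Real.exp 1))) / h =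
          2 * (C1 * (Real.exp 1 * Real.exp 1)) * B * (y * Real.log y ^ k) := by
        rw [hh]; field_simp
      have e2 : (2 * Real.log y) ^ (2 * k) * (2 * h * y + 1) =
          4 ^ k * (2 * (y * Real.log y ^ k) + Real.log y ^ k * Real.log y ^ k) := by
        rw [hh, mul_pow, pow_mul, pow_mul' (Real.log y)]
        norm_num
        field_simp
      rw [e1, e2]
      have e3 := log_pow_le_mul (y := y) (by linarith) k
      have e4 : Real.log y ^ k * Real.log y ^ k ≤ k.factorial * (y * Real.log y ^ k) := by
        nlinarith
      have e5 : (4:ℝ) ^ k * (2 * (y * Real.log y ^ k) + Real.log y ^ k * Real.log y ^ k) ≤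
          4 ^ k * ((2 + k.factorial) * (y * Real.log y ^ k)) := by
        gcongr
        linarith
      have e6 : (4:ℝ) ^ k * ((2 + k.factorial) * (y * Real.log y ^ k)) ≤
          4 ^ k * ((2 + k.factorial) * (y * Real.log y ^ k)) * B :=
        le_mul_of_one_le_right (by positivity) hB
      rw [hC3]
      nlinarith
    · have hn0 : (0:ℝ) < n := by exact_mod_cast hn
      rw [hbn, norm_mul, norm_pow, Complex.norm_real, Real.norm_of_nonneg
        (Real.log_natCast_nonneg n)]
      have e1 : Real.log n ≤ 2 * Real.log y := by
        have := Real.log_le_log hn0 hny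
        rw [Real.log_mul hy0.ne' (by positivity), Real.log_exp] at this
        linarith
      calc _ ≤ (2 * Real.log y) ^ (2 * k) * 1 := by
            gcongr
            exact ha n
        _ = _ := mul_one _
  have hx0 : 0 < x := by linarith
  have hlx : 1 ≤ Real.log x := by rwa [Real.le_log_iff_exp_le hx0]
  have hlxk : 1 ≤ Real.log x ^ k := one_le_pow₀ hlx
  set R := C3 * B * (x * Real.log x ^ k) with hR
  have hB2 : ∀ n : ℕ, (n:ℝ) ≤ x → ‖∑ i ∈ Icc 1 n, b i‖ ≤ R := by
    intro n hn
    rcases le_or_gt (Real.exp 1) n with h | h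
    · have := hB1 n h
      rw [Nat.floor_natCast] at this
      refine this.trans ?_
      have : 0 ≤ Real.log n := Real.log_natCast_nonneg n
      rw [hR]
      gcongr
      exact lt_of_lt_of_le (Real.exp_pos 1) h
    · have hn3 : n < 3 := by
        have : (n:ℝ) < 3 := by linarith [Real.exp_one_lt_d9]
        exact_mod_cast this
      have hR1 : 1 ≤ R := by
        rw [hR]
        exact one_le_mul_of_one_le_of_one_le (one_le_mul_of_one_le_of_one_le hC30 hB)
          (one_le_mul_of_one_le_of_one_le (by linarith) hlxk)
      have h2 : ‖b 2‖ ≤ 1 := by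
        rw [hbn, norm_mul, norm_pow, Complex.norm_real, Real.norm_of_nonneg
          (Real.log_natCast_nonneg 2)]
        refine mul_le_one₀ (pow_le_one₀ (Real.log_natCast_nonneg 2) ?_) (norm_nonneg _) (ha 2)
        push_cast
        linarith [Real.log_two_lt_d9]
      rcases Nat.eq_zero_or_pos k with hk | hk
      · have hb1 : ∀ i, b i = a i := fun i => by rw [hbn, hk]; simp
        have : n ≤ 2 := by omega
        refine (norm_sum_le_of_le (n := fun _ => 1) _ fun i _ => by rw [hb1]; exact ha i).trans ?_
        rw [sum_const, Nat.card_Icc, nsmul_eq_mul, mul_one, hR]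
        have h1 : (n:ℝ) ≤ x * Real.log x ^ k := by nlinarith
        have h3 : 1 ≤ C3 * B := one_le_mul_of_one_le_of_one_le hC30 hB
        have : 0 ≤ x * Real.log x ^ k := by positivity
        push_cast
        nlinarith
      · have hb1 : b 1 = 0 := by rw [hbn]; simp; omega
        interval_cases n
        · simp; linarith
        · simp [hb1]; linarith
        · rw [show Icc 1 2 = ({1, 2} : Finset ℕ) from rfl, sum_pair (by norm_num), hb1, zero_add]
          linarith
  -- remove the logarithms on `n > √x`
  set m := ⌊Real.sqrt x⌋₊ with hm
  have hsx : 1 < Real.sqrt x := by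
    rw [Real.lt_sqrt (by norm_num)]; linarith
  have hm1 : 1 ≤ m := Nat.le_floor (by simpa using hsx.le)
  have hmx : m ≤ ⌊x⌋₊ := Nat.floor_mono (by
    rw [Real.sqrt_le_left (by linarith)]; nlinarith)
  have hlogm : Real.log x / 2 ≤ Real.log ((m + 1 : ℕ) : ℝ) := by
    rw [← Real.log_sqrt hx0.le]
    refine Real.log_le_log (by linarith) ?_
    push_cast
    exact (Nat.lt_floor_add_one _).le
  have hmain : ‖∑ n ∈ Ioc m ⌊x⌋₊, a n‖ ≤ 2 * 4 ^ k * C3 * B * x / Real.log x ^ k := by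
    rcases hmx.lt_or_eq with hlt | heq
    · have e1 : ∑ n ∈ Ioc m ⌊x⌋₊, a n =
          ∑ n ∈ Ioc m ⌊x⌋₊, b n * (((Real.log n ^ (2 * k))⁻¹ : ℝ) : ℂ) := by
        refine sum_congr rfl fun n hn => ?_
        have hn1 : 1 < n := by have := (mem_Ioc.1 hn).1; omega
        have : 0 < Real.log n := Real.log_pos (by exact_mod_cast hn1)
        have h0 : (Real.log n : ℂ) ≠ 0 := by exact_mod_cast this.ne'
        rw [hbn, Complex.ofReal_inv, Complex.ofReal_pow]
        field_simp
      rw [e1]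
      have hpos : ∀ n, m < n → 0 < Real.log (n:ℝ) := fun n hn =>
        Real.log_pos (by have : 1 < n := by omega
                         exact_mod_cast this)
      refine (abel_antitone (R := R) (w := fun n => (Real.log n ^ (2 * k))⁻¹) (fun n hn => ?_)
        (fun n hn => ?_) (fun n _ hn => hB2 n ?_) hlt).trans ?_
      · have := hpos n hn
        gcongr
        · have : 0 < n := by omega
          exact_mod_cast this
        · omega
      · have := hpos n hn
        positivity
      · exact (Nat.le_floor_iff hx0.le).1 hn
      · have e3 : (Real.log ((m + 1 : ℕ) : ℝ) ^ (2 * k))⁻¹ ≤ ((Real.log x / 2) ^ (2 * k))⁻¹ := by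
          gcongr
        have e4 : ((Real.log x / 2) ^ (2 * k))⁻¹ = 4 ^ k / (Real.log x ^ k * Real.log x ^ k) := by
          rw [div_pow, inv_div, pow_mul 2, pow_mul' (Real.log x), sq (Real.log x ^ k)]
          norm_num
        calc _ ≤ 2 * R * (4 ^ k / (Real.log x ^ k * Real.log x ^ k)) := by
              rw [← e4]; gcongr
          _ = _ := by rw [hR]; field_simp
    · rw [heq, Ioc_self, sum_empty, norm_zero]
      positivity
  have hsmall : ‖∑ n ∈ Icc 1 m, a n‖ ≤ (2 * k).factorial * 4 ^ k * B * x / Real.log x ^ k := by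
    have e1 : ‖∑ n ∈ Icc 1 m, a n‖ ≤ Real.sqrt x := by
      refine (norm_sum_le_of_le (n := fun _ => 1) _ fun i _ => ha i).trans ?_
      rw [sum_const, Nat.card_Icc, nsmul_eq_mul, mul_one]
      simpa using Nat.floor_le (Real.sqrt_nonneg x)
    refine e1.trans ?_
    have e2 := log_pow_le_mul hsx.le (2 * k)
    rw [Real.log_sqrt hx0.le, div_pow, pow_mul, pow_mul, div_le_iff₀ (by positivity)] at e2
    have e3 : Real.log x ^ k ≤ (Real.log x ^ 2) ^ k := by
      gcongr
      nlinarith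
    rw [le_div_iff₀ (by positivity)]
    have e4 : Real.sqrt x * Real.sqrt x = x := Real.mul_self_sqrt hx0.le
    have e5 : Real.sqrt x * Real.log x ^ k ≤ Real.sqrt x * ((2 * k).factorial * Real.sqrt x * (2 ^ 2) ^ k) := by
      gcongr
      linarith
    have e6 : Real.sqrt x * ((2 * k).factorial * Real.sqrt x * (2 ^ 2) ^ k) =
        (2 * k).factorial * 4 ^ k * x := by
      norm_num
      linear_combination ((2 * k).factorial * 4 ^ k : ℝ) * e4
    have e7 : ((2 * k).factorial * 4 ^ k * x : ℝ) ≤ (2 * k).factorial * 4 ^ k * x * B :=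
      le_mul_of_one_le_right (by positivity) hB
    linarith
  rw [← sum_Icc_add_Ioc a hmx]
  refine (norm_add_le _ _).trans ((add_le_add hsmall hmain).trans (le_of_eq ?_))
  ring

/-! ### The Möbius function twisted by a character -/

/-- The coefficients `μ(n) χ(n)` of `1 / L(s, χ)`. -/
noncomputable def muChar {q : ℕ} (χ : DirichletCharacter ℂ q) (n : ℕ) : ℂ :=
  (ArithmeticFunction.moebius n : ℂ) * χ n

lemma norm_moebius_le (n : ℕ) : ‖(ArithmeticFunction.moebius n : ℂ)‖ ≤ 1 := by
  rw [Complex.norm_intCast]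
  exact_mod_cast ArithmeticFunction.abs_moebius_le_one

lemma norm_muChar_le {q : ℕ} (χ : DirichletCharacter ℂ q) (n : ℕ) : ‖muChar χ n‖ ≤ 1 := by
  unfold muChar
  rw [norm_mul]
  exact mul_le_one₀ (norm_moebius_le n) (norm_nonneg _) (χ.norm_le_one _)

lemma LSeries_muChar {q : ℕ} [NeZero q] (χ : DirichletCharacter ℂ q) {s : ℂ} (hs : 1 < s.re) :
    LSeries (muChar χ) s = (χ.LFunction s)⁻¹ := by
  have h := DirichletCharacter.LSeries.mul_mu_eq_one χ hs
  rw [← DirichletCharacter.LFunction_eq_LSeries χ hs] at h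
  have h2 : muChar χ = (fun n : ℕ => χ n) * (fun n : ℕ => (ArithmeticFunction.moebius n : ℂ)) := by
    funext n
    simp [muChar, mul_comm]
  rw [h2]
  exact eq_inv_of_mul_eq_one_right h

lemma iteratedDeriv_muChar {q : ℕ} [NeZero q] (χ : DirichletCharacter ℂ q) {s : ℂ}
    (hs : 1 < s.re) (m : ℕ) {F : ℂ → ℂ} (hF : ∀ z : ℂ, 1 < z.re → F z = (χ.LFunction z)⁻¹) :
    iteratedDeriv m (LSeries (muChar χ)) s = iteratedDeriv m F s := by
  refine Filter.EventuallyEq.iteratedDeriv_eq m ?_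
  have ho : IsOpen {z : ℂ | 1 < z.re} := isOpen_lt continuous_const Complex.continuous_re
  filter_upwards [ho.mem_nhds hs] with z hz
  rw [LSeries_muChar χ hz, hF z hz]

/-- Cauchy's estimate for `1 / L(s, χ)`, on a disc whose radius is a small power of the conductor,
so that the lower bound for `L` at the centre persists on it. -/
lemma inv_LFunction_deriv_bound (m : ℕ) : ∃ C : ℝ, 1 ≤ C ∧
    ∀ (q : ℕ) [NeZero q] (χ : DirichletCharacter ℂ q) (s : ℂ), 1 < s.re → s.re ≤ 2 →
      (χ ≠ 1 ∨ 2 ≤ |s.im|) → ‖iteratedDeriv m (fun z => (χ.LFunction z)⁻¹) s‖ ≤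
        C * q * (|s.im| + 2) ^ (1 / 2 : ℝ) := by
  set η : ℝ := 1 / (2 * (3 * m + 1)) with hη
  have hη0 : 0 < η := by positivity
  have hη4 : η ≤ 1 / 2 := by
    rw [hη, div_le_div_iff₀ (by positivity) (by positivity)]
    have : (0:ℝ) ≤ m := by positivity
    linarith
  obtain ⟨c1, hc1, hlow⟩ := LFunction_lower hη0
  set c := min c1 1 with hc
  have hc0 : 0 < c := by positivity
  have hcc : c ≤ 1 := min_le_right _ _
  set K := 1200 * (1 + 1 / η) / η with hK
  have hK0 : 0 < K := by positivity
  have hKη : 1 ≤ K * η := by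
    rw [hK, div_mul_cancel₀ _ hη0.ne']
    have : 0 < 1 / η := by positivity
    linarith
  refine ⟨m.factorial * (2 / c) * (4 * K / c) ^ m, ?_, ?_⟩
  · refine one_le_mul_of_one_le_of_one_le (one_le_mul_of_one_le_of_one_le ?_ ?_)
      (one_le_pow₀ ?_)
    · exact_mod_cast Nat.one_le_iff_ne_zero.2 (Nat.factorial_ne_zero m)
    · rw [le_div_iff₀ hc0]; linarith
    · rw [le_div_iff₀ hc0]; nlinarith
  intro q _ χ s hs1 hs2 hχ
  have hχ1 : χ ≠ 1 ∨ 1 ≤ |s.im| := hχ.imp id (fun h => by linarith)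
  set τ := cond q s.im with hτ
  have hτ2 : 2 ≤ τ := two_le_cond _
  have hτ0 : 0 < τ := by linarith
  have hL := hlow q χ s hs1.le hs2 hχ1
  have hL' : c * τ ^ (-η) ≤ ‖χ.LFunction s‖ := by
    refine le_trans ?_ hL
    gcongr
    exact min_le_left _ _
  -- Within distance `ρ`, the variation of `L` is at most half the lower bound at the centre.
  set ρ := c / (4 * K) * τ ^ (-(3 * η)) with hρ
  have hρ0 : 0 < ρ := by positivity
  have hτ3 : τ ^ (-(3 * η)) ≤ 1 := Real.rpow_le_one_of_one_le_of_nonpos (by linarith) (by linarith)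
  have hρη : ρ ≤ η / 4 := by
    have h1 : c / (4 * K) ≤ η / 4 := by
      rw [div_le_div_iff₀ (by positivity) (by norm_num)]
      nlinarith
    calc ρ ≤ η / 4 * 1 := by rw [hρ]; gcongr
      _ = _ := mul_one _
  have hball : ∀ z ∈ Metric.closedBall s ρ, 1 - η / 2 ≤ z.re ∧ z.re ≤ 5 / 2 ∧
      (χ ≠ 1 ∨ 1 ≤ |z.im|) ∧ |z.im| ≤ 2 * |s.im| + 2 := by
    intro z hz
    rw [mem_closedBall_iff_norm] at hz
    have h1 := abs_le.1 ((Complex.abs_re_le_norm (z - s)).trans hz)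
    have h2 := (Complex.abs_im_le_norm (z - s)).trans hz
    rw [Complex.sub_re] at h1
    rw [Complex.sub_im] at h2
    have h3 := abs_sub_abs_le_abs_sub z.im s.im
    have h4 := abs_sub_abs_le_abs_sub s.im z.im
    rw [abs_sub_comm] at h4
    refine ⟨by linarith, by linarith, hχ.imp id (fun h => by linarith), ?_⟩
    linarith [abs_nonneg s.im]
  have hdiff : ∀ z ∈ Metric.closedBall s ρ, DifferentiableAt ℂ χ.LFunction z := by
    intro z hz
    refine DirichletCharacter.differentiableAt_LFunction χ z ?_
    rcases (hball z hz).2.2.1 with h | h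
    · exact Or.inr h
    · left
      rintro rfl
      norm_num at h
  have hlow2 : ∀ z ∈ Metric.closedBall s ρ, c / 2 * τ ^ (-η) ≤ ‖χ.LFunction z‖ := by
    intro z hz
    have h1 := Convex.norm_image_sub_le_of_norm_deriv_le (𝕜 := ℂ) (f := χ.LFunction)
      (C := K * (2 * τ ^ (2 * η))) hdiff (fun w hw => by
        obtain ⟨a1, a2, a3, a4⟩ := hball w hw
        refine (LFunction_deriv_bound hη0 hη4 a3 a1 a2).trans ?_
        rw [← hK]
        gcongr
        exact cond_rpow_le hη0 hη4 a4) (convex_closedBall s ρ)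
      (Metric.mem_closedBall_self hρ0.le) hz
    rw [mem_closedBall_iff_norm] at hz
    have h2 : K * (2 * τ ^ (2 * η)) * ‖z - s‖ ≤ c / 2 * τ ^ (-η) := by
      calc _ ≤ K * (2 * τ ^ (2 * η)) * ρ := by gcongr
        _ = c / 2 * (τ ^ (2 * η) * τ ^ (-(3 * η))) := by rw [hρ]; field_simp; norm_num
        _ = _ := by
          rw [← Real.rpow_add hτ0]
          congr 2; ring
    have h3 := norm_sub_norm_le (χ.LFunction s) (χ.LFunction z)
    rw [norm_sub_rev] at h3
    linarith
  have hpos : 0 < c / 2 * τ ^ (-η) := by positivity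
  have hne : ∀ z ∈ Metric.closedBall s ρ, χ.LFunction z ≠ 0 := fun z hz h0 => by
    have := hlow2 z hz
    rw [h0, norm_zero] at this
    linarith
  have hD : DifferentiableOn ℂ (fun z => (χ.LFunction z)⁻¹) (Metric.closedBall s ρ) :=
    fun z hz => ((hdiff z hz).inv (hne z hz)).differentiableWithinAt
  have hDC : DiffContOnCl ℂ (fun z => (χ.LFunction z)⁻¹) (Metric.ball s ρ) := by
    refine DifferentiableOn.diffContOnCl ?_
    exact hD.mono Metric.closure_ball_subset_closedBall
  refine (Complex.norm_iteratedDeriv_le_of_forall_mem_sphere_norm_le m hρ0 hDC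
    (C := 2 / c * τ ^ η) fun z hz => ?_).trans ?_
  · have hz := Metric.sphere_subset_closedBall hz
    rw [norm_inv, inv_le_comm₀ (norm_pos_iff.2 (hne z hz)) (by positivity), mul_inv, inv_div,
      ← Real.rpow_neg hτ0.le]
    exact hlow2 z hz
  · have e1 : (ρ ^ m)⁻¹ = (4 * K / c) ^ m * τ ^ (3 * η * m) := by
      rw [hρ, mul_pow, mul_inv, ← inv_pow, inv_div, ← Real.rpow_natCast (τ ^ _), ← Real.rpow_mul hτ0.le,
        ← Real.rpow_neg hτ0.le]
      congr 2; ring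
    have e2 : τ ^ η * τ ^ (3 * η * m) = τ ^ (1 / 2 : ℝ) := by
      rw [← Real.rpow_add hτ0]
      congr 1
      rw [hη]
      field_simp
      ring
    have e3 : τ ^ (1 / 2 : ℝ) ≤ q * (|s.im| + 2) ^ (1 / 2 : ℝ) := by
      have hq : (1:ℝ) ≤ q := by exact_mod_cast Nat.one_le_iff_ne_zero.2 (NeZero.ne q)
      rw [hτ, cond, Real.mul_rpow (by positivity) (by positivity)]
      gcongr
      calc (q:ℝ) ^ (1 / 2 : ℝ) ≤ (q:ℝ) ^ (1:ℝ) := Real.rpow_le_rpow_of_exponent_le hq (by norm_num)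
        _ = q := Real.rpow_one _
    calc _ = m.factorial * (2 / c) * (4 * K / c) ^ m * (τ ^ η * τ ^ (3 * η * m)) := by
          rw [div_eq_mul_inv _ (ρ ^ m), e1]; ring
      _ ≤ m.factorial * (2 / c) * (4 * K / c) ^ m * (q * (|s.im| + 2) ^ (1 / 2 : ℝ)) := by
          rw [e2]; gcongr
      _ = _ := by ring

/-- The analogue of `inv_LFunction_deriv_bound` for the Dirichlet series of `μ χ`, including `ζ` near
its pole. -/
lemma muChar_deriv_bound (m : ℕ) : ∃ C : ℝ, 1 ≤ C ∧
    ∀ (q : ℕ) [NeZero q] (χ : DirichletCharacter ℂ q) (s : ℂ), 1 < s.re → s.re ≤ 2 →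
      (χ ≠ 1 ∨ q = 1) → ‖iteratedDeriv m (LSeries (muChar χ)) s‖ ≤
        C * q * (|s.im| + 2) ^ (1 / 2 : ℝ) := by
  obtain ⟨C1, hC1, h1⟩ := inv_LFunction_deriv_bound m
  obtain ⟨Z, hZ, hZ1, hZs⟩ := exists_zeta_entire
  have hZne : ∀ z : ℂ, 1 ≤ z.re → Z z ≠ 0 := by
    intro z hz
    by_cases h : z = 1
    · rw [h, hZ1]; exact one_ne_zero
    · rw [hZs z h]
      exact mul_ne_zero (sub_ne_zero.2 h) (riemannZeta_ne_zero_of_one_le_re hz)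
  set G : ℂ → ℂ := fun z => (z - 1) / Z z with hG
  set S : Set ℂ := Set.Icc (1:ℝ) 2 ×ℂ Set.Icc (-2:ℝ) 2 with hS
  have hScomp : IsCompact S := isCompact_Icc.reProdIm isCompact_Icc
  have hcont : ContinuousOn (iteratedDeriv m G) S := by
    intro z hz
    have hz1 : 1 ≤ z.re := by
      rw [hS, Complex.mem_reProdIm] at hz
      exact hz.1.1
    have hA : AnalyticAt ℂ G z := by
      refine AnalyticAt.div ?_ (hZ.analyticAt z) (hZne z hz1)
      fun_prop
    rw [iteratedDeriv_eq_iterate]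
    exact (hA.iterated_deriv m).continuousAt.continuousWithinAt
  obtain ⟨C2, hC2⟩ := hScomp.exists_bound_of_continuousOn hcont
  refine ⟨max C1 C2, hC1.trans (le_max_left _ _), ?_⟩
  intro q _ χ s hs1 hs2 hχ
  have hC0 : 0 ≤ max C1 C2 := zero_le_one.trans (hC1.trans (le_max_left _ _))
  by_cases hcase : χ ≠ 1 ∨ 2 ≤ |s.im|
  · rw [iteratedDeriv_muChar χ hs1 m (fun _ _ => rfl)]
    refine (h1 q χ s hs1 hs2 hcase).trans ?_
    gcongr
    exact le_max_left _ _
  · push Not at hcase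
    obtain rfl : q = 1 := hχ.resolve_left (fun h => h hcase.1)
    rw [iteratedDeriv_muChar χ hs1 m (F := G) (fun z hz => ?_)]
    · have hsS : s ∈ S := by
        rw [hS, Complex.mem_reProdIm]
        exact ⟨⟨hs1.le, hs2⟩, abs_le.1 hcase.2.le⟩
      refine (hC2 s hsS).trans ?_
      have h3 : (1:ℝ) ≤ (|s.im| + 2) ^ (1 / 2 : ℝ) :=
        Real.one_le_rpow (by linarith [abs_nonneg s.im]) (by norm_num)
      rw [Nat.cast_one, mul_one]
      exact (le_max_right _ _).trans (le_mul_of_one_le_right hC0 h3)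
    · have hz1 : z ≠ 1 := by rintro rfl; simp at hz
      rw [hG, DirichletCharacter.LFunction_modOne_eq]
      simp only
      rw [hZs z hz1]
      have : z - 1 ≠ 0 := sub_ne_zero.2 hz1
      field_simp

/-- Siegel–Walfisz type bound for `∑ μ(n) χ(n)`. -/
theorem muChar_sum_bound (k : ℕ) : ∃ C : ℝ, 1 ≤ C ∧
    ∀ (q : ℕ) [NeZero q] (χ : DirichletCharacter ℂ q) (x : ℝ), (χ ≠ 1 ∨ q = 1) →
      Real.exp 1 ≤ x → ‖∑ n ∈ Icc 1 ⌊x⌋₊, muChar χ n‖ ≤ C * q * x / Real.log x ^ k := by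
  obtain ⟨C1, hC1, h1⟩ := muChar_deriv_bound (2 * k)
  obtain ⟨C2, hC2, h2⟩ := sum_bound_of_deriv k
  refine ⟨max 1 (C2 * C1), le_max_left _ _, ?_⟩
  intro q _ χ x hχ hx
  have hq : (1:ℝ) ≤ q := by exact_mod_cast Nat.one_le_iff_ne_zero.2 (NeZero.ne q)
  have hx0 : 0 < x := (Real.exp_pos 1).trans_le hx
  have hlx : 1 ≤ Real.log x := by rwa [Real.le_log_iff_exp_le hx0]
  refine (h2 (muChar χ) (C1 * q) x (norm_muChar_le χ)
    (one_le_mul_of_one_le_of_one_le hC1 hq) (fun s hs1 hs2 => h1 q χ s hs1 hs2 hχ) hx).trans ?_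
  rw [← mul_assoc]
  gcongr
  exact le_max_right _ _

/-! ### Coprimality conditions and residue classes -/

/-- `∑ μ(n) χ(n) n⁻¹ W(x/n)` over `n ≤ x` free of the primes in `S`. -/
noncomputable def twSum {q : ℕ} (χ : DirichletCharacter ℂ q) (W : ℝ → ℂ) (S : Finset ℕ) (x : ℝ) :
    ℂ :=
  ∑ n ∈ (Icc 1 ⌊x⌋₊).filter (fun n => ∀ p ∈ S, ¬ p ∣ n), muChar χ n / n * W (x / n)

/-- Recursion for adding a prime to the coprimality condition: it comes from splitting off the
multiples of `p`. -/
lemma twSum_insert {q : ℕ} (χ : DirichletCharacter ℂ q) (W : ℝ → ℂ) {S : Finset ℕ} {p : ℕ}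
    (hS : ∀ r ∈ S, r.Prime) (hp : p.Prime) (hpS : p ∉ S) (x : ℝ) :
    twSum χ W (insert p S) x = twSum χ W S x + χ p / p * twSum χ W (insert p S) (x / p) := by
  have hp0 : (p:ℂ) ≠ 0 := by exact_mod_cast hp.ne_zero
  have hdvd : ∀ m, (∀ r ∈ S, ¬ r ∣ m) → ∀ r ∈ S, ¬ r ∣ p * m := by
    intro m hm r hr h
    rcases (hS r hr).dvd_mul.1 h with h | h
    · rw [Nat.prime_dvd_prime_iff_eq (hS r hr) hp] at h
      exact hpS (h ▸ hr)
    · exact hm r hr h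
  have h1 : twSum χ W S x = twSum χ W (insert p S) x +
      ∑ n ∈ ((Icc 1 ⌊x⌋₊).filter (fun n => ∀ p ∈ S, ¬ p ∣ n)).filter (fun n => p ∣ n),
        muChar χ n / n * W (x / n) := by
    unfold twSum
    rw [← sum_filter_add_sum_filter_not _ (fun n => p ∣ n), add_comm]
    congr 1
    refine sum_congr ?_ fun _ _ => rfl
    ext n
    simp only [mem_filter, mem_insert, forall_eq_or_imp]
    tauto
  have h2 : ∑ n ∈ ((Icc 1 ⌊x⌋₊).filter (fun n => ∀ p ∈ S, ¬ p ∣ n)).filter (fun n => p ∣ n),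
        muChar χ n / n * W (x / n) = -(χ p / p * twSum χ W (insert p S) (x / p)) := by
    unfold twSum
    rw [mul_sum, ← sum_neg_distrib]
    have hsub : ∑ n ∈ (Icc 1 ⌊x / p⌋₊).filter (fun n => ∀ p ∈ S, ¬ p ∣ n),
        muChar χ (p * n) / (p * n : ℕ) * W (x / (p * n : ℕ)) =
        ∑ n ∈ (Icc 1 ⌊x / p⌋₊).filter (fun n => ∀ r ∈ insert p S, ¬ r ∣ n),
          muChar χ (p * n) / (p * n : ℕ) * W (x / (p * n : ℕ)) := by
      symm
      refine sum_subset ?_ ?_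
      · intro n
        simp only [mem_filter, mem_insert, forall_eq_or_imp]
        tauto
      · intro n hn hn'
        have hpn : p ∣ n := by
          simp only [mem_filter, mem_insert, forall_eq_or_imp] at hn hn'
          tauto
        have : ArithmeticFunction.moebius (p * n) = 0 := by
          refine ArithmeticFunction.moebius_eq_zero_of_not_squarefree fun hsq => ?_
          have := hsq p (mul_dvd_mul_left p hpn)
          exact hp.one_lt.ne' (Nat.isUnit_iff.1 this)
        simp [muChar, this]
    have hbij : ∑ n ∈ (Icc 1 ⌊x / p⌋₊).filter (fun n => ∀ p ∈ S, ¬ p ∣ n),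
        muChar χ (p * n) / (p * n : ℕ) * W (x / (p * n : ℕ)) =
        ∑ n ∈ ((Icc 1 ⌊x⌋₊).filter (fun n => ∀ p ∈ S, ¬ p ∣ n)).filter (fun n => p ∣ n),
        muChar χ n / n * W (x / n) := by
      refine sum_bij (fun n _ => p * n) ?_ ?_ ?_ ?_
      · intro n hn
        simp only [mem_filter, mem_Icc, Nat.floor_div_natCast] at hn ⊢
        refine ⟨⟨⟨Nat.mul_pos hp.pos hn.1.1, ?_⟩, hdvd n hn.2⟩, dvd_mul_right _ _⟩
        have := (Nat.le_div_iff_mul_le hp.pos).1 hn.1.2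
        linarith
      · intro a _ b _ h
        exact Nat.eq_of_mul_eq_mul_left hp.pos h
      · intro n hn
        simp only [mem_filter, mem_Icc] at hn
        obtain ⟨⟨⟨a1, a2⟩, a3⟩, m, rfl⟩ := hn
        refine ⟨m, ?_, rfl⟩
        simp only [mem_filter, mem_Icc, Nat.floor_div_natCast]
        refine ⟨⟨Nat.pos_of_mul_pos_left a1, (Nat.le_div_iff_mul_le hp.pos).2 (by linarith)⟩,
          fun r hr h => a3 r hr (h.mul_left p)⟩
      · intro n hn
        rfl
    rw [← hbij, hsub]
    refine sum_congr rfl fun n hn => ?_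
    simp only [mem_filter, mem_insert, forall_eq_or_imp] at hn
    have hcop : p.Coprime n := (Nat.Prime.coprime_iff_not_dvd hp).2 hn.2.1
    have hmu : ArithmeticFunction.moebius (p * n) = -ArithmeticFunction.moebius n := by
      rw [ArithmeticFunction.isMultiplicative_moebius.map_mul_of_coprime hcop,
        ArithmeticFunction.moebius_apply_prime hp]
      ring
    have hx : x / ((p * n : ℕ) : ℝ) = x / p / n := by push_cast; rw [div_div]
    unfold muChar
    rw [hmu, hx]
    push_cast
    rw [map_mul]
    ring
  rw [h1, h2]
  ring

lemma twSum_of_lt_one {q : ℕ} (χ : DirichletCharacter ℂ q) (W : ℝ → ℂ) (S : Finset ℕ) {x : ℝ}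
    (hx : x < 1) : twSum χ W S x = 0 := by
  unfold twSum
  rw [Nat.floor_eq_zero.2 hx]
  simp

/-- The Euler factors `∏ (1 - p^(-σ))⁻¹`. -/
noncomputable def eulerProd (σ : ℝ) (S : Finset ℕ) : ℝ := ∏ p ∈ S, (1 - (p:ℝ) ^ (-σ))⁻¹

lemma euler_factor {σ : ℝ} (hσ : 0 < σ) {p : ℕ} (hp : p.Prime) :
    0 < 1 - (p:ℝ) ^ (-σ) ∧ 1 ≤ (1 - (p:ℝ) ^ (-σ))⁻¹ := by
  have h1 : (1:ℝ) < p := by exact_mod_cast hp.one_lt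
  have h2 : (p:ℝ) ^ (-σ) < 1 := Real.rpow_lt_one_of_one_lt_of_neg h1 (by linarith)
  have h3 : 0 < (p:ℝ) ^ (-σ) := by positivity
  refine ⟨by linarith, ?_⟩
  rw [one_le_inv₀ (by linarith)]
  linarith

lemma one_le_eulerProd {σ : ℝ} (hσ : 0 < σ) {S : Finset ℕ} (hS : ∀ r ∈ S, r.Prime) :
    1 ≤ eulerProd σ S := by
  unfold eulerProd
  exact Finset.one_le_prod fun p hp => (euler_factor hσ (hS p hp)).2

lemma eulerProd_insert {σ : ℝ} (hσ : 0 < σ) {S : Finset ℕ} {p : ℕ} (hp : p.Prime) (hpS : p ∉ S) :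
    eulerProd σ (insert p S) = eulerProd σ S + (p:ℝ) ^ (-σ) * eulerProd σ (insert p S) := by
  unfold eulerProd
  rw [prod_insert hpS]
  have := (euler_factor hσ hp).1
  field_simp
  ring

/-- Removing the multiples of finitely many primes, one prime at a time. -/
lemma coprime_induction {a b Y : ℝ} (ha : 0 ≤ a) (E : Finset ℕ → ℝ → ℂ) (z : ℕ → ℂ)
    (hz : ∀ p, ‖z p‖ ≤ 1 / p)
    (hbase : ∀ x, 0 < x → x ≤ Y → ‖E ∅ x‖ ≤ a + b * x ^ (-(1 / 2) : ℝ))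
    (hsmall : ∀ S : Finset ℕ, (∀ r ∈ S, r.Prime) → ∀ x, 0 < x → x < 1 →
      ‖E S x‖ ≤ b * eulerProd (1 / 2) S * x ^ (-(1 / 2) : ℝ))
    (hrec : ∀ (S : Finset ℕ) (p : ℕ), (∀ r ∈ S, r.Prime) → p.Prime → p ∉ S → ∀ x, 0 < x →
      E (insert p S) x = E S x + z p * E (insert p S) (x / p)) :
    ∀ S : Finset ℕ, (∀ r ∈ S, r.Prime) → ∀ x, 0 < x → x ≤ Y →
      ‖E S x‖ ≤ a * eulerProd 1 S + b * eulerProd (1 / 2) S * x ^ (-(1 / 2) : ℝ) := by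
  intro S
  induction S using Finset.induction_on with
  | empty =>
    intro _ x hx hxY
    simpa [eulerProd] using hbase x hx hxY
  | insert p S hpS ih =>
    intro hS
    have hp : p.Prime := hS p (mem_insert_self _ _)
    have hS' : ∀ r ∈ S, r.Prime := fun r hr => hS r (mem_insert_of_mem hr)
    have hp2 : (2:ℝ) ≤ p := by exact_mod_cast hp.two_le
    have hp0 : (0:ℝ) < p := by linarith
    have e1 := eulerProd_insert (σ := 1) (by norm_num) hp hpS
    have e2 := eulerProd_insert (σ := 1 / 2) (by norm_num) hp hpS
    have p1 := one_le_eulerProd (σ := 1) (by norm_num) hS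
    have p2 := one_le_eulerProd (σ := 1 / 2) (by norm_num) hS
    set c1 := eulerProd 1 (insert p S)
    set c2 := eulerProd (1 / 2) (insert p S)
    have key : ∀ n : ℕ, ∀ x, 0 < x → x ≤ Y → x < 2 ^ n →
        ‖E (insert p S) x‖ ≤ a * c1 + b * c2 * x ^ (-(1 / 2) : ℝ) := by
      intro n
      induction n with
      | zero =>
        intro x hx _ hx1
        refine (hsmall _ hS x hx (by simpa using hx1)).trans ?_
        have : 0 ≤ a * c1 := by positivity
        linarith
      | succ n ihn =>
        intro x hx hxY hxn
        rw [hrec S p hS' hp hpS x hx]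
        have hxp : x / p ≤ x / 2 := by gcongr
        have h1 := ihn (x / p) (by positivity) (by linarith) (by
          rw [pow_succ] at hxn
          linarith)
        refine (norm_add_le _ _).trans ((add_le_add (ih hS' x hx hxY) (le_refl _)).trans ?_)
        rw [norm_mul]
        have h2 : ‖z p‖ * ‖E (insert p S) (x / p)‖ ≤
            1 / p * (a * c1 + b * c2 * (x / p) ^ (-(1 / 2) : ℝ)) := by
          gcongr
          exact hz p
        have h3 : 1 / (p:ℝ) * (x / p) ^ (-(1 / 2) : ℝ) = (p:ℝ) ^ (-(1 / 2) : ℝ) * x ^ (-(1 / 2) : ℝ) := by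
          rw [Real.div_rpow hx.le hp0.le, Real.rpow_neg hp0.le (1 / 2)]
          have h4 : (p:ℝ) = (p:ℝ) ^ (1 / 2 : ℝ) * (p:ℝ) ^ (1 / 2 : ℝ) := by
            rw [← Real.rpow_add hp0]; norm_num
          have h5 : (p:ℝ) ^ (1 / 2 : ℝ) ≠ 0 := by positivity
          rw [show 1 / (p:ℝ) = ((p:ℝ) ^ (1 / 2 : ℝ))⁻¹ * ((p:ℝ) ^ (1 / 2 : ℝ))⁻¹ by
            rw [← mul_inv, ← h4, one_div]]
          field_simp
        have h6 : (p:ℝ) ^ (-1 : ℝ) = 1 / p := by rw [Real.rpow_neg_one, one_div]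
        rw [h6] at e1
        have h7 : 1 / p * (a * c1 + b * c2 * (x / p) ^ (-(1 / 2) : ℝ)) =
            a * (1 / p * c1) + b * ((p:ℝ) ^ (-(1 / 2) : ℝ) * c2) * x ^ (-(1 / 2) : ℝ) := by
          linear_combination b * c2 * h3
        rw [h7] at h2
        have h8 : (a * c1 + b * c2 * x ^ (-(1 / 2) : ℝ)) =
          a * eulerProd 1 S + b * eulerProd (1 / 2) S * x ^ (-(1 / 2) : ℝ) +
          (a * (1 / p * c1) + b * ((p:ℝ) ^ (-(1 / 2) : ℝ) * c2) * x ^ (-(1 / 2) : ℝ)) := by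
          linear_combination a * e1 + b * x ^ (-(1 / 2) : ℝ) * e2
        linarith
    intro x hx hxY
    obtain ⟨n, hn⟩ := pow_unbounded_of_one_lt x (by norm_num : (1:ℝ) < 2)
    exact key n x hx hxY hn

lemma prod_ratio_le (S : Finset ℕ) (hS : ∀ r ∈ S, 2 ≤ r) :
    ∏ p ∈ S, (1 - (p:ℝ) ^ (-1:ℝ))⁻¹ ≤ S.card + 1 := by
  induction S using Finset.induction_on_max with
  | empty => simp
  | insert p S hmax ih =>
    have hpS : p ∉ S := fun h => lt_irrefl _ (hmax p h)
    have hp2 : 2 ≤ p := hS p (mem_insert_self _ _)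
    have ih := ih fun r hr => hS r (mem_insert_of_mem hr)
    rw [prod_insert hpS, card_insert_of_notMem hpS]
    have hcard : S.card + 2 ≤ p := by
      have : S ⊆ Finset.Ico 2 p := fun r hr =>
        Finset.mem_Ico.2 ⟨hS r (mem_insert_of_mem hr), hmax r hr⟩
      have := card_le_card this
      rw [Nat.card_Ico] at this
      omega
    have hp : (S.card:ℝ) + 2 ≤ p := by exact_mod_cast hcard
    have hc : (0:ℝ) ≤ S.card := by positivity
    have h1 : (1 - (p:ℝ) ^ (-1:ℝ))⁻¹ ≤ (S.card + 2) / (S.card + 1) := by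
      rw [Real.rpow_neg_one, inv_le_comm₀ ?_ (by positivity), inv_div]
      · have : (p:ℝ)⁻¹ ≤ ((S.card:ℝ) + 2)⁻¹ := by gcongr
        have e : ((S.card:ℝ) + 1) / (S.card + 2) = 1 - (S.card + 2 : ℝ)⁻¹ := by field_simp; ring
        linarith
      · have : (p:ℝ)⁻¹ < 1 := inv_lt_one_of_one_lt₀ (by linarith)
        linarith
    calc _ ≤ ((S.card:ℝ) + 2) / (S.card + 1) * (S.card + 1) := by
          refine mul_le_mul h1 ih ?_ (by positivity)
          refine prod_nonneg fun r hr => inv_nonneg.2 ?_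
          have : (2:ℝ) ≤ r := by exact_mod_cast hS r (mem_insert_of_mem hr)
          have : (r:ℝ) ^ (-1:ℝ) ≤ 1 := by
            rw [Real.rpow_neg_one]; exact inv_le_one_of_one_le₀ (by linarith)
          linarith
      _ = _ := by field_simp; push_cast; ring

lemma card_primeFactors_le {d : ℕ} (hd : 1 ≤ d) : (d.primeFactors.card : ℝ) ≤ 2 * Real.log d := by
  have h1 : 2 ^ d.primeFactors.card ≤ d := by
    calc 2 ^ d.primeFactors.card ≤ ∏ p ∈ d.primeFactors, p :=
          Finset.pow_card_le_prod _ _ _ fun p hp => (Nat.prime_of_mem_primeFactors hp).two_le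
      _ ≤ d := Nat.le_of_dvd hd (Nat.prod_primeFactors_dvd d)
  have h2 : ((2:ℝ) ^ d.primeFactors.card) ≤ d := by exact_mod_cast h1
  have h3 := Real.log_le_log (by positivity) h2
  rw [Real.log_pow] at h3
  have := Real.log_two_gt_d9
  have : (0:ℝ) ≤ d.primeFactors.card := by positivity
  nlinarith

lemma eulerProd_one_le {d : ℕ} (hd : 1 ≤ d) : eulerProd 1 d.primeFactors ≤ 2 * Real.log d + 1 := by
  have := prod_ratio_le d.primeFactors fun r hr => (Nat.prime_of_mem_primeFactors hr).two_le
  unfold eulerProd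
  linarith [card_primeFactors_le hd]

lemma eulerProd_half_le {ε : ℝ} (hε : 0 < ε) : ∃ C : ℝ, 1 ≤ C ∧ ∀ d : ℕ, 1 ≤ d →
    eulerProd (1 / 2) d.primeFactors ≤ C * (d:ℝ) ^ ε := by
  set P : ℕ := ⌈(4:ℝ) ^ (1 / ε)⌉₊ with hP
  refine ⟨4 ^ P, one_le_pow₀ (by norm_num), fun d hd => ?_⟩
  have hfac : ∀ p : ℕ, p.Prime → (1 - (p:ℝ) ^ (-(1 / 2) : ℝ))⁻¹ ≤ 4 := by
    intro p hp
    have h2 : (2:ℝ) ≤ p := by exact_mod_cast hp.two_le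
    have h3 : (p:ℝ) ^ (-(1 / 2) : ℝ) ≤ 3 / 4 := by
      calc (p:ℝ) ^ (-(1 / 2) : ℝ) ≤ (2:ℝ) ^ (-(1 / 2) : ℝ) :=
            Real.rpow_le_rpow_of_nonpos (by norm_num) h2 (by norm_num)
        _ ≤ 3 / 4 := by
          rw [Real.rpow_neg (by norm_num), ← Real.sqrt_eq_rpow, inv_le_comm₀ (by positivity)
            (by norm_num)]
          refine Real.le_sqrt_of_sq_le ?_
          norm_num
    rw [inv_le_comm₀ (by linarith) (by norm_num)]
    norm_num
    linarith
  have hstep : eulerProd (1 / 2) d.primeFactors ≤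
      ∏ p ∈ d.primeFactors, (if p ≤ P then (4:ℝ) else 1) * (p:ℝ) ^ ε := by
    unfold eulerProd
    refine prod_le_prod (fun p hp => ?_) fun p hp => ?_
    · exact (zero_le_one.trans (euler_factor (by norm_num) (Nat.prime_of_mem_primeFactors hp)).2)
    · have hpp := Nat.prime_of_mem_primeFactors hp
      refine (hfac p hpp).trans ?_
      have h1 : (1:ℝ) ≤ p := by exact_mod_cast hpp.one_lt.le
      split_ifs with h
      · have : (1:ℝ) ≤ (p:ℝ) ^ ε := Real.one_le_rpow h1 hε.le
        linarith
      · have h2 : (4:ℝ) ^ (1 / ε) ≤ p := (Nat.le_ceil _).trans (by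
          push Not at h
          exact_mod_cast h.le)
        calc (4:ℝ) = ((4:ℝ) ^ (1 / ε)) ^ ε := by
              rw [← Real.rpow_mul (by norm_num), one_div_mul_cancel hε.ne', Real.rpow_one]
          _ ≤ (p:ℝ) ^ ε := by gcongr
          _ = _ := (one_mul _).symm
  refine hstep.trans ?_
  rw [prod_mul_distrib]
  have h1 : ∏ p ∈ d.primeFactors, (if p ≤ P then (4:ℝ) else 1) ≤ 4 ^ P := by
    rw [← prod_filter, prod_const]
    refine pow_le_pow_right₀ (by norm_num) ?_
    have : d.primeFactors.filter (· ≤ P) ⊆ Icc 1 P := fun p hp => by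
      rw [mem_filter] at hp
      exact mem_Icc.2 ⟨(Nat.prime_of_mem_primeFactors hp.1).one_lt.le, hp.2⟩
    simpa using card_le_card this
  have h2 : ∏ p ∈ d.primeFactors, (p:ℝ) ^ ε ≤ (d:ℝ) ^ ε := by
    rw [Real.finsetProd_rpow _ _ (fun _ _ => by positivity)]
    have : ((∏ p ∈ d.primeFactors, p : ℕ) : ℝ) ≤ d := by
      exact_mod_cast Nat.le_of_dvd hd (Nat.prod_primeFactors_dvd d)
    push_cast at this
    gcongr
  gcongr

/-- Powers of `log` are dominated by any positive power. -/
lemma log_pow_le_rpow {ε : ℝ} (hε : 0 < ε) (k : ℕ) {y : ℝ} (hy : 1 ≤ y) :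
    Real.log y ^ k ≤ k.factorial / ε ^ k * y ^ ε := by
  have hy0 : 0 < y := by linarith
  have h := log_pow_le_mul (Real.one_le_rpow hy hε.le) k
  rw [Real.log_rpow hy0, mul_pow] at h
  rw [div_mul_eq_mul_div, le_div_iff₀ (by positivity)]
  linarith

/-- A bound saving `k + 1` logarithms for `E ∅` is transferred to `E S`, with `S` the set of primes
dividing `d`, at the cost of one logarithm. The sums `E S` are only assumed to satisfy the recursion
that a coprimality condition obeys. -/
lemma coprime_bound (k : ℕ) {θ : ℝ} (hθ : 0 < θ) : ∃ C : ℝ, 1 ≤ C ∧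
    ∀ (E : Finset ℕ → ℝ → ℂ) (z : ℕ → ℂ) (A : ℝ), 1 ≤ A → (∀ p, ‖z p‖ ≤ 1 / p) →
    (∀ x, Real.exp 1 ≤ x → ‖E ∅ x‖ ≤ A / Real.log x ^ (k + 1)) →
    (∀ x, 1 ≤ x → ‖E ∅ x‖ ≤ 2 * x ^ 2) →
    (∀ S : Finset ℕ, (∀ r ∈ S, r.Prime) → ∀ x, 0 < x → x < 1 →
      ‖E S x‖ ≤ eulerProd (1 / 2) S * x ^ (-(1 / 2) : ℝ)) →
    (∀ (S : Finset ℕ) (p : ℕ), (∀ r ∈ S, r.Prime) → p.Prime → p ∉ S → ∀ x, 0 < x →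
      E (insert p S) x = E S x + z p * E (insert p S) (x / p)) →
    ∀ (X Y : ℝ) (d : ℕ), 1 ≤ X → X ^ θ ≤ Y → Real.exp 8 ≤ Y → 1 ≤ d → (d:ℝ) ≤ X →
      ‖E d.primeFactors Y‖ ≤ C * A / Real.log Y ^ k := by
  obtain ⟨C1, hC1, hE⟩ := eulerProd_half_le (ε := θ / 16) (by positivity)
  refine ⟨8 ^ (k + 1) * (2 / θ + 1) + 2 * C1 * (k.factorial / (1 / 8) ^ k), ?_, ?_⟩
  · have h1 : (1:ℝ) ≤ 8 ^ (k + 1) := one_le_pow₀ (by norm_num)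
    have h2 : 0 < 2 / θ := by positivity
    have h3 : 0 ≤ 2 * C1 * (k.factorial / (1 / 8 : ℝ) ^ k) := by positivity
    nlinarith
  intro E z A hA hz hb1 hb2 hsm hrec X Y d hX hXY hY hd hdX
  have hY1 : 1 ≤ Y := (Real.one_le_exp (by norm_num)).trans hY
  have hY0 : 0 < Y := by linarith
  have hlY : 8 ≤ Real.log Y := by rwa [Real.le_log_iff_exp_le hY0]
  have hY516 : 1 ≤ Y ^ (5 / 16 : ℝ) := Real.one_le_rpow hY1 (by norm_num)
  have hmain := coprime_induction (a := A * 8 ^ (k + 1) / Real.log Y ^ (k + 1))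
    (b := 2 * Y ^ (5 / 16 : ℝ)) (Y := Y) (by positivity) E z hz ?_ ?_ hrec
    d.primeFactors (fun r hr => Nat.prime_of_mem_primeFactors hr) Y hY0 le_rfl
  · refine hmain.trans ?_
    have hlX : Real.log X ≤ Real.log Y / θ := by
      rw [le_div_iff₀ hθ, mul_comm, ← Real.log_rpow (by linarith)]
      exact Real.log_le_log (by positivity) hXY
    have hld : Real.log d ≤ Real.log X := Real.log_le_log (by exact_mod_cast hd) hdX
    have h1 : eulerProd 1 d.primeFactors ≤ (2 / θ + 1) * Real.log Y := by
      have := eulerProd_one_le hd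
      have e : 2 / θ * Real.log Y = 2 * (Real.log Y / θ) := by ring
      linarith
    have h2 : eulerProd (1 / 2) d.primeFactors ≤ C1 * Y ^ (1 / 16 : ℝ) := by
      refine (hE d hd).trans ?_
      have : (d:ℝ) ^ (θ / 16) ≤ Y ^ (1 / 16 : ℝ) := by
        calc (d:ℝ) ^ (θ / 16) ≤ X ^ (θ / 16) := by gcongr
          _ = (X ^ θ) ^ (1 / 16 : ℝ) := by
            rw [← Real.rpow_mul (by linarith)]; congr 1; ring
          _ ≤ _ := by gcongr
      gcongr
    have h3 : A * 8 ^ (k + 1) / Real.log Y ^ (k + 1) * eulerProd 1 d.primeFactors ≤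
        8 ^ (k + 1) * (2 / θ + 1) * A / Real.log Y ^ k := by
      calc _ ≤ A * 8 ^ (k + 1) / Real.log Y ^ (k + 1) * ((2 / θ + 1) * Real.log Y) := by gcongr
        _ = _ := by
          have : Real.log Y ≠ 0 := by linarith
          rw [pow_succ (Real.log Y)]
          field_simp
    have h4 : 2 * Y ^ (5 / 16 : ℝ) * eulerProd (1 / 2) d.primeFactors * Y ^ (-(1 / 2) : ℝ) ≤
        2 * C1 * (k.factorial / (1 / 8) ^ k) * A / Real.log Y ^ k := by
      calc _ ≤ 2 * Y ^ (5 / 16 : ℝ) * (C1 * Y ^ (1 / 16 : ℝ)) * Y ^ (-(1 / 2) : ℝ) := by gcongr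
        _ = 2 * C1 * (Y ^ (5 / 16 : ℝ) * Y ^ (1 / 16 : ℝ) * Y ^ (-(1 / 2) : ℝ)) := by ring
        _ = 2 * C1 * Y ^ (-(1 / 8) : ℝ) := by
          rw [← Real.rpow_add hY0, ← Real.rpow_add hY0]; norm_num
        _ ≤ 2 * C1 * (k.factorial / (1 / 8) ^ k / Real.log Y ^ k) := by
          gcongr
          rw [Real.rpow_neg hY0.le, le_div_iff₀ (by positivity), ← div_eq_inv_mul,
            div_le_iff₀ (by positivity)]
          exact log_pow_le_rpow (by norm_num) k hY1
        _ = 2 * C1 * (k.factorial / (1 / 8) ^ k) * 1 / Real.log Y ^ k := by ring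
        _ ≤ _ := by gcongr
    calc _ ≤ _ := add_le_add h3 h4
      _ = _ := by ring
  · intro x hx hxY
    have hxr : 0 < x ^ (-(1 / 2) : ℝ) := by positivity
    have ha0 : 0 ≤ A * 8 ^ (k + 1) / Real.log Y ^ (k + 1) := by positivity
    rcases lt_or_ge x 1 with h1 | h1
    · have := hsm ∅ (by simp) x hx h1
      simp only [eulerProd, prod_empty, one_mul] at this
      nlinarith
    rcases lt_or_ge x (Y ^ (1 / 8 : ℝ)) with h2 | h2
    · refine (hb2 x h1).trans ?_
      have e : x ^ 2 = x ^ (5 / 2 : ℝ) * x ^ (-(1 / 2) : ℝ) := by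
        rw [← Real.rpow_add hx, ← Real.rpow_natCast]; norm_num
      have e2 : x ^ (5 / 2 : ℝ) ≤ Y ^ (5 / 16 : ℝ) := by
        calc _ ≤ (Y ^ (1 / 8 : ℝ)) ^ (5 / 2 : ℝ) := by gcongr
          _ = _ := by rw [← Real.rpow_mul hY0.le]; norm_num
      rw [e]
      nlinarith
    · have h3 : Real.log Y / 8 ≤ Real.log x := by
        have := Real.log_le_log (by positivity) h2
        rw [Real.log_rpow hY0] at this
        linarith
      have h4 : Real.exp 1 ≤ x := by
        rw [← Real.le_log_iff_exp_le hx]; linarith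
      refine (hb1 x h4).trans ?_
      have : A / Real.log x ^ (k + 1) ≤ A / (Real.log Y / 8) ^ (k + 1) := by gcongr
      have e : A / (Real.log Y / 8) ^ (k + 1) = A * 8 ^ (k + 1) / Real.log Y ^ (k + 1) := by
        rw [div_pow]; field_simp
      have : 0 ≤ 2 * Y ^ (5 / 16 : ℝ) * x ^ (-(1 / 2) : ℝ) := by positivity
      linarith
  · intro S hS x hx hx1
    refine (hsm S hS x hx hx1).trans ?_
    have := one_le_eulerProd (σ := 1 / 2) (by norm_num) hS
    gcongr
    nlinarith

lemma filter_empty_forall (n : ℕ) :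
    (Icc 1 n).filter (fun m => ∀ p ∈ (∅ : Finset ℕ), ¬ p ∣ m) = Icc 1 n := by simp

lemma twSum_inv {q : ℕ} (χ : DirichletCharacter ℂ q) (S : Finset ℕ) (x : ℝ) (hx : 0 < x) :
    twSum χ (fun y => ((y⁻¹ : ℝ) : ℂ)) S x =
      (∑ n ∈ (Icc 1 ⌊x⌋₊).filter (fun n => ∀ p ∈ S, ¬ p ∣ n), muChar χ n) / x := by
  unfold twSum
  rw [sum_div]
  refine sum_congr rfl fun n hn => ?_
  have : (n:ℂ) ≠ 0 := by
    have := (mem_Icc.1 (mem_filter.1 hn).1).1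
    exact_mod_cast (by omega : n ≠ 0)
  have hx' : (x:ℂ) ≠ 0 := by exact_mod_cast hx.ne'
  push_cast
  field_simp

lemma forall_primeFactors_iff {d n : ℕ} (hd : 1 ≤ d) :
    (∀ p ∈ d.primeFactors, ¬ p ∣ n) ↔ n.Coprime d := by
  constructor
  · intro h
    refine Nat.coprime_of_dvd fun p hp hpn hpd => h p ?_ hpn
    exact Nat.mem_primeFactors.2 ⟨hp, hpd, by omega⟩
  · intro h p hp hpn
    exact Nat.not_coprime_of_dvd_of_dvd (Nat.prime_of_mem_primeFactors hp).one_lt hpn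
      (Nat.dvd_of_mem_primeFactors hp) h

/-- `∑_{n ≤ Y, (n, d) = 1} μ(n) χ(n)` saves any power of the logarithm. -/
lemma muChar_coprime_bound (k : ℕ) {θ : ℝ} (hθ : 0 < θ) : ∃ C : ℝ, 1 ≤ C ∧
    ∀ (q : ℕ) [NeZero q] (χ : DirichletCharacter ℂ q), (χ ≠ 1 ∨ q = 1) →
    ∀ (X Y : ℝ) (d : ℕ), 1 ≤ X → X ^ θ ≤ Y → Real.exp 8 ≤ Y → 1 ≤ d → (d:ℝ) ≤ X →
      ‖∑ n ∈ (Icc 1 ⌊Y⌋₊).filter (fun n => n.Coprime d), muChar χ n‖ ≤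
        C * q * Y / Real.log Y ^ k := by
  obtain ⟨C1, hC1, h1⟩ := muChar_sum_bound (k + 1)
  obtain ⟨C2, hC2, h2⟩ := coprime_bound k hθ
  refine ⟨C2 * C1, one_le_mul_of_one_le_of_one_le hC2 hC1, ?_⟩
  intro q _ χ hχ X Y d hX hXY hY hd hdX
  have hq : (1:ℝ) ≤ q := by exact_mod_cast Nat.one_le_iff_ne_zero.2 (NeZero.ne q)
  have hY0 : 0 < Y := (Real.exp_pos 8).trans_le hY
  have hb : ∀ x : ℝ, 0 < x → ‖twSum χ (fun y => ((y⁻¹ : ℝ) : ℂ)) ∅ x‖ =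
      ‖∑ n ∈ Icc 1 ⌊x⌋₊, muChar χ n‖ / x := by
    intro x hx
    rw [twSum_inv χ ∅ x hx, filter_empty_forall, norm_div, Complex.norm_real,
      Real.norm_of_nonneg hx.le]
  have := h2 (twSum χ (fun y => ((y⁻¹ : ℝ) : ℂ))) (fun p => χ p / p) (C1 * q)
    (one_le_mul_of_one_le_of_one_le hC1 hq) (fun p => ?_) (fun x hx => ?_) (fun x hx => ?_)
    (fun S hS x hx hx1 => ?_) (fun S p hS hp hpS x hx => twSum_insert χ _ hS hp hpS x)
    X Y d hX hXY hY hd hdX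
  · rw [twSum_inv χ _ Y hY0, norm_div, Complex.norm_real, Real.norm_of_nonneg hY0.le,
      div_le_iff₀ hY0] at this
    simp only [forall_primeFactors_iff hd] at this
    refine this.trans (le_of_eq ?_)
    ring
  · rw [norm_div, Complex.norm_natCast]
    gcongr
    exact χ.norm_le_one _
  · have hx0 : 0 < x := (Real.exp_pos 1).trans_le hx
    rw [hb x hx0, div_le_iff₀ hx0]
    refine (h1 q χ x hχ hx).trans (le_of_eq ?_)
    ring
  · have hx0 : 0 < x := by linarith
    rw [hb x hx0, div_le_iff₀ hx0]
    refine (norm_sum_le_of_le (n := fun _ => 1) _ fun i _ => norm_muChar_le χ i).trans ?_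
    rw [sum_const, Nat.card_Icc, nsmul_eq_mul, mul_one, Nat.add_sub_cancel]
    refine (Nat.floor_le hx0.le).trans ?_
    nlinarith
  · rw [twSum_of_lt_one χ _ S hx1, norm_zero]
    have := one_le_eulerProd (σ := 1 / 2) (by norm_num) hS
    positivity

/-- Siegel–Walfisz for the Möbius function in reduced classes, with an extra coprimality
condition. -/
theorem moebius_class_bound (k : ℕ) {θ : ℝ} (hθ : 0 < θ) : ∃ C : ℝ, 1 ≤ C ∧
    ∀ (X Y : ℝ) (d g h : ℕ), 1 ≤ X → X ^ θ ≤ Y → Real.exp 8 ≤ Y → 1 ≤ d → (d:ℝ) ≤ X → g ∣ d →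
      h.Coprime g →
      ‖∑ n ∈ (Icc 1 ⌊Y⌋₊).filter (fun n => n.Coprime d ∧ n ≡ h [MOD g]),
        (ArithmeticFunction.moebius n : ℂ)‖ ≤ C * g * Y / Real.log Y ^ k := by
  obtain ⟨C, hC, h1⟩ := muChar_coprime_bound k hθ
  refine ⟨C, hC, ?_⟩
  intro X Y d g h hX hXY hY hd hdX hgd hgh
  have hg0 : g ≠ 0 := by rintro rfl; simp at hgd; omega
  haveI : NeZero g := ⟨hg0⟩
  have hg1 : (1:ℝ) ≤ g := by exact_mod_cast Nat.one_le_iff_ne_zero.2 hg0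
  have hY0 : 0 < Y := (Real.exp_pos 8).trans_le hY
  have hlY : 8 ≤ Real.log Y := by rwa [Real.le_log_iff_exp_le hY0]
  have hunit : IsUnit ((h : ℕ) : ZMod g) := (ZMod.isUnit_iff_coprime h g).2 hgh
  set R := C * g * Y / Real.log Y ^ k with hR
  have hchar : ∀ χ : DirichletCharacter ℂ g,
      ‖∑ n ∈ (Icc 1 ⌊Y⌋₊).filter (fun n => n.Coprime d), muChar χ n‖ ≤ R := by
    intro χ
    by_cases hχ : χ = 1
    · have := h1 1 (1 : DirichletCharacter ℂ 1) (Or.inr rfl) X Y d hX hXY hY hd hdX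
      have e : ∑ n ∈ (Icc 1 ⌊Y⌋₊).filter (fun n => n.Coprime d), muChar χ n =
          ∑ n ∈ (Icc 1 ⌊Y⌋₊).filter (fun n => n.Coprime d),
            muChar (1 : DirichletCharacter ℂ 1) n := by
        refine sum_congr rfl fun n hn => ?_
        have hn := (mem_filter.1 hn).2
        unfold muChar
        rw [hχ, MulChar.one_apply ((ZMod.isUnit_iff_coprime n g).2 (hn.coprime_dvd_right hgd)),
          MulChar.one_apply (isUnit_of_subsingleton _)]
      rw [e]
      refine this.trans ?_
      rw [hR]
      gcongr
      simpa using hg1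
    · exact h1 g χ (Or.inl hχ) X Y d hX hXY hY hd hdX
  have hφ : 0 < (g.totient : ℝ) := by exact_mod_cast Nat.totient_pos.2 (Nat.pos_of_ne_zero hg0)
  have horth : (g.totient : ℂ) * ∑ n ∈ (Icc 1 ⌊Y⌋₊).filter (fun n => n.Coprime d ∧ n ≡ h [MOD g]),
        (ArithmeticFunction.moebius n : ℂ) =
      ∑ χ : DirichletCharacter ℂ g, χ ((h : ZMod g)⁻¹) *
        ∑ n ∈ (Icc 1 ⌊Y⌋₊).filter (fun n => n.Coprime d), muChar χ n := by
    simp_rw [mul_sum]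
    rw [sum_comm, ← filter_filter, sum_filter]
    refine sum_congr rfl fun n hn => ?_
    have := DirichletCharacter.sum_char_inv_mul_char_eq ℂ hunit (n : ZMod g)
    simp only [muChar]
    have e : ∑ χ : DirichletCharacter ℂ g, χ ((h : ZMod g)⁻¹) *
        ((ArithmeticFunction.moebius n : ℂ) * χ n) =
        (ArithmeticFunction.moebius n : ℂ) * ∑ χ : DirichletCharacter ℂ g,
          χ ((h : ZMod g)⁻¹) * χ n := by
      rw [mul_sum]
      exact sum_congr rfl fun χ _ => by ring
    rw [e, this]
    by_cases hnh : n ≡ h [MOD g]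
    · rw [if_pos hnh, if_pos ((ZMod.natCast_eq_natCast_iff _ _ _).2 hnh.symm)]
      ring
    · rw [if_neg hnh, if_neg (fun h' => hnh ((ZMod.natCast_eq_natCast_iff _ _ _).1 h').symm)]
      ring
  have hcard : (Finset.univ : Finset (DirichletCharacter ℂ g)).card = g.totient := by
    have := DirichletCharacter.card_eq_totient_of_hasEnoughRootsOfUnity ℂ g
    rw [← this, Nat.card_eq_fintype_card]
    rfl
  have hn := congrArg norm horth
  rw [norm_mul, Complex.norm_natCast] at hn
  have hle : ‖∑ χ : DirichletCharacter ℂ g, χ ((h : ZMod g)⁻¹) *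
        ∑ n ∈ (Icc 1 ⌊Y⌋₊).filter (fun n => n.Coprime d), muChar χ n‖ ≤ g.totient * R := by
    refine (norm_sum_le_of_le (n := fun _ => R) _ fun χ _ => ?_).trans ?_
    · rw [norm_mul]
      have h0 : 0 ≤ R := (norm_nonneg _).trans (hchar 1)
      calc _ ≤ 1 * R := mul_le_mul (χ.norm_le_one _) (hchar χ) (norm_nonneg _) zero_le_one
        _ = R := one_mul _
    · rw [sum_const, hcard, nsmul_eq_mul]
  rw [← hn] at hle
  exact le_of_mul_le_mul_left hle hφ

/-! ### The sums `∑ μ(b) / b` over `b` coprime to `d` -/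

/-- The hyperbola identity at the point `K * Y`. -/
lemma hyperbola (u v : ℕ → ℝ) {K Y : ℕ} (hK : 1 ≤ K) (hY : 1 ≤ Y) :
    ∑ n ∈ Ioc 0 (K * Y), u n * ∑ m ∈ Ioc 0 (K * Y / n), v m =
      ∑ n ∈ Ioc 0 Y, u n * ∑ m ∈ Ioc 0 (K * Y / n), v m +
      ∑ m ∈ Ioc 0 K, v m * ∑ n ∈ Ioc Y (K * Y / m), u n := by
  have hYK : Y ≤ K * Y := Nat.le_mul_of_pos_left _ hK
  rw [← sum_Ioc_consecutive _ (Nat.zero_le Y) hYK]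
  congr 1
  simp_rw [mul_sum]
  rw [sum_comm' (s' := fun m => Ioc Y (K * Y / m)) (t' := Ioc 0 K)]
  · exact sum_congr rfl fun m _ => sum_congr rfl fun n _ => mul_comm _ _
  · intro n m
    simp only [mem_Ioc]
    constructor
    · rintro ⟨⟨h1, h2⟩, h3, h4⟩
      rw [Nat.le_div_iff_mul_le (by omega)] at h4
      refine ⟨⟨h1, ?_⟩, h3, ?_⟩
      · rw [Nat.le_div_iff_mul_le h3]; linarith
      · by_contra h
        push Not at h
        nlinarith
    · rintro ⟨⟨h1, h2⟩, h3, h4⟩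
      rw [Nat.le_div_iff_mul_le h3] at h2
      refine ⟨⟨h1, by nlinarith⟩, h3, ?_⟩
      rw [Nat.le_div_iff_mul_le (by omega)]; linarith

/-- The identity `μ * 1 = δ`, weighted by a completely multiplicative function and summed. -/
lemma sum_moebius_div {N : ℕ} (hN : 1 ≤ N) (h : ℕ → ℝ) (hh : ∀ m n, h (m * n) = h m * h n)
    (h1 : h 1 = 1) :
    ∑ n ∈ Ioc 0 N, (ArithmeticFunction.moebius n : ℝ) * h n * ∑ m ∈ Ioc 0 (N / n), h m = 1 := by
  let f : ArithmeticFunction ℝ := ⟨fun n => (ArithmeticFunction.moebius n : ℝ) * h n, by simp⟩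
  let g : ArithmeticFunction ℝ := ⟨fun n => if n = 0 then 0 else h n, by simp⟩
  have key := ArithmeticFunction.sum_Ioc_mul_eq_sum_sum f g N
  have e1 : ∀ n ∈ Ioc 0 N, (f * g) n = if n = 1 then 1 else 0 := by
    intro n hn
    have hn0 : n ≠ 0 := by have := (mem_Ioc.1 hn).1; omega
    have e2 : (f * g) n = h n * ∑ x ∈ n.divisorsAntidiagonal, (ArithmeticFunction.moebius x.1 : ℝ) := by
      rw [ArithmeticFunction.mul_apply, mul_sum]
      refine sum_congr rfl fun x hx => ?_
      obtain ⟨hx1, hx2⟩ := Nat.mem_divisorsAntidiagonal.1 hx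
      have : x.2 ≠ 0 := by rintro h; simp [h] at hx1; omega
      simp only [f, g, ArithmeticFunction.coe_mk, this, if_false]
      rw [← hx1, hh]; ring
    rw [e2, Nat.sum_divisorsAntidiagonal (fun i _ => (ArithmeticFunction.moebius i : ℝ))]
    have e3 : ((∑ i ∈ n.divisors, ArithmeticFunction.moebius i : ℤ) : ℝ) = if n = 1 then 1 else 0 := by
      rw [← ArithmeticFunction.coe_mul_zeta_apply, ArithmeticFunction.moebius_mul_coe_zeta,
        ArithmeticFunction.one_apply]
      split_ifs <;> simp
    push_cast at e3
    rw [e3]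
    split_ifs with h2
    · rw [h2, h1, mul_one]
    · simp
  rw [sum_congr rfl e1, sum_ite_eq' ] at key
  rw [if_pos (by simp; omega)] at key
  rw [key]
  refine sum_congr rfl fun n _ => ?_
  simp only [f, ArithmeticFunction.coe_mk]
  congr 1
  refine sum_congr rfl fun m hm => ?_
  simp only [g, ArithmeticFunction.coe_mk]
  rw [if_neg]
  have := (mem_Ioc.1 hm).1; omega

lemma sum_Ioc_sub (u : ℕ → ℝ) (Y N : ℕ) (h : Y ≤ N) :
    ∑ n ∈ Ioc Y N, u n = ∑ n ∈ Ioc 0 N, u n - ∑ n ∈ Ioc 0 Y, u n := by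
  rw [← sum_Ioc_consecutive _ (Nat.zero_le Y) h]; ring

lemma abs_moebius_real (n : ℕ) : |(ArithmeticFunction.moebius n : ℝ)| ≤ 1 := by
  exact_mod_cast ArithmeticFunction.abs_moebius_le_one

/-- Summation by the hyperbola method: cancellation in `∑ μ(n)` gives cancellation in `∑ μ(n) / n`.
The parameter `K` is the point of splitting. -/
lemma moebius_div_sum_le {K Y : ℕ} (hK : 1 ≤ K) (hY : 1 ≤ Y) {ε : ℝ}
    (hε : ∀ j : ℕ, Y ≤ j → |∑ n ∈ Ioc 0 j, (ArithmeticFunction.moebius n : ℝ)| ≤ ε * j) :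
    |∑ n ∈ Ioc 0 Y, (ArithmeticFunction.moebius n : ℝ) / n| ≤ 2 / K + 2 * K * ε := by
  have hKR : (1:ℝ) ≤ K := by exact_mod_cast hK
  have hYR : (1:ℝ) ≤ Y := by exact_mod_cast hY
  have hε0 : 0 ≤ ε := by
    have := (abs_nonneg _).trans (hε Y le_rfl)
    exact nonneg_of_mul_nonneg_left this (by linarith)
  have hKY : 1 ≤ K * Y := Nat.mul_pos hK hY
  have h1 := sum_moebius_div hKY (fun _ => 1) (by simp) rfl
  simp only [mul_one] at h1
  rw [hyperbola _ _ hK hY] at h1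
  have h2 : |∑ m ∈ Ioc 0 K, (1:ℝ) * ∑ n ∈ Ioc Y (K * Y / m), (ArithmeticFunction.moebius n : ℝ)| ≤
      K * (2 * ε * (K * Y)) := by
    refine (abs_sum_le_sum_abs _ _).trans ?_
    rw [show (K:ℝ) * (2 * ε * (K * Y)) = ∑ m ∈ Ioc 0 K, (2 * ε * (K * Y)) by simp]
    refine sum_le_sum fun m hm => ?_
    obtain ⟨hm0, hmK⟩ := mem_Ioc.1 hm
    have hle : Y ≤ K * Y / m := by
      rw [Nat.le_div_iff_mul_le hm0]; nlinarith
    rw [one_mul, sum_Ioc_sub _ _ _ hle]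
    refine (abs_sub _ _).trans ?_
    have a1 := hε _ hle
    have a2 := hε Y le_rfl
    have a3 : ((K * Y / m : ℕ) : ℝ) ≤ K * Y := by
      exact_mod_cast Nat.div_le_self _ _
    have a4 : (Y:ℝ) ≤ K * Y := by nlinarith
    nlinarith [mul_le_mul_of_nonneg_left a3 hε0, mul_le_mul_of_nonneg_left a4 hε0]
  have h3 : |∑ n ∈ Ioc 0 Y, (ArithmeticFunction.moebius n : ℝ) * ∑ m ∈ Ioc 0 (K * Y / n), (1:ℝ) -
      K * Y * ∑ n ∈ Ioc 0 Y, (ArithmeticFunction.moebius n : ℝ) / n| ≤ Y := by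
    rw [mul_sum, ← sum_sub_distrib]
    refine (abs_sum_le_sum_abs _ _).trans ?_
    rw [show (Y:ℝ) = ∑ m ∈ Ioc 0 Y, (1:ℝ) by simp]
    refine sum_le_sum fun n hn => ?_
    obtain ⟨hn0, hnY⟩ := mem_Ioc.1 hn
    have hnR : (0:ℝ) < n := by exact_mod_cast hn0
    have e1 : (ArithmeticFunction.moebius n : ℝ) * ∑ m ∈ Ioc 0 (K * Y / n), (1:ℝ) -
        K * (∑ m ∈ Ioc 0 Y, (1:ℝ)) * ((ArithmeticFunction.moebius n : ℝ) / n) =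
        ArithmeticFunction.moebius n * (((K * Y / n : ℕ) : ℝ) - ((K * Y : ℕ) : ℝ) / n) := by
      simp; ring
    rw [e1, abs_mul]
    refine mul_le_one₀ (abs_moebius_real n) (abs_nonneg _) ?_
    rw [abs_le]
    have b1 : ((K * Y / n : ℕ) : ℝ) ≤ ((K * Y : ℕ) : ℝ) / n := Nat.cast_div_le
    have b2 : ((K * Y : ℕ) : ℝ) / n < ((K * Y / n : ℕ) : ℝ) + 1 := by
      rw [div_lt_iff₀ hnR]
      exact_mod_cast Nat.lt_mul_of_div_lt (Nat.lt_succ_self _) hn0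
    constructor <;> linarith
  set G := ∑ n ∈ Ioc 0 Y, (ArithmeticFunction.moebius n : ℝ) / n
  have h4 : |K * Y * G| ≤ 1 + K * (2 * ε * (K * Y)) + Y := by
    rw [abs_le] at *
    constructor <;> linarith [h2.1, h2.2, h3.1, h3.2]
  rw [abs_mul, abs_of_nonneg (by positivity : (0:ℝ) ≤ K * Y)] at h4
  have h5 : (K * Y : ℝ) * |G| ≤ (K * Y) * (2 / K + 2 * K * ε) := by
    refine h4.trans ?_
    have : (K * Y : ℝ) * (2 / K + 2 * K * ε) = 2 * Y + K * (2 * ε * (K * Y)) := by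
      field_simp
    rw [this]; linarith
  exact le_of_mul_le_mul_left h5 (by positivity)

lemma harmonic_bound {z : ℝ} (hz : 1 ≤ z) :
    |∑ m ∈ Ioc 0 ⌊z⌋₊, (m:ℝ)⁻¹ - Real.log z - Real.eulerMascheroniConstant| ≤ 2 / z := by
  have hj : 1 ≤ ⌊z⌋₊ := Nat.one_le_floor_iff _ |>.2 hz
  set j := ⌊z⌋₊
  have hjR : (1:ℝ) ≤ j := by exact_mod_cast hj
  have hjz : (j:ℝ) ≤ z := Nat.floor_le (by linarith)
  have hzj : z < j + 1 := Nat.lt_floor_add_one z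
  have e1 : ∑ m ∈ Ioc 0 j, (m:ℝ)⁻¹ = harmonic j := by
    rw [harmonic_eq_sum_Icc]; push_cast; rfl
  have h1 := Real.eulerMascheroniSeq_lt_eulerMascheroniConstant j
  have h2 := Real.eulerMascheroniConstant_lt_eulerMascheroniSeq' j
  rw [Real.eulerMascheroniSeq] at h1
  rw [Real.eulerMascheroniSeq', if_neg (by omega)] at h2
  have h3 : Real.log (j + 1) - Real.log j ≤ 1 / j := by
    rw [← Real.log_div (by positivity) (by positivity)]
    refine (Real.log_le_sub_one_of_pos (by positivity)).trans (le_of_eq ?_)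
    field_simp; ring
  have h4 : Real.log j ≤ Real.log z := Real.log_le_log (by linarith) hjz
  have h5 : Real.log z ≤ Real.log (j + 1) := Real.log_le_log (by linarith) hzj.le
  have h6 : 1 / (j:ℝ) ≤ 2 / z := by
    rw [div_le_div_iff₀ (by linarith) (by linarith)]; linarith
  rw [e1, abs_le]
  constructor <;> linarith

/-- The hyperbola method for the sum weighted by `log (Y / n)`, whose limit is `1`. -/
lemma moebius_log_sum_le {K Y : ℕ} (hK : 1 ≤ K) (hY : 1 ≤ Y) {ε : ℝ}
    (hε : ∀ j : ℕ, Y ≤ j → |∑ n ∈ Ioc 0 j, (ArithmeticFunction.moebius n : ℝ) / n| ≤ ε) :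
    |∑ n ∈ Ioc 0 Y, (ArithmeticFunction.moebius n : ℝ) / n * Real.log (Y / n) - 1| ≤
      2 / K + 4 * K * ε := by
  have hKR : (1:ℝ) ≤ K := by exact_mod_cast hK
  have hYR : (1:ℝ) ≤ Y := by exact_mod_cast hY
  have hε0 : 0 ≤ ε := (abs_nonneg _).trans (hε Y le_rfl)
  have hKY : 1 ≤ K * Y := Nat.mul_pos hK hY
  have h1 := sum_moebius_div hKY (fun n => (n:ℝ)⁻¹) (by intros; push_cast; rw [mul_inv]) (by simp)
  simp only [← div_eq_mul_inv] at h1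
  rw [hyperbola _ _ hK hY] at h1
  have h2 : |∑ m ∈ Ioc 0 K, (m:ℝ)⁻¹ *
      ∑ n ∈ Ioc Y (K * Y / m), (ArithmeticFunction.moebius n : ℝ) / n| ≤ K * (2 * ε) := by
    refine (abs_sum_le_sum_abs _ _).trans ?_
    rw [show (K:ℝ) * (2 * ε) = ∑ m ∈ Ioc 0 K, (2 * ε) by simp]
    refine sum_le_sum fun m hm => ?_
    obtain ⟨hm0, hmK⟩ := mem_Ioc.1 hm
    have hle : Y ≤ K * Y / m := by
      rw [Nat.le_div_iff_mul_le hm0]; nlinarith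
    have hm1 : (1:ℝ) ≤ m := by exact_mod_cast hm0
    rw [sum_Ioc_sub _ _ _ hle, abs_mul, abs_inv, Nat.abs_cast]
    refine (mul_le_of_le_one_left (abs_nonneg _) (inv_le_one_of_one_le₀ hm1)).trans ?_
    refine (abs_sub _ _).trans ?_
    linarith [hε _ hle, hε Y le_rfl]
  set G := ∑ n ∈ Ioc 0 Y, (ArithmeticFunction.moebius n : ℝ) / n with hG
  set H := ∑ n ∈ Ioc 0 Y, (ArithmeticFunction.moebius n : ℝ) / n * Real.log (Y / n) with hH
  have h3 : |∑ n ∈ Ioc 0 Y, (ArithmeticFunction.moebius n : ℝ) / n *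
      ∑ m ∈ Ioc 0 (K * Y / n), (m:ℝ)⁻¹ -
      (H + (Real.log K + Real.eulerMascheroniConstant) * G)| ≤ 2 / K := by
    rw [hH, hG, mul_sum, ← sum_add_distrib, ← sum_sub_distrib]
    refine (abs_sum_le_sum_abs _ _).trans ?_
    rw [show (2:ℝ) / K = ∑ m ∈ Ioc 0 Y, 2 / ((K:ℝ) * Y) by simp; field_simp]
    refine sum_le_sum fun n hn => ?_
    obtain ⟨hn0, hnY⟩ := mem_Ioc.1 hn
    have hnR : (0:ℝ) < n := by exact_mod_cast hn0
    have hnYR : (n:ℝ) ≤ Y := by exact_mod_cast hnY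
    have hz : 1 ≤ (K:ℝ) * (Y / n) := by
      have : 1 ≤ (Y:ℝ) / n := by rwa [one_le_div hnR]
      nlinarith
    have b := harmonic_bound hz
    have e2 : ⌊(K:ℝ) * (Y / n)⌋₊ = K * Y / n := by
      rw [← mul_div_assoc, ← Nat.cast_mul, Nat.floor_div_eq_div]
    rw [e2, Real.log_mul (by positivity) (by positivity)] at b
    have e1 : (ArithmeticFunction.moebius n : ℝ) / n * ∑ m ∈ Ioc 0 (K * Y / n), (m:ℝ)⁻¹ -
        ((ArithmeticFunction.moebius n : ℝ) / n * Real.log (Y / n) +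
          (Real.log K + Real.eulerMascheroniConstant) * ((ArithmeticFunction.moebius n : ℝ) / n)) =
        (ArithmeticFunction.moebius n : ℝ) * ((∑ m ∈ Ioc 0 (K * Y / n), (m:ℝ)⁻¹ -
          (Real.log K + Real.log (Y / n)) - Real.eulerMascheroniConstant) / n) := by
      field_simp; ring
    rw [e1, abs_mul, abs_div, Nat.abs_cast]
    refine (mul_le_of_le_one_left (by positivity) (abs_moebius_real n)).trans ?_
    rw [div_le_iff₀ hnR]
    refine b.trans (le_of_eq ?_)
    field_simp
  have h5 : |(Real.log K + Real.eulerMascheroniConstant) * G| ≤ 2 * K * ε := by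
    rw [abs_mul]
    have g1 := Real.one_half_lt_eulerMascheroniConstant
    have g2 := Real.eulerMascheroniConstant_lt_two_thirds
    have g3 : 0 ≤ Real.log K := Real.log_nonneg hKR
    have g4 : Real.log K ≤ K - 1 := Real.log_le_sub_one_of_pos (by linarith)
    rw [abs_of_nonneg (by linarith)]
    have := hε Y le_rfl
    gcongr
    linarith
  rw [abs_le] at *
  constructor <;> linarith [h2.1, h2.2, h3.1, h3.2, h5.1, h5.2]

lemma muChar_one (n : ℕ) : muChar (1 : DirichletCharacter ℂ 1) n = (ArithmeticFunction.moebius n : ℂ) := by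
  unfold muChar
  rw [MulChar.one_apply (isUnit_of_subsingleton _), mul_one]

lemma moebius_sum_le (k : ℕ) : ∃ C : ℝ, 1 ≤ C ∧ ∀ (x : ℝ) (j : ℕ), Real.exp 1 ≤ x → ⌊x⌋₊ ≤ j →
    |∑ n ∈ Ioc 0 j, (ArithmeticFunction.moebius n : ℝ)| ≤ C / Real.log x ^ k * j := by
  obtain ⟨C, hC, h⟩ := muChar_sum_bound k
  refine ⟨2 * C, by linarith, ?_⟩
  intro x j hx hj
  have hx0 : 0 < x := (Real.exp_pos 1).trans_le hx
  have hx1 : 1 ≤ x := (Real.one_le_exp (by norm_num)).trans hx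
  have hlx : 1 ≤ Real.log x := by rwa [Real.le_log_iff_exp_le hx0]
  have hf1 : 1 ≤ ⌊x⌋₊ := Nat.one_le_floor_iff _ |>.2 hx1
  have hf : ⌊max x j⌋₊ = j := by
    rcases le_total x j with h | h
    · rw [max_eq_right h, Nat.floor_natCast]
    · rw [max_eq_left h]
      exact le_antisymm hj (Nat.le_floor h)
  have hxj : max x j ≤ 2 * j := by
    have h1 : x < j + 1 := (Nat.lt_floor_add_one x).trans_le (by exact_mod_cast Nat.succ_le_succ hj)
    have h2 : (1:ℝ) ≤ j := by exact_mod_cast hf1.trans hj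
    exact max_le (by linarith) (by linarith)
  have := h 1 (1 : DirichletCharacter ℂ 1) (max x j) (Or.inr rfl) (hx.trans (le_max_left _ _))
  rw [hf] at this
  simp only [muChar_one] at this
  have e1 : ((∑ n ∈ Ioc 0 j, (ArithmeticFunction.moebius n : ℝ) : ℝ) : ℂ) =
      ∑ n ∈ Icc 1 j, (ArithmeticFunction.moebius n : ℂ) := by
    push_cast; rfl
  rw [← Real.norm_eq_abs, ← Complex.norm_real, e1]
  refine this.trans ?_
  have h3 : Real.log x ^ k ≤ Real.log (max x j) ^ k := by
    gcongr; exact le_max_left _ _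
  calc C * ((1:ℕ):ℝ) * max x j / Real.log (max x j) ^ k ≤ C * ((1:ℕ):ℝ) * (2 * j) / Real.log x ^ k := by
        gcongr
    _ = _ := by push_cast; ring

lemma ceil_pow_log {x : ℝ} (hx : Real.exp 1 ≤ x) (k : ℕ) :
    1 ≤ ⌈Real.log x ^ k⌉₊ ∧ Real.log x ^ k ≤ ⌈Real.log x ^ k⌉₊ ∧
      (⌈Real.log x ^ k⌉₊ : ℝ) ≤ 2 * Real.log x ^ k ∧ 1 ≤ Real.log x ^ k := by
  have hx0 : 0 < x := (Real.exp_pos 1).trans_le hx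
  have hlx : 1 ≤ Real.log x := by rwa [Real.le_log_iff_exp_le hx0]
  have h1 : 1 ≤ Real.log x ^ k := one_le_pow₀ hlx
  have h2 := Nat.ceil_lt_add_one (zero_le_one.trans h1)
  exact ⟨Nat.one_le_ceil_iff.2 (by linarith), Nat.le_ceil _, by linarith, h1⟩

lemma moebius_div_sum_bound (k : ℕ) : ∃ C : ℝ, 1 ≤ C ∧ ∀ (x : ℝ) (j : ℕ), Real.exp 1 ≤ x →
    ⌊x⌋₊ ≤ j → |∑ n ∈ Ioc 0 j, (ArithmeticFunction.moebius n : ℝ) / n| ≤ C / Real.log x ^ k := by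
  obtain ⟨C, hC, h⟩ := moebius_sum_le (2 * k)
  refine ⟨2 + 4 * C, by linarith, ?_⟩
  intro x j hx hj
  obtain ⟨h1, h2, h3, h4⟩ := ceil_pow_log hx k
  have hx1 : 1 ≤ x := (Real.one_le_exp (by norm_num)).trans hx
  have hf1 : 1 ≤ ⌊x⌋₊ := Nat.one_le_floor_iff _ |>.2 hx1
  have := moebius_div_sum_le h1 (hf1.trans hj) (fun i hi => h x i hx (hj.trans hi))
  refine this.trans ?_
  set l := Real.log x ^ k with hl
  have e1 : Real.log x ^ (2 * k) = l * l := by rw [hl, two_mul, pow_add]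
  rw [e1]
  have hl0 : 0 < l := by linarith
  calc 2 / (⌈l⌉₊ : ℝ) + 2 * ⌈l⌉₊ * (C / (l * l)) ≤ 2 / l + 2 * (2 * l) * (C / (l * l)) := by gcongr
    _ = _ := by field_simp; ring

lemma moebius_log_sum_bound (k : ℕ) : ∃ C : ℝ, 1 ≤ C ∧ ∀ x : ℝ, Real.exp 1 ≤ x →
    |∑ n ∈ Ioc 0 ⌊x⌋₊, (ArithmeticFunction.moebius n : ℝ) / n * Real.log (x / n) - 1| ≤
      C / Real.log x ^ k := by
  obtain ⟨C, hC, h⟩ := moebius_div_sum_bound (2 * k)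
  refine ⟨2 + 9 * C, by linarith, ?_⟩
  intro x hx
  obtain ⟨h1, h2, h3, h4⟩ := ceil_pow_log hx k
  have hx1 : 1 ≤ x := (Real.one_le_exp (by norm_num)).trans hx
  have hf1 : 1 ≤ ⌊x⌋₊ := Nat.one_le_floor_iff _ |>.2 hx1
  have hf1R : (1:ℝ) ≤ ⌊x⌋₊ := by exact_mod_cast hf1
  have key := moebius_log_sum_le h1 hf1 (fun i hi => h x i hx hi)
  have hG := h x _ hx le_rfl
  have hfl : (⌊x⌋₊ : ℝ) ≤ x := Nat.floor_le (by linarith)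
  have hfl2 : x < ⌊x⌋₊ + 1 := Nat.lt_floor_add_one x
  have e1 : ∑ n ∈ Ioc 0 ⌊x⌋₊, (ArithmeticFunction.moebius n : ℝ) / n * Real.log (x / n) =
      ∑ n ∈ Ioc 0 ⌊x⌋₊, (ArithmeticFunction.moebius n : ℝ) / n * Real.log (⌊x⌋₊ / n) +
      Real.log (x / ⌊x⌋₊) * ∑ n ∈ Ioc 0 ⌊x⌋₊, (ArithmeticFunction.moebius n : ℝ) / n := by
    rw [mul_sum, ← sum_add_distrib]
    refine sum_congr rfl fun n hn => ?_
    have hn0 : (n:ℝ) ≠ 0 := by have := (mem_Ioc.1 hn).1; positivity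
    rw [Real.log_div (by linarith) hn0, Real.log_div (by linarith) hn0,
      Real.log_div (by linarith) (by linarith)]
    ring
  have hlog0 : 0 ≤ Real.log (x / ⌊x⌋₊) := Real.log_nonneg (by rwa [one_le_div (by linarith)])
  have hlog1 : Real.log (x / ⌊x⌋₊) ≤ 1 := by
    refine (Real.log_le_sub_one_of_pos (by positivity)).trans ?_
    rw [sub_le_iff_le_add, div_le_iff₀ (by linarith)]; linarith
  set l := Real.log x ^ k with hl
  have e2 : Real.log x ^ (2 * k) = l * l := by rw [hl, two_mul, pow_add]
  rw [e2] at key hG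
  have hl0 : 0 < l := by linarith
  have hb : |Real.log (x / ⌊x⌋₊) * ∑ n ∈ Ioc 0 ⌊x⌋₊, (ArithmeticFunction.moebius n : ℝ) / n| ≤ C / l := by
    rw [abs_mul, abs_of_nonneg hlog0]
    calc _ ≤ 1 * (C / (l * l)) := by gcongr
      _ ≤ C / (l * 1) := by rw [one_mul]; gcongr
      _ = _ := by rw [mul_one]
  have hk2 : 2 / (⌈l⌉₊ : ℝ) + 4 * ⌈l⌉₊ * (C / (l * l)) ≤ (2 + 8 * C) / l := by
    calc 2 / (⌈l⌉₊ : ℝ) + 4 * ⌈l⌉₊ * (C / (l * l)) ≤ 2 / l + 4 * (2 * l) * (C / (l * l)) := by gcongr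
      _ = _ := by field_simp; ring
  have e3 : (2 + 9 * C) / l = (2 + 8 * C) / l + C / l := by ring
  rw [e1, e3]
  have key2 := key.trans hk2
  rw [abs_le] at *
  constructor <;> linarith [key2.1, key2.2, hb.1, hb.2]

lemma eulerProd_one_eq {d : ℕ} (hd : 1 ≤ d) : eulerProd 1 d.primeFactors = d / d.totient := by
  have h := Nat.totient_eq_mul_prod_factors d
  have h' : (d.totient : ℝ) = d * ∏ p ∈ d.primeFactors, (1 - (p:ℝ)⁻¹) := by
    have := congrArg (Rat.cast (K := ℝ)) h
    push_cast at this
    exact this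
  have hp : 0 < (d.totient : ℝ) := by exact_mod_cast Nat.totient_pos.2 hd
  unfold eulerProd
  simp only [Real.rpow_neg_one, prod_inv_distrib]
  have hne : ∏ p ∈ d.primeFactors, (1 - (p:ℝ)⁻¹) ≠ 0 := by
    intro h0; rw [h0, mul_zero] at h'; linarith
  have hd0 : (d:ℝ) ≠ 0 := by positivity
  rw [h']
  field_simp

lemma eulerProd_one_le_half {S : Finset ℕ} (hS : ∀ r ∈ S, r.Prime) :
    eulerProd 1 S ≤ eulerProd (1 / 2) S := by
  unfold eulerProd
  refine prod_le_prod (fun p hp => ?_) fun p hp => ?_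
  · have : (p:ℝ) ^ (-(1:ℝ)) ≤ 1 := Real.rpow_le_one_of_one_le_of_nonpos
      (by exact_mod_cast (hS p hp).one_le) (by norm_num)
    exact inv_nonneg.2 (by linarith)
  · have h1 : (1:ℝ) < p := by exact_mod_cast (hS p hp).one_lt
    have h2 : (p:ℝ) ^ (-(1/2) : ℝ) < 1 := Real.rpow_lt_one_of_one_lt_of_neg h1 (by norm_num)
    have h3 : (p:ℝ) ^ (-(1:ℝ)) ≤ (p:ℝ) ^ (-(1/2) : ℝ) :=
      Real.rpow_le_rpow_of_exponent_le h1.le (by norm_num)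
    exact inv_anti₀ (by linarith) (by linarith)

/-- `∑_{b ≤ Y, (b, d) = 1} μ(b) / b` is small. -/
lemma moebius_div_coprime_bound (k : ℕ) {θ : ℝ} (hθ : 0 < θ) : ∃ C : ℝ, 1 ≤ C ∧
    ∀ (X Y : ℝ) (d : ℕ), 1 ≤ X → X ^ θ ≤ Y → Real.exp 8 ≤ Y → 1 ≤ d → (d:ℝ) ≤ X →
      |∑ n ∈ (Icc 1 ⌊Y⌋₊).filter (fun n => n.Coprime d), (ArithmeticFunction.moebius n : ℝ) / n| ≤
        C / Real.log Y ^ k := by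
  obtain ⟨C1, hC1, h1⟩ := moebius_div_sum_bound (k + 1)
  obtain ⟨C2, hC2, h2⟩ := coprime_bound k hθ
  refine ⟨C2 * C1, one_le_mul_of_one_le_of_one_le hC2 hC1, ?_⟩
  intro X Y d hX hXY hY hd hdX
  have ht : ∀ S x, twSum (1 : DirichletCharacter ℂ 1) (fun _ => 1) S x =
      ((∑ n ∈ (Icc 1 ⌊x⌋₊).filter (fun n => ∀ p ∈ S, ¬ p ∣ n),
        (ArithmeticFunction.moebius n : ℝ) / n : ℝ) : ℂ) := by
    intro S x
    unfold twSum
    simp only [muChar_one]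
    push_cast
    simp
  have := h2 (twSum (1 : DirichletCharacter ℂ 1) (fun _ => 1)) (fun p => (1 : DirichletCharacter ℂ 1) p / p) C1
    hC1 (fun p => ?_) (fun x hx => ?_) (fun x hx => ?_)
    (fun S hS x hx hx1 => ?_) (fun S p hS hp hpS x hx => twSum_insert _ _ hS hp hpS x)
    X Y d hX hXY hY hd hdX
  · rw [ht, Complex.norm_real, Real.norm_eq_abs] at this
    simp only [forall_primeFactors_iff hd] at this
    exact this
  · rw [norm_div, Complex.norm_natCast]
    gcongr
    exact DirichletCharacter.norm_le_one _ _
  · rw [ht, filter_empty_forall, Complex.norm_real, Real.norm_eq_abs]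
    exact h1 x _ hx le_rfl
  · rw [ht, filter_empty_forall, Complex.norm_real]
    refine (norm_sum_le_of_le (n := fun _ => 1) _ fun i hi => ?_).trans ?_
    · rw [norm_div, Real.norm_eq_abs, Real.norm_natCast]
      exact div_le_one_of_le₀ ((abs_moebius_real i).trans (by exact_mod_cast (mem_Icc.1 hi).1)) (by positivity)
    rw [sum_const, Nat.card_Icc, nsmul_eq_mul, mul_one, Nat.add_sub_cancel]
    refine (Nat.floor_le (by linarith)).trans ?_
    nlinarith
  · rw [twSum_of_lt_one _ _ S hx1, norm_zero]
    have := one_le_eulerProd (σ := 1 / 2) (by norm_num) hS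
    positivity

/-- `∑_{b ≤ Y, (b, d) = 1} μ(b) log(Y/b) / b` is close to `d / φ(d)`. -/
lemma moebius_log_coprime_bound (k : ℕ) {θ : ℝ} (hθ : 0 < θ) : ∃ C : ℝ, 1 ≤ C ∧
    ∀ (X Y : ℝ) (d : ℕ), 1 ≤ X → X ^ θ ≤ Y → Real.exp 8 ≤ Y → 1 ≤ d → (d:ℝ) ≤ X →
      |∑ n ∈ (Icc 1 ⌊Y⌋₊).filter (fun n => n.Coprime d),
        (ArithmeticFunction.moebius n : ℝ) / n * Real.log (Y / n) - d / d.totient| ≤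
        C / Real.log Y ^ k := by
  obtain ⟨C1, hC1, h1⟩ := moebius_log_sum_bound (k + 1)
  obtain ⟨C2, hC2, h2⟩ := coprime_bound k hθ
  refine ⟨C2 * C1, one_le_mul_of_one_le_of_one_le hC2 hC1, ?_⟩
  intro X Y d hX hXY hY hd hdX
  have ht : ∀ S x, twSum (1 : DirichletCharacter ℂ 1) (fun y => (Real.log y : ℂ)) S x - (eulerProd 1 S : ℂ) =
      ((∑ n ∈ (Icc 1 ⌊x⌋₊).filter (fun n => ∀ p ∈ S, ¬ p ∣ n),
        (ArithmeticFunction.moebius n : ℝ) / n * Real.log (x / n) - eulerProd 1 S : ℝ) : ℂ) := by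
    intro S x
    unfold twSum
    simp only [muChar_one]
    push_cast
    rfl
  have hχ : ∀ p : ℕ, (1 : DirichletCharacter ℂ 1) p = 1 := fun p =>
    MulChar.one_apply (isUnit_of_subsingleton _)
  have hemp : eulerProd 1 ∅ = 1 := by simp [eulerProd]
  have := h2 (fun S x => twSum (1 : DirichletCharacter ℂ 1) (fun y => (Real.log y : ℂ)) S x - (eulerProd 1 S : ℂ))
    (fun p => (1 : DirichletCharacter ℂ 1) p / p) C1
    hC1 (fun p => ?_) (fun x hx => ?_) (fun x hx => ?_)
    (fun S hS x hx hx1 => ?_) (fun S p hS hp hpS x hx => ?_)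
    X Y d hX hXY hY hd hdX
  · rw [ht, Complex.norm_real, Real.norm_eq_abs, eulerProd_one_eq hd] at this
    simp only [forall_primeFactors_iff hd] at this
    exact this
  · rw [norm_div, Complex.norm_natCast]
    gcongr
    exact DirichletCharacter.norm_le_one _ _
  · rw [ht, filter_empty_forall, Complex.norm_real, Real.norm_eq_abs, hemp]
    exact h1 x hx
  · rw [ht, filter_empty_forall, Complex.norm_real, hemp]
    refine (norm_sub_le _ _).trans ?_
    have : ‖∑ n ∈ Icc 1 ⌊x⌋₊, (ArithmeticFunction.moebius n : ℝ) / n * Real.log (x / n)‖ ≤ x * x := by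
      refine (norm_sum_le_of_le (n := fun _ => x) _ fun i hi => ?_).trans ?_
      · have hi1 : (1:ℝ) ≤ i := by exact_mod_cast (mem_Icc.1 hi).1
        rw [norm_mul, norm_div, Real.norm_eq_abs, Real.norm_natCast]
        have hix : (i:ℝ) ≤ x := (Nat.le_floor_iff (by linarith)).1 (mem_Icc.1 hi).2
        have hl0 : 0 ≤ Real.log (x / i) := Real.log_nonneg (by rwa [one_le_div (by linarith)])
        have hl1 : Real.log (x / i) ≤ x := by
          refine (Real.log_le_sub_one_of_pos (by positivity)).trans ?_
          have : x / i ≤ x := div_le_self (by linarith) hi1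
          linarith
        rw [Real.norm_of_nonneg hl0]
        refine (mul_le_of_le_one_left hl0 ?_).trans hl1
        exact div_le_one_of_le₀ ((abs_moebius_real i).trans hi1) (by positivity)
      rw [sum_const, Nat.card_Icc, nsmul_eq_mul, Nat.add_sub_cancel]
      gcongr
      exact Nat.floor_le (by linarith)
    rw [norm_one]
    nlinarith
  · rw [twSum_of_lt_one _ _ S hx1, zero_sub, norm_neg, Complex.norm_real]
    have h3 := one_le_eulerProd (σ := 1) (by norm_num) hS
    rw [Real.norm_of_nonneg (by linarith)]
    have h4 := eulerProd_one_le_half hS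
    have h5 : 1 ≤ x ^ (-(1 / 2) : ℝ) := Real.one_le_rpow_of_pos_of_le_one_of_nonpos hx hx1.le (by norm_num)
    nlinarith
  · rw [twSum_insert _ _ hS hp hpS x, hχ]
    have := eulerProd_insert (σ := 1) (by norm_num) hp hpS
    rw [Real.rpow_neg_one] at this
    have h3 : (eulerProd 1 (insert p S) : ℂ) = eulerProd 1 S + (p:ℂ)⁻¹ * eulerProd 1 (insert p S) := by
      have := congrArg (Complex.ofReal) this
      push_cast at this
      exact this
    linear_combination -h3

/-! ### Exponential sums over arithmetic progressions -/

/-- Partial summation against a sequence whose partial sums are `κ t + O(ρ)`. -/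
lemma abel_bound {a b κ ρ B B' : ℝ} (ha : 0 ≤ a) (hab : a ≤ b) {c : ℕ → ℂ} {φ φ' : ℝ → ℂ}
    (hφ : ∀ t ∈ Set.Icc a b, HasDerivAt φ (φ' t) t) (hφc : ContinuousOn φ' (Set.Icc a b))
    (hc : ∀ t ∈ Set.Icc a b, ‖∑ k ∈ Icc 0 ⌊t⌋₊, c k - κ * t‖ ≤ ρ)
    (hB : ∀ t ∈ Set.Icc a b, ‖φ t‖ ≤ B) (hB' : ∀ t ∈ Set.Icc a b, ‖φ' t‖ ≤ B') :
    ‖∑ k ∈ Ioc ⌊a⌋₊ ⌊b⌋₊, φ k * c k - κ * ∫ t in Set.Ioc a b, φ t‖ ≤ ρ * (2 * B + (b - a) * B') := by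
  have hde : ∀ t ∈ Set.Icc a b, deriv φ t = φ' t := fun t ht => (hφ t ht).deriv
  have hInt : IntegrableOn φ' (Set.Icc a b) := hφc.integrableOn_Icc
  have hInt' : IntegrableOn (deriv φ) (Set.Icc a b) :=
    hInt.congr_fun (fun t ht => (hde t ht).symm) measurableSet_Icc
  have h1 := sum_mul_eq_sub_sub_integral_mul c ha hab
    (fun t ht => (hφ t ht).differentiableAt) hInt'
  have h1' : ∫ t in Set.Ioc a b, deriv φ t * ∑ k ∈ Icc 0 ⌊t⌋₊, c k =
      ∫ t in Set.Ioc a b, φ' t * ∑ k ∈ Icc 0 ⌊t⌋₊, c k :=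
    setIntegral_congr_fun measurableSet_Ioc fun t ht => by
      simp only [hde t (Set.Ioc_subset_Icc_self ht)]
  have hci : IntervalIntegrable φ' volume a b := by
    rw [intervalIntegrable_iff_integrableOn_Icc_of_le hab]; exact hInt
  have h2 : ∫ t in a..b, φ t * 1 = φ b * b - φ a * a - ∫ t in a..b, φ' t * (t:ℂ) := by
    refine intervalIntegral.integral_mul_deriv_eq_deriv_mul (v := fun t : ℝ => (t:ℂ))
      (fun t ht => hφ t ?_) (fun t _ => ?_) hci intervalIntegrable_const
    · rwa [Set.uIcc_of_le hab] at ht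
    · exact Complex.ofRealCLM.hasDerivAt
  simp only [mul_one] at h2
  rw [intervalIntegral.integral_of_le hab, intervalIntegral.integral_of_le hab] at h2
  have hi1 : IntegrableOn (fun t => φ' t * ∑ k ∈ Icc 0 ⌊t⌋₊, c k) (Set.Ioc a b) :=
    (integrableOn_mul_sum_Icc c ha hInt).mono_set Set.Ioc_subset_Icc_self
  have hi2 : IntegrableOn (fun t => φ' t * (t:ℂ)) (Set.Ioc a b) := by
    refine (ContinuousOn.integrableOn_Icc ?_).mono_set Set.Ioc_subset_Icc_self
    exact hφc.mul Complex.continuous_ofReal.continuousOn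
  have h3 : ∫ t in Set.Ioc a b, φ' t * (∑ k ∈ Icc 0 ⌊t⌋₊, c k - κ * t) =
      (∫ t in Set.Ioc a b, φ' t * ∑ k ∈ Icc 0 ⌊t⌋₊, c k) - κ * ∫ t in Set.Ioc a b, φ' t * (t:ℂ) := by
    rw [← integral_const_mul, ← integral_sub hi1 (hi2.const_mul _)]
    congr 1; funext t; ring
  have h4 : ‖∫ t in Set.Ioc a b, φ' t * (∑ k ∈ Icc 0 ⌊t⌋₊, c k - κ * t)‖ ≤ B' * ρ * (b - a) := by
    refine (norm_setIntegral_le_of_norm_le_const (C := B' * ρ) (by simp) fun t ht => ?_).trans ?_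
    · have ht' := Set.Ioc_subset_Icc_self ht
      rw [norm_mul]
      exact mul_le_mul (hB' t ht') (hc t ht') (norm_nonneg _) ((norm_nonneg _).trans (hB' t ht'))
    · simp [Measure.real, Real.volume_Ioc, ENNReal.toReal_ofReal (sub_nonneg.2 hab)]
  have h5 : ∑ k ∈ Ioc ⌊a⌋₊ ⌊b⌋₊, φ k * c k - κ * ∫ t in Set.Ioc a b, φ t =
      φ b * (∑ k ∈ Icc 0 ⌊b⌋₊, c k - κ * b) - φ a * (∑ k ∈ Icc 0 ⌊a⌋₊, c k - κ * a) -
      ∫ t in Set.Ioc a b, φ' t * (∑ k ∈ Icc 0 ⌊t⌋₊, c k - κ * t) := by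
    rw [h1, h1', h3, h2]; ring
  have hend : ∀ t ∈ Set.Icc a b, ‖φ t * (∑ k ∈ Icc 0 ⌊t⌋₊, c k - κ * t)‖ ≤ B * ρ := by
    intro t ht
    rw [norm_mul]
    exact mul_le_mul (hB t ht) (hc t ht) (norm_nonneg _) ((norm_nonneg _).trans (hB t ht))
  rw [h5]
  refine (norm_sub_le _ _).trans ((add_le_add (norm_sub_le _ _) h4).trans ?_)
  have := hend b ⟨hab, le_rfl⟩
  have := hend a ⟨le_rfl, hab⟩
  nlinarith

lemma count_class {q : ℕ} (hq : 1 ≤ q) (a : ℕ) {t : ℝ} (ht : 0 ≤ t) :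
    ‖∑ k ∈ Icc 0 ⌊t⌋₊, (if k ≡ a [MOD q] then (1:ℂ) else 0) - ((1 / q : ℝ) : ℂ) * t‖ ≤ 2 := by
  have hqR : (1:ℝ) ≤ q := by exact_mod_cast hq
  have h1 : ∑ k ∈ Icc 0 ⌊t⌋₊, (if k ≡ a [MOD q] then (1:ℂ) else 0) =
      (((⌊t⌋₊ + 1).count (· ≡ a [MOD q]) : ℕ) : ℂ) := by
    rw [Nat.count_eq_card_filter_range, sum_boole]
    congr 2
    ext k; simp
  rw [h1, Nat.count_modEq_card _ (by omega)]
  set N := ⌊t⌋₊ + 1 with hN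
  have hN1 : t < N := by rw [hN]; push_cast; exact Nat.lt_floor_add_one t
  have hN2 : (N:ℝ) ≤ t + 1 := by rw [hN]; push_cast; linarith [Nat.floor_le ht]
  have hd1 : ((N / q : ℕ) : ℝ) ≤ (N:ℝ) / q := Nat.cast_div_le
  have hd2 : (N:ℝ) / q < ((N / q : ℕ) : ℝ) + 1 := by
    rw [div_lt_iff₀ (by linarith)]
    exact_mod_cast Nat.lt_mul_of_div_lt (Nat.lt_succ_self _) hq
  have hd3 : (N:ℝ) / q ≤ t / q + 1 := by
    rw [div_add_one (by positivity)]; gcongr; linarith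
  have hd4 : t / q ≤ (N:ℝ) / q := by gcongr
  set i : ℕ := if a % q < N % q then 1 else 0 with hi
  have hi1 : (i:ℝ) ≤ 1 := by rw [hi]; split_ifs <;> simp
  have hi0 : (0:ℝ) ≤ i := by positivity
  rw [show (((N / q + i : ℕ) : ℂ) - ((1 / q : ℝ) : ℂ) * t) =
    ((((N / q : ℕ) : ℝ) + i - t / q : ℝ) : ℂ) by push_cast; ring, Complex.norm_real, Real.norm_eq_abs,
    abs_le]
  constructor <;> linarith

lemma norm_e (t : ℝ) : ‖e t‖ = 1 := by
  unfold e
  rw [show (2 * Real.pi * Complex.I * t : ℂ) = ((2 * Real.pi * t : ℝ) : ℂ) * Complex.I by push_cast; ring]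
  exact Complex.norm_exp_ofReal_mul_I _

lemma conj_e (t : ℝ) : (starRingEnd ℂ) (e t) = e (-t) := by
  unfold e
  rw [← Complex.exp_conj]
  congr 1
  simp [Complex.conj_ofNat]

lemma e_add (s t : ℝ) : e (s + t) = e s * e t := by
  unfold e
  rw [← Complex.exp_add]
  congr 1
  push_cast; ring

lemma hasDerivAt_e {β c : ℝ} (hc : 1 ≤ c) (t : ℝ) :
    HasDerivAt (fun t : ℝ => e (β * t ^ c))
      (2 * Real.pi * Complex.I * (β * (c * t ^ (c - 1)) : ℝ) * e (β * t ^ c)) t := by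
  have h1 : HasDerivAt (fun t : ℝ => β * t ^ c) (β * (c * t ^ (c - 1))) t :=
    (Real.hasDerivAt_rpow_const (Or.inr hc)).const_mul β
  have h2 := ((h1.ofReal_comp).const_mul (2 * Real.pi * Complex.I : ℂ)).cexp
  unfold e
  convert h2 using 1
  ring

lemma continuous_e : Continuous e := by
  unfold e; fun_prop

lemma continuous_rpow_c {c : ℝ} (hc : 0 ≤ c) : Continuous (fun t : ℝ => t ^ c) :=
  Real.continuous_rpow_const hc

/-- A smooth function summed over an arithmetic progression, compared with its mean value. -/
lemma ap_sum {a b B B' : ℝ} (ha : 0 ≤ a) (hab : a ≤ b) {q r : ℕ} (hq : 1 ≤ q) {φ φ' : ℝ → ℂ}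
    (hφ : ∀ t ∈ Set.Icc a b, HasDerivAt φ (φ' t) t) (hφc : ContinuousOn φ' (Set.Icc a b))
    (hB : ∀ t ∈ Set.Icc a b, ‖φ t‖ ≤ B) (hB' : ∀ t ∈ Set.Icc a b, ‖φ' t‖ ≤ B') :
    ‖∑ k ∈ (Ioc ⌊a⌋₊ ⌊b⌋₊).filter (fun k => k ≡ r [MOD q]), φ k -
      ((1 / q : ℝ) : ℂ) * ∫ t in Set.Ioc a b, φ t‖ ≤ 2 * (2 * B + (b - a) * B') := by
  have := abel_bound ha hab hφ hφc (fun t ht => count_class hq r (ha.trans ht.1)) hB hB'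
  simp only [mul_ite, mul_one, mul_zero] at this
  rwa [sum_filter]

lemma norm_deriv_e {β c t v : ℝ} (hc : 1 ≤ c) (hc2 : c ≤ 17 / 16) (ht : 0 ≤ t) (htv : t ≤ v) :
    ‖(2 * Real.pi * Complex.I * (β * (c * t ^ (c - 1)) : ℝ) * e (β * t ^ c) : ℂ)‖ ≤
      7 * |β| * v ^ (c - 1) := by
  have h1 : t ^ (c - 1) ≤ v ^ (c - 1) := Real.rpow_le_rpow ht htv (by linarith)
  have h0 : 0 ≤ t ^ (c - 1) := Real.rpow_nonneg ht _
  have hpi := Real.pi_lt_d2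
  have hpi0 := Real.pi_pos
  rw [norm_mul, norm_e, mul_one, norm_mul, Complex.norm_real]
  simp only [norm_mul, Complex.norm_I, Complex.norm_real, Real.norm_eq_abs, Complex.norm_ofNat,
    abs_of_pos hpi0, abs_of_nonneg h0, abs_of_nonneg (by linarith : (0:ℝ) ≤ c)]
  have h2 : 2 * Real.pi * c ≤ 7 := by nlinarith
  have h3 : 0 ≤ v ^ (c - 1) := h0.trans h1
  calc 2 * Real.pi * 1 * (|β| * (c * t ^ (c - 1))) = (2 * Real.pi * c) * (|β| * t ^ (c - 1)) := by ring
    _ ≤ 7 * (|β| * v ^ (c - 1)) := by gcongr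
    _ = _ := by ring

lemma continuous_deriv_e (β : ℝ) {c : ℝ} (hc : 1 ≤ c) :
    Continuous (fun t : ℝ => (2 * Real.pi * Complex.I * (β * (c * t ^ (c - 1)) : ℝ) * e (β * t ^ c) : ℂ)) := by
  have h1 : Continuous (fun t : ℝ => t ^ (c - 1)) := Real.continuous_rpow_const (by linarith)
  have h2 : Continuous (fun t : ℝ => t ^ c) := Real.continuous_rpow_const (by linarith)
  have h3 := continuous_e
  fun_prop

/-- Arithmetic progressions against `e(β t^c)`. -/
lemma ap_sum_e {a b β c : ℝ} (hc : 1 ≤ c) (hc2 : c ≤ 17 / 16) (ha : 0 ≤ a) (hab : a ≤ b)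
    (hb : 0 < b) {q : ℕ} (r : ℕ) (hq : 1 ≤ q) :
    ‖∑ k ∈ (Ioc ⌊a⌋₊ ⌊b⌋₊).filter (fun k => k ≡ r [MOD q]), e (β * (k:ℝ) ^ c) -
      ((1 / q : ℝ) : ℂ) * ∫ t in Set.Ioc a b, e (β * t ^ c)‖ ≤ 4 + 14 * (|β| * b ^ c) := by
  refine (ap_sum (B := 1) (B' := 7 * |β| * b ^ (c - 1)) ha hab hq (fun t _ => hasDerivAt_e hc t)
    (continuous_deriv_e β hc).continuousOn (fun t _ => (norm_e _).le)
    (fun t ht => norm_deriv_e hc hc2 (ha.trans ht.1) ht.2)).trans ?_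
  have h1 : b ^ c = b * b ^ (c - 1) := by rw [Real.rpow_sub_one hb.ne']; field_simp
  have h2 : (b - a) * (7 * |β| * b ^ (c - 1)) ≤ b * (7 * |β| * b ^ (c - 1)) := by
    gcongr; linarith
  rw [h1]; linarith

/-- Arithmetic progressions against `t e(β t^c)`. -/
lemma ap_sum_te {a b β c : ℝ} (hc : 1 ≤ c) (hc2 : c ≤ 17 / 16) (ha : 0 ≤ a) (hab : a ≤ b)
    (hb : 0 < b) {q : ℕ} (r : ℕ) (hq : 1 ≤ q) :
    ‖∑ k ∈ (Ioc ⌊a⌋₊ ⌊b⌋₊).filter (fun k => k ≡ r [MOD q]), (((k:ℝ):ℂ) * e (β * (k:ℝ) ^ c)) -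
      ((1 / q : ℝ) : ℂ) * ∫ t in Set.Ioc a b, (t:ℂ) * e (β * t ^ c)‖ ≤ b * (6 + 14 * (|β| * b ^ c)) := by
  have h1 : b ^ c = b * b ^ (c - 1) := by rw [Real.rpow_sub_one hb.ne']; field_simp
  have hid : ∀ t : ℝ, HasDerivAt (fun t : ℝ => (t:ℂ)) 1 t := fun t => Complex.ofRealCLM.hasDerivAt
  refine (ap_sum (φ := fun t : ℝ => (t:ℂ) * e (β * t ^ c)) (B := b)
    (B' := 1 + b * (7 * |β| * b ^ (c - 1))) ha hab hq (fun t _ => (hid t).mul (hasDerivAt_e hc t))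
    ?_ (fun t ht => ?_) (fun t ht => ?_)).trans ?_
  · have h2 : Continuous (fun t : ℝ => t ^ c) := Real.continuous_rpow_const (by linarith)
    have h3 := continuous_e
    have h4 := continuous_deriv_e β hc
    refine Continuous.continuousOn ?_
    exact (continuous_const.mul (h3.comp (continuous_const.mul h2))).add (Complex.continuous_ofReal.mul h4)
  · rw [norm_mul, norm_e, mul_one, Complex.norm_real, Real.norm_of_nonneg (ha.trans ht.1)]
    exact ht.2
  · refine (norm_add_le _ _).trans ?_
    refine add_le_add ?_ ?_
    · rw [one_mul, norm_e]
    · rw [norm_mul, Complex.norm_real, Real.norm_of_nonneg (ha.trans ht.1)]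
      refine mul_le_mul ht.2 (norm_deriv_e hc hc2 (ha.trans ht.1) ht.2) (norm_nonneg _) hb.le
  · have h2 : (b - a) * (1 + b * (7 * |β| * b ^ (c - 1))) ≤ b * (1 + b * (7 * |β| * b ^ (c - 1))) := by
      gcongr; linarith
    rw [h1]
    nlinarith

/-- Arithmetic progressions against `log t e(β t^c)`. -/
lemma ap_sum_le {a b β c : ℝ} (hc : 1 ≤ c) (hc2 : c ≤ 17 / 16) (ha : 1 ≤ a) (hab : a ≤ b)
    {q : ℕ} (r : ℕ) (hq : 1 ≤ q) :
    ‖∑ k ∈ (Ioc ⌊a⌋₊ ⌊b⌋₊).filter (fun k => k ≡ r [MOD q]),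
        (((Real.log (k:ℝ) : ℝ) : ℂ) * e (β * (k:ℝ) ^ c)) -
      ((1 / q : ℝ) : ℂ) * ∫ t in Set.Ioc a b, ((Real.log t : ℝ) : ℂ) * e (β * t ^ c)‖ ≤
      Real.log b * (4 + 14 * (|β| * b ^ c)) + 2 * (b / a) := by
  have hb : 0 < b := by linarith
  have hlb : 0 ≤ Real.log b := Real.log_nonneg (by linarith)
  have h1 : b ^ c = b * b ^ (c - 1) := by rw [Real.rpow_sub_one hb.ne']; field_simp
  have hpos : ∀ t ∈ Set.Icc a b, 0 < t := fun t ht => by linarith [ht.1]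
  have hid : ∀ t ∈ Set.Icc a b, HasDerivAt (fun t : ℝ => ((Real.log t : ℝ) : ℂ)) ((t⁻¹ : ℝ) : ℂ) t :=
    fun t ht => (Real.hasDerivAt_log (hpos t ht).ne').ofReal_comp
  have hl : ∀ t ∈ Set.Icc a b, ‖((Real.log t : ℝ) : ℂ)‖ ≤ Real.log b := by
    intro t ht
    rw [Complex.norm_real, Real.norm_of_nonneg (Real.log_nonneg (by linarith [ht.1]))]
    exact Real.log_le_log (hpos t ht) ht.2
  refine (ap_sum (φ := fun t : ℝ => ((Real.log t : ℝ) : ℂ) * e (β * t ^ c)) (B := Real.log b)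
    (B' := a⁻¹ + Real.log b * (7 * |β| * b ^ (c - 1))) (by linarith) hab hq
    (fun t ht => (hid t ht).mul (hasDerivAt_e hc t))
    ?_ (fun t ht => ?_) (fun t ht => ?_)).trans ?_
  · have h2 : Continuous (fun t : ℝ => t ^ c) := Real.continuous_rpow_const (by linarith)
    have h3 := continuous_e
    have h4 := continuous_deriv_e β hc
    have h5 : ContinuousOn (fun t : ℝ => ((t⁻¹ : ℝ) : ℂ)) (Set.Icc a b) := fun t ht =>
      (Complex.continuous_ofReal.continuousAt.comp
        (continuousAt_inv₀ (hpos t ht).ne')).continuousWithinAt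
    have h6 : ContinuousOn (fun t : ℝ => ((Real.log t : ℝ) : ℂ)) (Set.Icc a b) := fun t ht =>
      (hid t ht).continuousAt.continuousWithinAt
    exact (h5.mul (h3.comp (continuous_const.mul h2)).continuousOn).add (h6.mul h4.continuousOn)
  · rw [norm_mul, norm_e, mul_one]
    exact hl t ht
  · refine (norm_add_le _ _).trans ?_
    refine add_le_add ?_ ?_
    · rw [norm_mul, norm_e, mul_one, Complex.norm_real, Real.norm_of_nonneg (by have := hpos t ht; positivity)]
      exact inv_anti₀ (by linarith) ht.1
    · rw [norm_mul]
      exact mul_le_mul (hl t ht) (norm_deriv_e hc hc2 (hpos t ht).le ht.2) (norm_nonneg _) hlb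
  · have h2 : (b - a) * (a⁻¹ + Real.log b * (7 * |β| * b ^ (c - 1))) ≤
        b * (a⁻¹ + Real.log b * (7 * |β| * b ^ (c - 1))) := by
      have : 0 ≤ a⁻¹ := by positivity
      gcongr; linarith
    rw [h1, div_eq_mul_inv]
    linarith

end SieveBV

namespace SieveBV

open Finset MeasureTheory Filter Asymptotics
open ArithmeticFunction (moebius vonMangoldt)

/-! ### Vaughan's identity -/

/-- The coefficients `∑_{c ∣ m, c > U} Λ(c)` of the bilinear part of Vaughan's identity. -/
noncomputable def bigLam (U : ℝ) (m : ℕ) : ℝ :=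
  ∑ c ∈ m.divisors.filter (fun c : ℕ => ¬ (c:ℝ) ≤ U), vonMangoldt c

lemma bigLam_nonneg (U : ℝ) (m : ℕ) : 0 ≤ bigLam U m :=
  sum_nonneg fun _ _ => ArithmeticFunction.vonMangoldt_nonneg

lemma bigLam_le (U : ℝ) (m : ℕ) : bigLam U m ≤ Real.log m := by
  unfold bigLam
  rw [← ArithmeticFunction.vonMangoldt_sum]
  exact sum_le_sum_of_subset_of_nonneg (filter_subset _ _) fun _ _ _ =>
    ArithmeticFunction.vonMangoldt_nonneg

lemma bigLam_eq_zero {U : ℝ} {m : ℕ} (h : (m:ℝ) ≤ U) : bigLam U m = 0 := by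
  unfold bigLam
  rw [filter_false_of_mem, sum_empty]
  intro c hc
  push Not
  have := Nat.le_of_dvd (Nat.pos_of_mem_divisors hc |> fun _ => Nat.pos_of_ne_zero
    (Nat.mem_divisors.1 hc).2) (Nat.dvd_of_mem_divisors hc)
  exact le_trans (by exact_mod_cast this) h

lemma moebius_bigLam {U : ℝ} {n : ℕ} (hn : U < n) (hn0 : n ≠ 0) :
    ∑ b ∈ n.divisors, (moebius b : ℝ) * bigLam U (n / b) = vonMangoldt n := by
  let g : ArithmeticFunction ℝ := ⟨fun c => if (c:ℝ) ≤ U then 0 else vonMangoldt c, by simp⟩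
  have h1 : ((moebius : ArithmeticFunction ℤ) : ArithmeticFunction ℝ) *
      (((ArithmeticFunction.zeta : ArithmeticFunction ℕ) : ArithmeticFunction ℝ) * g) = g := by
    rw [← mul_assoc, ArithmeticFunction.coe_moebius_mul_coe_zeta, one_mul]
  have h2 := congrArg (fun F : ArithmeticFunction ℝ => F n) h1
  simp only [ArithmeticFunction.mul_apply (f := ((moebius : ArithmeticFunction ℤ) : ArithmeticFunction ℝ))] at h2
  rw [Nat.sum_divisorsAntidiagonal (fun i j => ((moebius : ArithmeticFunction ℤ) : ArithmeticFunction ℝ) i *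
      (((ArithmeticFunction.zeta : ArithmeticFunction ℕ) : ArithmeticFunction ℝ) * g) j)] at h2
  have h3 : g n = vonMangoldt n := by
    simp only [g, ArithmeticFunction.coe_mk]
    rw [if_neg (by linarith)]
  rw [h3] at h2
  rw [← h2]
  refine sum_congr rfl fun b hb => ?_
  rw [ArithmeticFunction.intCoe_apply, ArithmeticFunction.coe_zeta_mul_apply]
  congr 1
  unfold bigLam
  rw [sum_filter]
  refine sum_congr rfl fun c _ => ?_
  simp only [g, ArithmeticFunction.coe_mk]
  split_ifs <;> simp_all

/-- Vaughan's identity. -/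
lemma vaughan {U V : ℝ} {n : ℕ} (hn : U < n) (hn0 : n ≠ 0) :
    (vonMangoldt n : ℝ) =
      ∑ b ∈ n.divisors.filter (fun b : ℕ => (b:ℝ) ≤ V), (moebius b : ℝ) * (Real.log n - Real.log b) -
      ∑ b ∈ n.divisors.filter (fun b : ℕ => (b:ℝ) ≤ V), (moebius b : ℝ) *
        ∑ c ∈ (n / b).divisors.filter (fun c : ℕ => (c:ℝ) ≤ U), vonMangoldt c +
      ∑ b ∈ n.divisors.filter (fun b : ℕ => ¬ (b:ℝ) ≤ V), (moebius b : ℝ) * bigLam U (n / b) := by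
  rw [← moebius_bigLam hn hn0, ← sum_filter_add_sum_filter_not n.divisors (fun b : ℕ => (b:ℝ) ≤ V),
    ← sum_sub_distrib]
  congr 1
  refine sum_congr rfl fun b hb => ?_
  have hb' := Nat.dvd_of_mem_divisors (mem_filter.1 hb).1
  have hb0 : b ≠ 0 := by rintro rfl; simp at hb'; exact hn0 hb'
  rw [← mul_sub]
  congr 1
  have h1 : Real.log n - Real.log b = Real.log ((n / b : ℕ) : ℝ) := by
    rw [Nat.cast_div hb' (by exact_mod_cast hb0), Real.log_div (by exact_mod_cast hn0) (by exact_mod_cast hb0)]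
  rw [h1, ← ArithmeticFunction.vonMangoldt_sum,
    ← sum_filter_add_sum_filter_not _ (fun c : ℕ => (c:ℝ) ≤ U)]
  unfold bigLam
  ring

lemma exists_class {b d : ℕ} (hb : 1 ≤ b) (hd : 1 ≤ d) (h : b.Coprime d) :
    ∃ r : ℕ, ∀ n : ℕ, (b ∣ n ∧ d ∣ n + 2) ↔ n ≡ r [MOD b * d] := by
  obtain ⟨r, hr1, hr2⟩ := Nat.chineseRemainder h 0 (2 * d - 2)
  refine ⟨r, fun n => ?_⟩
  rw [← Nat.modEq_and_modEq_iff_modEq_mul h]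
  have h1 : b ∣ n ↔ n ≡ r [MOD b] := by
    rw [← Nat.modEq_zero_iff_dvd]
    exact ⟨fun hh => hh.trans hr1.symm, fun hh => hh.trans hr1⟩
  have h2 : d ∣ n + 2 ↔ n ≡ r [MOD d] := by
    have h3 : r + 2 ≡ 0 [MOD d] := by
      have := hr2.add_right 2
      rw [show 2 * d - 2 + 2 = 2 * d by omega] at this
      exact this.trans (Nat.modEq_zero_iff_dvd.2 (Dvd.intro_left _ rfl))
    rw [← Nat.modEq_zero_iff_dvd]
    exact ⟨fun hh => Nat.ModEq.add_right_cancel' 2 (hh.trans h3.symm), fun hh => (hh.add_right 2).trans h3⟩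
  rw [h1, h2]

lemma coprime_of_dvd {b d n : ℕ} (hd : ¬ 2 ∣ d) (h1 : b ∣ n) (h2 : d ∣ n + 2) : b.Coprime d := by
  refine Nat.coprime_of_dvd fun p hp hpb hpd => ?_
  have h3 : p ∣ 2 := by
    have := Nat.dvd_sub (hpd.trans h2) (hpb.trans h1)
    simpa using this
  rw [(Nat.prime_dvd_prime_iff_eq hp Nat.prime_two).1 h3] at hpd
  exact hd hpd

/-- The integers of the window `(μX, X]`. -/
noncomputable def window (μ X : ℝ) : Finset ℕ := Ioc ⌊μ * X⌋₊ ⌊X⌋₊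

lemma I_eq {c μ X α : ℝ} (hμ : μ ≤ 1) (hX : 0 ≤ X) :
    I c μ X α = ∫ t in Set.Ioc (μ * X) X, e (α * t ^ c) := by
  unfold I
  rw [intervalIntegral.integral_of_le (by nlinarith)]

/-- Exponential sum over the `n` in the window with `b ∣ n` and `d ∣ n + 2`. -/
lemma typeI_e {c μ X α : ℝ} (hc : 1 ≤ c) (hc2 : c ≤ 17 / 16) (hμ : 0 < μ) (hμ1 : μ ≤ 1) (hX : 0 < X)
    {b d : ℕ} (hb : 1 ≤ b) (hd : 1 ≤ d) (hd2 : ¬ 2 ∣ d) :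
    ‖∑ n ∈ (window μ X).filter (fun n => b ∣ n ∧ d ∣ n + 2), e (α * (n:ℝ) ^ c) -
      ((if b.Coprime d then 1 / (b * d : ℝ) else 0 : ℝ) : ℂ) * I c μ X α‖ ≤ 4 + 14 * (|α| * X ^ c) := by
  split_ifs with h
  · obtain ⟨r, hr⟩ := exists_class hb hd h
    simp only [hr]
    rw [I_eq hμ1 hX.le]
    have := ap_sum_e (β := α) hc hc2 (mul_pos hμ hX).le (by nlinarith) hX r (Nat.mul_pos hb hd)
    push_cast at this ⊢
    exact this
  · rw [filter_false_of_mem fun n _ hn => h (coprime_of_dvd hd2 hn.1 hn.2)]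
    simp
    positivity

/-- The analogue of `typeI_e` with the weight `log n`. -/
lemma typeI_log {c μ X α : ℝ} (hc : 1 ≤ c) (hc2 : c ≤ 17 / 16) (hμ : 0 < μ) (hμ1 : μ ≤ 1)
    (hX : 1 ≤ μ * X)
    {b d : ℕ} (hb : 1 ≤ b) (hd : 1 ≤ d) (hd2 : ¬ 2 ∣ d) :
    ‖∑ n ∈ (window μ X).filter (fun n => b ∣ n ∧ d ∣ n + 2),
        (((Real.log (n:ℝ) : ℝ) : ℂ) * e (α * (n:ℝ) ^ c)) -
      ((if b.Coprime d then 1 / (b * d : ℝ) else 0 : ℝ) : ℂ) *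
        ∫ t in Set.Ioc (μ * X) X, ((Real.log t : ℝ) : ℂ) * e (α * t ^ c)‖ ≤
      Real.log X * (4 + 14 * (|α| * X ^ c)) + 2 / μ := by
  have hX0 : 0 < X := by by_contra hh; nlinarith
  have hX1 : 1 ≤ X := by nlinarith
  split_ifs with h
  · obtain ⟨r, hr⟩ := exists_class hb hd h
    simp only [hr]
    have := ap_sum_le (β := α) hc hc2 hX (by nlinarith) r (Nat.mul_pos hb hd)
    rw [show 2 * (X / (μ * X)) = 2 / μ by field_simp] at this
    push_cast at this ⊢
    exact this
  · rw [filter_false_of_mem fun n _ hn => h (coprime_of_dvd hd2 hn.1 hn.2)]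
    simp
    have := Real.log_nonneg hX1
    positivity

lemma norm_I_le {c μ X α : ℝ} (hμ : 0 ≤ μ) (hμ1 : μ ≤ 1) (hX : 0 ≤ X) : ‖I c μ X α‖ ≤ X := by
  unfold I
  refine (intervalIntegral.norm_integral_le_of_norm_le_const (C := 1) fun t _ => (norm_e _).le).trans ?_
  rw [abs_of_nonneg (by nlinarith)]
  nlinarith

lemma norm_J_le {c μ X α : ℝ} (hμ : 0 ≤ μ) (hμ1 : μ ≤ 1) (hX : 1 ≤ μ * X) :
    ‖∫ t in Set.Ioc (μ * X) X, ((Real.log t : ℝ) : ℂ) * e (α * t ^ c)‖ ≤ Real.log X * X := by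
  have hX0 : 0 < X := by by_contra hh; nlinarith
  have hX1 : 1 ≤ X := by nlinarith
  have hl := Real.log_nonneg hX1
  refine (norm_setIntegral_le_of_norm_le_const (C := Real.log X) (by simp) fun t ht => ?_).trans ?_
  · rw [norm_mul, norm_e, mul_one, Complex.norm_real,
      Real.norm_of_nonneg (Real.log_nonneg (by linarith [ht.1]))]
    exact Real.log_le_log (by linarith [ht.1]) ht.2
  · rw [Measure.real, Real.volume_Ioc, ENNReal.toReal_ofReal (by nlinarith)]
    gcongr
    nlinarith

/-! ### The linear sums -/

/-- `G_d(V) = ∑_{b ≤ V, (b, d) = 1} μ(b) / b`. -/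
noncomputable def Gd (d : ℕ) (V : ℝ) : ℝ :=
  ∑ n ∈ (Icc 1 ⌊V⌋₊).filter (fun n => n.Coprime d), (moebius n : ℝ) / n

/-- `H_d(V) = ∑_{b ≤ V, (b, d) = 1} μ(b) log(V / b) / b`. -/
noncomputable def Hd (d : ℕ) (V : ℝ) : ℝ :=
  ∑ n ∈ (Icc 1 ⌊V⌋₊).filter (fun n => n.Coprime d), (moebius n : ℝ) / n * Real.log (V / n)

/-- The part `∑ μ(b) log (n / b)` of Vaughan's identity. Writing
`log (n / b) = log (n / V) + log (V / b)`, the first summand leads to the small sum `Gd`, and the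
second to `Hd`, which is close to `d / φ(d)`. -/
lemma typeI_first {c μ X α V : ℝ} (hc : 1 ≤ c) (hc2 : c ≤ 17 / 16) (hμ : 0 < μ) (hμ1 : μ ≤ 1)
    (hX : 1 ≤ μ * X) (hV : 1 ≤ V) (hVX : V ≤ X) {d : ℕ} (hd : 1 ≤ d) (hd2 : ¬ 2 ∣ d) :
    ‖∑ b ∈ Icc 1 ⌊V⌋₊, (moebius b : ℂ) * ∑ n ∈ (window μ X).filter (fun n => b ∣ n ∧ d ∣ n + 2),
        (((Real.log (n:ℝ) - Real.log b : ℝ) : ℂ) * e (α * (n:ℝ) ^ c)) -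
      ((1 / d.totient : ℝ) : ℂ) * I c μ X α‖ ≤
      V * (Real.log X * (8 + 28 * (|α| * X ^ c)) + 2 / μ) +
        X / d * (2 * Real.log X * |Gd d V| + |Hd d V - d / d.totient|) := by
  have hX0 : 0 < X := by by_contra hh; nlinarith
  have hX1 : 1 ≤ X := by nlinarith
  have hL := Real.log_nonneg hX1
  have hdR : (1:ℝ) ≤ d := by exact_mod_cast hd
  set J := ∫ t in Set.Ioc (μ * X) X, ((Real.log t : ℝ) : ℂ) * e (α * t ^ c) with hJ
  set κ : ℕ → ℝ := fun b => if b.Coprime d then 1 / (b * d : ℝ) else 0 with hκ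
  set Er := Real.log X * (8 + 28 * (|α| * X ^ c)) + 2 / μ with hEr
  have hEr0 : 0 ≤ Er := by positivity
  have h1 : ∀ b ∈ Icc 1 ⌊V⌋₊, ‖(moebius b : ℂ) *
      ∑ n ∈ (window μ X).filter (fun n => b ∣ n ∧ d ∣ n + 2),
        (((Real.log (n:ℝ) - Real.log b : ℝ) : ℂ) * e (α * (n:ℝ) ^ c)) -
      (moebius b : ℂ) * (κ b * (J - Real.log b * I c μ X α))‖ ≤ Er := by
    intro b hb
    obtain ⟨hb1, hbV⟩ := mem_Icc.1 hb
    have hb1R : (1:ℝ) ≤ b := by exact_mod_cast hb1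
    have hbX : (b:ℝ) ≤ X := ((Nat.le_floor_iff (by linarith)).1 hbV).trans hVX
    have hlb0 : 0 ≤ Real.log b := Real.log_nonneg hb1R
    have hlb : Real.log b ≤ Real.log X := Real.log_le_log (by linarith) hbX
    have a1 := typeI_log (α := α) hc hc2 hμ hμ1 hX hb1 hd hd2
    have a2 := typeI_e (α := α) hc hc2 hμ hμ1 hX0 hb1 hd hd2
    rw [← mul_sub, norm_mul]
    refine (mul_le_of_le_one_left (norm_nonneg _) (norm_moebius_le b)).trans ?_
    have e1 : ∑ n ∈ (window μ X).filter (fun n => b ∣ n ∧ d ∣ n + 2),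
        (((Real.log (n:ℝ) - Real.log b : ℝ) : ℂ) * e (α * (n:ℝ) ^ c)) -
        κ b * (J - Real.log b * I c μ X α) =
        (∑ n ∈ (window μ X).filter (fun n => b ∣ n ∧ d ∣ n + 2),
          (((Real.log (n:ℝ) : ℝ) : ℂ) * e (α * (n:ℝ) ^ c)) - κ b * J) -
        Real.log b * (∑ n ∈ (window μ X).filter (fun n => b ∣ n ∧ d ∣ n + 2),
          e (α * (n:ℝ) ^ c) - κ b * I c μ X α) := by
      rw [mul_sub (Real.log b : ℂ), mul_sum, sub_sub_sub_comm, ← sum_sub_distrib]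
      congr 1
      · refine sum_congr rfl fun n _ => ?_
        push_cast; ring
      · ring
    rw [e1]
    have a3 : ‖(Real.log b : ℂ) * (∑ n ∈ (window μ X).filter (fun n => b ∣ n ∧ d ∣ n + 2),
        e (α * (n:ℝ) ^ c) - κ b * I c μ X α)‖ ≤ Real.log X * (4 + 14 * (|α| * X ^ c)) := by
      rw [norm_mul, Complex.norm_real, Real.norm_of_nonneg hlb0]
      exact mul_le_mul hlb a2 (norm_nonneg _) hL
    refine (norm_sub_le _ _).trans ((add_le_add a1 a3).trans (le_of_eq ?_))
    rw [hEr]; ring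
  have h2 : ∑ b ∈ Icc 1 ⌊V⌋₊, (moebius b : ℂ) * (κ b * (J - Real.log b * I c μ X α)) =
      ((1 / d : ℝ) : ℂ) * (Gd d V * (J - Real.log V * I c μ X α) + Hd d V * I c μ X α) := by
    unfold Gd Hd
    rw [sum_filter, sum_filter]
    push_cast
    rw [sum_mul, sum_mul, ← sum_add_distrib, mul_sum]
    refine sum_congr rfl fun b hb => ?_
    have hb1 := (mem_Icc.1 hb).1
    have hb0 : (b:ℂ) ≠ 0 := by exact_mod_cast (by omega : b ≠ 0)
    have hd0 : (d:ℂ) ≠ 0 := by exact_mod_cast (by omega : d ≠ 0)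
    simp only [hκ]
    split_ifs with h
    · rw [Real.log_div (by linarith) (by positivity)]
      push_cast
      field_simp
      ring
    · simp
  have h3 : ‖∑ b ∈ Icc 1 ⌊V⌋₊, (moebius b : ℂ) * ∑ n ∈ (window μ X).filter (fun n => b ∣ n ∧ d ∣ n + 2),
        (((Real.log (n:ℝ) - Real.log b : ℝ) : ℂ) * e (α * (n:ℝ) ^ c)) -
      ∑ b ∈ Icc 1 ⌊V⌋₊, (moebius b : ℂ) * (κ b * (J - Real.log b * I c μ X α))‖ ≤ V * Er := by
    rw [← sum_sub_distrib]
    refine (norm_sum_le_of_le _ h1).trans ?_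
    rw [sum_const, Nat.card_Icc, nsmul_eq_mul, Nat.add_sub_cancel]
    gcongr
    exact Nat.floor_le (by linarith)
  have hI := norm_I_le (c := c) (α := α) hμ.le hμ1 hX0.le
  have hJn := norm_J_le (c := c) (α := α) hμ.le hμ1 hX
  have hlV0 : 0 ≤ Real.log V := Real.log_nonneg hV
  have hlV : Real.log V ≤ Real.log X := Real.log_le_log (by linarith) hVX
  have hφ : 0 < (d.totient : ℝ) := by exact_mod_cast Nat.totient_pos.2 hd
  have h4 : ‖((1 / d : ℝ) : ℂ) * (Gd d V * (J - Real.log V * I c μ X α) + Hd d V * I c μ X α) -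
      ((1 / d.totient : ℝ) : ℂ) * I c μ X α‖ ≤
      X / d * (2 * Real.log X * |Gd d V| + |Hd d V - d / d.totient|) := by
    have e2 : ((1 / d : ℝ) : ℂ) * (Gd d V * (J - Real.log V * I c μ X α) + Hd d V * I c μ X α) -
        ((1 / d.totient : ℝ) : ℂ) * I c μ X α =
        ((1 / d : ℝ) : ℂ) * (((Gd d V : ℝ) : ℂ) * (J - Real.log V * I c μ X α) +
          ((Hd d V - d / d.totient : ℝ) : ℂ) * I c μ X α) := by
      have hd0 : (d:ℂ) ≠ 0 := by exact_mod_cast (by omega : d ≠ 0)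
      have hφ0 : (d.totient : ℂ) ≠ 0 := by exact_mod_cast hφ.ne'
      push_cast
      field_simp
      ring
    rw [e2, norm_mul, Complex.norm_real, Real.norm_of_nonneg (by positivity)]
    have n1 : ‖J - Real.log V * I c μ X α‖ ≤ 2 * Real.log X * X := by
      refine (norm_sub_le _ _).trans ?_
      rw [norm_mul, Complex.norm_real, Real.norm_of_nonneg hlV0]
      have := mul_le_mul hlV hI (norm_nonneg _) hL
      linarith
    calc 1 / (d:ℝ) * _ ≤ 1 / (d:ℝ) * (|Gd d V| * (2 * Real.log X * X) + |Hd d V - d / d.totient| * X) := by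
          gcongr
          refine (norm_add_le _ _).trans ?_
          rw [norm_mul, norm_mul, Complex.norm_real, Complex.norm_real, Real.norm_eq_abs, Real.norm_eq_abs]
          gcongr
      _ = _ := by ring
  rw [h2] at h3
  refine (norm_sub_le_norm_sub_add_norm_sub _ _ _).trans (add_le_add h3 h4)

lemma vonMangoldt_sum_div_le {U X : ℝ} (hU : 1 ≤ U) (hUX : U ≤ X) (d : ℕ) :
    ∑ m ∈ Icc 1 ⌊U⌋₊, (if m.Coprime d then (vonMangoldt m : ℝ) / m else 0) ≤
      Real.log X * (1 + Real.log X) := by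
  have hL : 0 ≤ Real.log X := Real.log_nonneg (by linarith)
  calc _ ≤ ∑ m ∈ Icc 1 ⌊U⌋₊, Real.log X * (m:ℝ)⁻¹ := by
        refine sum_le_sum fun m hm => ?_
        have hm1 : (1:ℝ) ≤ m := by exact_mod_cast (mem_Icc.1 hm).1
        have hmX : (m:ℝ) ≤ X := ((Nat.le_floor_iff (by linarith)).1 (mem_Icc.1 hm).2).trans hUX
        have : vonMangoldt m ≤ Real.log X :=
          ArithmeticFunction.vonMangoldt_le_log.trans (Real.log_le_log (by linarith) hmX)
        split_ifs
        · rw [div_eq_mul_inv]; gcongr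
        · positivity
    _ = Real.log X * harmonic ⌊U⌋₊ := by
        rw [← mul_sum, harmonic_eq_sum_Icc]; push_cast; rfl
    _ ≤ _ := by
        gcongr
        have h1 := harmonic_floor_le_one_add_log U hU
        have h2 := Real.log_le_log (by linarith) hUX
        linarith

/-- The part `∑ μ(b) Λ(m)` of Vaughan's identity, with `b ≤ V`, `m ≤ U`. It has no main term, as the
sum over `b` is `Gd`. -/
lemma typeI_second {c μ X α U V : ℝ} (hc : 1 ≤ c) (hc2 : c ≤ 17 / 16) (hμ : 0 < μ) (hμ1 : μ ≤ 1)
    (hX : 1 ≤ X) (hV : 1 ≤ V) (hU : 1 ≤ U) (hUX : U ≤ X) {d : ℕ} (hd : 1 ≤ d) (hd2 : ¬ 2 ∣ d) :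
    ‖∑ b ∈ Icc 1 ⌊V⌋₊, (moebius b : ℂ) * ∑ m ∈ Icc 1 ⌊U⌋₊, ((vonMangoldt m : ℝ) : ℂ) *
        ∑ n ∈ (window μ X).filter (fun n => b * m ∣ n ∧ d ∣ n + 2), e (α * (n:ℝ) ^ c)‖ ≤
      V * (U * (Real.log X * (4 + 14 * (|α| * X ^ c)))) +
        X / d * (|Gd d V| * (Real.log X * (1 + Real.log X))) := by
  have hX0 : 0 < X := by linarith
  have hL := Real.log_nonneg hX
  have hdR : (1:ℝ) ≤ d := by exact_mod_cast hd
  set Er := 4 + 14 * (|α| * X ^ c) with hEr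
  have hEr0 : 0 ≤ Er := by positivity
  set κ : ℕ → ℝ := fun b => if b.Coprime d then 1 / (b:ℝ) else 0 with hκ
  have h1 : ∀ b ∈ Icc 1 ⌊V⌋₊, ∀ m ∈ Icc 1 ⌊U⌋₊, ‖((vonMangoldt m : ℝ) : ℂ) *
        ∑ n ∈ (window μ X).filter (fun n => b * m ∣ n ∧ d ∣ n + 2), e (α * (n:ℝ) ^ c) -
        ((vonMangoldt m : ℝ) : ℂ) * ((κ b * κ m * (1 / d) : ℝ) * I c μ X α)‖ ≤ Real.log X * Er := by
    intro b hb m hm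
    have hm1 : (1:ℝ) ≤ m := by exact_mod_cast (mem_Icc.1 hm).1
    have hmX : (m:ℝ) ≤ X := ((Nat.le_floor_iff (by linarith)).1 (mem_Icc.1 hm).2).trans hUX
    have hΛ : vonMangoldt m ≤ Real.log X :=
      ArithmeticFunction.vonMangoldt_le_log.trans (Real.log_le_log (by linarith) hmX)
    have a2 := typeI_e (α := α) hc hc2 hμ hμ1 hX0 (b := b * m)
      (Nat.mul_pos (mem_Icc.1 hb).1 (mem_Icc.1 hm).1) hd hd2
    have e1 : (if (b * m).Coprime d then 1 / (((b * m : ℕ) : ℝ) * d) else 0) = κ b * κ m * (1 / d) := by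
      simp only [hκ, Nat.coprime_mul_iff_left]
      rw [Nat.cast_mul]
      split_ifs <;> first | tauto | (simp; try ring)
    rw [e1] at a2
    rw [← mul_sub, norm_mul, Complex.norm_real, Real.norm_of_nonneg ArithmeticFunction.vonMangoldt_nonneg]
    exact mul_le_mul hΛ a2 (norm_nonneg _) hL
  have h2 : ∀ b ∈ Icc 1 ⌊V⌋₊, ‖(moebius b : ℂ) * ∑ m ∈ Icc 1 ⌊U⌋₊, ((vonMangoldt m : ℝ) : ℂ) *
        ∑ n ∈ (window μ X).filter (fun n => b * m ∣ n ∧ d ∣ n + 2), e (α * (n:ℝ) ^ c) -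
        (moebius b : ℂ) * ∑ m ∈ Icc 1 ⌊U⌋₊, ((vonMangoldt m : ℝ) : ℂ) *
          ((κ b * κ m * (1 / d) : ℝ) * I c μ X α)‖ ≤ U * (Real.log X * Er) := by
    intro b hb
    rw [← mul_sub, norm_mul, ← sum_sub_distrib]
    refine (mul_le_of_le_one_left (norm_nonneg _) (norm_moebius_le b)).trans ?_
    refine (norm_sum_le_of_le _ (h1 b hb)).trans ?_
    rw [sum_const, Nat.card_Icc, nsmul_eq_mul, Nat.add_sub_cancel]
    gcongr
    exact Nat.floor_le (by linarith)
  have h3 := norm_sum_le_of_le _ h2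
  rw [sum_const, Nat.card_Icc, nsmul_eq_mul, Nat.add_sub_cancel, sum_sub_distrib] at h3
  have h4 : ∑ b ∈ Icc 1 ⌊V⌋₊, (moebius b : ℂ) * ∑ m ∈ Icc 1 ⌊U⌋₊, ((vonMangoldt m : ℝ) : ℂ) *
          ((κ b * κ m * (1 / d) : ℝ) * I c μ X α) =
      ((1 / d : ℝ) : ℂ) * (Gd d V : ℂ) *
        ((∑ m ∈ Icc 1 ⌊U⌋₊, (if m.Coprime d then (vonMangoldt m : ℝ) / m else 0) : ℝ) : ℂ) * I c μ X α := by
    have e1 : (Gd d V : ℂ) = ∑ b ∈ Icc 1 ⌊V⌋₊, (moebius b : ℂ) * (κ b : ℂ) := by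
      unfold Gd
      rw [sum_filter, Complex.ofReal_sum]
      refine sum_congr rfl fun b hb => ?_
      simp only [hκ]
      split_ifs <;> push_cast <;> ring
    have e2 : ((∑ m ∈ Icc 1 ⌊U⌋₊, (if m.Coprime d then (vonMangoldt m : ℝ) / m else 0) : ℝ) : ℂ) =
        ∑ m ∈ Icc 1 ⌊U⌋₊, ((vonMangoldt m : ℝ) : ℂ) * (κ m : ℂ) := by
      rw [Complex.ofReal_sum]
      refine sum_congr rfl fun m hm => ?_
      simp only [hκ]
      split_ifs <;> push_cast <;> ring
    rw [e1, e2, mul_assoc _ (∑ b ∈ Icc 1 ⌊V⌋₊, _) (∑ m ∈ Icc 1 ⌊U⌋₊, _), sum_mul_sum, mul_sum, sum_mul]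
    refine sum_congr rfl fun b hb => ?_
    rw [mul_sum, mul_sum, sum_mul]
    refine sum_congr rfl fun m hm => ?_
    push_cast
    ring
  have h5 : ‖((1 / d : ℝ) : ℂ) * (Gd d V : ℂ) *
        ((∑ m ∈ Icc 1 ⌊U⌋₊, (if m.Coprime d then (vonMangoldt m : ℝ) / m else 0) : ℝ) : ℂ) * I c μ X α‖ ≤
      X / d * (|Gd d V| * (Real.log X * (1 + Real.log X))) := by
    have hs := vonMangoldt_sum_div_le hU hUX d
    have hs0 : 0 ≤ ∑ m ∈ Icc 1 ⌊U⌋₊, (if m.Coprime d then (vonMangoldt m : ℝ) / m else 0) :=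
      sum_nonneg fun m _ => by
        split_ifs
        · exact div_nonneg ArithmeticFunction.vonMangoldt_nonneg (by positivity)
        · exact le_rfl
    rw [norm_mul, norm_mul, norm_mul, Complex.norm_real, Complex.norm_real, Complex.norm_real,
      Real.norm_of_nonneg hs0, Real.norm_eq_abs, Real.norm_eq_abs, abs_of_nonneg (by positivity)]
    calc _ ≤ 1 / (d:ℝ) * |Gd d V| * (Real.log X * (1 + Real.log X)) * X := by
          gcongr
          exact norm_I_le hμ.le hμ1 hX0.le
      _ = _ := by ring
  rw [h4] at h3
  have h6 : (⌊V⌋₊:ℝ) * (U * (Real.log X * Er)) ≤ V * (U * (Real.log X * Er)) := by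
    gcongr
    exact Nat.floor_le (by linarith)
  refine (norm_le_norm_add_norm_sub' _ _).trans ((add_le_add h5 (h3.trans h6)).trans (le_of_eq ?_))
  ring

/-! ### The main term of the dispersion -/

/-- First derivative test for `∫ t e(β t^c) dt`. -/
lemma osc_integral {c β u v : ℝ} (hc : 1 ≤ c) (hc2 : c ≤ 17 / 16) (hu : 0 < u) (huv : u ≤ v)
    (hβ : β ≠ 0) :
    ‖∫ t in Set.Ioc u v, (t:ℂ) * e (β * t ^ c)‖ ≤ v ^ (2 - c) / |β| := by
  have hv : 0 < v := hu.trans_le huv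
  have hpos : ∀ t ∈ Set.uIcc u v, 0 < t := fun t ht => by
    rw [Set.uIcc_of_le huv] at ht; exact hu.trans_le ht.1
  have hd : ∀ t ∈ Set.uIcc u v, HasDerivAt (fun t : ℝ => t ^ (2 - c)) ((2 - c) * t ^ (1 - c)) t := by
    intro t ht
    have := Real.hasDerivAt_rpow_const (x := t) (p := 2 - c) (Or.inl (hpos t ht).ne')
    rwa [show (2 - c - 1 : ℝ) = 1 - c by ring] at this
  have hcont : ContinuousOn (fun t : ℝ => (2 - c) * t ^ (1 - c)) (Set.uIcc u v) :=
    continuousOn_const.mul (continuousOn_id.rpow_const fun t ht => Or.inl (hpos t ht).ne')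
  have hparts := intervalIntegral.integral_mul_deriv_eq_deriv_mul (a := u) (b := v)
    (u := fun t : ℝ => ((t ^ (2 - c) : ℝ) : ℂ)) (u' := fun t => (((2 - c) * t ^ (1 - c) : ℝ) : ℂ))
    (v := fun t : ℝ => e (β * t ^ c)) (fun t ht => (hd t ht).ofReal_comp)
    (fun t _ => hasDerivAt_e hc t)
    (Complex.continuous_ofReal.comp_continuousOn hcont).intervalIntegrable
    ((continuous_deriv_e β hc).intervalIntegrable _ _)
  have hI : ∫ t in u..v, ((t ^ (2 - c) : ℝ) : ℂ) *
      (2 * Real.pi * Complex.I * (β * (c * t ^ (c - 1)) : ℝ) * e (β * t ^ c)) =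
      (2 * Real.pi * Complex.I * (β * c : ℝ)) * ∫ t in u..v, (t:ℂ) * e (β * t ^ c) := by
    rw [← intervalIntegral.integral_const_mul]
    refine intervalIntegral.integral_congr fun t ht => ?_
    have ht0 := hpos t ht
    have h1 : (t ^ (2 - c) * t ^ (c - 1) : ℝ) = t := by
      rw [← Real.rpow_add ht0]; norm_num
    have h2 : ((t ^ (2 - c) : ℝ) : ℂ) * ((t ^ (c - 1) : ℝ) : ℂ) = (t:ℂ) := by
      rw [← Complex.ofReal_mul, h1]
    push_cast
    rw [← h2]
    ring
  rw [hI] at hparts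
  have hb : ‖∫ t in u..v, (((2 - c) * t ^ (1 - c) : ℝ) : ℂ) * e (β * t ^ c)‖ ≤
      v ^ (2 - c) - u ^ (2 - c) := by
    rw [← intervalIntegral.integral_eq_sub_of_hasDerivAt hd hcont.intervalIntegrable]
    refine intervalIntegral.norm_integral_le_of_norm_le huv ?_ hcont.intervalIntegrable
    refine Eventually.of_forall fun t ht => ?_
    have : 0 ≤ t ^ (1 - c) := Real.rpow_nonneg (hu.trans ht.1).le _
    rw [norm_mul, norm_e, mul_one, Complex.norm_real, Real.norm_of_nonneg]
    exact mul_nonneg (by linarith) this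
  have hn := congrArg norm hparts
  rw [norm_mul] at hn
  have hk : ‖(2 * Real.pi * Complex.I * (β * c : ℝ) : ℂ)‖ = 2 * Real.pi * c * |β| := by
    simp only [norm_mul, Complex.norm_I, Complex.norm_real, Real.norm_eq_abs, Complex.norm_ofNat,
      abs_of_pos Real.pi_pos, abs_of_nonneg (by linarith : (0:ℝ) ≤ c)]
    ring
  have hu0 : 0 ≤ u ^ (2 - c) := Real.rpow_nonneg hu.le _
  have hv0 : 0 ≤ v ^ (2 - c) := Real.rpow_nonneg hv.le _
  have hbd : ‖((v ^ (2 - c) : ℝ) : ℂ) * e (β * v ^ c) - ((u ^ (2 - c) : ℝ) : ℂ) * e (β * u ^ c) -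
      ∫ t in u..v, (((2 - c) * t ^ (1 - c) : ℝ) : ℂ) * e (β * t ^ c)‖ ≤ 2 * v ^ (2 - c) := by
    refine (norm_sub_le _ _).trans ((add_le_add (norm_sub_le _ _) hb).trans ?_)
    rw [norm_mul, norm_mul, norm_e, norm_e, Complex.norm_real, Complex.norm_real,
      Real.norm_of_nonneg hu0, Real.norm_of_nonneg hv0]
    linarith
  rw [← hn, hk, intervalIntegral.integral_of_le huv] at hbd
  have hβ0 : 0 < |β| := abs_pos.2 hβ
  rw [le_div_iff₀ hβ0]
  have hpi := Real.pi_gt_three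
  set N := ‖∫ t in Set.Ioc u v, (t:ℂ) * e (β * t ^ c)‖
  have hN : 0 ≤ N := norm_nonneg _
  have : 6 * (N * |β|) ≤ 2 * Real.pi * c * |β| * N := by
    have h6 : 6 ≤ 2 * Real.pi * c := by nlinarith
    have : 0 ≤ |β| * N := by positivity
    nlinarith
  have h0 : 0 ≤ N * |β| := by positivity
  linarith

/-- Lower end of the range of the smooth variable paired with `b₁`, `b₂`. -/
noncomputable def loEnd (μ X U : ℝ) (b₁ b₂ : ℕ) : ℝ := max U (max (μ * X / b₁) (μ * X / b₂))

/-- Upper end of the range of the smooth variable paired with `b₁`, `b₂`. -/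
noncomputable def hiEnd (X : ℝ) (b₁ b₂ : ℕ) : ℝ := min (X / b₁) (X / b₂)

/-- The integral attached to the pair `(b₁, b₂)` in the dispersion of the bilinear sum. -/
noncomputable def pairInt (c μ X α U : ℝ) (b₁ b₂ : ℕ) : ℂ :=
  ∫ t in Set.Ioc (loEnd μ X U b₁ b₂) (hiEnd X b₁ b₂), (t:ℂ) * e (α * ((b₁:ℝ) ^ c - (b₂:ℝ) ^ c) * t ^ c)

lemma loEnd_comm (μ X U : ℝ) (b₁ b₂ : ℕ) : loEnd μ X U b₁ b₂ = loEnd μ X U b₂ b₁ := by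
  unfold loEnd; rw [max_comm (μ * X / b₁)]

lemma hiEnd_comm (X : ℝ) (b₁ b₂ : ℕ) : hiEnd X b₁ b₂ = hiEnd X b₂ b₁ := by
  unfold hiEnd; rw [min_comm]

lemma pairInt_le_sq {c μ X α U : ℝ} (hX : 0 ≤ X) (hU : 0 < U) {b₁ b₂ : ℕ} :
    ‖pairInt c μ X α U b₁ b₂‖ ≤ (hiEnd X b₁ b₂) ^ 2 := by
  unfold pairInt
  set u := loEnd μ X U b₁ b₂
  set v := hiEnd X b₁ b₂ with hv
  have hu : 0 < u := hU.trans_le (le_max_left _ _)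
  have hv0 : 0 ≤ v := by rw [hv]; unfold hiEnd; positivity
  rcases le_or_gt v u with h | h
  · rw [Set.Ioc_eq_empty (not_lt.2 h)]; simp; positivity
  · refine (norm_setIntegral_le_of_norm_le_const (C := v) (by simp) fun t ht => ?_).trans ?_
    · rw [norm_mul, norm_e, mul_one, Complex.norm_real, Real.norm_of_nonneg (hu.trans ht.1).le]
      exact ht.2
    · simp only [Measure.real, Real.volume_Ioc, ENNReal.toReal_ofReal (sub_nonneg.2 h.le)]
      nlinarith

/-- `x^c - y^c ≥ x^(c-1) (x - y)` for `x ≥ y ≥ 0`. -/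
lemma rpow_sub_ge {c x y : ℝ} (hc : 1 ≤ c) (hx : 0 < x) (hy : 0 < y) (hyx : y ≤ x) :
    x ^ (c - 1) * (x - y) ≤ x ^ c - y ^ c := by
  have h1 : x ^ c = x ^ (c - 1) * x := by rw [Real.rpow_sub_one hx.ne']; field_simp
  have h2 : y ^ c = y ^ (c - 1) * y := by rw [Real.rpow_sub_one hy.ne']; field_simp
  have h3 : y ^ (c - 1) ≤ x ^ (c - 1) := Real.rpow_le_rpow hy.le hyx (by linarith)
  rw [h1, h2]
  nlinarith

/-- First derivative test for `pairInt`, using `b₁ ^ c - b₂ ^ c ≥ b₁ ^ (c - 1) (b₁ - b₂)`. -/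
lemma pairInt_le_osc {c μ X α U : ℝ} (hc : 1 ≤ c) (hc2 : c ≤ 17 / 16) (hX : 0 < X) (hU : 0 < U)
    (hα : α ≠ 0) {b₁ b₂ : ℕ} (hb : b₂ < b₁) (hb2 : 1 ≤ b₂) (z : ℂ)
    (hz : z = pairInt c μ X α U b₁ b₂ ∨ z = pairInt c μ X α U b₂ b₁) :
    ‖z‖ ≤ X ^ 2 / (|α| * X ^ c * (b₁ * (b₁ - b₂))) := by
  have h1R : (0:ℝ) < b₁ := by exact_mod_cast (by omega : 0 < b₁)
  have h2R : (0:ℝ) < b₂ := by exact_mod_cast (by omega : 0 < b₂)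
  have h12 : (b₂:ℝ) < b₁ := by exact_mod_cast hb
  have hα0 : 0 < |α| := abs_pos.2 hα
  have hXc : 0 < X ^ c := Real.rpow_pos_of_pos hX _
  have hbase : ∀ β : ℝ, |α| * ((b₁:ℝ) ^ c - (b₂:ℝ) ^ c) ≤ |β| →
      ‖∫ t in Set.Ioc (loEnd μ X U b₁ b₂) (hiEnd X b₁ b₂), (t:ℂ) * e (β * t ^ c)‖ ≤
        X ^ 2 / (|α| * X ^ c * (b₁ * (b₁ - b₂))) := by
    intro β hβ
    have hrp := rpow_sub_ge hc h1R h2R h12.le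
    have hbc : 0 < (b₁:ℝ) ^ (c - 1) := Real.rpow_pos_of_pos h1R _
    have hβ' : |α| * ((b₁:ℝ) ^ (c - 1) * (b₁ - b₂)) ≤ |β| :=
      (mul_le_mul_of_nonneg_left hrp hα0.le).trans hβ
    have hβp : 0 < |α| * ((b₁:ℝ) ^ (c - 1) * (b₁ - b₂)) := by
      have : (0:ℝ) < b₁ - b₂ := by linarith
      positivity
    have hsub : (0:ℝ) < b₁ - b₂ := by linarith
    set u := loEnd μ X U b₁ b₂ with hu'
    set v := hiEnd X b₁ b₂ with hv'
    have hu : 0 < u := hU.trans_le (le_max_left _ _)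
    rcases le_or_gt v u with h | h
    · rw [Set.Ioc_eq_empty (not_lt.2 h)]; simp; positivity
    · refine (osc_integral hc hc2 hu h.le (abs_pos.1 (hβp.trans_le hβ'))).trans ?_
      have hvX : v ≤ X / b₁ := min_le_left _ _
      have hv0 : 0 < v := hu.trans h
      calc v ^ (2 - c) / |β| ≤ (X / b₁) ^ (2 - c) / (|α| * ((b₁:ℝ) ^ (c - 1) * (b₁ - b₂))) := by
            gcongr
            linarith
        _ = _ := by
            rw [Real.div_rpow hX.le h1R.le, Real.rpow_sub hX, Real.rpow_sub h1R, Real.rpow_sub_one h1R.ne']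
            have : (0:ℝ) < (b₁:ℝ) ^ c := Real.rpow_pos_of_pos h1R _
            norm_num
            field_simp
  have hpos : 0 ≤ (b₁:ℝ) ^ c - (b₂:ℝ) ^ c :=
    sub_nonneg.2 (Real.rpow_le_rpow h2R.le h12.le (by linarith))
  rcases hz with rfl | rfl
  · exact hbase _ (by rw [abs_mul, abs_of_nonneg hpos])
  · unfold pairInt
    rw [loEnd_comm, hiEnd_comm]
    exact hbase _ (by rw [abs_mul, abs_sub_comm, abs_of_nonneg hpos])

/-- A double sum is at most twice the sum over ordered pairs when the summand is controlled by a
function of the larger and the smaller variable. -/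
lemma sum_pairs_le {B : Finset ℕ} {F G : ℕ → ℕ → ℝ} (hG : ∀ x y, 0 ≤ G x y)
    (h : ∀ x ∈ B, ∀ y ∈ B, y ≤ x → F x y ≤ G x y ∧ F y x ≤ G x y) :
    ∑ x ∈ B, ∑ y ∈ B, F x y ≤ 2 * ∑ x ∈ B, ∑ y ∈ B.filter (· ≤ x), G x y := by
  have h1 : ∑ x ∈ B, ∑ y ∈ B, F x y ≤ ∑ x ∈ B, ∑ y ∈ B, ((if y ≤ x then G x y else 0) +
      (if x ≤ y then G y x else 0)) := by
    refine sum_le_sum fun x hx => sum_le_sum fun y hy => ?_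
    rcases le_total y x with hyx | hyx
    · rw [if_pos hyx]
      have : 0 ≤ if x ≤ y then G y x else 0 := by split_ifs; exacts [hG _ _, le_rfl]
      linarith [(h x hx y hy hyx).1]
    · rw [if_pos hyx]
      have : 0 ≤ if y ≤ x then G x y else 0 := by split_ifs; exacts [hG _ _, le_rfl]
      linarith [(h y hy x hx hyx).2]
  refine h1.trans (le_of_eq ?_)
  simp only [sum_add_distrib]
  rw [two_mul]
  congr 1
  · simp only [sum_filter]
  · rw [sum_comm]; simp only [sum_filter]

lemma sum_inv_sq_tail {V Y : ℝ} (hV : 1 ≤ V) :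
    ∑ b ∈ Ioc ⌊V⌋₊ ⌊Y⌋₊, 1 / (b:ℝ) ^ 2 ≤ 2 / V := by
  have hf : 1 ≤ ⌊V⌋₊ := Nat.one_le_floor_iff _ |>.2 hV
  rcases le_or_gt ⌊V⌋₊ ⌊Y⌋₊ with h | h
  · have h1 := sum_Ioc_inv_sq_le_sub (α := ℝ) (by omega : ⌊V⌋₊ ≠ 0) h
    simp only [one_div]
    refine h1.trans ?_
    have h2 : V < ⌊V⌋₊ + 1 := Nat.lt_floor_add_one V
    have h3 : (1:ℝ) ≤ ⌊V⌋₊ := by exact_mod_cast hf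
    have h4 : (⌊V⌋₊:ℝ)⁻¹ ≤ 2 / V := by
      rw [inv_eq_one_div, div_le_div_iff₀ (by linarith) (by linarith)]; linarith
    have : (0:ℝ) ≤ (⌊Y⌋₊:ℝ)⁻¹ := by positivity
    linarith
  · rw [Ioc_eq_empty (by omega), sum_empty]; positivity

lemma sum_inv_le {V Y X : ℝ} (hY : Y ≤ X) (hX : 1 ≤ X) :
    ∑ b ∈ Ioc ⌊V⌋₊ ⌊Y⌋₊, 1 / (b:ℝ) ≤ 1 + Real.log X := by
  calc _ ≤ ∑ b ∈ Icc 1 ⌊X⌋₊, 1 / (b:ℝ) := by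
        refine sum_le_sum_of_subset_of_nonneg (fun b hb => ?_) fun _ _ _ => by positivity
        rw [mem_Ioc] at hb
        have := Nat.floor_le_floor hY
        rw [mem_Icc]; omega
    _ = harmonic ⌊X⌋₊ := by rw [harmonic_eq_sum_Icc]; push_cast; simp
    _ ≤ _ := harmonic_floor_le_one_add_log X hX

/-- The main term of the dispersion for the moduli `d₁`, `d₂`: the sum of `μ(b₁) μ(b₂)` times the
pair integral over `V < b₁, b₂ ≤ X / U` with `(bᵢ, dᵢ) = 1` and `b₁ ≡ b₂ (mod (d₁, d₂))`. -/
noncomputable def mainQ (c μ X α U V : ℝ) (d₁ d₂ : ℕ) : ℂ :=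
  ∑ b₁ ∈ Ioc ⌊V⌋₊ ⌊X / U⌋₊, ∑ b₂ ∈ Ioc ⌊V⌋₊ ⌊X / U⌋₊,
    if b₁.Coprime d₁ ∧ b₂.Coprime d₂ ∧ b₁ ≡ b₂ [MOD d₁.gcd d₂] then
      (moebius b₁ : ℂ) * (moebius b₂ : ℂ) * pairInt c μ X α U b₁ b₂ else 0

lemma mainQ_le_sum {c μ X α U V : ℝ} (d₁ d₂ : ℕ) :
    ‖mainQ c μ X α U V d₁ d₂‖ ≤ ∑ b₁ ∈ Ioc ⌊V⌋₊ ⌊X / U⌋₊, ∑ b₂ ∈ Ioc ⌊V⌋₊ ⌊X / U⌋₊,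
      if b₁ ≡ b₂ [MOD d₁.gcd d₂] then ‖pairInt c μ X α U b₁ b₂‖ else 0 := by
  unfold mainQ
  refine norm_sum_le_of_le _ fun b₁ _ => norm_sum_le_of_le _ fun b₂ _ => ?_
  by_cases h : b₁ ≡ b₂ [MOD d₁.gcd d₂]
  · rw [if_pos h]
    split_ifs
    · rw [norm_mul, norm_mul]
      refine mul_le_of_le_one_left (norm_nonneg _) ?_
      exact mul_le_one₀ (norm_moebius_le _) (norm_nonneg _) (norm_moebius_le _)
    · simp
  · rw [if_neg h, if_neg (by tauto)]; simp

lemma card_class_le {q : ℕ} (hq : 1 ≤ q) (a x : ℕ) :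
    (((Icc 0 x).filter (fun k => k ≡ a [MOD q])).card : ℝ) ≤ x / q + 2 := by
  have h := count_class hq a (t := (x:ℝ)) (by positivity)
  rw [Nat.floor_natCast, sum_boole] at h
  rw [show ((((Icc 0 x).filter (fun k => k ≡ a [MOD q])).card : ℂ) - ((1 / q : ℝ) : ℂ) * ((x:ℝ):ℂ)) =
    (((((Icc 0 x).filter (fun k => k ≡ a [MOD q])).card : ℝ) - (1 / q) * x : ℝ) : ℂ) by push_cast; ring,
    Complex.norm_real, Real.norm_eq_abs] at h
  have := (abs_le.1 h).2
  rw [one_div_mul_eq_div] at this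
  linarith

/-- Trivial bound: the congruence `b₁ ≡ b₂` modulo the gcd saves the gcd, except on the diagonal. -/
lemma mainQ_large_gcd {c μ X α U V : ℝ} (hX : 1 ≤ X) (hU : 1 ≤ U) (hV : 1 ≤ V)
    {d₁ d₂ : ℕ} (hd : 1 ≤ d₁.gcd d₂) :
    ‖mainQ c μ X α U V d₁ d₂‖ ≤
      2 * X ^ 2 * ((1 + Real.log X) / d₁.gcd d₂ + 4 / V) := by
  set g := d₁.gcd d₂ with hg
  set B := Ioc ⌊V⌋₊ ⌊X / U⌋₊ with hB
  have hgR : (1:ℝ) ≤ g := by exact_mod_cast hd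
  refine (mainQ_le_sum d₁ d₂).trans ?_
  rw [← hg]
  refine (sum_pairs_le (B := B) (G := fun x y => if y ≡ x [MOD g] then X ^ 2 / (x:ℝ) ^ 2 else 0)
    (fun x y => by split_ifs <;> positivity) ?_).trans ?_
  · intro x hx y hy hyx
    have hx0 : (0:ℝ) < x := by
      have := (mem_Ioc.1 hx).1
      exact_mod_cast (by omega : 0 < x)
    have hb1 : ‖pairInt c μ X α U x y‖ ≤ X ^ 2 / (x:ℝ) ^ 2 := by
      refine (pairInt_le_sq (by linarith) (by linarith)).trans ?_
      rw [← div_pow]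
      gcongr
      · unfold hiEnd; positivity
      · exact min_le_left _ _
    have hb2 : ‖pairInt c μ X α U y x‖ ≤ X ^ 2 / (x:ℝ) ^ 2 := by
      refine (pairInt_le_sq (by linarith) (by linarith)).trans ?_
      rw [← div_pow]
      gcongr
      · unfold hiEnd; positivity
      · exact min_le_right _ _
    by_cases h : y ≡ x [MOD g]
    · rw [if_pos h, if_pos h.symm, if_pos h]; exact ⟨hb1, hb2⟩
    · rw [if_neg h, if_neg (fun hh => h hh.symm), if_neg h]; exact ⟨le_rfl, le_rfl⟩
  · have h1 : ∀ x ∈ B, ∑ y ∈ B.filter (· ≤ x), (if y ≡ x [MOD g] then X ^ 2 / (x:ℝ) ^ 2 else 0) ≤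
        X ^ 2 * (1 / g * (1 / x) + 2 * (1 / (x:ℝ) ^ 2)) := by
      intro x hx
      have hx0 : (0:ℝ) < x := by
        have := (mem_Ioc.1 hx).1
        exact_mod_cast (by omega : 0 < x)
      rw [← sum_filter, sum_const, nsmul_eq_mul]
      have hc1 : (((B.filter (· ≤ x)).filter (fun k => k ≡ x [MOD g])).card : ℝ) ≤ x / g + 2 := by
        refine le_trans ?_ (card_class_le hd x x)
        refine Nat.cast_le.2 (card_le_card (filter_subset_filter _ fun y hy => ?_))
        rw [mem_filter] at hy
        rw [mem_Icc]; omega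
      calc _ ≤ ((x:ℝ) / g + 2) * (X ^ 2 / (x:ℝ) ^ 2) := by gcongr
        _ = _ := by field_simp
    refine (mul_le_mul_of_nonneg_left (sum_le_sum h1) (by norm_num)).trans ?_
    rw [← mul_sum, sum_add_distrib, ← mul_sum, ← mul_sum]
    have s1 := sum_inv_le (V := V) (Y := X / U) (X := X) (div_le_self (by linarith) hU) hX
    have s2 := sum_inv_sq_tail (Y := X / U) hV
    rw [← hB] at s1 s2
    calc 2 * (X ^ 2 * (1 / g * ∑ b ∈ B, 1 / (b:ℝ) + 2 * ∑ b ∈ B, 1 / (b:ℝ) ^ 2)) ≤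
        2 * (X ^ 2 * (1 / g * (1 + Real.log X) + 2 * (2 / V))) := by gcongr
      _ = _ := by ring

lemma sum_inv_gap_le {X : ℝ} {x : ℕ} (hx : 1 ≤ x) (hxX : (x:ℝ) ≤ X) (B : Finset ℕ) :
    ∑ y ∈ B.filter (· < x), 1 / ((x:ℝ) - y) ≤ 1 + Real.log X := by
  have hx1 : (1:ℝ) ≤ x := by exact_mod_cast hx
  calc _ ≤ ∑ y ∈ range x, 1 / ((x:ℝ) - y) := by
        refine sum_le_sum_of_subset_of_nonneg (fun y hy => ?_) fun y hy _ => ?_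
        · rw [mem_filter] at hy; rw [mem_range]; exact hy.2
        · have : (y:ℝ) < x := by exact_mod_cast mem_range.1 hy
          have : (0:ℝ) < x - y := by linarith
          positivity
    _ = ∑ i ∈ range x, 1 / ((i:ℝ) + 1) := by
        rw [← sum_range_reflect]
        refine sum_congr rfl fun y hy => ?_
        have := mem_range.1 hy
        rw [Nat.sub_sub, Nat.cast_sub (by omega)]
        push_cast
        congr 1; ring
    _ = harmonic x := by unfold harmonic; push_cast; simp
    _ ≤ 1 + Real.log x := harmonic_le_one_add_log x
    _ ≤ _ := by gcongr

/-- Bound of `mainQ` by the first derivative test off the diagonal. -/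
lemma mainQ_osc {c μ X α U V : ℝ} (hc : 1 ≤ c) (hc2 : c ≤ 17 / 16) (hX : 1 ≤ X) (hU : 1 ≤ U)
    (hV : 1 ≤ V) (hα : α ≠ 0) (d₁ d₂ : ℕ) :
    ‖mainQ c μ X α U V d₁ d₂‖ ≤
      2 * X ^ 2 * ((1 + Real.log X) ^ 2 / (|α| * X ^ c) + 2 / V) := by
  have hX0 : 0 < X := by linarith
  have hL := Real.log_nonneg hX
  set B := Ioc ⌊V⌋₊ ⌊X / U⌋₊ with hB
  set T := |α| * X ^ c with hT
  have hα0 : 0 < |α| := abs_pos.2 hα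
  have hT0 : 0 < T := mul_pos hα0 (Real.rpow_pos_of_pos hX0 _)
  have hB1 : ∀ x ∈ B, 1 ≤ x := fun x hx => by
    have := (mem_Ioc.1 hx).1
    omega
  have hBX : ∀ x ∈ B, (x:ℝ) ≤ X := fun x hx =>
    ((Nat.le_floor_iff (by positivity)).1 (mem_Ioc.1 hx).2).trans (div_le_self hX0.le hU)
  refine (mainQ_le_sum d₁ d₂).trans ?_
  refine (sum_pairs_le (B := B) (G := fun x y => if y < x then X ^ 2 / (T * (x * (x - y))) else
    X ^ 2 / (x:ℝ) ^ 2) (fun x y => ?_) ?_).trans ?_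
  · split_ifs with h
    · have : (0:ℝ) < x - y := sub_pos.2 (by exact_mod_cast h)
      positivity
    · positivity
  · intro x hx y hy hyx
    have h1 := hB1 x hx
    have h2 := hB1 y hy
    have hx0 : (0:ℝ) < x := by exact_mod_cast h1
    have key : ∀ z : ℂ, (z = pairInt c μ X α U x y ∨ z = pairInt c μ X α U y x) →
        ‖z‖ ≤ if y < x then X ^ 2 / (T * (x * (x - y))) else X ^ 2 / (x:ℝ) ^ 2 := by
      intro z hz
      split_ifs with h
      · exact pairInt_le_osc hc hc2 hX0 (by linarith) hα h h2 z hz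
      · have hxy : y = x := by omega
        subst hxy
        have hz' : z = pairInt c μ X α U y y := by tauto
        rw [hz', ← div_pow]
        refine (pairInt_le_sq hX0.le (by linarith)).trans ?_
        gcongr
        · unfold hiEnd; positivity
        · exact min_le_left _ _
    constructor
    · refine le_trans ?_ (key _ (Or.inl rfl))
      split_ifs
      · exact le_rfl
      · exact norm_nonneg _
    · refine le_trans ?_ (key _ (Or.inr rfl))
      split_ifs
      · exact le_rfl
      · exact norm_nonneg _
  · have h1 : ∀ x ∈ B, ∑ y ∈ B.filter (· ≤ x), (if y < x then X ^ 2 / (T * (x * (x - y))) else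
        X ^ 2 / (x:ℝ) ^ 2) ≤ X ^ 2 * ((1 + Real.log X) / T * (1 / x) + 1 / (x:ℝ) ^ 2) := by
      intro x hx
      have hx0 : (0:ℝ) < x := by exact_mod_cast hB1 x hx
      rw [sum_ite, filter_filter, filter_filter]
      have f1 : B.filter (fun y => y ≤ x ∧ y < x) = B.filter (· < x) := by
        ext y
        simp only [mem_filter]
        exact ⟨fun h => ⟨h.1, h.2.2⟩, fun h => ⟨h.1, h.2.le, h.2⟩⟩
      have f2 : B.filter (fun y => y ≤ x ∧ ¬ y < x) = {x} := by
        ext y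
        simp only [mem_filter, mem_singleton]
        constructor
        · intro h; omega
        · rintro rfl; exact ⟨hx, le_rfl, lt_irrefl _⟩
      rw [f1, f2, sum_singleton]
      have s := sum_inv_gap_le (hB1 x hx) (hBX x hx) B
      have e1 : ∑ y ∈ B.filter (· < x), X ^ 2 / (T * (x * ((x:ℝ) - y))) =
          X ^ 2 / (T * x) * ∑ y ∈ B.filter (· < x), 1 / ((x:ℝ) - y) := by
        rw [mul_sum]
        refine sum_congr rfl fun y hy => ?_
        rw [div_mul_div_comm, mul_one, mul_assoc T]
      rw [e1]
      calc _ ≤ X ^ 2 / (T * x) * (1 + Real.log X) + X ^ 2 / (x:ℝ) ^ 2 := by gcongr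
        _ = _ := by field_simp
    refine (mul_le_mul_of_nonneg_left (sum_le_sum h1) (by norm_num)).trans ?_
    rw [← mul_sum, sum_add_distrib, ← mul_sum]
    have s1 := sum_inv_le (V := V) (Y := X / U) (X := X) (div_le_self (by linarith) hU) hX
    have s2 := sum_inv_sq_tail (Y := X / U) hV
    rw [← hB] at s1 s2
    calc 2 * (X ^ 2 * ((1 + Real.log X) / T * ∑ b ∈ B, 1 / (b:ℝ) + ∑ b ∈ B, 1 / (b:ℝ) ^ 2)) ≤
        2 * (X ^ 2 * ((1 + Real.log X) / T * (1 + Real.log X) + 2 / V)) := by gcongr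
      _ = _ := by ring

/-- `e(α (tb)^c)` restricted to `μX < tb ≤ X`. -/
noncomputable def zTerm (c μ X α : ℝ) (b : ℕ) (t : ℝ) : ℂ :=
  (Set.Ioc (μ * X / b) (X / b)).indicator (fun t => e (α * (t * b) ^ c)) t

/-- The sum of `μ(b) e(α (tb)^c)` over `V < b ≤ X / U` with `μX < tb ≤ X`, `(b, d) = 1` and
`b ≡ h (mod g)`. -/
noncomputable def zSum (c μ X α U V : ℝ) (d g h : ℕ) (t : ℝ) : ℂ :=
  ∑ b ∈ Ioc ⌊V⌋₊ ⌊X / U⌋₊, if b.Coprime d ∧ b ≡ h [MOD g] then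
    (moebius b : ℂ) * zTerm c μ X α b t else 0

lemma zTerm_mul_conj {c μ X α : ℝ} {b₁ b₂ : ℕ} {t : ℝ} (ht : 0 < t) :
    (t:ℂ) * (zTerm c μ X α b₁ t * (starRingEnd ℂ) (zTerm c μ X α b₂ t)) =
      (Set.Ioc (max (μ * X / b₁) (μ * X / b₂)) (min (X / b₁) (X / b₂))).indicator
        (fun t : ℝ => (t:ℂ) * e (α * ((b₁:ℝ) ^ c - (b₂:ℝ) ^ c) * t ^ c)) t := by
  unfold zTerm
  rw [← Set.Ioc_inter_Ioc]
  by_cases h1 : t ∈ Set.Ioc (μ * X / b₁) (X / b₁)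
  · by_cases h2 : t ∈ Set.Ioc (μ * X / b₂) (X / b₂)
    · rw [Set.indicator_of_mem h1, Set.indicator_of_mem h2,
        Set.indicator_of_mem (Set.mem_inter h1 h2), conj_e, ← e_add]
      congr 2
      rw [Real.mul_rpow ht.le (by positivity), Real.mul_rpow ht.le (by positivity)]
      ring
    · rw [Set.indicator_of_notMem h2,
        Set.indicator_of_notMem (fun h : t ∈ Set.Ioc (μ * X / b₁) (X / b₁) ∩ _ => h2 h.2)]
      simp
  · rw [Set.indicator_of_notMem h1,
      Set.indicator_of_notMem (fun h : t ∈ _ ∩ Set.Ioc (μ * X / b₂) (X / b₂) => h1 h.1)]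
    simp

lemma continuous_pair (c β : ℝ) (hc : 1 ≤ c) : Continuous (fun t : ℝ => (t:ℂ) * e (β * t ^ c)) := by
  have h2 : Continuous (fun t : ℝ => t ^ c) := Real.continuous_rpow_const (by linarith)
  have h3 := continuous_e
  fun_prop

lemma integrableOn_zTerm {c μ X α U V : ℝ} (hc : 1 ≤ c) (hU : 0 ≤ U) {b₁ b₂ : ℕ} :
    IntegrableOn (fun t : ℝ => (t:ℂ) * (zTerm c μ X α b₁ t * (starRingEnd ℂ) (zTerm c μ X α b₂ t)))
      (Set.Ioc U (X / V)) := by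
  have h1 : IntegrableOn ((Set.Ioc (max (μ * X / b₁) (μ * X / b₂)) (min (X / b₁) (X / b₂))).indicator
        (fun t : ℝ => (t:ℂ) * e (α * ((b₁:ℝ) ^ c - (b₂:ℝ) ^ c) * t ^ c))) (Set.Ioc U (X / V)) :=
    Integrable.indicator (((continuous_pair c _ hc).integrableOn_Icc).mono_set Set.Ioc_subset_Icc_self)
      measurableSet_Ioc
  exact h1.congr_fun (fun t ht => (zTerm_mul_conj (hU.trans_lt ht.1)).symm) measurableSet_Ioc

lemma pairInt_eq {c μ X α U V : ℝ} (hU : 0 ≤ U) (hV : 0 < V) (hX : 0 ≤ X) {b₁ b₂ : ℕ}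
    (hb₁ : V ≤ b₁) :
    pairInt c μ X α U b₁ b₂ = ∫ t in Set.Ioc U (X / V),
      (t:ℂ) * (zTerm c μ X α b₁ t * (starRingEnd ℂ) (zTerm c μ X α b₂ t)) := by
  rw [setIntegral_congr_fun measurableSet_Ioc (fun t ht => zTerm_mul_conj (hU.trans_lt ht.1)),
    setIntegral_indicator measurableSet_Ioc, Set.Ioc_inter_Ioc]
  unfold pairInt loEnd hiEnd
  rw [min_eq_right (a := X / V)]
  refine (min_le_left _ _).trans ?_
  gcongr

lemma sum_class_split {g : ℕ} (hg : 1 ≤ g) (B : Finset ℕ) (P₁ P₂ : ℕ → Prop) [DecidablePred P₁]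
    [DecidablePred P₂] (F₁ F₂ : ℕ → ℂ) :
    ∑ b₁ ∈ B, ∑ b₂ ∈ B, (if P₁ b₁ ∧ P₂ b₂ ∧ b₁ ≡ b₂ [MOD g] then F₁ b₁ * F₂ b₂ else 0) =
      ∑ h ∈ range g, (∑ b ∈ B, if P₁ b ∧ b ≡ h [MOD g] then F₁ b else 0) *
        (∑ b ∈ B, if P₂ b ∧ b ≡ h [MOD g] then F₂ b else 0) := by
  simp only [sum_mul_sum]
  symm
  rw [sum_comm]
  refine sum_congr rfl fun b₁ _ => ?_
  rw [sum_comm]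
  refine sum_congr rfl fun b₂ _ => ?_
  rw [sum_eq_single (b₁ % g)]
  · have e1 : b₁ ≡ b₁ % g [MOD g] := (Nat.mod_modEq _ _).symm
    have e2 : b₂ ≡ b₁ % g [MOD g] ↔ b₁ ≡ b₂ [MOD g] :=
      ⟨fun h => e1.trans h.symm, fun h => h.symm.trans e1⟩
    simp only [e1, e2, and_true]
    split_ifs <;> first | tauto | simp
  · intro h hh hne
    have : ¬ b₁ ≡ h [MOD g] := by
      intro h1
      apply hne
      rw [h1, Nat.mod_eq_of_lt (mem_range.1 hh)]
    rw [if_neg (fun h => this h.2), zero_mul]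
  · intro h
    exact absurd (mem_range.2 (Nat.mod_lt _ hg)) h

/-- Opening `pairInt` and sorting `b₁ ≡ b₂` by their common class `h` turns `mainQ` into an integral
of products of Möbius sums. -/
lemma mainQ_eq {c μ X α U V : ℝ} (hc : 1 ≤ c) (hU : 0 ≤ U) (hV : 0 < V) (hX : 0 ≤ X) {d₁ d₂ : ℕ}
    (hd : 1 ≤ d₁.gcd d₂) :
    mainQ c μ X α U V d₁ d₂ = ∫ t in Set.Ioc U (X / V), (t:ℂ) * ∑ h ∈ range (d₁.gcd d₂),
      zSum c μ X α U V d₁ (d₁.gcd d₂) h t *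
        (starRingEnd ℂ) (zSum c μ X α U V d₂ (d₁.gcd d₂) h t) := by
  have h1 : ∀ t : ℝ, (t:ℂ) * ∑ h ∈ range (d₁.gcd d₂), zSum c μ X α U V d₁ (d₁.gcd d₂) h t *
        (starRingEnd ℂ) (zSum c μ X α U V d₂ (d₁.gcd d₂) h t) =
      ∑ b₁ ∈ Ioc ⌊V⌋₊ ⌊X / U⌋₊, ∑ b₂ ∈ Ioc ⌊V⌋₊ ⌊X / U⌋₊,
        (if b₁.Coprime d₁ ∧ b₂.Coprime d₂ ∧ b₁ ≡ b₂ [MOD d₁.gcd d₂] then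
          (moebius b₁ : ℂ) * (moebius b₂ : ℂ) else 0) *
          ((t:ℂ) * (zTerm c μ X α b₁ t * (starRingEnd ℂ) (zTerm c μ X α b₂ t))) := by
    intro t
    have h2 := sum_class_split hd (Ioc ⌊V⌋₊ ⌊X / U⌋₊) (fun b => b.Coprime d₁) (fun b => b.Coprime d₂)
      (fun b => (moebius b : ℂ) * zTerm c μ X α b t)
      (fun b => (starRingEnd ℂ) ((moebius b : ℂ) * zTerm c μ X α b t))
    have h3 : ∀ h, (starRingEnd ℂ) (zSum c μ X α U V d₂ (d₁.gcd d₂) h t) =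
        ∑ b ∈ Ioc ⌊V⌋₊ ⌊X / U⌋₊, if b.Coprime d₂ ∧ b ≡ h [MOD d₁.gcd d₂] then
          (starRingEnd ℂ) ((moebius b : ℂ) * zTerm c μ X α b t) else 0 := by
      intro h
      unfold zSum
      rw [map_sum]
      refine sum_congr rfl fun b _ => ?_
      split_ifs <;> simp
    simp only [h3]
    unfold zSum
    rw [← h2, mul_sum]
    refine sum_congr rfl fun b₁ _ => ?_
    rw [mul_sum]
    refine sum_congr rfl fun b₂ _ => ?_
    split_ifs
    · rw [map_mul, map_intCast]; ring
    · simp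
  simp only [h1]
  rw [integral_finsetSum _ fun b₁ _ => integrable_finsetSum _ fun b₂ _ =>
    (integrableOn_zTerm hc hU).const_mul _]
  unfold mainQ
  refine sum_congr rfl fun b₁ hb₁ => ?_
  rw [integral_finsetSum _ fun b₂ _ => (integrableOn_zTerm hc hU).const_mul _]
  refine sum_congr rfl fun b₂ hb₂ => ?_
  rw [integral_const_mul, ← pairInt_eq hU hV hX ((Nat.lt_of_floor_lt (mem_Ioc.1 hb₁).1).le)]
  split_ifs <;> simp

/-- Siegel–Walfisz for the Möbius sums in `mainQ`, by partial summation against the phase. -/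
theorem zSum_bound (k : ℕ) {θ : ℝ} (hθ : 0 < θ) : ∃ C : ℝ, 1 ≤ C ∧
    ∀ (c μ X α U V t : ℝ) (d g h : ℕ), 1 ≤ c → c ≤ 17 / 16 → 0 < μ → μ ≤ 1 → 1 ≤ X → X ^ θ ≤ V →
      Real.exp 8 ≤ V → 0 < U → U < t → t ≤ X / V → 1 ≤ d → (d:ℝ) ≤ X → g ∣ d →
      ‖zSum c μ X α U V d g h t‖ ≤
        C * g * (X / t) / Real.log V ^ k * (2 + 7 * (|α| * X ^ c)) := by
  obtain ⟨C, hC, hcl⟩ := moebius_class_bound k hθ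
  refine ⟨C, hC, ?_⟩
  intro c μ X α U V t d g h hc hc2 hμ hμ1 hX hθV hV hU hUt htX hd hdX hgd
  have hX0 : 0 < X := by linarith
  have ht0 : 0 < t := hU.trans hUt
  have hV1 : 1 < V := lt_of_lt_of_le (by rw [← Real.exp_zero]; exact Real.exp_lt_exp.2 (by norm_num)) hV
  have hlV : 0 < Real.log V := Real.log_pos hV1
  have hVt : V ≤ X / t := by
    rw [le_div_iff₀ ht0]
    rw [le_div_iff₀ (by linarith)] at htX
    linarith
  have hXc : 0 < X ^ c := Real.rpow_pos_of_pos hX0 _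
  by_cases hhg : h.Coprime g
  · set a := max V (μ * X / t) with ha
    have hab : a ≤ X / t := max_le hVt (by gcongr; nlinarith)
    have ha0 : 0 ≤ a := le_trans (by linarith) (le_max_left _ _)
    set cc : ℕ → ℂ := fun b => if b.Coprime d ∧ b ≡ h [MOD g] then (moebius b : ℂ) else 0 with hcc
    set β := α * t ^ c with hβ
    have hz : zSum c μ X α U V d g h t = ∑ b ∈ Ioc ⌊a⌋₊ ⌊X / t⌋₊, e (β * (b:ℝ) ^ c) * cc b := by
      have hsub : Ioc ⌊a⌋₊ ⌊X / t⌋₊ ⊆ Ioc ⌊V⌋₊ ⌊X / U⌋₊ := by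
        refine Ioc_subset_Ioc (Nat.floor_le_floor (le_max_left _ _)) (Nat.floor_le_floor ?_)
        gcongr
      unfold zSum
      rw [← sum_subset hsub]
      · refine sum_congr rfl fun b hb => ?_
        rw [mem_Ioc, Nat.floor_lt ha0, Nat.le_floor_iff (by positivity)] at hb
        have hb0 : (0:ℝ) < b := ha0.trans_lt hb.1
        have hmem : t ∈ Set.Ioc (μ * X / b) (X / b) := by
          constructor
          · have := (le_max_right _ _).trans_lt hb.1
            rw [div_lt_iff₀ ht0] at this
            rw [div_lt_iff₀ hb0]; linarith
          · have := hb.2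
            rw [le_div_iff₀ ht0] at this
            rw [le_div_iff₀ hb0]; linarith
        unfold zTerm
        rw [Set.indicator_of_mem hmem, Real.mul_rpow ht0.le hb0.le]
        simp only [hcc, hβ]
        split_ifs
        · rw [mul_comm, mul_assoc]
        · simp
      · intro b hb hb'
        rw [mem_Ioc] at hb
        have hVb : V < b := Nat.lt_of_floor_lt hb.1
        have hb0 : (0:ℝ) < b := by linarith
        have hnm : t ∉ Set.Ioc (μ * X / b) (X / b) := by
          rintro ⟨h1, h2⟩
          apply hb'
          rw [mem_Ioc, Nat.floor_lt ha0, Nat.le_floor_iff (by positivity)]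
          rw [div_lt_iff₀ hb0] at h1
          rw [le_div_iff₀ hb0] at h2
          constructor
          · refine max_lt hVb ?_
            rw [div_lt_iff₀ ht0]; linarith
          · rw [le_div_iff₀ ht0]; linarith
        unfold zTerm
        rw [Set.indicator_of_notMem hnm]
        simp
    have hab2 := abel_bound (a := a) (b := X / t) (κ := 0) (ρ := C * g * (X / t) / Real.log V ^ k)
      (B := 1) (B' := 7 * |β| * (X / t) ^ (c - 1)) (c := cc) ha0 hab (fun x _ => hasDerivAt_e (β := β) hc x)
      (continuous_deriv_e β hc).continuousOn ?_ (fun x _ => (norm_e _).le)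
      (fun x hx => norm_deriv_e hc hc2 (ha0.trans hx.1) hx.2)
    · rw [Complex.ofReal_zero, zero_mul, sub_zero] at hab2
      rw [hz]
      refine hab2.trans ?_
      have hXt : 0 < X / t := by positivity
      refine mul_le_mul_of_nonneg_left (add_le_add (by norm_num) ?_) (by positivity)
      · have e1 : |β| * (X / t) ^ c = |α| * X ^ c := by
          rw [hβ, abs_mul, abs_of_pos (Real.rpow_pos_of_pos ht0 _), Real.div_rpow hX0.le ht0.le]
          have := Real.rpow_pos_of_pos ht0 c
          field_simp
        have e2 : (X / t) ^ c = (X / t) * (X / t) ^ (c - 1) := by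
          rw [Real.rpow_sub_one hXt.ne']; field_simp
        have hp : 0 ≤ (X / t) ^ (c - 1) := Real.rpow_nonneg hXt.le _
        calc (X / t - a) * (7 * |β| * (X / t) ^ (c - 1)) ≤ (X / t) * (7 * |β| * (X / t) ^ (c - 1)) := by
              gcongr; linarith
          _ = 7 * (|β| * (X / t) ^ c) := by rw [e2]; ring
          _ = _ := by rw [e1]
    · intro x hx
      have hVx : V ≤ x := (le_max_left _ _).trans hx.1
      have h1 : ∑ b ∈ Icc 0 ⌊x⌋₊, cc b = ∑ n ∈ (Icc 1 ⌊x⌋₊).filter (fun n => n.Coprime d ∧ n ≡ h [MOD g]),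
          (moebius n : ℂ) := by
        rw [sum_filter]
        symm
        refine sum_subset (Icc_subset_Icc (by omega) le_rfl) fun b hb hb' => ?_
        have : b = 0 := by
          rw [mem_Icc] at hb hb'; omega
        subst this
        simp
      rw [h1, Complex.ofReal_zero, zero_mul, sub_zero]
      refine (hcl X x d g h hX (hθV.trans hVx) (hV.trans hVx) hd hdX hgd hhg).trans ?_
      have : Real.log V ≤ Real.log x := Real.log_le_log (by linarith) hVx
      have hx2 := hx.2
      have hx0 : 0 ≤ x := by linarith
      gcongr
  · have : zSum c μ X α U V d g h t = 0 := by
      unfold zSum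
      refine sum_eq_zero fun b _ => ?_
      rw [if_neg]
      rintro ⟨h1, h2⟩
      apply hhg
      have h3 : b.Coprime g := Nat.Coprime.coprime_dvd_right hgd h1
      have h4 : Nat.gcd b g = Nat.gcd h g := h2.gcd_eq
      unfold Nat.Coprime at h3 ⊢
      rw [← h4, h3]
    rw [this, norm_zero]
    positivity

/-- Bound of `mainQ` by Siegel–Walfisz, effective when the gcd and the phase `|α| X ^ c` are at most
powers of `log X`. -/
theorem mainQ_sw (k : ℕ) {θ : ℝ} (hθ : 0 < θ) : ∃ C : ℝ, 1 ≤ C ∧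
    ∀ (c μ X α U V : ℝ) (d₁ d₂ : ℕ), 1 ≤ c → c ≤ 17 / 16 → 0 < μ → μ ≤ 1 → 1 ≤ X → X ^ θ ≤ V →
      Real.exp 8 ≤ V → 1 ≤ U → 1 ≤ d₁ → (d₁:ℝ) ≤ X → 1 ≤ d₂ → (d₂:ℝ) ≤ X →
      ‖mainQ c μ X α U V d₁ d₂‖ ≤ (d₁.gcd d₂) *
        (C * (d₁.gcd d₂) / Real.log V ^ k * (2 + 7 * (|α| * X ^ c))) ^ 2 * X ^ 2 * Real.log X := by
  obtain ⟨C, hC, hz⟩ := zSum_bound k hθ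
  refine ⟨C, hC, ?_⟩
  intro c μ X α U V d₁ d₂ hc hc2 hμ hμ1 hX hθV hV hU hd₁ hdX₁ hd₂ hdX₂
  have hg : 1 ≤ d₁.gcd d₂ := Nat.gcd_pos_of_pos_left _ hd₁
  have hV1 : 1 < V := lt_of_lt_of_le (by rw [← Real.exp_zero]; exact Real.exp_lt_exp.2 (by norm_num)) hV
  have hX0 : 0 < X := by linarith
  have hL := Real.log_nonneg hX
  rw [mainQ_eq hc (by linarith) (by linarith) hX0.le hg]
  set g := d₁.gcd d₂ with hgdef
  set R := C * g / Real.log V ^ k * (2 + 7 * (|α| * X ^ c)) with hR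
  have hR0 : 0 ≤ R := by
    have := Real.log_pos hV1
    positivity
  rcases le_or_gt (X / V) U with h | h
  · rw [Set.Ioc_eq_empty (not_lt.2 h)]; simp; positivity
  have hpt : ∀ t ∈ Set.Ioc U (X / V), ‖(t:ℂ) * ∑ h ∈ range g, zSum c μ X α U V d₁ g h t *
        (starRingEnd ℂ) (zSum c μ X α U V d₂ g h t)‖ ≤ (g * R ^ 2 * X ^ 2) * (1 / t) := by
    intro t ht
    have ht0 : 0 < t := by linarith [ht.1]
    rw [norm_mul, Complex.norm_real, Real.norm_of_nonneg ht0.le]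
    have hb : ∀ d : ℕ, 1 ≤ d → (d:ℝ) ≤ X → g ∣ d → ∀ h, ‖zSum c μ X α U V d g h t‖ ≤ R * (X / t) := by
      intro d hd hdX hgd h
      refine (hz c μ X α U V t d g h hc hc2 hμ hμ1 hX hθV hV (by linarith) ht.1 ht.2 hd hdX hgd).trans
        (le_of_eq ?_)
      rw [hR]; ring
    have hs : ‖∑ h ∈ range g, zSum c μ X α U V d₁ g h t *
        (starRingEnd ℂ) (zSum c μ X α U V d₂ g h t)‖ ≤ g * (R * (X / t) * (R * (X / t))) := by
      refine (norm_sum_le_of_le (range g) (n := fun _ => R * (X / t) * (R * (X / t))) fun h _ => ?_).trans ?_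
      · rw [norm_mul, RCLike.norm_conj]
        have := hb d₁ hd₁ hdX₁ (Nat.gcd_dvd_left _ _) h
        have := hb d₂ hd₂ hdX₂ (Nat.gcd_dvd_right _ _) h
        gcongr
      · rw [sum_const, card_range, nsmul_eq_mul]
    calc t * _ ≤ t * (g * (R * (X / t) * (R * (X / t)))) := by gcongr
      _ = _ := by field_simp
  have hci : IntegrableOn (fun t : ℝ => (g * R ^ 2 * X ^ 2) * (1 / t)) (Set.Ioc U (X / V)) := by
    refine Integrable.const_mul ?_ _
    have : ContinuousOn (fun t : ℝ => 1 / t) (Set.Icc U (X / V)) :=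
      continuousOn_const.div continuousOn_id fun t ht => by
        have := ht.1
        exact ne_of_gt (by linarith)
    exact this.integrableOn_Icc.mono_set Set.Ioc_subset_Icc_self
  refine (norm_integral_le_of_norm_le hci ((ae_restrict_iff' measurableSet_Ioc).2
    (Eventually.of_forall hpt))).trans ?_
  rw [integral_const_mul, ← intervalIntegral.integral_of_le h.le,
    integral_one_div_of_pos (by linarith) (by linarith)]
  have : Real.log (X / V / U) ≤ Real.log X := by
    refine Real.log_le_log (div_pos (by linarith) (by linarith)) ?_
    exact (div_le_self (by positivity) hU).trans (div_le_self hX0.le hV1.le)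
  gcongr

/-- Saving of an arbitrary power of `log X` in the main term of the dispersion. A large greatest
common divisor is trivial, a large phase is treated by the first derivative test, and otherwise both
Möbius sums are short on conductor and phase, so Siegel–Walfisz applies. -/
theorem mainQ_bound (k₁ : ℕ) : ∃ C : ℝ, 1 ≤ C ∧
    ∀ (c μ X α U : ℝ) (d₁ d₂ : ℕ), 1 ≤ c → c ≤ 17 / 16 → 0 < μ → μ ≤ 1 → Real.exp 800 ≤ X →
      1 ≤ U → 1 ≤ d₁ → (d₁:ℝ) ≤ X → 1 ≤ d₂ → (d₂:ℝ) ≤ X →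
      ‖mainQ c μ X α U (X ^ (1 / 100 : ℝ)) d₁ d₂‖ ≤ C * X ^ 2 / Real.log X ^ k₁ := by
  obtain ⟨C₀, hC₀, hsw⟩ := mainQ_sw (3 * k₁ + 4) (θ := 1 / 100) (by norm_num)
  set K : ℝ := k₁.factorial / (1 / 100 : ℝ) ^ k₁ with hK
  have hK0 : 0 ≤ K := by positivity
  set C₂ := C₀ ^ 2 * 81 * 100 ^ (6 * k₁ + 8) with hC₂
  have hC₂1 : 0 ≤ C₂ := by positivity
  refine ⟨8 + 8 * K + C₂, by linarith, ?_⟩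
  intro c μ X α U d₁ d₂ hc hc2 hμ hμ1 hX hU hd₁ hdX₁ hd₂ hdX₂
  have hX0 : 0 < X := (Real.exp_pos _).trans_le hX
  have hlX : 800 ≤ Real.log X := by rw [Real.le_log_iff_exp_le hX0]; exact hX
  have hX1 : 1 ≤ X := by
    have := Real.add_one_le_exp (800:ℝ)
    linarith
  set ℓ := Real.log X with hℓ
  have hℓ0 : 0 < ℓ := by linarith
  set V := X ^ (1 / 100 : ℝ) with hV
  have hlV : Real.log V = ℓ / 100 := by rw [hV, Real.log_rpow hX0]; ring
  have hV0 : 0 < V := Real.rpow_pos_of_pos hX0 _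
  have hV8 : Real.exp 8 ≤ V := by
    rw [← Real.le_log_iff_exp_le hV0, hlV]; linarith
  have hV1 : 1 ≤ V := by
    have := Real.add_one_le_exp (8:ℝ)
    linarith
  have hg : 1 ≤ d₁.gcd d₂ := Nat.gcd_pos_of_pos_left _ hd₁
  have hKV : 1 / V ≤ K / ℓ ^ k₁ := by
    have := log_pow_le_rpow (ε := 1 / 100) (by norm_num) k₁ hX1
    rw [div_le_div_iff₀ hV0 (by positivity), one_mul]
    exact this
  set T := |α| * X ^ c with hT
  have hT0 : 0 ≤ T := by positivity
  have hX2 : 0 ≤ X ^ 2 := by positivity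
  have fin : ∀ a : ℝ, a ≤ 8 + 8 * K + C₂ → X ^ 2 * (a / ℓ ^ k₁) ≤ (8 + 8 * K + C₂) * X ^ 2 / ℓ ^ k₁ := by
    intro a ha
    rw [← mul_div_assoc, mul_comm (X ^ 2) a]
    gcongr
  -- The three cases: large gcd, large phase, and Siegel–Walfisz when both are powers of `log X`.
  rcases le_or_gt (ℓ ^ (k₁ + 1)) (d₁.gcd d₂ : ℝ) with h1 | h1
  · refine (mainQ_large_gcd hX1 hU hV1 hg).trans (le_trans ?_ (fin (4 + 8 * K) (by linarith)))
    have a1 : (1 + ℓ) / (d₁.gcd d₂ : ℝ) ≤ 2 / ℓ ^ k₁ := by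
      calc (1 + ℓ) / (d₁.gcd d₂ : ℝ) ≤ (2 * ℓ) / ℓ ^ (k₁ + 1) := by
            gcongr; linarith
        _ = _ := by rw [pow_succ]; field_simp
    calc 2 * X ^ 2 * ((1 + ℓ) / (d₁.gcd d₂ : ℝ) + 4 / V) =
        2 * X ^ 2 * ((1 + ℓ) / (d₁.gcd d₂ : ℝ) + 4 * (1 / V)) := by ring
      _ ≤ 2 * X ^ 2 * (2 / ℓ ^ k₁ + 4 * (K / ℓ ^ k₁)) := by gcongr
      _ = _ := by ring
  rcases le_or_gt (ℓ ^ (k₁ + 2)) T with h2 | h2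
  · have hα : α ≠ 0 := by
      rintro rfl
      rw [hT, abs_zero, zero_mul] at h2
      have : 0 < ℓ ^ (k₁ + 2) := by positivity
      linarith
    refine (mainQ_osc hc hc2 hX1 hU hV1 hα d₁ d₂).trans (le_trans ?_ (fin (8 + 4 * K) (by linarith)))
    have a1 : (1 + ℓ) ^ 2 / T ≤ 4 / ℓ ^ k₁ := by
      calc (1 + ℓ) ^ 2 / T ≤ (2 * ℓ) ^ 2 / ℓ ^ (k₁ + 2) := by
            gcongr; linarith
        _ = _ := by rw [pow_add]; field_simp; norm_num
    calc 2 * X ^ 2 * ((1 + ℓ) ^ 2 / T + 2 / V) =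
        2 * X ^ 2 * ((1 + ℓ) ^ 2 / T + 2 * (1 / V)) := by ring
      _ ≤ 2 * X ^ 2 * (4 / ℓ ^ k₁ + 2 * (K / ℓ ^ k₁)) := by gcongr
      _ = _ := by ring
  · refine (hsw c μ X α U V d₁ d₂ hc hc2 hμ hμ1 hX1 le_rfl hV8 hU hd₁ hdX₁ hd₂ hdX₂).trans
      (le_trans ?_ (fin C₂ (by linarith)))
    rw [hlV]
    have a1 : 2 + 7 * T ≤ 9 * ℓ ^ (k₁ + 2) := by
      have : 1 ≤ ℓ ^ (k₁ + 2) := one_le_pow₀ (by linarith)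
      linarith
    calc (d₁.gcd d₂ : ℝ) * (C₀ * (d₁.gcd d₂ : ℝ) / (ℓ / 100) ^ (3 * k₁ + 4) * (2 + 7 * T)) ^ 2 * X ^ 2 * ℓ
        ≤ ℓ ^ (k₁ + 1) * (C₀ * ℓ ^ (k₁ + 1) / (ℓ / 100) ^ (3 * k₁ + 4) * (9 * ℓ ^ (k₁ + 2))) ^ 2 *
          X ^ 2 * ℓ := by gcongr
      _ = _ := by
          rw [hC₂, div_pow ℓ]
          have e1 : (100:ℝ) ^ (6 * k₁ + 8) = (100 ^ (3 * k₁ + 4)) ^ 2 := by rw [← pow_mul]; congr 1; ring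
          rw [e1, div_div_eq_mul_div]
          field_simp
          ring

/-! ### The bilinear sums -/

lemma modEq_lcm_iff {a r d₁ d₂ : ℕ} :
    (a ≡ r [MOD d₁] ∧ a ≡ r [MOD d₂]) ↔ a ≡ r [MOD d₁.lcm d₂] := by
  constructor
  · rintro ⟨h1, h2⟩
    rw [Nat.modEq_iff_dvd, Int.natCast_dvd] at h1 h2 ⊢
    exact Nat.lcm_dvd h1 h2
  · intro h
    exact ⟨h.of_dvd (Nat.dvd_lcm_left _ _), h.of_dvd (Nat.dvd_lcm_right _ _)⟩

lemma exists_class_mul {b d : ℕ} (hb : 1 ≤ b) (hd : 1 ≤ d) (h : b.Coprime d) :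
    ∃ r : ℕ, ∀ m : ℕ, d ∣ b * m + 2 ↔ m ≡ r [MOD d] := by
  obtain ⟨r, hr⟩ := exists_class hb hd h
  obtain ⟨r₁, rfl⟩ := ((hr r).2 rfl).1
  refine ⟨r₁, fun m => ?_⟩
  rw [← Nat.ModEq.mul_left_cancel_iff' (by omega : b ≠ 0), ← hr]
  simp

/-- The conditions `dᵢ ∣ bᵢ m + 2` (`i = 1, 2`) describe one residue class modulo `[d₁, d₂]`, or are
contradictory. -/
lemma pair_class {b₁ b₂ d₁ d₂ : ℕ} (hb₁ : 1 ≤ b₁) (hb₂ : 1 ≤ b₂) (hd₁ : 1 ≤ d₁) (hd₂ : 1 ≤ d₂)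
    (h : b₁.Coprime d₁ ∧ b₂.Coprime d₂ ∧ b₁ ≡ b₂ [MOD d₁.gcd d₂]) :
    ∃ r : ℕ, ∀ m : ℕ, (d₁ ∣ b₁ * m + 2 ∧ d₂ ∣ b₂ * m + 2) ↔ m ≡ r [MOD d₁.lcm d₂] := by
  obtain ⟨h1, h2, h3⟩ := h
  obtain ⟨r₁, hr₁⟩ := exists_class_mul hb₁ hd₁ h1
  obtain ⟨r₂, hr₂⟩ := exists_class_mul hb₂ hd₂ h2
  have e1 : b₁ * r₁ + 2 ≡ 0 [MOD d₁.gcd d₂] :=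
    Nat.modEq_zero_iff_dvd.2 ((Nat.gcd_dvd_left _ _).trans ((hr₁ r₁).2 rfl))
  have e2 : b₂ * r₂ + 2 ≡ 0 [MOD d₁.gcd d₂] :=
    Nat.modEq_zero_iff_dvd.2 ((Nat.gcd_dvd_right _ _).trans ((hr₂ r₂).2 rfl))
  have e3 : b₁ * r₁ ≡ b₂ * r₂ [MOD d₁.gcd d₂] := Nat.ModEq.add_right_cancel' 2 (e1.trans e2.symm)
  have e4 : b₁ * r₁ ≡ b₁ * r₂ [MOD d₁.gcd d₂] := e3.trans (h3.symm.mul_right _)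
  have hc : (d₁.gcd d₂).Coprime b₁ :=
    (Nat.Coprime.coprime_dvd_right (Nat.gcd_dvd_left d₁ d₂) h1).symm
  have e5 : r₁ ≡ r₂ [MOD d₁.gcd d₂] := Nat.ModEq.cancel_left_of_coprime hc e4
  obtain ⟨r, ha, hb⟩ := Nat.chineseRemainder' e5
  refine ⟨r, fun m => ?_⟩
  rw [hr₁, hr₂, ← modEq_lcm_iff]
  exact ⟨fun hh => ⟨hh.1.trans ha.symm, hh.2.trans hb.symm⟩,
    fun hh => ⟨hh.1.trans ha, hh.2.trans hb⟩⟩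

/-- Oddness of the moduli makes `bᵢ` a unit modulo `dᵢ`; on the gcd both `b₁` and `b₂` are then
`-2 / m`. -/
lemma pair_class_necessary {b₁ b₂ d₁ d₂ m : ℕ} (ho₁ : ¬ 2 ∣ d₁) (ho₂ : ¬ 2 ∣ d₂)
    (h1 : d₁ ∣ b₁ * m + 2) (h2 : d₂ ∣ b₂ * m + 2) :
    b₁.Coprime d₁ ∧ b₂.Coprime d₂ ∧ b₁ ≡ b₂ [MOD d₁.gcd d₂] := by
  refine ⟨coprime_of_dvd ho₁ (dvd_mul_right _ _) h1, coprime_of_dvd ho₂ (dvd_mul_right _ _) h2, ?_⟩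
  have e1 : b₁ * m + 2 ≡ 0 [MOD d₁.gcd d₂] :=
    Nat.modEq_zero_iff_dvd.2 ((Nat.gcd_dvd_left _ _).trans h1)
  have e2 : b₂ * m + 2 ≡ 0 [MOD d₁.gcd d₂] :=
    Nat.modEq_zero_iff_dvd.2 ((Nat.gcd_dvd_right _ _).trans h2)
  have e3 : b₁ * m ≡ b₂ * m [MOD d₁.gcd d₂] := Nat.ModEq.add_right_cancel' 2 (e1.trans e2.symm)
  have hm : m.Coprime d₁ := coprime_of_dvd ho₁ (dvd_mul_left _ _) h1
  exact Nat.ModEq.cancel_right_of_coprime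
    (Nat.Coprime.coprime_dvd_right (Nat.gcd_dvd_left d₁ d₂) hm).symm e3

/-- The condition that `n = bm` lies in the window and `d ∣ n + 2`. -/
def Adm (μ X : ℝ) (d b m : ℕ) : Prop := b * m ∈ window μ X ∧ d ∣ b * m + 2

noncomputable instance (μ X : ℝ) (d b m : ℕ) : Decidable (Adm μ X d b m) := Classical.dec _

lemma mul_mem_window {μ X : ℝ} (hμ : 0 ≤ μ) (hX : 0 ≤ X) {b m : ℕ} (hb : 1 ≤ b) :
    b * m ∈ window μ X ↔ μ * X / b < m ∧ (m:ℝ) ≤ X / b := by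
  have hb0 : (0:ℝ) < b := by exact_mod_cast hb
  unfold window
  rw [mem_Ioc, Nat.floor_lt (by positivity), Nat.le_floor_iff hX, div_lt_iff₀ hb0, le_div_iff₀ hb0]
  push_cast
  rw [mul_comm (b:ℝ)]

/-- The sum over `m` that results from expanding the square, compared with its integral. -/
lemma inner_bound {c μ X α U V : ℝ} (hc : 1 ≤ c) (hc2 : c ≤ 17 / 16) (hμ : 0 ≤ μ)
    (hX : 0 < X) (hU : 0 < U) (hV : 0 < V) {d₁ d₂ b₁ b₂ : ℕ} (hd₁ : 1 ≤ d₁) (hd₂ : 1 ≤ d₂)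
    (ho₁ : ¬ 2 ∣ d₁) (ho₂ : ¬ 2 ∣ d₂) (hb₁ : V < b₁) (hb₂ : V < b₂) :
    ‖∑ m ∈ Ioc ⌊U⌋₊ ⌊X / V⌋₊, (if Adm μ X d₁ b₁ m ∧ Adm μ X d₂ b₂ m then
        ((m:ℝ):ℂ) * e (α * ((b₁:ℝ) ^ c - (b₂:ℝ) ^ c) * (m:ℝ) ^ c) else 0) -
      (if b₁.Coprime d₁ ∧ b₂.Coprime d₂ ∧ b₁ ≡ b₂ [MOD d₁.gcd d₂] then
        ((1 / d₁.lcm d₂ : ℝ) : ℂ) * pairInt c μ X α U b₁ b₂ else 0)‖ ≤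
      X / b₁ * (6 + 14 * (|α| * X ^ c)) := by
  have hb₁0 : (0:ℝ) < b₁ := hV.trans hb₁
  have hb₂0 : (0:ℝ) < b₂ := hV.trans hb₂
  have hb₁1 : 1 ≤ b₁ := by exact_mod_cast hb₁0
  have hb₂1 : 1 ≤ b₂ := by exact_mod_cast hb₂0
  have hXc : 0 < X ^ c := Real.rpow_pos_of_pos hX _
  set u := loEnd μ X U b₁ b₂ with hu
  set v := hiEnd X b₁ b₂ with hv
  have hu0 : 0 < u := hU.trans_le (le_max_left _ _)
  have hv0 : 0 < v := lt_min (by positivity) (by positivity)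
  have hset : ∀ m : ℕ, (m ∈ Ioc ⌊U⌋₊ ⌊X / V⌋₊ ∧ (Adm μ X d₁ b₁ m ∧ Adm μ X d₂ b₂ m)) ↔
      (m ∈ Ioc ⌊u⌋₊ ⌊v⌋₊ ∧ (d₁ ∣ b₁ * m + 2 ∧ d₂ ∣ b₂ * m + 2)) := by
    intro m
    unfold Adm
    rw [mul_mem_window hμ hX.le hb₁1, mul_mem_window hμ hX.le hb₂1, mem_Ioc, mem_Ioc,
      Nat.floor_lt hU.le, Nat.floor_lt hu0.le, Nat.le_floor_iff (by positivity), Nat.le_floor_iff hv0.le,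
      hu, hv]
    unfold loEnd hiEnd
    rw [max_lt_iff, max_lt_iff, le_min_iff]
    constructor
    · tauto
    · rintro ⟨⟨⟨h1, h2, h3⟩, h4, h5⟩, h6, h7⟩
      refine ⟨⟨h1, h4.trans ?_⟩, ⟨⟨h2, h4⟩, h6⟩, ⟨h3, h5⟩, h7⟩
      gcongr
  have hsum : ∑ m ∈ Ioc ⌊U⌋₊ ⌊X / V⌋₊, (if Adm μ X d₁ b₁ m ∧ Adm μ X d₂ b₂ m then
        ((m:ℝ):ℂ) * e (α * ((b₁:ℝ) ^ c - (b₂:ℝ) ^ c) * (m:ℝ) ^ c) else 0) =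
      ∑ m ∈ (Ioc ⌊u⌋₊ ⌊v⌋₊).filter (fun m => d₁ ∣ b₁ * m + 2 ∧ d₂ ∣ b₂ * m + 2),
        ((m:ℝ):ℂ) * e (α * ((b₁:ℝ) ^ c - (b₂:ℝ) ^ c) * (m:ℝ) ^ c) := by
    rw [← sum_filter]
    refine sum_congr ?_ fun _ _ => rfl
    ext m
    rw [mem_filter, mem_filter, hset]
  rw [hsum]
  have hpos : 0 ≤ X / b₁ * (6 + 14 * (|α| * X ^ c)) := by positivity
  split_ifs with hK
  · obtain ⟨r, hr⟩ := pair_class hb₁1 hb₂1 hd₁ hd₂ hK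
    simp only [hr]
    rcases lt_or_ge v u with h | h
    · have e1 : Ioc ⌊u⌋₊ ⌊v⌋₊ = ∅ := Ioc_eq_empty (not_lt.2 (Nat.floor_le_floor h.le))
      have e2 : pairInt c μ X α U b₁ b₂ = 0 := by
        unfold pairInt
        rw [← hu, ← hv, Set.Ioc_eq_empty (not_lt.2 h.le)]; simp
      rw [e1, e2]
      simpa using hpos
    · have hlcm : 1 ≤ d₁.lcm d₂ := Nat.lcm_pos hd₁ hd₂
      refine (ap_sum_te hc hc2 hu0.le h hv0 r hlcm).trans ?_
      have hv1 : v ≤ X / b₁ := min_le_left _ _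
      have hv2 : v ≤ X / b₂ := min_le_right _ _
      have hvc : 0 < v ^ c := Real.rpow_pos_of_pos hv0 _
      have hp : ∀ b : ℕ, (0:ℝ) < b → v ≤ X / b → 0 ≤ (b:ℝ) ^ c * v ^ c ∧ (b:ℝ) ^ c * v ^ c ≤ X ^ c := by
        intro b hb hvb
        refine ⟨by positivity, ?_⟩
        rw [← Real.mul_rpow hb.le hv0.le]
        refine Real.rpow_le_rpow (by positivity) ?_ (by linarith)
        rw [le_div_iff₀ hb] at hvb
        linarith
      have hβ : |α * ((b₁:ℝ) ^ c - (b₂:ℝ) ^ c)| * v ^ c ≤ |α| * X ^ c := by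
        rw [abs_mul, mul_assoc, ← abs_of_pos hvc, ← abs_mul]
        gcongr
        rw [sub_mul, abs_le]
        have p1 := hp b₁ hb₁0 hv1
        have p2 := hp b₂ hb₂0 hv2
        constructor <;> linarith [p1.1, p1.2, p2.1, p2.2]
      gcongr
  · rw [filter_false_of_mem, sum_empty]
    · simpa using hpos
    · rintro m - ⟨h1, h2⟩
      exact hK (pair_class_necessary ho₁ ho₂ h1 h2)

/-- `∑_{d₁, d₂ ≤ N} 1 / [d₁, d₂] ≤ (1 + log N)³`. -/
lemma sum_inv_lcm_le {N : ℕ} (hN : 1 ≤ N) :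
    ∑ d₁ ∈ Icc 1 N, ∑ d₂ ∈ Icc 1 N, 1 / ((d₁.lcm d₂ : ℕ) : ℝ) ≤ (1 + Real.log N) ^ 3 := by
  have hH : ∑ d ∈ Icc 1 N, 1 / (d:ℝ) ≤ 1 + Real.log N := by
    have := harmonic_le_one_add_log N
    rw [harmonic_eq_sum_Icc] at this
    push_cast at this
    simpa [one_div] using this
  have hlog : 0 ≤ Real.log N := Real.log_nonneg (by exact_mod_cast hN)
  have hmult : ∀ g ∈ Icc 1 N, ∑ d ∈ Icc 1 N, (if g ∣ d then 1 / (d:ℝ) else 0) ≤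
      1 / g * (1 + Real.log N) := by
    intro g hg
    have hg1 := (mem_Icc.1 hg).1
    rw [← sum_filter]
    calc ∑ d ∈ (Icc 1 N).filter (g ∣ ·), 1 / (d:ℝ) ≤
        ∑ d ∈ (Icc 1 N).image (g * ·), 1 / (d:ℝ) := by
          refine sum_le_sum_of_subset_of_nonneg (fun d hd => ?_) fun _ _ _ => by positivity
          obtain ⟨h1, k, rfl⟩ := mem_filter.1 hd
          rw [mem_Icc] at h1
          refine mem_image.2 ⟨k, mem_Icc.2 ⟨?_, ?_⟩, rfl⟩
          · by_contra h0
            have : k = 0 := by omega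
            subst this
            simp at h1
          · exact (Nat.le_mul_of_pos_left k hg1).trans h1.2
      _ = ∑ d ∈ Icc 1 N, 1 / ((g * d : ℕ) : ℝ) :=
          sum_image fun a _ b _ hab => Nat.eq_of_mul_eq_mul_left hg1 hab
      _ = 1 / g * ∑ d ∈ Icc 1 N, 1 / (d:ℝ) := by
          rw [mul_sum]
          refine sum_congr rfl fun d _ => ?_
          push_cast
          rw [div_mul_div_comm, one_mul]
      _ ≤ _ := by gcongr
  have h1 : ∀ d₁ ∈ Icc 1 N, ∀ d₂ ∈ Icc 1 N, 1 / ((d₁.lcm d₂ : ℕ) : ℝ) ≤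
      ∑ g ∈ Icc 1 N, (g:ℝ) * ((if g ∣ d₁ then 1 / (d₁:ℝ) else 0) * (if g ∣ d₂ then 1 / (d₂:ℝ) else 0)) := by
    intro d₁ hd₁ d₂ hd₂
    rw [mem_Icc] at hd₁ hd₂
    have hg0 : 0 < d₁.gcd d₂ := Nat.gcd_pos_of_pos_left _ hd₁.1
    have hmem : d₁.gcd d₂ ∈ Icc 1 N :=
      mem_Icc.2 ⟨hg0, (Nat.gcd_le_left _ hd₁.1).trans hd₁.2⟩
    refine le_trans (le_of_eq ?_) (single_le_sum (f := fun g : ℕ => (g:ℝ) *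
      ((if g ∣ d₁ then 1 / (d₁:ℝ) else 0) * (if g ∣ d₂ then 1 / (d₂:ℝ) else 0))) (fun g _ => ?_) hmem)
    · rw [if_pos (Nat.gcd_dvd_left _ _), if_pos (Nat.gcd_dvd_right _ _)]
      have e1 : ((d₁.gcd d₂ : ℕ) : ℝ) * ((d₁.lcm d₂ : ℕ) : ℝ) = d₁ * d₂ := by
        exact_mod_cast Nat.gcd_mul_lcm d₁ d₂
      have hl0 : (0:ℝ) < ((d₁.lcm d₂ : ℕ) : ℝ) := by exact_mod_cast Nat.lcm_pos hd₁.1 hd₂.1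
      have p1 : (0:ℝ) < d₁ := by exact_mod_cast hd₁.1
      have p2 : (0:ℝ) < d₂ := by exact_mod_cast hd₂.1
      field_simp
      linarith
    · split_ifs <;> positivity
  calc _ ≤ ∑ d₁ ∈ Icc 1 N, ∑ d₂ ∈ Icc 1 N, ∑ g ∈ Icc 1 N, (g:ℝ) *
        ((if g ∣ d₁ then 1 / (d₁:ℝ) else 0) * (if g ∣ d₂ then 1 / (d₂:ℝ) else 0)) :=
        sum_le_sum fun d₁ h₁ => sum_le_sum fun d₂ h₂ => h1 d₁ h₁ d₂ h₂
    _ = ∑ g ∈ Icc 1 N, (g:ℝ) * ((∑ d ∈ Icc 1 N, if g ∣ d then 1 / (d:ℝ) else 0) *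
          (∑ d ∈ Icc 1 N, if g ∣ d then 1 / (d:ℝ) else 0)) := by
        symm
        simp only [sum_mul_sum]
        simp only [mul_sum]
        rw [sum_comm]
        refine sum_congr rfl fun d₁ _ => ?_
        rw [sum_comm]
    _ ≤ ∑ g ∈ Icc 1 N, (1 + Real.log N) ^ 2 * (1 / (g:ℝ)) := by
        refine sum_le_sum fun g hg => ?_
        have hg0 : (0:ℝ) < g := by exact_mod_cast (mem_Icc.1 hg).1
        have hm := hmult g hg
        have hnn : 0 ≤ ∑ d ∈ Icc 1 N, (if g ∣ d then 1 / (d:ℝ) else 0) :=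
          sum_nonneg fun d _ => by split_ifs <;> positivity
        calc _ ≤ (g:ℝ) * ((1 / g * (1 + Real.log N)) * (1 / g * (1 + Real.log N))) := by gcongr
          _ = _ := by field_simp
    _ ≤ (1 + Real.log N) ^ 2 * (1 + Real.log N) := by
        rw [← mul_sum]; gcongr
    _ = _ := by ring

/-- The part of Vaughan's identity with both variables large, parametrised by the factorisation
`n = b m` with `V < b ≤ X / U` and `U < m ≤ X / V`. -/
lemma third_eq {X U V : ℝ} (hU : 0 < U) (hV : 0 < V) {n : ℕ} (hn : n ≠ 0) (hnX : (n:ℝ) ≤ X) :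
    ∑ b ∈ n.divisors.filter (fun b : ℕ => ¬ (b:ℝ) ≤ V), (moebius b : ℝ) * bigLam U (n / b) =
      ∑ b ∈ Ioc ⌊V⌋₊ ⌊X / U⌋₊, ∑ m ∈ Ioc ⌊U⌋₊ ⌊X / V⌋₊,
        if b * m = n then (moebius b : ℝ) * bigLam U m else 0 := by
  have hX0 : 0 ≤ X := (Nat.cast_nonneg n).trans hnX
  have h1 : ∀ b ∈ Ioc ⌊V⌋₊ ⌊X / U⌋₊, ∑ m ∈ Ioc ⌊U⌋₊ ⌊X / V⌋₊,
      (if b * m = n then (moebius b : ℝ) * bigLam U m else 0) =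
      if b ∣ n then (moebius b : ℝ) * bigLam U (n / b) else 0 := by
    intro b hb
    rw [mem_Ioc, Nat.floor_lt hV.le] at hb
    have hb0 : (0:ℝ) < b := hV.trans hb.1
    have hb1 : 0 < b := by exact_mod_cast hb0
    split_ifs with h
    · obtain ⟨k, rfl⟩ := h
      rw [Nat.mul_div_cancel_left k hb1]
      have : ∀ m, (b * m = b * k) ↔ (m = k) := fun m => Nat.mul_right_inj hb1.ne'
      simp only [this]
      rw [sum_ite_eq']
      split_ifs with hk
      · rfl
      · rw [bigLam_eq_zero, mul_zero]
        by_contra hcon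
        push Not at hcon
        refine hk (mem_Ioc.2 ⟨(Nat.floor_lt hU.le).2 hcon, (Nat.le_floor_iff (by positivity)).2 ?_⟩)
        rw [le_div_iff₀ hV]
        push_cast at hnX
        nlinarith [hb.1, Nat.cast_nonneg (α := ℝ) k]
    · refine sum_eq_zero fun m _ => if_neg ?_
      rintro rfl
      exact h (dvd_mul_right _ _)
  rw [sum_congr rfl h1, ← sum_filter]
  symm
  refine sum_subset (fun b hb => ?_) fun b hb hb' => ?_
  · rw [mem_filter, mem_Ioc, Nat.floor_lt hV.le] at hb
    rw [mem_filter, Nat.mem_divisors]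
    exact ⟨⟨hb.2, hn⟩, not_le.2 hb.1.1⟩
  · rw [mem_filter, Nat.mem_divisors, not_le] at hb
    have hb0 : (0:ℝ) < b := hV.trans hb.2
    rw [bigLam_eq_zero, mul_zero]
    rw [mem_filter, mem_Ioc, Nat.floor_lt hV.le, Nat.le_floor_iff (by positivity)] at hb'
    have h2 : X / U < b := by
      by_contra h
      exact hb' ⟨⟨hb.2, not_lt.1 h⟩, hb.1.1⟩
    refine Nat.cast_div_le.trans ?_
    rw [div_le_iff₀ hb0]
    rw [div_lt_iff₀ hU] at h2
    linarith

/-- The coefficient of `bigLam U m` in the weighted bilinear sum. -/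
noncomputable def bilin (c μ X α U V : ℝ) (lam : ℕ → ℝ) (N : ℕ) (m : ℕ) : ℂ :=
  ∑ p ∈ Icc 1 N ×ˢ Ioc ⌊V⌋₊ ⌊X / U⌋₊, if Adm μ X p.1 p.2 m then
    ((lam p.1 * moebius p.2 : ℝ) : ℂ) * e (α * (p.2:ℝ) ^ c * (m:ℝ) ^ c) else 0

/-- The bilinear part of Vaughan's identity, with `n = b m` and the long variable `m` outside. -/
lemma typeII_eq {c μ X α U V : ℝ} (hX : 0 ≤ X) (hU : 0 < U) (hV : 0 < V)
    (lam : ℕ → ℝ) (N : ℕ) :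
    ∑ d ∈ Icc 1 N, (lam d : ℂ) * ∑ n ∈ (window μ X).filter (fun n => d ∣ n + 2),
      ((∑ b ∈ n.divisors.filter (fun b : ℕ => ¬ (b:ℝ) ≤ V), (moebius b : ℝ) * bigLam U (n / b) : ℝ) : ℂ) *
        e (α * (n:ℝ) ^ c) =
    ∑ m ∈ Ioc ⌊U⌋₊ ⌊X / V⌋₊, (bigLam U m : ℂ) * bilin c μ X α U V lam N m := by
  have h1 : ∀ d ∈ Icc 1 N, (lam d : ℂ) * ∑ n ∈ (window μ X).filter (fun n => d ∣ n + 2),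
      ((∑ b ∈ n.divisors.filter (fun b : ℕ => ¬ (b:ℝ) ≤ V), (moebius b : ℝ) * bigLam U (n / b) : ℝ) : ℂ) *
        e (α * (n:ℝ) ^ c) =
      ∑ b ∈ Ioc ⌊V⌋₊ ⌊X / U⌋₊, ∑ m ∈ Ioc ⌊U⌋₊ ⌊X / V⌋₊,
        (bigLam U m : ℂ) * if Adm μ X d b m then
          ((lam d * moebius b : ℝ) : ℂ) * e (α * (b:ℝ) ^ c * (m:ℝ) ^ c) else 0 := by
    intro d _
    have h2 : ∀ n ∈ (window μ X).filter (fun n => d ∣ n + 2),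
        ((∑ b ∈ n.divisors.filter (fun b : ℕ => ¬ (b:ℝ) ≤ V), (moebius b : ℝ) * bigLam U (n / b) : ℝ) : ℂ) *
        e (α * (n:ℝ) ^ c) = ∑ b ∈ Ioc ⌊V⌋₊ ⌊X / U⌋₊, ∑ m ∈ Ioc ⌊U⌋₊ ⌊X / V⌋₊,
          if b * m = n then ((moebius b : ℝ) : ℂ) * (bigLam U m : ℂ) *
            e (α * (b:ℝ) ^ c * (m:ℝ) ^ c) else 0 := by
      intro n hn
      rw [mem_filter] at hn
      have hn1 := mem_Ioc.1 hn.1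
      rw [third_eq hU hV (by omega) ((Nat.le_floor_iff hX).1 hn1.2)]
      push_cast
      rw [sum_mul]
      refine sum_congr rfl fun b _ => ?_
      rw [sum_mul]
      refine sum_congr rfl fun m _ => ?_
      split_ifs with h
      · subst h
        push_cast
        rw [Real.mul_rpow (Nat.cast_nonneg _) (Nat.cast_nonneg _), mul_assoc α]
      · simp
    rw [sum_congr rfl h2, sum_comm, mul_sum]
    refine sum_congr rfl fun b _ => ?_
    rw [sum_comm, mul_sum]
    refine sum_congr rfl fun m _ => ?_
    rw [sum_ite_eq]
    have : b * m ∈ (window μ X).filter (fun n => d ∣ n + 2) ↔ Adm μ X d b m := by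
      rw [mem_filter]; rfl
    by_cases h : Adm μ X d b m
    · rw [if_pos h, if_pos (this.2 h)]
      push_cast; ring
    · rw [if_neg h, if_neg (fun h' => h (this.1 h'))]
      simp
  rw [sum_congr rfl h1]
  symm
  unfold bilin
  simp only [sum_product, mul_sum]
  rw [sum_comm]
  refine sum_congr rfl fun d _ => ?_
  rw [sum_comm]

/-- Expanding the square in the bilinear sum. -/
lemma bilin_sq {c μ X α U V : ℝ} (lam : ℕ → ℝ) (N : ℕ) :
    ((∑ m ∈ Ioc ⌊U⌋₊ ⌊X / V⌋₊, (m:ℝ) * ‖bilin c μ X α U V lam N m‖ ^ 2 : ℝ) : ℂ) =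
    ∑ p ∈ Icc 1 N ×ˢ Ioc ⌊V⌋₊ ⌊X / U⌋₊, ∑ q ∈ Icc 1 N ×ˢ Ioc ⌊V⌋₊ ⌊X / U⌋₊,
      ((lam p.1 * moebius p.2 * (lam q.1 * moebius q.2) : ℝ) : ℂ) *
      ∑ m ∈ Ioc ⌊U⌋₊ ⌊X / V⌋₊, (if Adm μ X p.1 p.2 m ∧ Adm μ X q.1 q.2 m then
        ((m:ℝ):ℂ) * e (α * ((p.2:ℝ) ^ c - (q.2:ℝ) ^ c) * (m:ℝ) ^ c) else 0) := by
  have h1 : ∀ m : ℕ, (((m:ℝ) * ‖bilin c μ X α U V lam N m‖ ^ 2 : ℝ) : ℂ) =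
      ∑ p ∈ Icc 1 N ×ˢ Ioc ⌊V⌋₊ ⌊X / U⌋₊, ∑ q ∈ Icc 1 N ×ˢ Ioc ⌊V⌋₊ ⌊X / U⌋₊,
      ((lam p.1 * moebius p.2 * (lam q.1 * moebius q.2) : ℝ) : ℂ) *
      (if Adm μ X p.1 p.2 m ∧ Adm μ X q.1 q.2 m then
        ((m:ℝ):ℂ) * e (α * ((p.2:ℝ) ^ c - (q.2:ℝ) ^ c) * (m:ℝ) ^ c) else 0) := by
    intro m
    push_cast
    rw [← Complex.mul_conj']
    unfold bilin
    rw [map_sum, sum_mul_sum, mul_sum]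
    refine sum_congr rfl fun p _ => ?_
    rw [mul_sum]
    refine sum_congr rfl fun q _ => ?_
    by_cases hp : Adm μ X p.1 p.2 m
    · by_cases hq : Adm μ X q.1 q.2 m
      · rw [if_pos hp, if_pos hq, if_pos ⟨hp, hq⟩, map_mul, Complex.conj_ofReal, conj_e]
        have : e (α * ((p.2:ℝ) ^ c - (q.2:ℝ) ^ c) * (m:ℝ) ^ c) =
            e (α * (p.2:ℝ) ^ c * (m:ℝ) ^ c) * e (-(α * (q.2:ℝ) ^ c * (m:ℝ) ^ c)) := by
          rw [← e_add]; congr 1; ring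
        rw [this]
        push_cast
        ring
      · simp [hq]
    · simp [hp]
  rw [Complex.ofReal_sum]
  rw [sum_congr rfl fun m _ => h1 m, sum_comm]
  refine sum_congr rfl fun p _ => ?_
  rw [sum_comm]
  refine sum_congr rfl fun q _ => ?_
  rw [mul_sum]

/-- The dispersion: main terms `mainQ` weighted by `1 / lcm(d₁, d₂)`, and the error of replacing sums
by integrals. -/
lemma bilin_sq_bound {c μ X α U V : ℝ} (hc : 1 ≤ c) (hc2 : c ≤ 17 / 16) (hμ : 0 ≤ μ)
    (hX : 1 ≤ X) (hU : 1 ≤ U) (hV : 1 ≤ V) (lam : ℕ → ℝ) (hl : ∀ d, |lam d| ≤ 1)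
    (hl2 : ∀ d, 2 ∣ d → lam d = 0) (N : ℕ) :
    ∑ m ∈ Ioc ⌊U⌋₊ ⌊X / V⌋₊, (m:ℝ) * ‖bilin c μ X α U V lam N m‖ ^ 2 ≤
      ∑ d₁ ∈ Icc 1 N, ∑ d₂ ∈ Icc 1 N, 1 / ((d₁.lcm d₂ : ℕ) : ℝ) * ‖mainQ c μ X α U V d₁ d₂‖ +
      (N:ℝ) ^ 2 * (X / U) * (X * (1 + Real.log X) * (6 + 14 * (|α| * X ^ c))) := by
  have hX0 : 0 < X := by linarith
  have hU0 : 0 < U := by linarith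
  have hV0 : 0 < V := by linarith
  have hXc : 0 < X ^ c := Real.rpow_pos_of_pos hX0 _
  have hlog : 0 ≤ Real.log X := Real.log_nonneg hX
  set B := Ioc ⌊V⌋₊ ⌊X / U⌋₊ with hB
  set P := Icc 1 N ×ˢ B with hP
  set E := 6 + 14 * (|α| * X ^ c) with hE
  have hE0 : 0 ≤ E := by positivity
  set w : ℕ × ℕ → ℝ := fun p => lam p.1 * moebius p.2 with hw
  have hw1 : ∀ p, |w p| ≤ 1 := by
    intro p
    simp only [hw, abs_mul]
    have h1 : |((moebius p.2 : ℤ) : ℝ)| ≤ 1 := by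
      exact_mod_cast ArithmeticFunction.abs_moebius_le_one
    calc _ ≤ (1:ℝ) * 1 := mul_le_mul (hl _) h1 (abs_nonneg _) zero_le_one
      _ = 1 := one_mul 1
  set Km : ℕ × ℕ → ℕ × ℕ → ℂ := fun p q =>
    if p.2.Coprime p.1 ∧ q.2.Coprime q.1 ∧ p.2 ≡ q.2 [MOD p.1.gcd q.1] then
        ((1 / p.1.lcm q.1 : ℝ) : ℂ) * pairInt c μ X α U p.2 q.2 else 0 with hKm
  have hmain : ∑ p ∈ P, ∑ q ∈ P, ((w p * w q : ℝ) : ℂ) * Km p q =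
      ∑ d₁ ∈ Icc 1 N, ∑ d₂ ∈ Icc 1 N,
        ((lam d₁ * lam d₂ * (1 / ((d₁.lcm d₂ : ℕ) : ℝ)) : ℝ) : ℂ) * mainQ c μ X α U V d₁ d₂ := by
    simp only [hP, sum_product]
    refine sum_congr rfl fun d₁ _ => ?_
    rw [sum_comm]
    refine sum_congr rfl fun d₂ _ => ?_
    unfold mainQ
    rw [mul_sum]
    refine sum_congr rfl fun b₁ _ => ?_
    rw [mul_sum]
    refine sum_congr rfl fun b₂ _ => ?_
    simp only [hKm, hw]
    split_ifs
    · push_cast; ring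
    · simp
  have hdiff : ‖((∑ m ∈ Ioc ⌊U⌋₊ ⌊X / V⌋₊, (m:ℝ) * ‖bilin c μ X α U V lam N m‖ ^ 2 : ℝ) : ℂ) -
      ∑ p ∈ P, ∑ q ∈ P, ((w p * w q : ℝ) : ℂ) * Km p q‖ ≤
      ∑ p ∈ P, ∑ q ∈ P, X / p.2 * E := by
    rw [bilin_sq, ← sum_sub_distrib]
    refine norm_sum_le_of_le _ fun p hp => ?_
    rw [← sum_sub_distrib]
    refine norm_sum_le_of_le _ fun q hq => ?_
    rw [← mul_sub, norm_mul, Complex.norm_real, Real.norm_eq_abs]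
    change |w p * w q| * _ ≤ _
    rw [mem_product, mem_Icc, mem_Ioc, Nat.floor_lt hV0.le] at hp hq
    have hb0 : (0:ℝ) < p.2 := hV0.trans hp.2.1
    have hr : 0 ≤ X / p.2 * E := by positivity
    by_cases h1 : 2 ∣ p.1
    · have : w p = 0 := by simp [hw, hl2 _ h1]
      rw [this]; simpa using hr
    by_cases h2 : 2 ∣ q.1
    · have : w q = 0 := by simp [hw, hl2 _ h2]
      rw [this]; simpa using hr
    have hwpq : |w p * w q| ≤ 1 := by
      rw [abs_mul]
      calc _ ≤ (1:ℝ) * 1 := mul_le_mul (hw1 _) (hw1 _) (abs_nonneg _) zero_le_one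
        _ = 1 := one_mul 1
    have hin := inner_bound (α := α) hc hc2 hμ hX0 hU0 hV0 hp.1.1 hq.1.1 h1 h2 hp.2.1 hq.2.1
    calc _ ≤ 1 * (X / p.2 * E) := mul_le_mul hwpq hin (norm_nonneg _) zero_le_one
      _ = _ := one_mul _
  have hcardB : (#B : ℝ) ≤ X / U := by
    rw [hB, Nat.card_Ioc]
    calc ((⌊X / U⌋₊ - ⌊V⌋₊ : ℕ) : ℝ) ≤ (⌊X / U⌋₊ : ℝ) := by exact_mod_cast Nat.sub_le _ _
      _ ≤ _ := Nat.floor_le (by positivity)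
  have herr : ∑ p ∈ P, ∑ q ∈ P, X / (p.2:ℝ) * E ≤
      (N:ℝ) ^ 2 * (X / U) * (X * (1 + Real.log X) * E) := by
    have hs : ∑ b ∈ B, 1 / (b:ℝ) ≤ 1 + Real.log X := sum_inv_le (div_le_self hX0.le hU) hX
    have e1 : ∑ p ∈ P, ∑ q ∈ P, X / (p.2:ℝ) * E =
        (N:ℝ) * #B * (N * (X * E * ∑ b ∈ B, 1 / (b:ℝ))) := by
      simp only [sum_const, nsmul_eq_mul]
      rw [← mul_sum, hP, card_product, sum_product]
      simp only [sum_const, nsmul_eq_mul, Nat.card_Icc, mul_sum]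
      push_cast [Nat.add_sub_cancel]
      refine sum_congr rfl fun b _ => ?_
      ring
    rw [e1]
    calc (N:ℝ) * #B * (N * (X * E * ∑ b ∈ B, 1 / (b:ℝ))) ≤
        (N:ℝ) * (X / U) * (N * (X * E * (1 + Real.log X))) := by gcongr
      _ = _ := by ring
  have hmain2 : ‖∑ p ∈ P, ∑ q ∈ P, ((w p * w q : ℝ) : ℂ) * Km p q‖ ≤
      ∑ d₁ ∈ Icc 1 N, ∑ d₂ ∈ Icc 1 N, 1 / ((d₁.lcm d₂ : ℕ) : ℝ) * ‖mainQ c μ X α U V d₁ d₂‖ := by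
    rw [hmain]
    refine norm_sum_le_of_le _ fun d₁ _ => norm_sum_le_of_le _ fun d₂ _ => ?_
    rw [norm_mul, Complex.norm_real, Real.norm_eq_abs, abs_mul, abs_mul,
      abs_of_nonneg (by positivity : (0:ℝ) ≤ 1 / ((d₁.lcm d₂ : ℕ) : ℝ))]
    refine mul_le_mul_of_nonneg_right ?_ (norm_nonneg _)
    calc _ ≤ (1 * 1) * (1 / ((d₁.lcm d₂ : ℕ) : ℝ)) := by
          refine mul_le_mul_of_nonneg_right ?_ (by positivity)
          exact mul_le_mul (hl _) (hl _) (abs_nonneg _) zero_le_one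
      _ = _ := by ring
  have hnn : 0 ≤ ∑ m ∈ Ioc ⌊U⌋₊ ⌊X / V⌋₊, (m:ℝ) * ‖bilin c μ X α U V lam N m‖ ^ 2 :=
    sum_nonneg fun _ _ => by positivity
  have hnorm : ‖((∑ m ∈ Ioc ⌊U⌋₊ ⌊X / V⌋₊, (m:ℝ) * ‖bilin c μ X α U V lam N m‖ ^ 2 : ℝ) : ℂ)‖ =
      ∑ m ∈ Ioc ⌊U⌋₊ ⌊X / V⌋₊, (m:ℝ) * ‖bilin c μ X α U V lam N m‖ ^ 2 := by
    rw [Complex.norm_real, Real.norm_eq_abs, abs_of_nonneg hnn]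
  rw [← hnorm]
  have htri := norm_add_le (((∑ m ∈ Ioc ⌊U⌋₊ ⌊X / V⌋₊, (m:ℝ) * ‖bilin c μ X α U V lam N m‖ ^ 2 : ℝ) : ℂ) -
      ∑ p ∈ P, ∑ q ∈ P, ((w p * w q : ℝ) : ℂ) * Km p q) (∑ p ∈ P, ∑ q ∈ P, ((w p * w q : ℝ) : ℂ) * Km p q)
  rw [sub_add_cancel] at htri
  linarith

/-- Cauchy's inequality for the bilinear sum. -/
lemma typeII_cauchy {c μ X α U V : ℝ} (hX : 1 ≤ X) (hU : 1 ≤ U) (hV : 1 ≤ V)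
    (lam : ℕ → ℝ) (N : ℕ) :
    ‖∑ m ∈ Ioc ⌊U⌋₊ ⌊X / V⌋₊, (bigLam U m : ℂ) * bilin c μ X α U V lam N m‖ ^ 2 ≤
      (Real.log X ^ 2 * (1 + Real.log X)) *
        ∑ m ∈ Ioc ⌊U⌋₊ ⌊X / V⌋₊, (m:ℝ) * ‖bilin c μ X α U V lam N m‖ ^ 2 := by
  have hX0 : 0 < X := by linarith
  have hU0 : 0 < U := by linarith
  have hV0 : 0 < V := by linarith
  have hlog : 0 ≤ Real.log X := Real.log_nonneg hX
  have hm0 : ∀ m ∈ Ioc ⌊U⌋₊ ⌊X / V⌋₊, (0:ℝ) < m ∧ (m:ℝ) ≤ X := by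
    intro m hm
    rw [mem_Ioc, Nat.floor_lt hU0.le, Nat.le_floor_iff (by positivity)] at hm
    exact ⟨hU0.trans hm.1, hm.2.trans (div_le_self hX0.le hV)⟩
  have h1 : ‖∑ m ∈ Ioc ⌊U⌋₊ ⌊X / V⌋₊, (bigLam U m : ℂ) * bilin c μ X α U V lam N m‖ ≤
      ∑ m ∈ Ioc ⌊U⌋₊ ⌊X / V⌋₊, bigLam U m * ‖bilin c μ X α U V lam N m‖ := by
    refine norm_sum_le_of_le _ fun m _ => ?_
    rw [norm_mul, Complex.norm_real, Real.norm_eq_abs, abs_of_nonneg (bigLam_nonneg _ _)]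
  have h2 := sum_sq_le_sum_mul_sum_of_sq_le_mul (Ioc ⌊U⌋₊ ⌊X / V⌋₊)
    (r := fun m => bigLam U m * ‖bilin c μ X α U V lam N m‖)
    (f := fun m => bigLam U m ^ 2 / m) (g := fun m => (m:ℝ) * ‖bilin c μ X α U V lam N m‖ ^ 2)
    (fun m _ => by positivity) (fun m _ => by positivity) (fun m hm => by
      have := (hm0 m hm).1
      refine le_of_eq ?_
      field_simp)
  have h3 : ∑ m ∈ Ioc ⌊U⌋₊ ⌊X / V⌋₊, bigLam U m ^ 2 / (m:ℝ) ≤ Real.log X ^ 2 * (1 + Real.log X) := by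
    calc _ ≤ ∑ m ∈ Ioc ⌊U⌋₊ ⌊X / V⌋₊, Real.log X ^ 2 * (1 / (m:ℝ)) := by
          refine sum_le_sum fun m hm => ?_
          rw [div_eq_mul_one_div]
          have h0 := hm0 m hm
          have hle : bigLam U m ≤ Real.log X :=
            (bigLam_le U m).trans (Real.log_le_log h0.1 h0.2)
          have := bigLam_nonneg U m
          gcongr
      _ ≤ _ := by
          rw [← mul_sum]
          gcongr
          exact sum_inv_le (div_le_self hX0.le hV) hX
  calc _ ≤ (∑ m ∈ Ioc ⌊U⌋₊ ⌊X / V⌋₊, bigLam U m * ‖bilin c μ X α U V lam N m‖) ^ 2 := by gcongr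
    _ ≤ _ := h2
    _ ≤ _ := mul_le_mul_of_nonneg_right h3 (sum_nonneg fun _ _ => by positivity)

/-- The bilinear part of Vaughan's identity saves an arbitrary power of `log X`: the
off-diagonal main terms are controlled by cancellation of the Möbius function, and the errors
by `ξ + 3δ < 12/25`. -/
theorem typeII_bound {δ ξ : ℝ} (hδ : 0 < δ) (hξ : 0 < ξ) (hδξ : ξ + 3 * δ < 12 / 25) (k : ℕ) :
    ∃ C : ℝ, 1 ≤ C ∧ ∀ (c μ X α : ℝ) (lam : ℕ → ℝ) (N : ℕ), 1 ≤ c → c ≤ 17 / 16 → 0 < μ → μ ≤ 1 →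
      Real.exp 800 ≤ X → |α| * X ^ c ≤ X ^ ξ → (∀ d, |lam d| ≤ 1) → (∀ d, 2 ∣ d → lam d = 0) →
      1 ≤ N → (N:ℝ) ≤ X ^ δ →
      ‖∑ d ∈ Icc 1 N, (lam d : ℂ) * ∑ n ∈ (window μ X).filter (fun n => d ∣ n + 2),
        ((∑ b ∈ n.divisors.filter (fun b : ℕ => ¬ (b:ℝ) ≤ X ^ (1/100:ℝ)),
          (moebius b : ℝ) * bigLam (X ^ (49/100:ℝ)) (n / b) : ℝ) : ℂ) * e (α * (n:ℝ) ^ c)‖ ≤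
      C * X / Real.log X ^ k := by
  obtain ⟨C, hC1, hC⟩ := mainQ_bound (2 * k + 6)
  set K : ℝ := (2 * k + 4).factorial / (1/100 : ℝ) ^ (2 * k + 4) with hK
  have hK0 : 0 < K := by positivity
  refine ⟨16 * C + 80 * K, by linarith, ?_⟩
  intro c μ X α lam N hc hc2 hμ hμ1 hX hα hl hl2 hN hND
  have hX1 : 1 ≤ X := (Real.one_le_exp (by norm_num)).trans hX
  have hX0 : 0 < X := by linarith
  have hlog : 800 ≤ Real.log X := by rwa [Real.le_log_iff_exp_le hX0]
  have hlog0 : 0 < Real.log X := by linarith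
  set U := X ^ (49/100:ℝ) with hU
  set V := X ^ (1/100:ℝ) with hV
  have hU1 : 1 ≤ U := Real.one_le_rpow hX1 (by norm_num)
  have hV1 : 1 ≤ V := Real.one_le_rpow hX1 (by norm_num)
  have hNX : (N:ℝ) ≤ X := hND.trans (by
    calc X ^ δ ≤ X ^ (1:ℝ) := Real.rpow_le_rpow_of_exponent_le hX1 (by linarith)
      _ = X := Real.rpow_one X)
  rw [typeII_eq hX0.le (by linarith) (by linarith)]
  have h1 := typeII_cauchy (c := c) (μ := μ) (α := α) hX1 hU1 hV1 lam N
  have h2 := bilin_sq_bound (α := α) hc hc2 hμ.le hX1 hU1 hV1 lam hl hl2 N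
  set S := ‖∑ m ∈ Ioc ⌊U⌋₊ ⌊X / V⌋₊, (bigLam U m : ℂ) * bilin c μ X α U V lam N m‖ with hS
  set ℓ := Real.log X with hℓ
  have hXξ : 1 ≤ X ^ ξ := Real.one_le_rpow hX1 hξ.le
  have h3 : ∑ d₁ ∈ Icc 1 N, ∑ d₂ ∈ Icc 1 N, 1 / ((d₁.lcm d₂ : ℕ) : ℝ) * ‖mainQ c μ X α U V d₁ d₂‖ ≤
      8 * C * X ^ 2 * ℓ ^ 3 / ℓ ^ (2 * k + 6) := by
    have hlogN : Real.log N ≤ ℓ := Real.log_le_log (by exact_mod_cast hN) hNX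
    have hlogN0 : 0 ≤ Real.log N := Real.log_nonneg (by exact_mod_cast hN)
    calc _ ≤ ∑ d₁ ∈ Icc 1 N, ∑ d₂ ∈ Icc 1 N, 1 / ((d₁.lcm d₂ : ℕ) : ℝ) * (C * X ^ 2 / ℓ ^ (2 * k + 6)) := by
          refine sum_le_sum fun d₁ hd₁ => sum_le_sum fun d₂ hd₂ => ?_
          rw [mem_Icc] at hd₁ hd₂
          refine mul_le_mul_of_nonneg_left ?_ (by positivity)
          exact hC c μ X α U d₁ d₂ hc hc2 hμ hμ1 hX hU1 hd₁.1
            (le_trans (by exact_mod_cast hd₁.2) hNX) hd₂.1 (le_trans (by exact_mod_cast hd₂.2) hNX)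
      _ = (∑ d₁ ∈ Icc 1 N, ∑ d₂ ∈ Icc 1 N, 1 / ((d₁.lcm d₂ : ℕ) : ℝ)) * (C * X ^ 2 / ℓ ^ (2 * k + 6)) := by
          simp only [sum_mul]
      _ ≤ (2 * ℓ) ^ 3 * (C * X ^ 2 / ℓ ^ (2 * k + 6)) := by
          refine mul_le_mul_of_nonneg_right ?_ (by positivity)
          refine (sum_inv_lcm_le hN).trans ?_
          gcongr
          linarith
      _ = _ := by ring
  -- The exponent is `2 δ + 51/100 + 1 + ξ ≤ 199/100`, by `ξ + 3 δ < 12/25`.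
  have h4 : (N:ℝ) ^ 2 * (X / U) * (X * (1 + ℓ) * (6 + 14 * (|α| * X ^ c))) ≤
      40 * ℓ * X ^ (199/100 : ℝ) := by
    calc _ ≤ (X ^ δ) ^ 2 * (X / U) * (X * (2 * ℓ) * (20 * X ^ ξ)) := by
          gcongr <;> linarith
      _ = 40 * ℓ * (X ^ (2 * δ) * X ^ (1 - 49/100 : ℝ) * X ^ (1:ℝ) * X ^ ξ) := by
          rw [Real.rpow_sub hX0, Real.rpow_one, mul_comm 2 δ, Real.rpow_mul hX0.le, Real.rpow_two]
          ring
      _ = 40 * ℓ * X ^ (2 * δ + (1 - 49/100) + 1 + ξ) := by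
          rw [Real.rpow_add hX0, Real.rpow_add hX0, Real.rpow_add hX0]
      _ ≤ _ := by
          refine mul_le_mul_of_nonneg_left ?_ (by positivity)
          exact Real.rpow_le_rpow_of_exponent_le hX1 (by linarith)
  have h5 : ℓ ^ (2 * k + 4) ≤ K * X ^ (1/100 : ℝ) := log_pow_le_rpow (by norm_num) _ hX1
  have h6 : S ^ 2 ≤ (16 * C + 80 * K) * (X / ℓ ^ k) ^ 2 := by
    calc S ^ 2 ≤ (ℓ ^ 2 * (2 * ℓ)) * (8 * C * X ^ 2 * ℓ ^ 3 / ℓ ^ (2 * k + 6) + 40 * ℓ * X ^ (199/100 : ℝ)) := by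
          refine h1.trans ?_
          refine mul_le_mul ?_ (h2.trans (add_le_add h3 h4)) (sum_nonneg fun _ _ => by positivity) (by positivity)
          gcongr
          linarith
      _ = 16 * C * (X / ℓ ^ k) ^ 2 + 80 * (ℓ ^ (2 * k + 4) * X ^ (199/100 : ℝ)) / (ℓ ^ k) ^ 2 := by
          have : ℓ ^ k ≠ 0 := by positivity
          field_simp
          ring
      _ ≤ 16 * C * (X / ℓ ^ k) ^ 2 + 80 * (K * X ^ 2) / (ℓ ^ k) ^ 2 := by
          have : ℓ ^ (2 * k + 4) * X ^ (199/100 : ℝ) ≤ K * X ^ 2 := by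
            calc _ ≤ K * X ^ (1/100 : ℝ) * X ^ (199/100 : ℝ) := by gcongr
              _ = K * X ^ (2:ℝ) := by rw [mul_assoc, ← Real.rpow_add hX0]; norm_num
              _ = _ := by rw [Real.rpow_two]
          gcongr
      _ = _ := by ring
  have h7 : S ^ 2 ≤ ((16 * C + 80 * K) * X / ℓ ^ k) ^ 2 := by
    refine h6.trans ?_
    have hk1 : 1 ≤ 16 * C + 80 * K := by linarith
    have : ((16 * C + 80 * K) * X / ℓ ^ k) ^ 2 = (16 * C + 80 * K) ^ 2 * (X / ℓ ^ k) ^ 2 := by ring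
    rw [this]
    refine mul_le_mul_of_nonneg_right ?_ (by positivity)
    nlinarith
  exact (pow_le_pow_iff_left₀ (norm_nonneg _) (by positivity) two_ne_zero).1 h7

/-! ### The von Mangoldt function in progressions -/

lemma divisor_swap {μ X V : ℝ} (hV : 0 ≤ V) (P : ℕ → Prop) [DecidablePred P] (F : ℕ → ℕ → ℂ) :
    ∑ n ∈ (window μ X).filter P, ∑ b ∈ n.divisors.filter (fun b : ℕ => (b:ℝ) ≤ V), F n b =
      ∑ b ∈ Icc 1 ⌊V⌋₊, ∑ n ∈ (window μ X).filter (fun n => b ∣ n ∧ P n), F n b := by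
  refine sum_comm' fun n b => ?_
  simp only [window, mem_filter, mem_Ioc, mem_Icc, Nat.mem_divisors, Nat.le_floor_iff hV]
  constructor
  · rintro ⟨⟨h1, h2⟩, ⟨h3, h4⟩, h5⟩
    exact ⟨⟨h1, h3, h2⟩, Nat.pos_of_dvd_of_pos h3 (by omega), h5⟩
  · rintro ⟨⟨h1, h3, h2⟩, h4, h5⟩
    exact ⟨⟨h1, h2⟩, ⟨h3, by omega⟩, h5⟩

lemma divisor_swap₂ {μ X U : ℝ} (hU : 0 ≤ U) (P : ℕ → Prop) [DecidablePred P] (F : ℕ → ℕ → ℂ)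
    {b : ℕ} (hb : 1 ≤ b) :
    ∑ n ∈ (window μ X).filter (fun n => b ∣ n ∧ P n),
      ∑ m ∈ (n / b).divisors.filter (fun m : ℕ => (m:ℝ) ≤ U), F n m =
      ∑ m ∈ Icc 1 ⌊U⌋₊, ∑ n ∈ (window μ X).filter (fun n => b * m ∣ n ∧ P n), F n m := by
  refine sum_comm' fun n m => ?_
  simp only [window, mem_filter, mem_Ioc, mem_Icc, Nat.mem_divisors, Nat.le_floor_iff hU]
  constructor
  · rintro ⟨⟨h1, h2, h3⟩, ⟨h4, h5⟩, h6⟩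
    refine ⟨⟨h1, ?_, h3⟩, Nat.pos_of_dvd_of_pos h4 (Nat.pos_of_ne_zero h5), h6⟩
    exact (Nat.dvd_div_iff_mul_dvd h2).1 h4
  · rintro ⟨⟨h1, h2, h3⟩, h4, h5⟩
    have hbn : b ∣ n := (dvd_mul_right _ _).trans h2
    refine ⟨⟨h1, hbn, h3⟩, ⟨(Nat.dvd_div_iff_mul_dvd hbn).2 h2, ?_⟩, h5⟩
    exact Nat.ne_of_gt (Nat.div_pos (Nat.le_of_dvd (by omega) hbn) hb)

/-- Vaughan's identity summed over a residue class in the window. -/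
lemma vaughan_sum {c μ X α U V : ℝ} (hμX : 0 ≤ μ * X) (hU : 0 ≤ U) (hV : 0 ≤ V) (hUX : U ≤ μ * X) (d : ℕ) :
    ∑ n ∈ (window μ X).filter (fun n => d ∣ n + 2), ((vonMangoldt n : ℝ) : ℂ) * e (α * (n:ℝ) ^ c) =
      ∑ b ∈ Icc 1 ⌊V⌋₊, (moebius b : ℂ) * ∑ n ∈ (window μ X).filter (fun n => b ∣ n ∧ d ∣ n + 2),
        (((Real.log (n:ℝ) - Real.log b : ℝ) : ℂ) * e (α * (n:ℝ) ^ c)) -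
      ∑ b ∈ Icc 1 ⌊V⌋₊, (moebius b : ℂ) * ∑ m ∈ Icc 1 ⌊U⌋₊, ((vonMangoldt m : ℝ) : ℂ) *
        ∑ n ∈ (window μ X).filter (fun n => b * m ∣ n ∧ d ∣ n + 2), e (α * (n:ℝ) ^ c) +
      ∑ n ∈ (window μ X).filter (fun n => d ∣ n + 2),
        ((∑ b ∈ n.divisors.filter (fun b : ℕ => ¬ (b:ℝ) ≤ V),
          (moebius b : ℝ) * bigLam U (n / b) : ℝ) : ℂ) * e (α * (n:ℝ) ^ c) := by
  have hfirst : ∑ b ∈ Icc 1 ⌊V⌋₊, (moebius b : ℂ) *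
      ∑ n ∈ (window μ X).filter (fun n => b ∣ n ∧ d ∣ n + 2),
        (((Real.log (n:ℝ) - Real.log b : ℝ) : ℂ) * e (α * (n:ℝ) ^ c)) =
      ∑ n ∈ (window μ X).filter (fun n => d ∣ n + 2),
        ((∑ b ∈ n.divisors.filter (fun b : ℕ => (b:ℝ) ≤ V),
          (moebius b : ℝ) * (Real.log n - Real.log b) : ℝ) : ℂ) * e (α * (n:ℝ) ^ c) := by
    have h := divisor_swap (μ := μ) (X := X) hV (fun n => d ∣ n + 2) (fun n b => (moebius b : ℂ) *
      (((Real.log (n:ℝ) - Real.log b : ℝ) : ℂ) * e (α * (n:ℝ) ^ c)))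
    simp only [mul_sum]
    rw [← h]
    refine sum_congr rfl fun n _ => ?_
    rw [Complex.ofReal_sum, sum_mul]
    refine sum_congr rfl fun b _ => ?_
    push_cast
    ring
  have hsecond : ∑ b ∈ Icc 1 ⌊V⌋₊, (moebius b : ℂ) * ∑ m ∈ Icc 1 ⌊U⌋₊, ((vonMangoldt m : ℝ) : ℂ) *
        ∑ n ∈ (window μ X).filter (fun n => b * m ∣ n ∧ d ∣ n + 2), e (α * (n:ℝ) ^ c) =
      ∑ n ∈ (window μ X).filter (fun n => d ∣ n + 2),
        ((∑ b ∈ n.divisors.filter (fun b : ℕ => (b:ℝ) ≤ V), (moebius b : ℝ) *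
          ∑ m ∈ (n / b).divisors.filter (fun m : ℕ => (m:ℝ) ≤ U), vonMangoldt m : ℝ) : ℂ) *
            e (α * (n:ℝ) ^ c) := by
    have h := divisor_swap (μ := μ) (X := X) hV (fun n => d ∣ n + 2) (fun n b => (moebius b : ℂ) *
      ∑ m ∈ (n / b).divisors.filter (fun m : ℕ => (m:ℝ) ≤ U),
        ((vonMangoldt m : ℝ) : ℂ) * e (α * (n:ℝ) ^ c))
    have h' : ∑ b ∈ Icc 1 ⌊V⌋₊, (moebius b : ℂ) * ∑ m ∈ Icc 1 ⌊U⌋₊, ((vonMangoldt m : ℝ) : ℂ) *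
        ∑ n ∈ (window μ X).filter (fun n => b * m ∣ n ∧ d ∣ n + 2), e (α * (n:ℝ) ^ c) =
        ∑ b ∈ Icc 1 ⌊V⌋₊, ∑ n ∈ (window μ X).filter (fun n => b ∣ n ∧ d ∣ n + 2), (moebius b : ℂ) *
      ∑ m ∈ (n / b).divisors.filter (fun m : ℕ => (m:ℝ) ≤ U),
        ((vonMangoldt m : ℝ) : ℂ) * e (α * (n:ℝ) ^ c) := by
      refine sum_congr rfl fun b hb => ?_
      rw [← mul_sum, divisor_swap₂ hU (fun n => d ∣ n + 2) _ (mem_Icc.1 hb).1]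
      simp only [mul_sum]
    rw [h', ← h]
    refine sum_congr rfl fun n _ => ?_
    rw [Complex.ofReal_sum, sum_mul]
    refine sum_congr rfl fun b _ => ?_
    rw [← sum_mul]
    push_cast
    ring
  rw [hfirst, hsecond, ← sum_sub_distrib, ← sum_add_distrib]
  refine sum_congr rfl fun n hn => ?_
  have hn1 := mem_Ioc.1 (mem_filter.1 hn).1
  rw [Nat.floor_lt hμX] at hn1
  rw [vaughan (U := U) (V := V) (hUX.trans_lt hn1.1) (by
    rintro rfl
    simp only [Nat.cast_zero] at hn1
    linarith [hn1.1])]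
  push_cast
  ring

/-- The linear sums of Vaughan's identity produce the main term for a single odd modulus. -/
lemma typeI_bound (k : ℕ) : ∃ C : ℝ, 1 ≤ C ∧ ∀ (c μ X α : ℝ) (d : ℕ), 1 ≤ c → c ≤ 17 / 16 → 0 < μ →
    μ ≤ 1 → Real.exp 800 ≤ X → X ^ (49/100:ℝ) ≤ μ * X → 1 ≤ d → (d:ℝ) ≤ X → ¬ 2 ∣ d →
    ‖∑ n ∈ (window μ X).filter (fun n => d ∣ n + 2), ((vonMangoldt n : ℝ) : ℂ) * e (α * (n:ℝ) ^ c) -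
      ((1 / d.totient : ℝ) : ℂ) * I c μ X α -
      ∑ n ∈ (window μ X).filter (fun n => d ∣ n + 2),
        ((∑ b ∈ n.divisors.filter (fun b : ℕ => ¬ (b:ℝ) ≤ X ^ (1/100:ℝ)),
          (moebius b : ℝ) * bigLam (X ^ (49/100:ℝ)) (n / b) : ℝ) : ℂ) * e (α * (n:ℝ) ^ c)‖ ≤
      X ^ (1/2:ℝ) * Real.log X * (12 + 2 / μ + 42 * (|α| * X ^ c)) + C * X / Real.log X ^ k * (1 / d) := by
  obtain ⟨C₁, hC₁1, hC₁⟩ := moebius_div_coprime_bound (k + 2) (θ := 1/100) (by norm_num)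
  obtain ⟨C₂, hC₂1, hC₂⟩ := moebius_log_coprime_bound (k + 2) (θ := 1/100) (by norm_num)
  have h100 : (1:ℝ) ≤ 100 ^ (k + 2) := one_le_pow₀ (by norm_num)
  refine ⟨100 ^ (k + 2) * (4 * C₁ + C₂), by nlinarith, ?_⟩
  intro c μ X α d hc hc2 hμ hμ1 hX hUX hd hdX hd2
  have hX1 : 1 ≤ X := (Real.one_le_exp (by norm_num)).trans hX
  have hX0 : 0 < X := by linarith
  have hXc : 0 < X ^ c := Real.rpow_pos_of_pos hX0 _
  have hlog : 800 ≤ Real.log X := by rwa [Real.le_log_iff_exp_le hX0]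
  have hlog0 : 0 < Real.log X := by linarith
  have hd0 : (0:ℝ) < d := by exact_mod_cast hd
  have hUV : X ^ (1/100:ℝ) * X ^ (49/100:ℝ) = X ^ (1/2:ℝ) := by
    rw [← Real.rpow_add hX0]; norm_num
  have hlogV : Real.log (X ^ (1/100:ℝ)) = Real.log X / 100 := by
    rw [Real.log_rpow hX0]; ring
  set U := X ^ (49/100:ℝ) with hU
  set V := X ^ (1/100:ℝ) with hV
  have hU1 : 1 ≤ U := Real.one_le_rpow hX1 (by norm_num)
  have hV1 : 1 ≤ V := Real.one_le_rpow hX1 (by norm_num)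
  have hUX' : U ≤ X := hUX.trans (by nlinarith)
  have hVX : V ≤ X := by
    calc V ≤ X ^ (1:ℝ) := Real.rpow_le_rpow_of_exponent_le hX1 (by norm_num)
      _ = X := Real.rpow_one X
  have hV8 : Real.exp 8 ≤ V := by
    rw [← Real.le_log_iff_exp_le (by linarith), hlogV]
    linarith
  rw [vaughan_sum (U := U) (V := V) (by positivity) (by linarith) (by linarith) hUX]
  set S₁ := ∑ b ∈ Icc 1 ⌊V⌋₊, (moebius b : ℂ) * ∑ n ∈ (window μ X).filter (fun n => b ∣ n ∧ d ∣ n + 2),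
        (((Real.log (n:ℝ) - Real.log b : ℝ) : ℂ) * e (α * (n:ℝ) ^ c))
  set S₂ := ∑ b ∈ Icc 1 ⌊V⌋₊, (moebius b : ℂ) * ∑ m ∈ Icc 1 ⌊U⌋₊, ((vonMangoldt m : ℝ) : ℂ) *
        ∑ n ∈ (window μ X).filter (fun n => b * m ∣ n ∧ d ∣ n + 2), e (α * (n:ℝ) ^ c)
  have h1 : ‖S₁ - ((1 / d.totient : ℝ) : ℂ) * I c μ X α‖ ≤ _ :=
    typeI_first hc hc2 hμ hμ1 (hU1.trans hUX) hV1 hVX hd hd2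
  have h2 : ‖S₂‖ ≤ _ := typeI_second hc hc2 hμ hμ1 hX1 hV1 hU1 hUX' hd hd2
  have hG : |Gd d V| ≤ C₁ / (Real.log X / 100) ^ (k + 2) := by
    rw [← hlogV]; exact hC₁ X V d hX1 le_rfl hV8 hd hdX
  have hH : |Hd d V - d / d.totient| ≤ C₂ / (Real.log X / 100) ^ (k + 2) := by
    rw [← hlogV]; exact hC₂ X V d hX1 le_rfl hV8 hd hdX
  set ℓ := Real.log X with hℓ
  set T := |α| * X ^ c with hT
  have hT0 : 0 ≤ T := by positivity
  have herr : V * (ℓ * (8 + 28 * T) + 2 / μ) + V * (U * (ℓ * (4 + 14 * T))) ≤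
      X ^ (1/2:ℝ) * ℓ * (12 + 2 / μ + 42 * T) := by
    have hVle : V ≤ V * U := by nlinarith
    calc V * (ℓ * (8 + 28 * T) + 2 / μ) + V * (U * (ℓ * (4 + 14 * T))) ≤
        (V * U) * (ℓ * (8 + 28 * T) + ℓ * (2 / μ)) + V * (U * (ℓ * (4 + 14 * T))) := by
          have : 2 / μ ≤ ℓ * (2 / μ) := le_mul_of_one_le_left (by positivity) (by linarith)
          gcongr
      _ = (V * U) * ℓ * (12 + 2 / μ + 42 * T) := by ring
      _ = _ := by rw [hUV]
  have hmain : X / d * (2 * ℓ * |Gd d V| + |Hd d V - d / d.totient|) +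
      X / d * (|Gd d V| * (ℓ * (1 + ℓ))) ≤
      100 ^ (k + 2) * (4 * C₁ + C₂) * X / ℓ ^ k * (1 / d) := by
    calc _ ≤ X / d * (2 * ℓ * (C₁ / (ℓ / 100) ^ (k + 2)) + (C₂ / (ℓ / 100) ^ (k + 2))) +
          X / d * ((C₁ / (ℓ / 100) ^ (k + 2)) * (ℓ * (1 + ℓ))) := by gcongr
      _ = X / d * (100 ^ (k + 2) / ℓ ^ (k + 2)) * (3 * ℓ * C₁ + C₂ + C₁ * ℓ ^ 2) := by
          rw [div_pow]
          have : ℓ ^ (k + 2) ≠ 0 := by positivity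
          field_simp
          ring
      _ ≤ X / d * (100 ^ (k + 2) / ℓ ^ (k + 2)) * ((4 * C₁ + C₂) * ℓ ^ 2) := by
          refine mul_le_mul_of_nonneg_left ?_ (by positivity)
          have e1 : ℓ * C₁ ≤ ℓ ^ 2 * C₁ := by
            refine mul_le_mul_of_nonneg_right ?_ (by linarith)
            nlinarith
          have e2 : C₂ ≤ C₂ * ℓ ^ 2 := le_mul_of_one_le_right (by linarith) (one_le_pow₀ (by linarith))
          linarith
      _ = _ := by
          rw [pow_add ℓ k 2]
          have : ℓ ^ k ≠ 0 := by positivity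
          field_simp
  have htri := norm_sub_le (S₁ - ((1 / d.totient : ℝ) : ℂ) * I c μ X α) S₂
  rw [show ∀ a b c z : ℂ, a - b + c - z - c = a - z - b from fun a b c z => by ring]
  linarith

lemma sum_one_div_Icc_le {N : ℕ} {X : ℝ} (hN : 1 ≤ N) (hNX : (N:ℝ) ≤ X) :
    ∑ d ∈ Icc 1 N, 1 / (d:ℝ) ≤ 1 + Real.log X := by
  have := harmonic_le_one_add_log N
  rw [harmonic_eq_sum_Icc] at this
  push_cast at this
  have h2 : Real.log N ≤ Real.log X := Real.log_le_log (by exact_mod_cast hN) hNX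
  simp only [one_div]
  linarith

/-- The asymptotic formula for the sum weighted by the von Mangoldt function and without the
integer part in the phase. -/
theorem vonMangoldt_sum_bound {δ ξ μ : ℝ} (hδ : 0 < δ) (hξ : 0 < ξ) (hδξ : ξ + 3 * δ < 12 / 25)
    (hμ : 0 < μ) (hμ1 : μ ≤ 1) (k : ℕ) :
    ∃ C : ℝ, 1 ≤ C ∧ ∀ (c X α : ℝ) (lam : ℕ → ℝ) (N : ℕ), 1 ≤ c → c ≤ 17 / 16 →
      Real.exp 800 ≤ X → X ^ (49/100:ℝ) ≤ μ * X → |α| * X ^ c ≤ X ^ ξ → (∀ d, |lam d| ≤ 1) →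
      (∀ d, 2 ∣ d → lam d = 0) → 1 ≤ N → (N:ℝ) ≤ X ^ δ →
      ‖∑ d ∈ Icc 1 N, (lam d : ℂ) * ∑ n ∈ (window μ X).filter (fun n => d ∣ n + 2),
          ((vonMangoldt n : ℝ) : ℂ) * e (α * (n:ℝ) ^ c) -
        ((∑ d ∈ Icc 1 N, lam d / (d.totient : ℝ) : ℝ) : ℂ) * I c μ X α‖ ≤ C * X / Real.log X ^ k := by
  obtain ⟨C₁, hC₁1, hC₁⟩ := typeI_bound (k + 1)
  obtain ⟨C₂, hC₂1, hC₂⟩ := typeII_bound hδ hξ hδξ k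
  set K : ℝ := (k + 1).factorial / (1/100 : ℝ) ^ (k + 1) with hK
  have hK0 : 0 < K := by positivity
  refine ⟨(54 + 2 / μ) * K + 2 * C₁ + C₂, ?_, ?_⟩
  · have : 0 < (54 + 2 / μ) * K := by positivity
    linarith
  intro c X α lam N hc hc2 hX hUX hα hl hl2 hN hND
  have hX1 : 1 ≤ X := (Real.one_le_exp (by norm_num)).trans hX
  have hX0 : 0 < X := by linarith
  have hlog : 800 ≤ Real.log X := by rwa [Real.le_log_iff_exp_le hX0]
  have hNX : (N:ℝ) ≤ X := hND.trans (by
    calc X ^ δ ≤ X ^ (1:ℝ) := Real.rpow_le_rpow_of_exponent_le hX1 (by linarith)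
      _ = X := Real.rpow_one X)
  have h2 := hC₂ c μ X α lam N hc hc2 hμ hμ1 hX hα hl hl2 hN hND
  set S : ℕ → ℂ := fun d => ∑ n ∈ (window μ X).filter (fun n => d ∣ n + 2),
          ((vonMangoldt n : ℝ) : ℂ) * e (α * (n:ℝ) ^ c) with hS
  set R : ℕ → ℂ := fun d => ∑ n ∈ (window μ X).filter (fun n => d ∣ n + 2),
        ((∑ b ∈ n.divisors.filter (fun b : ℕ => ¬ (b:ℝ) ≤ X ^ (1/100:ℝ)),
          (moebius b : ℝ) * bigLam (X ^ (49/100:ℝ)) (n / b) : ℝ) : ℂ) * e (α * (n:ℝ) ^ c) with hR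
  set ℓ := Real.log X with hℓ
  have hℓ0 : 0 < ℓ := by linarith
  have hXξ : 1 ≤ X ^ ξ := Real.one_le_rpow hX1 hξ.le
  change ‖∑ d ∈ Icc 1 N, (lam d : ℂ) * R d‖ ≤ _ at h2
  change ‖∑ d ∈ Icc 1 N, (lam d : ℂ) * S d - _‖ ≤ _
  have hdec : ∑ d ∈ Icc 1 N, (lam d : ℂ) * S d -
      ((∑ d ∈ Icc 1 N, lam d / (d.totient : ℝ) : ℝ) : ℂ) * I c μ X α =
      ∑ d ∈ Icc 1 N, (lam d : ℂ) * (S d - ((1 / d.totient : ℝ) : ℂ) * I c μ X α - R d) +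
      ∑ d ∈ Icc 1 N, (lam d : ℂ) * R d := by
    rw [Complex.ofReal_sum, sum_mul, ← sum_sub_distrib, ← sum_add_distrib]
    refine sum_congr rfl fun d _ => ?_
    push_cast
    ring
  have h1 : ‖∑ d ∈ Icc 1 N, (lam d : ℂ) * (S d - ((1 / d.totient : ℝ) : ℂ) * I c μ X α - R d)‖ ≤
      ∑ d ∈ Icc 1 N, (X ^ (1/2:ℝ) * ℓ * ((54 + 2 / μ) * X ^ ξ) + C₁ * X / ℓ ^ (k + 1) * (1 / d)) := by
    refine norm_sum_le_of_le _ fun d hd => ?_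
    rw [mem_Icc] at hd
    by_cases hd2 : 2 ∣ d
    · rw [hl2 d hd2]
      simp only [Complex.ofReal_zero, zero_mul, norm_zero]
      positivity
    · have h := hC₁ c μ X α d hc hc2 hμ hμ1 hX hUX hd.1 (le_trans (by exact_mod_cast hd.2) hNX) hd2
      have hlam : ‖(lam d : ℂ)‖ ≤ 1 := by
        rw [Complex.norm_real, Real.norm_eq_abs]; exact hl d
      rw [norm_mul]
      refine (mul_le_of_le_one_left (norm_nonneg _) hlam).trans (h.trans ?_)
      have h3 : 12 + 2 / μ + 42 * (|α| * X ^ c) ≤ (54 + 2 / μ) * X ^ ξ := by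
        have : 12 + 2 / μ ≤ (12 + 2 / μ) * X ^ ξ := le_mul_of_one_le_right (by positivity) hXξ
        linarith
      gcongr
  have h3 : ∑ d ∈ Icc 1 N, (X ^ (1/2:ℝ) * ℓ * ((54 + 2 / μ) * X ^ ξ) + C₁ * X / ℓ ^ (k + 1) * (1 / d)) ≤
      (54 + 2 / μ) * K * X / ℓ ^ k + 2 * C₁ * X / ℓ ^ k := by
    rw [sum_add_distrib, sum_const, nsmul_eq_mul, Nat.card_Icc, Nat.add_sub_cancel, ← mul_sum]
    refine add_le_add ?_ ?_
    · have hlk : ℓ ^ (k + 1) ≤ K * X ^ (1/100 : ℝ) := log_pow_le_rpow (by norm_num) _ hX1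
      rw [le_div_iff₀ (by positivity)]
      calc (N:ℝ) * (X ^ (1/2:ℝ) * ℓ * ((54 + 2 / μ) * X ^ ξ)) * ℓ ^ k
          = (54 + 2 / μ) * (ℓ ^ (k + 1) * (N * X ^ (1/2:ℝ) * X ^ ξ)) := by ring
        _ ≤ (54 + 2 / μ) * (K * X ^ (1/100 : ℝ) * (X ^ δ * X ^ (1/2:ℝ) * X ^ ξ)) := by gcongr
        _ = (54 + 2 / μ) * K * X ^ (1/100 + (δ + 1/2 + ξ)) := by
            rw [Real.rpow_add hX0, Real.rpow_add hX0, Real.rpow_add hX0]; ring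
        _ ≤ (54 + 2 / μ) * K * X ^ (1:ℝ) := by
            refine mul_le_mul_of_nonneg_left ?_ (by positivity)
            exact Real.rpow_le_rpow_of_exponent_le hX1 (by linarith)
        _ = _ := by rw [Real.rpow_one]
    · calc C₁ * X / ℓ ^ (k + 1) * ∑ d ∈ Icc 1 N, 1 / (d:ℝ) ≤ C₁ * X / ℓ ^ (k + 1) * (2 * ℓ) := by
            refine mul_le_mul_of_nonneg_left ?_ (by positivity)
            have := sum_one_div_Icc_le hN hNX
            linarith
        _ = _ := by
            have : ℓ ^ k ≠ 0 := by positivity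
            rw [pow_succ]
            field_simp
  rw [hdec]
  refine (norm_add_le _ _).trans ((add_le_add (h1.trans h3) h2).trans (le_of_eq ?_))
  ring

lemma norm_e_sub_le (s t : ℝ) : ‖e s - e t‖ ≤ 7 * |s - t| := by
  have h1 : e s = e t * e (s - t) := by rw [← e_add]; congr 1; ring
  have h2 : e s - e t = e t * (e (s - t) - 1) := by rw [h1]; ring
  have h3 : e (s - t) = Complex.exp (Complex.I * ((2 * Real.pi * (s - t) : ℝ) : ℂ)) := by
    unfold e; congr 1; push_cast; ring
  rw [h2, norm_mul, norm_e, one_mul, h3]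
  refine (Real.norm_exp_I_mul_ofReal_sub_one_le).trans ?_
  rw [Real.norm_eq_abs, abs_mul, abs_of_pos (by positivity)]
  have := Real.pi_lt_d2
  gcongr
  linarith

/-- Passing from primes and integer parts to the von Mangoldt function and the smooth phase. -/
lemma prime_sum_sub_le {c μ X α : ℝ} (hμ : 0 ≤ μ) (hX : 1 ≤ X) (d : ℕ) :
    ‖∑ p ∈ (range (⌊X⌋₊ + 1)).filter (fun p : ℕ => p.Prime ∧ μ * X < (p : ℝ) ∧ d ∣ (p + 2)),
        (Real.log p : ℂ) * e (α * ⌊(p : ℝ) ^ c⌋) -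
      ∑ n ∈ (window μ X).filter (fun n => d ∣ n + 2), ((vonMangoldt n : ℝ) : ℂ) * e (α * (n:ℝ) ^ c)‖ ≤
      42 * |α| * X + 2 * √X * Real.log X := by
  have hX0 : 0 ≤ X := by linarith
  have hset : (range (⌊X⌋₊ + 1)).filter (fun p : ℕ => p.Prime ∧ μ * X < (p : ℝ) ∧ d ∣ (p + 2)) =
      ((window μ X).filter (fun n => d ∣ n + 2)).filter Nat.Prime := by
    ext p
    simp only [window, mem_filter, mem_range, mem_Ioc, Nat.floor_lt (mul_nonneg hμ hX0),
      Nat.lt_succ_iff]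
    tauto
  have hΛ : ∀ n : ℕ, (0:ℝ) ≤ vonMangoldt n := fun n => ArithmeticFunction.vonMangoldt_nonneg
  rw [hset, sum_filter, ← sum_sub_distrib]
  have h1 : ∀ n : ℕ, ‖(if n.Prime then (Real.log n : ℂ) * e (α * ⌊(n : ℝ) ^ c⌋) else 0) -
      ((vonMangoldt n : ℝ) : ℂ) * e (α * (n:ℝ) ^ c)‖ ≤
      7 * |α| * vonMangoldt n + (if ¬ n.Prime then vonMangoldt n else 0) := by
    intro n
    by_cases hn : n.Prime
    · rw [if_pos hn, if_neg (not_not.2 hn), ArithmeticFunction.vonMangoldt_apply_prime hn, ← mul_sub,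
        norm_mul, Complex.norm_real, Real.norm_eq_abs,
        abs_of_nonneg (Real.log_nonneg (by exact_mod_cast hn.one_lt.le)), add_zero, mul_comm]
      refine mul_le_mul_of_nonneg_right ?_ (Real.log_nonneg (by exact_mod_cast hn.one_lt.le))
      refine (norm_e_sub_le _ _).trans ?_
      rw [← mul_sub, abs_mul]
      have hfl : |(⌊(n : ℝ) ^ c⌋ : ℝ) - (n:ℝ) ^ c| ≤ 1 := by
        rw [abs_le]
        constructor <;> linarith [Int.floor_le ((n : ℝ) ^ c), Int.lt_floor_add_one ((n : ℝ) ^ c)]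
      have := mul_le_of_le_one_right (abs_nonneg α) hfl
      linarith
    · rw [if_neg hn, if_pos hn, zero_sub, norm_neg, norm_mul, norm_e, mul_one, Complex.norm_real,
        Real.norm_eq_abs, abs_of_nonneg (hΛ n)]
      have : 0 ≤ 7 * |α| * vonMangoldt n := mul_nonneg (by positivity) (hΛ n)
      linarith
  refine (norm_sum_le_of_le _ fun n _ => h1 n).trans ?_
  have hsub : (window μ X).filter (fun n => d ∣ n + 2) ⊆ Ioc 0 ⌊X⌋₊ := by
    intro n hn
    have := mem_Ioc.1 (mem_filter.1 hn).1
    exact mem_Ioc.2 ⟨by omega, this.2⟩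
  have hlog4 : Real.log 4 ≤ 2 := by
    have : Real.log 4 = 2 * Real.log 2 := by
      rw [show (4:ℝ) = 2 ^ 2 by norm_num, Real.log_pow]; norm_num
    have := Real.log_two_lt_d9
    linarith
  calc _ ≤ ∑ n ∈ Ioc 0 ⌊X⌋₊, (7 * |α| * vonMangoldt n + (if ¬ n.Prime then vonMangoldt n else 0)) := by
        refine sum_le_sum_of_subset_of_nonneg hsub fun n _ _ => ?_
        have h := hΛ n
        split_ifs <;> positivity
    _ = 7 * |α| * Chebyshev.psi X + (Chebyshev.psi X - Chebyshev.theta X) := by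
        rw [sum_add_distrib, ← mul_sum, ← sum_filter, Chebyshev.psi_sub_theta_eq_sum_not_prime]
        rfl
    _ ≤ 7 * |α| * ((Real.log 4 + 4) * X) + 2 * √X * Real.log X := by
        have := Chebyshev.psi_le_const_mul_self hX0
        have := Chebyshev.psi_sub_theta_le hX
        gcongr
    _ ≤ 7 * |α| * ((2 + 4) * X) + 2 * √X * Real.log X := by gcongr
    _ = _ := by ring

/-! ### The asymptotic formula -/

lemma range_sum_eq {M : Type*} [AddCommMonoid M] (N : ℕ) (f : ℕ → M) (h0 : f 0 = 0) :
    ∑ d ∈ range (N + 1), f d = ∑ d ∈ Icc 1 N, f d := by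
  symm
  refine sum_subset (fun d hd => ?_) fun d hd hd' => ?_
  · rw [mem_Icc] at hd
    exact mem_range.2 (by omega)
  · rw [mem_range] at hd
    rw [mem_Icc] at hd'
    obtain rfl : d = 0 := by omega
    exact h0

/-- The asymptotic formula for large `X`, with a natural power of the logarithm. -/
theorem large_X_bound {c μ δ ξ : ℝ} (hc : 1 ≤ c) (hc2 : c ≤ 17 / 16) (hδ : 0 < δ) (hξ : 0 < ξ)
    (hδξ : ξ + 3 * δ < 12 / 25) (hμ : 0 < μ) (hμ1 : μ ≤ 1) (k : ℕ) :
    ∃ C : ℝ, 1 ≤ C ∧ ∀ (X α : ℝ) (lam : ℕ → ℝ), Real.exp 800 ≤ X → X ^ (49/100:ℝ) ≤ μ * X →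
      IsSieveWeight (X ^ δ) lam → |α| < X ^ (ξ - c) →
      ‖L c μ X (X ^ δ) lam α -
        ((∑ d ∈ range (⌊X ^ δ⌋₊ + 1), lam d / (Nat.totient d : ℝ)) : ℝ) * I c μ X α‖ ≤
        C * X / Real.log X ^ k := by
  obtain ⟨C, hC1, hC⟩ := vonMangoldt_sum_bound hδ hξ hδξ hμ hμ1 k
  set K : ℝ := (k + 1).factorial / (1/100 : ℝ) ^ (k + 1) with hK
  have hK0 : 0 < K := by positivity
  refine ⟨44 * K + C, by linarith, ?_⟩
  intro X α lam hX hUX hlam hα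
  have hX1 : 1 ≤ X := (Real.one_le_exp (by norm_num)).trans hX
  have hX0 : 0 < X := by linarith
  have hlog : 800 ≤ Real.log X := by rwa [Real.le_log_iff_exp_le hX0]
  have hXδ : 1 ≤ X ^ δ := Real.one_le_rpow hX1 hδ.le
  have hl0 : lam 0 = 0 := hlam.2 0 (Or.inr (Or.inl (dvd_zero 2)))
  have hl2 : ∀ d, 2 ∣ d → lam d = 0 := fun d hd => hlam.2 d (Or.inr (Or.inl hd))
  set N := ⌊X ^ δ⌋₊ with hN
  have hN1 : 1 ≤ N := (Nat.one_le_floor_iff _).2 hXδ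
  have hND : (N:ℝ) ≤ X ^ δ := Nat.floor_le (by linarith)
  have hα1 : |α| * X ^ c ≤ X ^ ξ := by
    calc |α| * X ^ c ≤ X ^ (ξ - c) * X ^ c := by gcongr
      _ = X ^ ξ := by rw [← Real.rpow_add hX0]; ring_nf
  have h1 := hC c X α lam N hc hc2 hX hUX hα1 hlam.1 hl2 hN1 hND
  set ℓ := Real.log X with hℓ
  have hℓ0 : 0 < ℓ := by linarith
  set S := ∑ d ∈ Icc 1 N, (lam d : ℂ) * ∑ n ∈ (window μ X).filter (fun n => d ∣ n + 2),
          ((vonMangoldt n : ℝ) : ℂ) * e (α * (n:ℝ) ^ c) with hS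
  have h2 : ‖L c μ X (X ^ δ) lam α - S‖ ≤ 44 * K * X / ℓ ^ k := by
    unfold L
    rw [← hN, range_sum_eq _ _ (by rw [hl0]; simp), hS, ← sum_sub_distrib]
    have hT : ∀ d ∈ Icc 1 N, ‖(lam d : ℂ) *
        ∑ p ∈ (range (⌊X⌋₊ + 1)).filter (fun p : ℕ => p.Prime ∧ μ * X < (p : ℝ) ∧ d ∣ (p + 2)),
          (Real.log p : ℂ) * e (α * ⌊(p : ℝ) ^ c⌋) -
        (lam d : ℂ) * ∑ n ∈ (window μ X).filter (fun n => d ∣ n + 2),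
          ((vonMangoldt n : ℝ) : ℂ) * e (α * (n:ℝ) ^ c)‖ ≤ 44 * ℓ * X ^ (1/2:ℝ) := by
      intro d _
      have hlam1 : ‖(lam d : ℂ)‖ ≤ 1 := by
        rw [Complex.norm_real, Real.norm_eq_abs]; exact hlam.1 d
      rw [← mul_sub, norm_mul]
      refine (mul_le_of_le_one_left (norm_nonneg _) hlam1).trans
        ((prime_sum_sub_le hμ.le hX1 d).trans ?_)
      have e1 : |α| * X ≤ X ^ (1/2:ℝ) := by
        calc |α| * X ≤ |α| * X ^ c := by
              refine mul_le_mul_of_nonneg_left ?_ (abs_nonneg _)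
              calc X = X ^ (1:ℝ) := (Real.rpow_one X).symm
                _ ≤ X ^ c := Real.rpow_le_rpow_of_exponent_le hX1 hc
          _ ≤ X ^ ξ := hα1
          _ ≤ _ := Real.rpow_le_rpow_of_exponent_le hX1 (by linarith)
      rw [Real.sqrt_eq_rpow]
      have e2 : 0 ≤ X ^ (1/2:ℝ) := by positivity
      have e3 : X ^ (1/2:ℝ) ≤ ℓ * X ^ (1/2:ℝ) := le_mul_of_one_le_left e2 (by linarith)
      linarith
    refine (norm_sum_le_of_le _ hT).trans ?_
    rw [sum_const, nsmul_eq_mul, Nat.card_Icc, Nat.add_sub_cancel, le_div_iff₀ (by positivity)]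
    have hlk : ℓ ^ (k + 1) ≤ K * X ^ (1/100 : ℝ) := log_pow_le_rpow (by norm_num) _ hX1
    calc (N:ℝ) * (44 * ℓ * X ^ (1/2:ℝ)) * ℓ ^ k = 44 * (ℓ ^ (k + 1) * (N * X ^ (1/2:ℝ))) := by ring
      _ ≤ 44 * (K * X ^ (1/100 : ℝ) * (X ^ δ * X ^ (1/2:ℝ))) := by gcongr
      _ = 44 * K * X ^ (1/100 + (δ + 1/2)) := by
          rw [Real.rpow_add hX0, Real.rpow_add hX0]; ring
      _ ≤ 44 * K * X ^ (1:ℝ) := by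
          refine mul_le_mul_of_nonneg_left ?_ (by positivity)
          exact Real.rpow_le_rpow_of_exponent_le hX1 (by linarith)
      _ = _ := by rw [Real.rpow_one]
  rw [range_sum_eq _ _ (by rw [hl0]; simp)]
  set Q := ((∑ d ∈ Icc 1 N, lam d / (d.totient : ℝ) : ℝ) : ℂ) * I c μ X α
  calc _ = ‖(L c μ X (X ^ δ) lam α - S) + (S - Q)‖ := by rw [sub_add_sub_cancel]
    _ ≤ _ := norm_add_le _ _
    _ ≤ 44 * K * X / ℓ ^ k + C * X / ℓ ^ k := add_le_add h2 h1
    _ = _ := by ring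

/-- The trivial bound, which handles bounded `X`. -/
lemma trivial_bound {c μ δ X Y α : ℝ} (hδ1 : δ ≤ 1) (hμ : 0 ≤ μ) (hμ1 : μ ≤ 1)
    (hX : 1 ≤ X) (hXY : X ≤ Y) {lam : ℕ → ℝ} (hl : ∀ d, |lam d| ≤ 1) :
    ‖L c μ X (X ^ δ) lam α -
        ((∑ d ∈ range (⌊X ^ δ⌋₊ + 1), lam d / (Nat.totient d : ℝ)) : ℝ) * I c μ X α‖ ≤
      (Y + 1) * ((Y + 1) * Real.log Y) + (Y + 1) * Y := by
  have hX0 : 0 < X := by linarith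
  have hY : 0 ≤ Real.log Y := Real.log_nonneg (by linarith)
  have hN : ((⌊X ^ δ⌋₊ + 1 : ℕ) : ℝ) ≤ Y + 1 := by
    have h1 : X ^ δ ≤ X := by
      calc X ^ δ ≤ X ^ (1:ℝ) := Real.rpow_le_rpow_of_exponent_le hX hδ1
        _ = X := Real.rpow_one X
    have h2 : (⌊X ^ δ⌋₊ : ℝ) ≤ X ^ δ := Nat.floor_le (by positivity)
    push_cast
    linarith
  have hM : ((⌊X⌋₊ + 1 : ℕ) : ℝ) ≤ Y + 1 := by
    have h2 : (⌊X⌋₊ : ℝ) ≤ X := Nat.floor_le (by positivity)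
    push_cast
    linarith
  have hlam : ∀ d, ‖(lam d : ℂ)‖ ≤ 1 := fun d => by
    rw [Complex.norm_real, Real.norm_eq_abs]; exact hl d
  refine (norm_sub_le _ _).trans (add_le_add ?_ ?_)
  · unfold L
    have hd : ∀ d ∈ range (⌊X ^ δ⌋₊ + 1), ‖(lam d : ℂ) *
        ∑ p ∈ (range (⌊X⌋₊ + 1)).filter (fun p : ℕ => p.Prime ∧ μ * X < (p : ℝ) ∧ d ∣ (p + 2)),
          (Real.log p : ℂ) * e (α * ⌊(p : ℝ) ^ c⌋)‖ ≤ (Y + 1) * Real.log Y := by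
      intro d _
      rw [norm_mul]
      refine (mul_le_of_le_one_left (norm_nonneg _) (hlam d)).trans ?_
      refine (norm_sum_le_of_le _ (n := fun _ => Real.log Y) fun p hp => ?_).trans ?_
      · rw [mem_filter, mem_range, Nat.lt_succ_iff, Nat.le_floor_iff hX0.le] at hp
        have hp1 : (1:ℝ) ≤ p := by exact_mod_cast hp.2.1.one_lt.le
        rw [norm_mul, norm_e, mul_one, Complex.norm_real, Real.norm_eq_abs,
          abs_of_nonneg (Real.log_nonneg hp1)]
        exact Real.log_le_log (by linarith) (hp.1.trans hXY)
      · rw [sum_const, nsmul_eq_mul]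
        refine mul_le_mul_of_nonneg_right (le_trans ?_ hM) hY
        exact_mod_cast (card_filter_le _ _).trans (card_range _).le
    refine (norm_sum_le_of_le _ hd).trans ?_
    rw [sum_const, nsmul_eq_mul, card_range]
    refine mul_le_mul_of_nonneg_right hN (mul_nonneg (by linarith) hY)
  · rw [norm_mul, Complex.norm_real, Real.norm_eq_abs]
    refine mul_le_mul ?_ ((norm_I_le hμ hμ1 hX0.le).trans hXY) (norm_nonneg _) (by linarith)
    refine (abs_sum_le_sum_abs _ _).trans ?_
    refine (sum_le_card_nsmul _ _ 1 fun d _ => ?_).trans ?_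
    · rw [abs_div, Nat.abs_cast]
      rcases Nat.eq_zero_or_pos d.totient with h | h
      · rw [h]; simp
      · have h1 : (1:ℝ) ≤ d.totient := by exact_mod_cast h
        exact (div_le_one (by linarith)).2 ((hl d).trans h1)
    · rw [card_range, nsmul_eq_mul, mul_one]
      exact hN

end SieveBV

theorem stmt_11 (c μ A δ ξ : ℝ) (hc1 : 1 < c) (hc2 : c < 17 / 16) (hμ1 : 0 < μ) (hμ2 : μ < 1)
    (hA : 0 < A) (hδ : 0 < δ) (hξ1 : 0 < ξ) (hξ2 : ξ < c) (hξδ : ξ + 3 * δ < 12 / 25) :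
    ∃ C : ℝ, 0 < C ∧
      ∀ X : ℝ, 2 ≤ X →
        ∀ lam : ℕ → ℝ, IsSieveWeight (X ^ δ) lam →
          ∀ α : ℝ, |α| < X ^ (ξ - c) →
            ‖L c μ X (X ^ δ) lam α -
                ((∑ d ∈ Finset.range (⌊X ^ δ⌋₊ + 1), lam d / (Nat.totient d : ℝ)) : ℝ) *
                  I c μ X α‖ ≤
              C * X * Real.log X ^ (-A) := by
  obtain ⟨C, hC1, hC⟩ := SieveBV.large_X_bound hc1.le hc2.le hδ hξ1 hξδ hμ1 hμ2.le ⌈A⌉₊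
  -- The threshold beyond which `X ^ (49/100) ≤ μ X`.
  set Y : ℝ := max (Real.exp 800) ((1 / μ) ^ (100/51 : ℝ)) with hY
  have hY1 : 1 < Y := (Real.one_lt_exp_iff.2 (by norm_num)).trans_le (le_max_left _ _)
  have hlogY : 0 < Real.log Y := Real.log_pos hY1
  set M : ℝ := (Y + 1) * ((Y + 1) * Real.log Y) + (Y + 1) * Y with hM
  have hM0 : 0 < M := by positivity
  refine ⟨C + M * Real.log Y ^ A, by positivity, fun X hX lam hlam α hα => ?_⟩
  have hX0 : 0 < X := by linarith
  have hlog : 0 < Real.log X := Real.log_pos (by linarith)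
  have hlA : 0 < Real.log X ^ (-A) := Real.rpow_pos_of_pos hlog _
  rcases le_total X Y with h | h
  · have h1 := SieveBV.trivial_bound (c := c) (δ := δ) (α := α) (by linarith) hμ1.le hμ2.le
      (by linarith) h hlam.1
    have h2 : Real.log Y ^ (-A) ≤ Real.log X ^ (-A) :=
      Real.rpow_le_rpow_of_nonpos hlog (Real.log_le_log hX0 h) (by linarith)
    calc _ ≤ M := h1
      _ = M * Real.log Y ^ A * 1 * Real.log Y ^ (-A) := by
          rw [mul_one, mul_assoc, ← Real.rpow_add hlogY, add_neg_cancel, Real.rpow_zero, mul_one]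
      _ ≤ (C + M * Real.log Y ^ A) * X * Real.log X ^ (-A) := by
          gcongr
          · linarith
          · linarith
  · have hX8 : Real.exp 800 ≤ X := (le_max_left _ _).trans h
    have hUX : X ^ (49/100:ℝ) ≤ μ * X := by
      have h1 : 1 / μ ≤ X ^ (51/100 : ℝ) := by
        calc 1 / μ = ((1 / μ) ^ (100/51 : ℝ)) ^ (51/100 : ℝ) := by
              rw [← Real.rpow_mul (by positivity)]; norm_num
          _ ≤ _ := Real.rpow_le_rpow (by positivity) ((le_max_right _ _).trans h) (by norm_num)
      rw [div_le_iff₀ hμ1] at h1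
      calc X ^ (49/100:ℝ) ≤ (X ^ (51/100 : ℝ) * μ) * X ^ (49/100:ℝ) :=
            le_mul_of_one_le_left (by positivity) h1
        _ = μ * (X ^ (51/100 : ℝ) * X ^ (49/100:ℝ)) := by ring
        _ = μ * X := by rw [← Real.rpow_add hX0]; norm_num
    have hlog1 : 1 ≤ Real.log X := by
      rw [Real.le_log_iff_exp_le hX0]
      exact (Real.exp_le_exp.2 (by norm_num)).trans hX8
    calc _ ≤ C * X / Real.log X ^ ⌈A⌉₊ := hC X α lam hX8 hUX hlam hα
      _ = C * X * Real.log X ^ (-(⌈A⌉₊ : ℝ)) := by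
          rw [Real.rpow_neg hlog.le, Real.rpow_natCast, div_eq_mul_inv]
      _ ≤ C * X * Real.log X ^ (-A) := by
          refine mul_le_mul_of_nonneg_left ?_ (by positivity)
          exact Real.rpow_le_rpow_of_exponent_le hlog1 (neg_le_neg (Nat.le_ceil A))
      _ ≤ (C + M * Real.log Y ^ A) * X * Real.log X ^ (-A) := by
          gcongr
          have : 0 ≤ M * Real.log Y ^ A := by positivity
          linarith
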